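/- For any d ≥ 1, any compact set Λ ⊂ (0,1), and any ρ > 0, there exists c > 0 such that for any Lebesgue measurable sets E₁, E₂ ⊂ ℝ^d with finite positive Lebesgue measures satisfying min(|E₁|,|E₂|) ≥ ρ max(|E₁|,|E₂|), and any τ > 0 with τ / min(|E₁|,|E₂|) ∈ Λ, one has ∫_{ℝ^d} min(1_{E₁} * 1_{E₂}, τ) ≥ ∫_{ℝ^d} min(1_{E₁⋆} * 1_{E₂⋆}, τ) + c · Distance((E₁,E₂), O(E₁⋆,E₂⋆))². -/

import Mathlib

/-!
**Reformulation.** For a set `C` of finite measure let `tri A B C = |{(x, y) : x ∈ A, y ∈ B, x + y ∈ C}|`. Then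
`∫ min(1_A * 1_B, τ) = |A||B| - T τ A B`, where `T τ A B` is the maximum over `C` of `tri A B C - τ|C|`, attained at
the superlevel set `lev τ A B` of `1_A * 1_B`. So the deficit `Def = T(A⋆, B⋆) - T(A, B)` has to dominate
`c * pairDistance²`.

**Symmetrization.** For finite unions of intervals in the line, sliding all centres towards `0` and merging intervals
that collide does not decrease `tri` (`chain1`); approximation gives the one-dimensional inequality `rs1`. Applied to
every line parallel to an axis this yields `tri A B C ≤ tri (St A) (St B) (St C)` for Steiner symmetrization `St`, and a
path of small steps (`path`) from `(A, B)` to `(St A, St B)` along which `T` is almost not below its initial value.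
Symmetrizing in suitable directions converges to balls (`steiner_induction`), whence `0 ≤ Def`.

**Local estimate.** Let `(A, B)` be close to `(Bl r1, Bl r2)`. The convolution of two balls is strictly decreasing in
the relevant range (`lens_aux`), so `lev` is close to `Bl r3` with `(r1, r2, r3)` a strict triangle (`exists_r3`), and
`A`, `B` can be trimmed to lie between balls of radii `r ± η` at a cost `O(Def)` in measure (`trim2`). An affine map
makes both sets centred and `A` isotropic (`normal`). In one dimension, `hex` bounds from below the gain of
symmetrizing three sets trapped near intervals by the squared distance to intervals and by the square of
`c_A + c_B - c_C`, the centres. Integrated over lines, it shows that, in terms of `e = √Def`, most sections of `A` and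
`B` are `O(e)`-close to intervals in `L¹`, whose centres satisfy a Cauchy equation up to `O(e)`; hence the centres
are affine functions of the position of the line (`cauchy`, `dir`), and the moment conditions kill these affine functions (`star`). So `A`
is almost invariant under reflections in all directions, hence, orthogonal maps being products of reflections, under a random rotation
(`Rand.th_le`); `Rand.maj` and `fin` conclude that `A` is `O(e)`-close to a ball. The lines near the boundary, where `hex` is unavailable,
contribute a small multiple of `|A Δ A⋆|`, which is absorbed. This is `core`, and gives `local_stab`.

**Global estimate.** If `(A, B)` is far from the orbit, the path towards its symmetrizations must cross the range of
the local estimate, at a pair whose deficit is at most about `Def` (`far`). Compactness of the parameters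
`(|A|, |B|, τ)`, after a dilation making `min(|A|, |B|) = 1`, makes `c` uniform (`stab_compact`).
-/

open MeasureTheory Set

noncomputable section

/-- `ℝ^d` with Lebesgue measure. -/
abbrev Vec (d : ℕ) := EuclideanSpace ℝ (Fin d)

/-- Indicator function of a set, with value `1 : ℝ`. -/
def ind {d : ℕ} (E : Set (Vec d)) : Vec d → ℝ := E.indicator 1

/-- Convolution of two functions on `ℝ^d`. -/
def conv {d : ℕ} (f g : Vec d → ℝ) (x : Vec d) : ℝ := ∫ y, f y * g (x - y)

/-- `E⋆`: the closed ball centered at the origin with the same measure as `E`. -/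
def ballStar {d : ℕ} (E : Set (Vec d)) : Set (Vec d) :=
  Metric.closedBall 0
    (((volume E).toReal / (volume (Metric.closedBall (0 : Vec d) 1)).toReal) ^ ((1 : ℝ) / d))

/-- `Distance((A,B), O(A⋆,B⋆))`: infimum over measure-preserving linear maps `ψ` and
translations `(u,v)` of `max(|A Δ (ψ(A⋆)+u)|, |B Δ (ψ(B⋆)+v)|)`. -/
def pairDistance {d : ℕ} (A B : Set (Vec d)) : ℝ :=
  sInf { r : ℝ | ∃ (ψ : Vec d ≃ₗ[ℝ] Vec d) (u v : Vec d),
    MeasurePreserving (⇑ψ) volume volume ∧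
    r = max (volume (symmDiff A ((fun y => ψ y + u) '' ballStar A))).toReal
            (volume (symmDiff B ((fun y => ψ y + v) '' ballStar B))).toReal }

set_option linter.unusedSectionVars false
set_option linter.unusedVariables false
set_option linter.deprecated false

namespace RS
open scoped ENNReal Topology symmDiff
open Filter Metric
open ENNReal (ofReal mul_ne_top toReal_mono toReal_mul toReal_pos ofReal_toReal ofReal_ne_top ofReal_le_ofReal toReal_nonneg toReal_le_toReal toReal_add zero_ne_top ofReal_mul toReal_ofReal tendsto_toReal)
open Real (norm_eq_abs exp log volume_real_Ico_of_le volume_real_Icc_of_le sqrt_nonneg sq_sqrt)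
open Finset (sum_le_sum mem_of_mem_erase sum_congr set_biUnion_insert sum_nonneg set_biUnion_finset_image mul_sum)

variable {G : Type*} [NormedAddCommGroup G] [NormedSpace ℝ G] [FiniteDimensional ℝ G]
  [MeasureSpace G] [BorelSpace G] [(volume : Measure G).IsAddHaarMeasure]
variable {d m : ℕ}

/-- Lebesgue measure with real values. -/
notation "vol" => Measure.real volume

/-- The determinant of a linear equivalence. -/
notation "det(" ψ ")" => LinearMap.det (LinearEquiv.toLinearMap ψ)

/-- Linear isometries of `ℝ^d`. -/
notation "O(" d ")" => Vec d ≃ₗᵢ[ℝ] Vec d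

/-- Linear automorphisms of `ℝ^d`. -/
notation "GL(" d ")" => Vec d ≃ₗ[ℝ] Vec d

lemma vol_nonneg {α : Type*} [MeasureSpace α] {s : Set α} : 0 ≤ vol s := measureReal_nonneg

/-- The closed ball of radius `r` about the origin. -/
abbrev Bl (r : ℝ) : Set (Vec d) := closedBall 0 r

lemma mem_Bl {r : ℝ} {x : Vec d} : x ∈ Bl r ↔ ‖x‖ ≤ r := mem_closedBall_zero_iff

lemma Bl_mono {r s : ℝ} (h : r ≤ s) : (Bl r : Set (Vec d)) ⊆ Bl s :=
  closedBall_subset_closedBall h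

lemma intBl {F : Type*} [NormedAddCommGroup F] {f : Vec d → F} (hf : Continuous f) {r : ℝ} :
    IntegrableOn f (Bl r) :=
  hf.continuousOn.integrableOn_compact (isCompact_closedBall _ _)

/-! ### The trilinear form and the functional `T` -/

section generic
variable {A B C A' B' C' : Set G}

/-- The trilinear form `|{(x,y) : x ∈ A, y ∈ B, x + y ∈ C}|`. -/
def triE (A B C : Set G) : ℝ≥0∞ :=
  ∫⁻ x, ∫⁻ y, A.indicator 1 x * B.indicator 1 y * C.indicator 1 (x + y)

/-- Real-valued version of `triE`. -/
def tri (A B C : Set G) : ℝ := (triE A B C).toReal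

/-- Convolution of two indicator functions, `|{y ∈ A : x - y ∈ B}|`, as an extended real. -/
def cvE (A B : Set G) (x : G) : ℝ≥0∞ := ∫⁻ y, A.indicator 1 y * B.indicator 1 (x - y)

/-- Real-valued version of `cvE`. -/
def cv (A B : Set G) (x : G) : ℝ := (cvE A B x).toReal

/-- The part of the convolution above height `τ`; since `∫ 1_A * 1_B = |A||B|`, lower bounds for
`∫ min (1_A * 1_B, τ)` are upper bounds for `T`. -/
def T (τ : ℝ) (A B : Set G) : ℝ := ∫ z, max (cv A B z - τ) 0

lemma indicator_le_one' (A : Set G) (x : G) : (A.indicator 1 x : ℝ≥0∞) ≤ 1 :=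
  Set.indicator_le_self' (by simp) x

lemma lintegral_ind (hA : MeasurableSet A) :
    ∫⁻ x, (A.indicator 1 x : ℝ≥0∞) = volume A := lintegral_indicator_one hA

lemma meas_ind (hA : MeasurableSet A) :
    Measurable (A.indicator 1 : G → ℝ≥0∞) := measurable_one.indicator hA

lemma meas_ind_add (hA : MeasurableSet A) :
    Measurable (fun p : G × G => (A.indicator 1 (p.1 + p.2) : ℝ≥0∞)) :=
  (meas_ind hA).comp measurable_add

lemma meas_ind_sub (hA : MeasurableSet A) :
    Measurable (fun p : G × G => (A.indicator 1 (p.1 - p.2) : ℝ≥0∞)) :=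
  (meas_ind hA).comp measurable_sub

lemma meas_tri_aux (hA : MeasurableSet A) (hB : MeasurableSet B)
    (hC : MeasurableSet C) : Measurable (fun p : G × G =>
      (A.indicator 1 p.1 * B.indicator 1 p.2 * C.indicator 1 (p.1 + p.2) : ℝ≥0∞)) :=
  (((meas_ind hA).comp measurable_fst).mul ((meas_ind hB).comp measurable_snd)).mul
    (meas_ind_add hC)

lemma triE_comm (hA : MeasurableSet A) (hB : MeasurableSet B)
    (hC : MeasurableSet C) : triE A B C = triE B A C := by
  unfold triE
  rw [lintegral_lintegral_swap (meas_tri_aux hA hB hC).aemeasurable]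
  refine lintegral_congr fun y => lintegral_congr fun x => ?_
  rw [mul_comm (A.indicator 1 x : ℝ≥0∞), add_comm]

lemma triE_eq_cvE (hA : MeasurableSet A) (hB : MeasurableSet B)
    (hC : MeasurableSet C) : triE A B C = ∫⁻ z in C, cvE A B z := by
  unfold triE cvE
  have h1 : ∀ x : G, ∫⁻ y, A.indicator 1 x * B.indicator 1 y * C.indicator 1 (x + y)
      = ∫⁻ z, (A.indicator 1 x * B.indicator 1 (z - x) * C.indicator 1 z : ℝ≥0∞) := by
    intro x
    rw [← lintegral_add_left_eq_self
      (fun z => (A.indicator 1 x * B.indicator 1 (z - x) * C.indicator 1 z : ℝ≥0∞)) x]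
    simp
  simp_rw [h1]
  rw [lintegral_lintegral_swap, ← lintegral_indicator hC]
  · refine lintegral_congr fun z => ?_
    by_cases hz : z ∈ C <;> simp [hz]
  · exact ((((meas_ind hA).comp measurable_fst).mul
      ((meas_ind hB).comp (measurable_snd.sub measurable_fst))).mul
      ((meas_ind hC).comp measurable_snd)).aemeasurable

lemma triE_le_AB (hA : MeasurableSet A) (hB : MeasurableSet B) :
    triE A B C ≤ volume A * volume B := by
  unfold triE
  calc _ ≤ ∫⁻ x, ∫⁻ y, (A.indicator 1 x * B.indicator 1 y : ℝ≥0∞) := by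
        refine lintegral_mono fun x => lintegral_mono fun y => ?_
        exact mul_le_of_le_one_right (by simp) (indicator_le_one' _ _)
    _ = _ := by
        simp_rw [lintegral_const_mul _ (meas_ind hB), lintegral_ind hB]
        rw [lintegral_mul_const _ (meas_ind hA), lintegral_ind hA]

lemma triE_rot (hA : MeasurableSet A) (hB : MeasurableSet B)
    (hC : MeasurableSet C) : triE A B C = triE C (-B) A := by
  unfold triE
  rw [lintegral_lintegral_swap (meas_tri_aux hA hB hC).aemeasurable]
  conv_rhs => rw [lintegral_lintegral_swap (meas_tri_aux hC hB.neg hA).aemeasurable]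
  rw [← lintegral_neg_eq_self]
  refine lintegral_congr fun y => ?_
  rw [← lintegral_add_right_eq_self _ y]
  refine lintegral_congr fun x => ?_
  simp only [add_neg_cancel_right]
  rw [mul_comm, mul_comm (A.indicator 1 _ : ℝ≥0∞), ← mul_assoc]
  congr 2

lemma triE_union_left (hA : MeasurableSet A) (hA' : MeasurableSet A')
    (hB : MeasurableSet B) (hC : MeasurableSet C) (hd : Disjoint A A') :
    triE (A ∪ A') B C = triE A B C + triE A' B C := by
  unfold triE
  rw [← lintegral_add_left]
  · refine lintegral_congr fun x => ?_
    rw [← lintegral_add_left]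
    · refine lintegral_congr fun y => ?_
      rw [Set.indicator_union_of_disjoint hd]
      simp [add_mul]
    · exact (meas_tri_aux hA hB hC).comp measurable_prodMk_left
  · exact (meas_tri_aux hA hB hC).lintegral_prod_right'

lemma triE_mono (hA : A ⊆ A') (hB : B ⊆ B') (hC : C ⊆ C') :
    triE A B C ≤ triE A' B' C' := by
  unfold triE
  refine lintegral_mono fun x => lintegral_mono fun y => ?_
  dsimp only
  gcongr

lemma cvE_le (hA : MeasurableSet A) (x : G) : cvE A B x ≤ volume A := by
  rw [← lintegral_ind hA]
  exact lintegral_mono fun y => mul_le_of_le_one_right (by simp) (indicator_le_one' _ _)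

lemma measurable_cvE (hA : MeasurableSet A) (hB : MeasurableSet B) :
    Measurable (cvE A B) := by
  unfold cvE
  exact Measurable.lintegral_prod_right' (f := fun p : G × G =>
    (A.indicator 1 p.2 * B.indicator 1 (p.1 - p.2) : ℝ≥0∞))
    (((meas_ind hA).comp measurable_snd).mul (meas_ind_sub hB))

lemma cvE_lt_top (hA : MeasurableSet A) (hfA : volume A ≠ ∞) (x : G) :
    cvE A B x < ∞ := (cvE_le hA x).trans_lt hfA.lt_top

lemma measurable_cv (hA : MeasurableSet A) (hB : MeasurableSet B) :
    Measurable (cv A B) := (measurable_cvE hA hB).ennreal_toReal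

lemma cv_nonneg (A B : Set G) (x : G) : 0 ≤ cv A B x := toReal_nonneg

lemma triE_univ (hA : MeasurableSet A) (hB : MeasurableSet B) :
    triE A B univ = volume A * volume B := by
  unfold triE
  simp only [mem_univ, indicator_of_mem, Pi.one_apply, mul_one]
  simp_rw [lintegral_const_mul _ (meas_ind hB), lintegral_ind hB]
  rw [lintegral_mul_const _ (meas_ind hA), lintegral_ind hA]

lemma lintegral_cvE (hA : MeasurableSet A) (hB : MeasurableSet B) :
    ∫⁻ z, cvE A B z = volume A * volume B := by
  rw [← triE_univ hA hB, triE_eq_cvE hA hB .univ]; simp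

/-- A measurable set of finite measure. -/
def Fm (A : Set G) : Prop := MeasurableSet A ∧ volume A ≠ ∞

lemma integrable_cv (hA : Fm A) (hB : Fm B) : Integrable (cv A B) := by
  refine integrable_toReal_of_lintegral_ne_top (measurable_cvE hA.1 hB.1).aemeasurable ?_
  rw [lintegral_cvE hA.1 hB.1]
  exact mul_ne_top hA.2 hB.2

lemma integral_cv (hA : Fm A) (hB : Fm B) :
    ∫ z, cv A B z = vol A * vol B := by
  unfold cv
  rw [integral_toReal (measurable_cvE hA.1 hB.1).aemeasurable
    (Eventually.of_forall fun x => cvE_lt_top hA.1 hA.2 x), lintegral_cvE hA.1 hB.1]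
  simp [Measure.real]

lemma tri_eq_setIntegral (hA : Fm A) (hB : Fm B) (hC : MeasurableSet C) :
    tri A B C = ∫ z in C, cv A B z := by
  unfold tri cv
  rw [triE_eq_cvE hA.1 hB.1 hC, integral_toReal (measurable_cvE hA.1 hB.1).aemeasurable
    (Eventually.of_forall fun x => cvE_lt_top hA.1 hA.2 x)]

lemma integrable_T {τ : ℝ} (hτ : 0 ≤ τ) (hA : Fm A) (hB : Fm B) :
    Integrable (fun z => max (cv A B z - τ) 0) := by
  refine (integrable_cv hA hB).mono'
    (((measurable_cv hA.1 hB.1).sub_const τ).max measurable_const).aestronglyMeasurable ?_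
  refine Eventually.of_forall fun z => ?_
  have := cv_nonneg A B z
  rw [Real.norm_of_nonneg (le_max_right _ _)]
  exact max_le (by linarith) this

lemma integral_min_add_T {τ : ℝ} (hτ : 0 ≤ τ) (hA : Fm A) (hB : Fm B) :
    (∫ z, min (cv A B z) τ) + T τ A B = vol A * vol B := by
  have h1 : (fun z => min (cv A B z) τ) = fun z => cv A B z - max (cv A B z - τ) 0 := by
    ext z
    rcases le_total (cv A B z) τ with h | h
    · rw [min_eq_left h, max_eq_right (by linarith)]; ring
    · rw [min_eq_right h, max_eq_left (by linarith)]; ring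
  rw [h1, integral_sub (integrable_cv hA hB) (integrable_T hτ hA hB), integral_cv hA hB]
  unfold T; ring

lemma tri_sub_le_T {τ : ℝ} (hτ : 0 ≤ τ) (hA : Fm A) (hB : Fm B) (hC : Fm C) :
    tri A B C - τ * vol C ≤ T τ A B := by
  rw [tri_eq_setIntegral hA hB hC.1]
  have h2 : τ * vol C = ∫ z in C, τ := by
    rw [setIntegral_const, smul_eq_mul, mul_comm]
  have hi : IntegrableOn (fun _ : G => τ) C := integrableOn_const hC.2
  rw [h2, ← integral_sub (integrable_cv hA hB).integrableOn hi]
  calc _ ≤ ∫ z in C, max (cv A B z - τ) 0 := by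
        refine setIntegral_mono ((integrable_cv hA hB).integrableOn.sub hi)
          (integrable_T hτ hA hB).integrableOn fun z => le_max_left _ _
    _ ≤ _ := setIntegral_le_integral (integrable_T hτ hA hB)
        (Eventually.of_forall fun z => le_max_right _ _)

/-- The superlevel set of the convolution, the optimal third set for `T`. -/
def lev (τ : ℝ) (A B : Set G) : Set G := {z | τ < cv A B z}

lemma measurableSet_lev {τ : ℝ} (hA : MeasurableSet A) (hB : MeasurableSet B) :
    MeasurableSet (lev τ A B) := measurableSet_lt measurable_const (measurable_cv hA hB)

lemma fm_lev {τ : ℝ} (hτ : 0 < τ) (hA : Fm A) (hB : Fm B) : Fm (lev τ A B) := by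
  refine ⟨measurableSet_lev hA.1 hB.1, ?_⟩
  have := (integrable_cv hA hB).measure_gt_lt_top hτ
  exact this.ne

lemma T_eq_lev {τ : ℝ} (hτ : 0 < τ) (hA : Fm A) (hB : Fm B) :
    T τ A B = tri A B (lev τ A B) - τ * vol (lev τ A B) := by
  have hC := fm_lev hτ hA hB
  rw [tri_eq_setIntegral hA hB hC.1]
  have h2 : τ * vol (lev τ A B) = ∫ z in lev τ A B, τ := by
    rw [setIntegral_const, smul_eq_mul, mul_comm]
  have hi : IntegrableOn (fun _ : G => τ) (lev τ A B) := integrableOn_const hC.2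
  rw [h2, ← integral_sub (integrable_cv hA hB).integrableOn hi, ← integral_indicator hC.1]
  unfold T
  congr 1
  ext z
  by_cases hz : z ∈ lev τ A B
  · rw [indicator_of_mem hz, max_eq_left]
    have : τ < cv A B z := hz
    linarith
  · rw [indicator_of_notMem hz, max_eq_right]
    have : ¬ τ < cv A B z := hz
    linarith

lemma triE_lt_top (C : Set G) (hA : Fm A) (hB : Fm B) : triE A B C < ∞ :=
  (triE_le_AB hA.1 hB.1).trans_lt (ENNReal.mul_lt_top hA.2.lt_top hB.2.lt_top)

lemma tri_mono (hA' : Fm A') (hB' : Fm B')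
    (hA : A ⊆ A') (hB : B ⊆ B') (hC : C ⊆ C') : tri A B C ≤ tri A' B' C' :=
  toReal_mono (triE_lt_top _ hA' hB').ne (triE_mono hA hB hC)

lemma tri_comm (hA : MeasurableSet A) (hB : MeasurableSet B)
    (hC : MeasurableSet C) : tri A B C = tri B A C := by
  unfold tri; rw [triE_comm hA hB hC]

lemma tri_rot (hA : MeasurableSet A) (hB : MeasurableSet B)
    (hC : MeasurableSet C) : tri A B C = tri C (-B) A := by
  unfold tri; rw [triE_rot hA hB hC]

lemma Fm.diff (hA : Fm A) (hB : MeasurableSet B) : Fm (A \ B) :=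
  ⟨hA.1.diff hB, fun h => hA.2 (measure_mono_top diff_subset h)⟩

end generic

section generic2
variable {A B C A' B' : Set G}

lemma Fm.union (hA : Fm A) (hB : Fm B) : Fm (A ∪ B) :=
  ⟨hA.1.union hB.1, (measure_union_lt_top hA.2.lt_top hB.2.lt_top).ne⟩

lemma Fm.inter (hA : Fm A) (hB : MeasurableSet B) : Fm (A ∩ B) :=
  ⟨hA.1.inter hB, fun h => hA.2 (measure_mono_top inter_subset_left h)⟩

lemma Fm.mono (hA : Fm A) (hB : MeasurableSet B) (h : B ⊆ A) : Fm B :=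
  ⟨hB, fun h' => hA.2 (measure_mono_top h h')⟩

lemma Fm.symmDiff (hA : Fm A) (hB : Fm B) : Fm (A ∆ B) :=
  ⟨hA.1.symmDiff hB.1, fun h => (hA.union hB).2 (measure_mono_top symmDiff_le_sup h)⟩

lemma tri_le_AB (hA : Fm A) (hB : Fm B) :
    tri A B C ≤ vol A * vol B := by
  have := toReal_mono (mul_ne_top hA.2 hB.2) (triE_le_AB (C := C) hA.1 hB.1)
  simpa [tri, Measure.real] using this

lemma tri_union_left (hA : Fm A) (hA' : Fm A')
    (hB : Fm B) (hC : MeasurableSet C) (hd : Disjoint A A') :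
    tri (A ∪ A') B C = tri A B C + tri A' B C := by
  unfold tri
  rw [triE_union_left hA.1 hA'.1 hB.1 hC hd,
    toReal_add (triE_lt_top _ hA hB).ne (triE_lt_top _ hA' hB).ne]

lemma tri_union_mid (hA : Fm A) (hA' : Fm A')
    (hB : Fm B) (hC : MeasurableSet C) (hd : Disjoint A A') :
    tri B (A ∪ A') C = tri B A C + tri B A' C := by
  rw [tri_comm hB.1 (hA.union hA').1 hC, tri_union_left hA hA' hB hC hd, tri_comm hB.1 hA.1 hC,
    tri_comm hB.1 hA'.1 hC]

lemma Fm.neg (hA : Fm A) : Fm (-A) :=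
  ⟨hA.1.neg, by rw [Measure.measure_neg]; exact hA.2⟩

lemma tri_union_right (hA : Fm A) (hA' : Fm A')
    (hB : Fm B) (hC : MeasurableSet C) (hd : Disjoint A A') :
    tri C B (A ∪ A') = tri C B A + tri C B A' := by
  rw [tri_rot hC hB.1 (hA.union hA').1, tri_union_left hA hA' hB.neg hC hd, tri_rot hC hB.1 hA.1,
    tri_rot hC hB.1 hA'.1]

lemma tri_lip_left (hA : Fm A) (hA' : Fm A') (hB : Fm B)
    (hC : MeasurableSet C) :
    tri A B C ≤ tri A' B C + vol (A \ A') * vol B := by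
  have h1 : tri A B C = tri (A ∩ A') B C + tri (A \ A') B C := by
    rw [← tri_union_left (hA.inter hA'.1) (hA.diff hA'.1) hB hC
      (disjoint_sdiff_right.mono_left inter_subset_right), inter_union_diff]
  have h2 : tri (A ∩ A') B C ≤ tri A' B C := tri_mono hA' hB inter_subset_right le_rfl le_rfl
  have h3 := tri_le_AB (C := C) (hA.diff hA'.1) hB
  linarith

lemma tri_lip_mid (hA : Fm A) (hA' : Fm A') (hB : Fm B)
    (hC : MeasurableSet C) :
    tri B A C ≤ tri B A' C + vol (A \ A') * vol B := by
  rw [tri_comm hB.1 hA.1 hC, tri_comm hB.1 hA'.1 hC]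
  exact tri_lip_left hA hA' hB hC

lemma real_neg (A : Set G) : vol (-A) = vol A := by
  simp [Measure.real, Measure.measure_neg]

lemma tri_lip_right (hA : Fm A) (hA' : Fm A') (hB : Fm B)
    (hC : MeasurableSet C) :
    tri C B A ≤ tri C B A' + vol (A \ A') * vol B := by
  rw [tri_rot hC hB.1 hA.1, tri_rot hC hB.1 hA'.1, ← real_neg B]
  exact tri_lip_left hA hA' hB.neg hC

lemma cvE_eq_measure (hA : MeasurableSet A) (hB : MeasurableSet B) (x : G) :
    cvE A B x = volume (A ∩ {y | x - y ∈ B}) := by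
  unfold cvE
  have hm : MeasurableSet {y | x - y ∈ B} := (measurable_const.sub measurable_id) hB
  rw [← lintegral_ind (hA.inter hm)]
  refine lintegral_congr fun y => ?_
  by_cases h1 : y ∈ A <;> by_cases h2 : x - y ∈ B <;> simp [h1, h2]

lemma cv_eq_real (hA : MeasurableSet A) (hB : MeasurableSet B) (x : G) :
    cv A B x = vol (A ∩ {y | x - y ∈ B}) := by
  unfold cv; rw [cvE_eq_measure hA hB]; rfl

lemma cvE_comm (x : G) :
    cvE A B x = cvE B A x := by
  unfold cvE
  rw [← lintegral_sub_left_eq_self _ x]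
  refine lintegral_congr fun y => ?_
  rw [mul_comm]; simp

lemma cv_comm (x : G) : cv A B x = cv B A x := by
  unfold cv; rw [cvE_comm]

lemma T_comm (τ : ℝ) (A B : Set G) : T τ A B = T τ B A := by
  unfold T; simp_rw [cv_comm (A := A)]

lemma T_lip_left {τ : ℝ} (hτ : 0 < τ) (hA : Fm A) (hA' : Fm A') (hB : Fm B) :
    T τ A B ≤ T τ A' B + vol (A \ A') * vol B := by
  have hC := fm_lev hτ hA hB
  have h1 := tri_lip_left hA hA' hB hC.1
  have h2 := tri_sub_le_T hτ.le hA' hB hC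
  rw [T_eq_lev hτ hA hB]; linarith

lemma T_lip {τ : ℝ} (hτ : 0 < τ) (hA : Fm A) (hA' : Fm A') (hB : Fm B)
    (hB' : Fm B') :
    T τ A B ≤ T τ A' B' + vol (A \ A') * vol B
      + vol (B \ B') * vol A' := by
  have h1 := T_lip_left hτ hA hA' hB
  have h2 := T_lip_left hτ hB hB' hA'
  rw [T_comm τ B, T_comm τ B'] at h2
  linarith

lemma cv_lip_left (hA : Fm A) (hA' : Fm A') (hB : MeasurableSet B) (x : G) :
    cv A B x ≤ cv A' B x + vol (A \ A') := by
  rw [cv_eq_real hA.1 hB, cv_eq_real hA'.1 hB]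
  refine (measureReal_mono ?_ ?_).trans (measureReal_union_le _ _)
  · intro y hy
    by_cases h : y ∈ A'
    · exact Or.inl ⟨h, hy.2⟩
    · exact Or.inr ⟨hy.1, h⟩
  · exact (measure_union_lt_top
      (measure_lt_top_of_subset inter_subset_left hA'.2) (hA.diff hA'.1).2.lt_top).ne

lemma cv_lip (hA : Fm A) (hA' : Fm A') (hB : Fm B) (hB' : Fm B') (x : G) :
    cv A B x ≤ cv A' B' x + vol (A \ A') + vol (B \ B') := by
  have h1 := cv_lip_left hA hA' hB.1 x
  have h2 := cv_lip_left hB hB' hA'.1 x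
  rw [cv_comm (A := B), cv_comm (A := B')] at h2
  linarith

/-- Affine image of a set. -/
def aff (ψ : G ≃ₗ[ℝ] G) (u : G) (A : Set G) : Set G := (fun y => ψ y + u) '' A

lemma mem_aff (ψ : G ≃ₗ[ℝ] G) (u : G) (A : Set G) (x : G) :
    ψ x + u ∈ aff ψ u A ↔ x ∈ A := by
  unfold aff
  constructor
  · rintro ⟨y, hy, h⟩
    simp at h; rwa [← h]
  · intro h; exact ⟨x, h, rfl⟩

/-- Affine equivalence as a homeomorphism. -/
def affH (ψ : G ≃ₗ[ℝ] G) (u : G) : G ≃ₜ G :=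
  ψ.toContinuousLinearEquiv.toHomeomorph.trans (Homeomorph.addRight u)

lemma affH_apply (ψ : G ≃ₗ[ℝ] G) (u x : G) : affH ψ u x = ψ x + u := rfl

lemma measurableSet_aff (ψ : G ≃ₗ[ℝ] G) (u : G) (hA : MeasurableSet A) :
    MeasurableSet (aff ψ u A) :=
  ((affH ψ u).measurableEmbedding.measurableSet_image).2 hA

lemma volume_aff (ψ : G ≃ₗ[ℝ] G) (u : G) (A : Set G) :
    volume (aff ψ u A) = ofReal |det(ψ)| * volume A := by
  have : aff ψ u A = (fun x => x + u) '' ((ψ : G →ₗ[ℝ] G) '' A) := by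
    unfold aff; rw [image_image]; rfl
  rw [this, ← Measure.addHaar_image_linearMap]
  simp

lemma real_aff (ψ : G ≃ₗ[ℝ] G) (u : G) (A : Set G) :
    vol (aff ψ u A) = |det(ψ)| * vol A := by
  simp [Measure.real, volume_aff]

lemma Fm.aff (hA : Fm A) (ψ : G ≃ₗ[ℝ] G) (u : G) : Fm (aff ψ u A) :=
  ⟨measurableSet_aff ψ u hA.1, by
    rw [volume_aff]; exact mul_ne_top ofReal_ne_top hA.2⟩

lemma cv_aff (ψ : G ≃ₗ[ℝ] G) (u v : G) (hA : MeasurableSet A)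
    (hB : MeasurableSet B) (x : G) :
    cv (aff ψ u A) (aff ψ v B) (ψ x + (u + v))
      = |det(ψ)| * cv A B x := by
  rw [cv_eq_real (measurableSet_aff ψ u hA) (measurableSet_aff ψ v hB), cv_eq_real hA hB,
    ← real_aff ψ u]
  congr 1
  ext z
  obtain ⟨y, rfl⟩ := (affH ψ u).surjective z
  rw [affH_apply, mem_aff]
  simp only [mem_inter_iff, mem_aff, mem_setOf_eq]
  have : ψ x + (u + v) - (ψ y + u) = ψ (x - y) + v := by rw [map_sub]; abel
  rw [this, mem_aff]

lemma T_aff (ψ : G ≃ₗ[ℝ] G) (u v : G) (hA : MeasurableSet A)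
    (hB : MeasurableSet B) (τ : ℝ) :
    T (|det(ψ)| * τ) (aff ψ u A) (aff ψ v B)
      = |det(ψ)| ^ 2 * T τ A B := by
  unfold T
  set k := |det(ψ)| with hk
  have hk0 : 0 ≤ k := abs_nonneg _
  have h := integral_image_eq_integral_abs_det_fderiv_smul (volume : Measure G)
    (s := univ) (f := affH ψ (u + v))
    (f' := fun _ => (ψ.toContinuousLinearEquiv : G →L[ℝ] G)) MeasurableSet.univ
    (fun x _ => by
      have := (ψ.toContinuousLinearEquiv : G →L[ℝ] G).hasFDerivAt (x := x)
      exact (this.add_const (u + v)).hasFDerivWithinAt)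
    (affH ψ (u + v)).injective.injOn
    (fun z => max (cv (aff ψ u A) (aff ψ v B) z - k * τ) 0)
  simp only [image_univ, (affH ψ (u + v)).surjective.range_eq, Measure.restrict_univ] at h
  rw [h]
  have h2 : ∀ x, |(ψ.toContinuousLinearEquiv : G →L[ℝ] G).det| •
      max (cv (aff ψ u A) (aff ψ v B) ((affH ψ (u + v)) x) - k * τ) 0
      = k ^ 2 * max (cv A B x - τ) 0 := by
    intro x
    rw [affH_apply, cv_aff ψ u v hA hB]
    have : |(ψ.toContinuousLinearEquiv : G →L[ℝ] G).det| = k := rfl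
    rw [this, ← hk, ← mul_sub, smul_eq_mul, pow_two, mul_assoc, mul_max_of_nonneg _ _ hk0, mul_zero,
      mul_max_of_nonneg _ _ hk0, mul_zero, mul_max_of_nonneg _ _ hk0, mul_zero]
  simp_rw [h2]
  rw [integral_const_mul]

end generic2

lemma conv_eq_cv {A B : Set (Vec d)} (hA : MeasurableSet A) (hB : MeasurableSet B)
    (x : Vec d) : conv (ind A) (ind B) x = cv A B x := by
  rw [cv_eq_real hA hB]
  unfold conv ind
  have hm : MeasurableSet {y | x - y ∈ B} := (measurable_const.sub measurable_id) hB
  rw [← integral_indicator_one (hA.inter hm)]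
  congr 1
  ext y
  by_cases h1 : y ∈ A <;> by_cases h2 : x - y ∈ B <;> simp [h1, h2]

section
/-! ### One-dimensional intervals -/

/-- The interval with centre `p.1` and half-length `p.2`. -/
def Iv (p : ℝ × ℝ) : Set ℝ := Ico (p.1 - p.2) (p.1 + p.2)

lemma fm_Iv (p : ℝ × ℝ) : Fm (Iv p) := ⟨measurableSet_Ico, by simp [Iv]⟩

lemma real_Iv {p : ℝ × ℝ} (h : 0 ≤ p.2) : vol (Iv p) = 2 * p.2 := by
  unfold Iv
  rw [volume_real_Ico_of_le (by linarith)]; ring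

/-- The convolution of the indicators of two centred intervals. -/
def phi (l l' u : ℝ) : ℝ := max 0 (min l (u + l') - max (-l) (u - l'))

lemma phi_eq (l l' u : ℝ) :
    phi l l' u = max 0 (min (min (2 * l) (2 * l')) (l + l' - |u|)) := by
  unfold phi
  congr 1
  rcases abs_cases u with ⟨h, _⟩ | ⟨h, _⟩ <;> rw [h] <;> simp only [min_def, max_def] <;>
    split_ifs <;> linarith

lemma phi_anti {l l' u v : ℝ} (h : |u| ≤ |v|) : phi l l' v ≤ phi l l' u := by
  rw [phi_eq, phi_eq]; gcongr

lemma continuous_phi (l l' : ℝ) : Continuous (phi l l') := by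
  unfold phi; fun_prop

lemma phi_neg (l l' u : ℝ) : phi l l' (-u) = phi l l' u := by
  rw [phi_eq, phi_eq, abs_neg]

lemma cv_Iv (p q : ℝ × ℝ) (z : ℝ) : cv (Iv p) (Iv q) z = phi p.2 q.2 (z - p.1 - q.1) := by
  rw [cv_eq_real (fm_Iv p).1 (fm_Iv q).1]
  have h1 : {y | z - y ∈ Iv q} = Ioc (z - q.1 - q.2) (z - q.1 + q.2) := by
    ext y; simp only [Iv, mem_setOf_eq, mem_Ico, mem_Ioc]
    constructor <;> rintro ⟨h1, h2⟩ <;> constructor <;> linarith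
  have h2 : (Iv p ∩ Ioc (z - q.1 - q.2) (z - q.1 + q.2) : Set ℝ) =ᵐ[volume]
      (Ioc (p.1 - p.2) (p.1 + p.2) ∩ Ioc (z - q.1 - q.2) (z - q.1 + q.2) : Set ℝ) :=
    Ico_ae_eq_Ioc.inter (ae_eq_refl _)
  rw [h1, measureReal_congr h2, Ioc_inter_Ioc, measureReal_def, Real.volume_Ioc,
    ENNReal.toReal_ofReal', max_comm]
  unfold phi
  congr 1
  have e1 : min (p.1 + p.2) (z - q.1 + q.2) = p.1 + min p.2 (z - p.1 - q.1 + q.2) := by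
    rw [← min_add_add_left]; congr 1; ring
  have e2 : max (p.1 - p.2) (z - q.1 - q.2) = p.1 + max (-p.2) (z - p.1 - q.1 - q.2) := by
    rw [← max_add_add_left]; congr 1; ring
  rw [e1, e2]; ring

/-- The trilinear form of three intervals, as a function of the offset of their centres. -/
def Gf (l l' l'' s : ℝ) : ℝ := ∫ u in (s - l'')..(s + l''), phi l l' u

lemma tri_Iv (p q r : ℝ × ℝ) (h : 0 ≤ r.2) :
    tri (Iv p) (Iv q) (Iv r) = Gf p.2 q.2 r.2 (r.1 - p.1 - q.1) := by
  rw [tri_eq_setIntegral (fm_Iv p) (fm_Iv q) (fm_Iv r).1]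
  simp_rw [cv_Iv]
  unfold Iv Gf
  rw [setIntegral_congr_set Ico_ae_eq_Ioc, ← intervalIntegral.integral_of_le (by linarith)]
  have := intervalIntegral.integral_comp_sub_right (a := r.1 - r.2) (b := r.1 + r.2)
    (fun u => phi p.2 q.2 u) (p.1 + q.1)
  simp_rw [sub_sub]
  rw [this]
  congr 1 <;> ring

lemma Gf_neg (l l' l'' s : ℝ) : Gf l l' l'' (-s) = Gf l l' l'' s := by
  unfold Gf
  have := intervalIntegral.integral_comp_neg (a := s - l'') (b := s + l'') (fun u => phi l l' u)
  simp only [phi_neg] at this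
  rw [this]; congr 1 <;> ring

lemma Gf_abs (l l' l'' s : ℝ) : Gf l l' l'' |s| = Gf l l' l'' s := by
  rcases abs_cases s with ⟨h, _⟩ | ⟨h, _⟩ <;> rw [h]
  exact Gf_neg _ _ _ _

lemma Gf_sub (l l' l'' s s' : ℝ) : Gf l l' l'' s' - Gf l l' l'' s =
    ∫ u in (s' - l'')..(s - l''), (phi l l' u - phi l l' (u + 2 * l'')) := by
  have hi : ∀ a b, IntervalIntegrable (phi l l') volume a b :=
    fun a b => (continuous_phi l l').intervalIntegrable a b
  have hi2 : ∀ a b, IntervalIntegrable (fun u => phi l l' (u + 2 * l'')) volume a b :=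
    fun a b => ((continuous_phi l l').comp (by fun_prop)).intervalIntegrable a b
  rw [intervalIntegral.integral_sub (hi _ _) (hi2 _ _),
    intervalIntegral.integral_comp_add_right (fun u => phi l l' u)]
  unfold Gf
  have e1 := intervalIntegral.integral_add_adjacent_intervals (hi (s' - l'') (s - l''))
    (hi (s - l'') (s + l''))
  have e2 := intervalIntegral.integral_add_adjacent_intervals (hi (s' - l'') (s' + l''))
    (hi (s' + l'') (s + l''))
  have e3 : s' - l'' + 2 * l'' = s' + l'' := by ring
  have e4 : s - l'' + 2 * l'' = s + l'' := by ring
  rw [e3, e4]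
  linarith

lemma Gf_anti {l l' l'' s s' : ℝ} (hl : 0 ≤ l'') (h : |s'| ≤ |s|) :
    Gf l l' l'' s ≤ Gf l l' l'' s' := by
  rw [← Gf_abs l l' l'' s, ← Gf_abs l l' l'' s', ← sub_nonneg, Gf_sub]
  refine intervalIntegral.integral_nonneg (by linarith) fun u hu => ?_
  rw [sub_nonneg]
  apply phi_anti
  have := abs_nonneg s'
  have h1 := hu.1
  rw [abs_of_nonneg (show 0 ≤ u + 2 * l'' by linarith)]
  exact abs_le.2 ⟨by linarith, by linarith⟩

/-- For three half-lengths satisfying the strict triangle inequality, a small offset `s` of the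
centres costs exactly `s ^ 2`. -/
lemma Gf_strict {l l' l'' s : ℝ} (h1 : |s| + |l - l'| ≤ l'') (h2 : |s| + l'' ≤ l + l') :
    Gf l l' l'' 0 - Gf l l' l'' s = s ^ 2 := by
  rw [← Gf_abs l l' l'' s, Gf_sub, ← sq_abs s]
  set t := |s| with ht
  have ht0 : 0 ≤ t := abs_nonneg s
  have hab := abs_le.1 (show |l - l'| ≤ l'' - t by linarith)
  have : ∀ u ∈ uIcc (0 - l'') (t - l''), phi l l' u - phi l l' (u + 2 * l'') = 2 * (u + l'') := by
    intro u hu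
    rw [uIcc_of_le (by linarith)] at hu
    obtain ⟨a1, a2⟩ := hu
    have b := abs_nonneg (l - l')
    rw [phi_eq, phi_eq, abs_of_nonpos (show u ≤ 0 by linarith),
      abs_of_nonneg (show 0 ≤ u + 2 * l'' by linarith)]
    rw [max_eq_right, max_eq_right, min_eq_right, min_eq_right]
    · ring
    all_goals first
      | (refine le_min ?_ ?_ <;> linarith)
      | (refine le_min (le_min ?_ ?_) ?_ <;> linarith)
  rw [intervalIntegral.integral_congr this]
  have h3 := intervalIntegral.integral_comp_add_right (a := 0 - l'') (b := t - l'')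
    (fun u => 2 * u) l''
  have h4 : ∀ a b : ℝ, ∫ u in a..b, 2 * u = b ^ 2 - a ^ 2 := by
    intro a b
    rw [intervalIntegral.integral_const_mul, integral_id]; ring
  have h5 : (∫ u in (0 - l'')..(t - l''), 2 * (u + l'')) = t ^ 2 := by
    rw [h3, h4]; ring
  exact h5

section sums

lemma fm_biUnion {α : Type*} (L : Finset α) (s : α → Set G) (hs : ∀ p ∈ L, Fm (s p)) :
    Fm (⋃ p ∈ L, s p) := by
  classical
  induction L using Finset.induction_on with
  | empty => simp [Fm]
  | insert a L ha ih =>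
    rw [set_biUnion_insert]
    exact (hs a (by simp)).union (ih fun p hp => hs p (by simp [hp]))

lemma add_biUnion {α : Type*} (F : Set G → ℝ) (F0 : F ∅ = 0)
    (hF : ∀ A A', Fm A → Fm A' → Disjoint A A' → F (A ∪ A') = F A + F A')
    (L : Finset α) (s : α → Set G) (hs : ∀ p ∈ L, Fm (s p))
    (hd : ∀ p ∈ L, ∀ q ∈ L, p ≠ q → Disjoint (s p) (s q)) :
    F (⋃ p ∈ L, s p) = ∑ p ∈ L, F (s p) := by
  classical
  induction L using Finset.induction_on with
  | empty => simp [F0]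
  | insert a L ha ih =>
    rw [set_biUnion_insert, Finset.sum_insert ha, hF, ih]
    · exact fun p hp => hs p (by simp [hp])
    · exact fun p hp q hq => hd p (by simp [hp]) q (by simp [hq])
    · exact hs a (by simp)
    · exact fm_biUnion L s fun p hp => hs p (by simp [hp])
    · rw [Set.disjoint_iUnion₂_right]
      intro q hq
      exact hd a (by simp) q (by simp [hq]) (by rintro rfl; exact ha hq)

lemma tri_empty_left (B C : Set G) : tri ∅ B C = 0 := by simp [tri, triE]
lemma tri_empty_mid (B C : Set G) : tri B ∅ C = 0 := by simp [tri, triE]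
lemma tri_empty_right (B C : Set G) : tri B C ∅ = 0 := by simp [tri, triE]

lemma tri_biUnion {α : Type*} (L₁ L₂ L₃ : Finset α) (s : α → Set G) (hs : ∀ p, Fm (s p))
    (h₁ : ∀ p ∈ L₁, ∀ q ∈ L₁, p ≠ q → Disjoint (s p) (s q))
    (h₂ : ∀ p ∈ L₂, ∀ q ∈ L₂, p ≠ q → Disjoint (s p) (s q))
    (h₃ : ∀ p ∈ L₃, ∀ q ∈ L₃, p ≠ q → Disjoint (s p) (s q)) :
    tri (⋃ p ∈ L₁, s p) (⋃ p ∈ L₂, s p) (⋃ p ∈ L₃, s p)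
      = ∑ p ∈ L₁, ∑ q ∈ L₂, ∑ r ∈ L₃, tri (s p) (s q) (s r) := by
  have f2 := fm_biUnion L₂ s fun p _ => hs p
  have f3 := fm_biUnion L₃ s fun p _ => hs p
  rw [add_biUnion (fun X => tri X (⋃ p ∈ L₂, s p) (⋃ p ∈ L₃, s p)) (tri_empty_left _ _)
    (fun A A' hA hA' hd => tri_union_left hA hA' f2 f3.1 hd) L₁ s (fun p _ => hs p) h₁]
  refine sum_congr rfl fun p _ => ?_
  rw [add_biUnion (fun X => tri (s p) X (⋃ p ∈ L₃, s p)) (tri_empty_mid _ _)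
    (fun A A' hA hA' hd => tri_union_mid hA hA' (hs p) f3.1 hd) L₂ s (fun p _ => hs p) h₂]
  refine sum_congr rfl fun q _ => ?_
  rw [add_biUnion (fun X => tri (s p) (s q) X) (tri_empty_right _ _)
    (fun A A' hA hA' hd => tri_union_right hA hA' (hs q) (hs p).1 hd) L₃ s (fun p _ => hs p) h₃]

end sums

end

section
/-! ### Sliding intervals towards the origin -/

/-- The interval obtained from `p` by scaling its centre by `t`. -/
def sl (t : ℝ) (p : ℝ × ℝ) : ℝ × ℝ := (t * p.1, p.2)

/-- Union of a finite family of intervals whose centres have been scaled by `t`. -/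
def Us (t : ℝ) (L : Finset (ℝ × ℝ)) : Set ℝ := ⋃ p ∈ L, Iv (sl t p)

/-- The intervals of `L`, with centres scaled by `t`, do not overlap. -/
def Val (t : ℝ) (L : Finset (ℝ × ℝ)) : Prop :=
  (∀ p ∈ L, 0 < p.2) ∧ ∀ p ∈ L, ∀ q ∈ L, p ≠ q → p.2 + q.2 ≤ t * |p.1 - q.1|

lemma disj_Iv {p q : ℝ × ℝ} (h : p.2 + q.2 ≤ |p.1 - q.1|) : Disjoint (Iv p) (Iv q) := by
  rw [Set.disjoint_left]
  rintro x ⟨h1, h2⟩ ⟨h3, h4⟩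
  rcases abs_cases (p.1 - q.1) with ⟨h5, _⟩ | ⟨h5, _⟩ <;> linarith

lemma Val.disj {t : ℝ} (ht : 0 ≤ t) {L : Finset (ℝ × ℝ)} (h : Val t L) :
    ∀ p ∈ L, ∀ q ∈ L, p ≠ q → Disjoint (Iv (sl t p)) (Iv (sl t q)) := by
  intro p hp q hq hpq
  apply disj_Iv
  simp only [sl]
  rw [← mul_sub, abs_mul, abs_of_nonneg ht]
  exact h.2 p hp q hq hpq

lemma fm_Us (t : ℝ) (L : Finset (ℝ × ℝ)) : Fm (Us t L) := fm_biUnion L _ fun p _ => fm_Iv _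

lemma real_Us {t : ℝ} (ht : 0 ≤ t) {L : Finset (ℝ × ℝ)} (h : Val t L) :
    vol (Us t L) = ∑ p ∈ L, 2 * p.2 := by
  unfold Us
  rw [add_biUnion (fun X => vol X) (by simp) (fun A A' hA hA' hd =>
    measureReal_union hd hA'.1 hA.2 hA'.2) L _ (fun p _ => fm_Iv _) (h.disj ht)]
  exact sum_congr rfl fun p hp => real_Iv (h.1 p hp).le

lemma tri_Us_mono {t t' : ℝ} (ht' : 0 ≤ t') (h : t' ≤ t) {L₁ L₂ L₃ : Finset (ℝ × ℝ)}
    (h₁ : Val t' L₁) (h₂ : Val t' L₂) (h₃ : Val t' L₃) :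
    tri (Us t L₁) (Us t L₂) (Us t L₃) ≤ tri (Us t' L₁) (Us t' L₂) (Us t' L₃) := by
  have up : ∀ {L}, Val t' L → Val t L := fun {L} hL => ⟨hL.1, fun p hp q hq hpq =>
    (hL.2 p hp q hq hpq).trans (by gcongr)⟩
  unfold Us
  rw [tri_biUnion L₁ L₂ L₃ (fun p => Iv (sl t p)) (fun p => fm_Iv _) ((up h₁).disj (ht'.trans h))
    ((up h₂).disj (ht'.trans h)) ((up h₃).disj (ht'.trans h)),
    tri_biUnion L₁ L₂ L₃ (fun p => Iv (sl t' p)) (fun p => fm_Iv _) (h₁.disj ht')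
    (h₂.disj ht') (h₃.disj ht')]
  refine sum_le_sum fun p hp => sum_le_sum fun q hq => sum_le_sum fun r hr => ?_
  rw [tri_Iv _ _ (sl t r) (h₃.1 r hr).le, tri_Iv _ _ (sl t' r) (h₃.1 r hr).le]
  apply Gf_anti (h₃.1 r hr).le
  simp only [sl, ← mul_sub, abs_mul, abs_of_nonneg ht', abs_of_nonneg (ht'.trans h)]
  gcongr

lemma symmDiff_Iv (p q : ℝ × ℝ) (h : p.2 = q.2) :
    vol ((Iv p) ∆ (Iv q)) ≤ 4 * |p.1 - q.1| := by
  have hsub : (Iv p) ∆ (Iv q) ⊆ Icc (p.1 - p.2 - |p.1 - q.1|) (p.1 - p.2 + |p.1 - q.1|) ∪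
      Icc (p.1 + p.2 - |p.1 - q.1|) (p.1 + p.2 + |p.1 - q.1|) := by
    intro x hx
    have := hx
    simp only [Set.mem_symmDiff, Iv, mem_Ico, not_and, not_lt, mem_union, mem_Icc] at *
    rcases abs_cases (p.1 - q.1) with ⟨h5, _⟩ | ⟨h5, _⟩ <;> rw [h5] <;> grind
  have h0 := abs_nonneg (p.1 - q.1)
  refine (measureReal_mono hsub (by
    exact (measure_union_lt_top (by simp) (by simp)).ne)).trans ?_
  refine (measureReal_union_le _ _).trans ?_
  rw [volume_real_Icc_of_le (by linarith), volume_real_Icc_of_le (by linarith)]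
  linarith

lemma symmDiff_biUnion {α : Type*} (L : Finset α) (s s' : α → Set ℝ) (hs : ∀ p, Fm (s p))
    (hs' : ∀ p, Fm (s' p)) :
    vol ((⋃ p ∈ L, s p) ∆ (⋃ p ∈ L, s' p))
      ≤ ∑ p ∈ L, vol ((s p) ∆ (s' p)) := by
  refine (measureReal_mono (?_ : _ ⊆ ⋃ p ∈ L, (s p) ∆ (s' p)) ?_).trans
    (measureReal_biUnion_finset_le _ _)
  · intro x hx
    simp only [Set.mem_symmDiff, mem_iUnion, not_exists] at *
    rcases hx with ⟨⟨p, hp, h⟩, h2⟩ | ⟨⟨p, hp, h⟩, h2⟩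
    · exact ⟨p, hp, Or.inl ⟨h, h2 p hp⟩⟩
    · exact ⟨p, hp, Or.inr ⟨h, h2 p hp⟩⟩
  · exact (fm_biUnion L _ fun p _ => (hs p).symmDiff (hs' p)).2

lemma near_Us (t t' : ℝ) (L : Finset (ℝ × ℝ)) :
    vol ((Us t L) ∆ (Us t' L)) ≤ |t - t'| * ∑ p ∈ L, 4 * |p.1| := by
  refine (symmDiff_biUnion L _ _ (fun p => fm_Iv _) fun p => fm_Iv _).trans ?_
  rw [mul_sum]
  refine sum_le_sum fun p _ => (symmDiff_Iv (sl t p) (sl t' p) rfl).trans (le_of_eq ?_)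
  simp only [sl, ← sub_mul, abs_mul]; ring

/-- One small step of the flow, for a finite family of subsets of the line. -/
structure Step1 {ι : Type*} (η : ℝ) (S S' : ι → Set ℝ) : Prop where
  fm : ∀ i, Fm (S' i)
  near : ∀ i, vol ((S i) ∆ (S' i)) ≤ η
  vol_eq : ∀ i, vol (S' i) = vol (S i)
  mono : ∀ i j k, tri (S i) (S j) (S k) ≤ tri (S' i) (S' j) (S' k)

section chain
variable {ι : Type*} [Fintype ι]

lemma Val.mono {t t' : ℝ} {L : Finset (ℝ × ℝ)} (h : t' ≤ t) (hL : Val t' L) : Val t L :=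
  ⟨hL.1, fun p hp q hq hpq => (hL.2 p hp q hq hpq).trans (by gcongr)⟩

lemma slide {η : ℝ} (hη : 0 < η) (L : ι → Finset (ℝ × ℝ)) {t : ℝ} (ht : 0 ≤ t) (ht1 : t ≤ 1)
    (hL : ∀ i, Val t (L i)) :
    Relation.ReflTransGen (Step1 η) (fun i => Us 1 (L i)) (fun i => Us t (L i)) := by
  set K : ℝ := ∑ i, ∑ p ∈ L i, 4 * |p.1| with hK
  have hKi : ∀ i, ∑ p ∈ L i, 4 * |p.1| ≤ K := fun i =>
    Finset.single_le_sum (f := fun i => ∑ p ∈ L i, 4 * |p.1|)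
      (fun i _ => sum_nonneg fun p _ => by positivity) (Finset.mem_univ i)
  have hK0 : 0 ≤ K := sum_nonneg fun i _ => sum_nonneg fun p _ => by positivity
  obtain ⟨N, hN⟩ := exists_nat_gt ((1 - t) * K / η)
  have hN0 : (0 : ℝ) < N + 1 := by positivity
  have key : ∀ k : ℕ, k ≤ N + 1 → Relation.ReflTransGen (Step1 η) (fun i => Us 1 (L i))
      (fun i => Us (1 - (1 - t) * (k / (N + 1 : ℝ))) (L i)) := by
    intro k
    induction k with
    | zero => intro _; simp; exact Relation.ReflTransGen.refl
    | succ k ih =>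
      intro hk
      refine (ih (by omega)).tail ?_
      have hk' : ((k + 1 : ℕ) : ℝ) / (N + 1) ≤ 1 := by
        rw [div_le_one hN0]; exact_mod_cast hk
      have hstep : ((k + 1 : ℕ) : ℝ) / (N + 1) = k / (N + 1 : ℝ) + 1 / (N + 1) := by
        push_cast; ring
      have hpos : (0 : ℝ) < 1 / (N + 1) := by positivity
      have hle : t ≤ 1 - (1 - t) * (((k + 1 : ℕ) : ℝ) / (N + 1)) := by
        nlinarith
      have hle2 : 1 - (1 - t) * (((k + 1 : ℕ) : ℝ) / (N + 1)) ≤ 1 - (1 - t) * (k / (N + 1 : ℝ)) := by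
        rw [hstep]; nlinarith
      refine ⟨fun i => fm_Us _ _, fun i => ?_, fun i => ?_, fun i j k => ?_⟩
      · refine (near_Us _ _ _).trans ?_
        have e : (1 - (1 - t) * (k / (N + 1 : ℝ))) - (1 - (1 - t) * (((k + 1 : ℕ) : ℝ) / (N + 1)))
          = (1 - t) / (N + 1) := by rw [hstep]; ring
        rw [e, abs_of_nonneg (div_nonneg (by linarith) hN0.le)]
        calc (1 - t) / (N + 1) * ∑ p ∈ L i, 4 * |p.1| ≤ (1 - t) / (N + 1) * K := by
              have : 0 ≤ (1 - t) / (N + 1 : ℝ) := div_nonneg (by linarith) hN0.le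
              gcongr; exact hKi i
          _ = ((1 - t) * K) / (N + 1) := by ring
          _ ≤ η := by
              rw [div_le_iff₀ hN0]
              rw [div_lt_iff₀ hη] at hN
              nlinarith
      · rw [real_Us (ht.trans hle) ((hL i).mono hle),
          real_Us (ht.trans (hle.trans hle2)) ((hL i).mono (hle.trans hle2))]
      · exact tri_Us_mono (ht.trans hle) hle2 ((hL i).mono hle) ((hL j).mono hle) ((hL k).mono hle)
  have := key (N + 1) le_rfl
  have e : (1 - (1 - t) * (((N + 1 : ℕ) : ℝ) / (N + 1 : ℝ))) = t := by
    push_cast; rw [div_self hN0.ne']; ring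
  rwa [e] at this

/-- When two intervals of a non-overlapping family touch, they can be merged into one. -/
lemma merge {t : ℝ} (ht : 0 < t) {L : Finset (ℝ × ℝ)} (hL : Val t L) {p q : ℝ × ℝ} (hp : p ∈ L)
    (hq : q ∈ L) (hpq : p ≠ q) (h : p.2 + q.2 = t * |p.1 - q.1|) :
    ∃ L' : Finset (ℝ × ℝ), L'.card < L.card ∧ Val 1 L' ∧ Us 1 L' = Us t L := by
  classical
  wlog hlt : p.1 ≤ q.1 generalizing p q
  · exact this hq hp hpq.symm (by rw [add_comm, h, abs_sub_comm]) (by linarith)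
  have hp2 := hL.1 p hp
  have hq2 := hL.1 q hq
  rw [abs_of_nonpos (by linarith)] at h
  set M : Finset (ℝ × ℝ) := ((L.erase p).erase q).image (sl t) with hM
  set n : ℝ × ℝ := ((t * p.1 - p.2 + (t * q.1 + q.2)) / 2, p.2 + q.2) with hn
  refine ⟨insert n M, ?_, ⟨?_, ?_⟩, ?_⟩
  · have h1 : M.card ≤ _ := Finset.card_image_le
    have h2 : ((L.erase p).erase q).card = L.card - 1 - 1 := by
      rw [Finset.card_erase_of_mem (by simp [hq, hpq.symm]), Finset.card_erase_of_mem hp]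
    have h3 : 1 < L.card := Finset.one_lt_card.2 ⟨p, hp, q, hq, hpq⟩
    have h4 := Finset.card_insert_le n M
    omega
  · intro r hr
    rcases Finset.mem_insert.1 hr with rfl | hr
    · simp only [hn]; linarith
    · obtain ⟨r', hr', rfl⟩ := Finset.mem_image.1 hr
      exact hL.1 r' (mem_of_mem_erase (mem_of_mem_erase hr'))
  · have key : ∀ r ∈ M, n.2 + r.2 ≤ |n.1 - r.1| := by
      intro r hr
      obtain ⟨r', hr', rfl⟩ := Finset.mem_image.1 hr
      simp only [Finset.mem_erase] at hr'
      obtain ⟨hrq, hrp, hrL⟩ := hr'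
      have a0 := hL.1 r' hrL
      have a1 := hL.2 p hp r' hrL (Ne.symm hrp)
      have a2 := hL.2 q hq r' hrL (Ne.symm hrq)
      simp only [hn, sl]
      rcases abs_cases (p.1 - r'.1) with ⟨b1, b1'⟩ | ⟨b1, b1'⟩ <;>
      rcases abs_cases (q.1 - r'.1) with ⟨b2, b2'⟩ | ⟨b2, b2'⟩ <;> rw [b1] at a1 <;> rw [b2] at a2
      · rw [le_abs]; left; linarith
      · linarith
      · exfalso; linarith
      · rw [le_abs]; right; linarith
    intro r hr s hs hrs
    rw [one_mul]
    rcases Finset.mem_insert.1 hr with rfl | hr <;> rcases Finset.mem_insert.1 hs with rfl | hs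
    · exact absurd rfl hrs
    · exact key s hs
    · rw [abs_sub_comm, add_comm]; exact key r hr
    · obtain ⟨r', hr', rfl⟩ := Finset.mem_image.1 hr
      obtain ⟨s', hs', rfl⟩ := Finset.mem_image.1 hs
      have := hL.2 r' (mem_of_mem_erase (mem_of_mem_erase hr')) s'
        (mem_of_mem_erase (mem_of_mem_erase hs')) (by rintro rfl; exact hrs rfl)
      simp only [sl]
      rwa [← mul_sub, abs_mul, abs_of_pos ht]
  · have e1 : ∀ r, sl 1 r = r := fun r => by simp [sl]
    have e2 : Iv n = Iv (sl t p) ∪ Iv (sl t q) := by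
      simp only [Iv, hn, sl]
      have : t * q.1 - q.2 = t * p.1 + p.2 := by linarith
      rw [this, Ico_union_Ico_eq_Ico (by linarith) (by linarith)]
      congr 1 <;> linarith
    unfold Us
    rw [set_biUnion_insert]
    simp only [e1]
    rw [e2, hM, set_biUnion_finset_image]
    ext x
    simp only [mem_union, mem_iUnion, Finset.mem_erase, exists_prop]
    constructor
    · rintro ((h | h) | ⟨r, ⟨_, _, hr⟩, h⟩)
      exacts [⟨p, hp, h⟩, ⟨q, hq, h⟩, ⟨r, hr, h⟩]
    · rintro ⟨r, hr, hx⟩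
      by_cases h1 : r = p
      · exact Or.inl (Or.inl (h1 ▸ hx))
      by_cases h2 : r = q
      · exact Or.inl (Or.inr (h2 ▸ hx))
      exact Or.inr ⟨r, ⟨h2, h1, hr⟩, hx⟩

/-- Every finite family of finite unions of intervals flows, by small steps along which all
trilinear forms increase, to the family of centred intervals of the same lengths. -/
theorem chain1 {η : ℝ} (hη : 0 < η) (L : ι → Finset (ℝ × ℝ)) (hL : ∀ i, Val 1 (L i)) :
    Relation.ReflTransGen (Step1 η) (fun i => Us 1 (L i))
      (fun i => Iv (0, vol (Us 1 (L i)) / 2)) := by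
  classical
  induction hn : ∑ i, (L i).card using Nat.strong_induction_on generalizing L with
  | _ n ih =>
  by_cases hex : ∃ i, ∃ p ∈ L i, ∃ q ∈ L i, p ≠ q
  · -- slide until the first collision, then merge
    set S : Set (ι × (ℝ × ℝ) × (ℝ × ℝ)) :=
      {x | x.2.1 ∈ L x.1 ∧ x.2.2 ∈ L x.1 ∧ x.2.1 ≠ x.2.2} with hS
    have hfin : S.Finite := by
      have : S ⊆ ↑((Finset.univ : Finset ι) ×ˢ (Finset.univ.biUnion L) ×ˢ (Finset.univ.biUnion L)) := by
        rintro ⟨i, p, q⟩ ⟨h1, h2, _⟩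
        simp only [Finset.coe_product, mem_prod, Finset.mem_coe, Finset.mem_univ, Finset.mem_biUnion,
          true_and]
        exact ⟨⟨i, h1⟩, ⟨i, h2⟩⟩
      exact (Finset.finite_toSet _).subset this
    obtain ⟨i0, p0, hp0, q0, hq0, hpq0⟩ := hex
    obtain ⟨⟨i, p, q⟩, ⟨hp, hq, hpq⟩, hmax⟩ := Set.exists_max_image S
      (fun x => (x.2.1.2 + x.2.2.2) / |x.2.1.1 - x.2.2.1|) hfin ⟨(i0, p0, q0), hp0, hq0, hpq0⟩
    simp only at hp hq hpq hmax
    have hpos : ∀ i, ∀ p ∈ L i, ∀ q ∈ L i, p ≠ q → 0 < |p.1 - q.1| := by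
      intro i p hp q hq hpq
      have := (hL i).2 p hp q hq hpq
      have h1 := (hL i).1 p hp
      have h2 := (hL i).1 q hq
      linarith
    have h0 := hpos i p hp q hq hpq
    set t := (p.2 + q.2) / |p.1 - q.1| with ht
    have ht0 : 0 < t := div_pos (add_pos ((hL i).1 p hp) ((hL i).1 q hq)) h0
    have ht1 : t ≤ 1 := by
      rw [ht, div_le_one h0]; simpa using (hL i).2 p hp q hq hpq
    have hv : ∀ j, Val t (L j) := by
      intro j
      refine ⟨(hL j).1, fun a ha b hb hab => ?_⟩
      have := hmax (j, a, b) ⟨ha, hb, hab⟩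
      rwa [div_le_iff₀ (hpos j a ha b hb hab)] at this
    have htouch : p.2 + q.2 = t * |p.1 - q.1| := by rw [ht]; field_simp
    have hall : ∀ j, ∃ L' : Finset (ℝ × ℝ), (L'.card ≤ (L j).card ∧ (j = i → L'.card < (L j).card))
        ∧ Val 1 L' ∧ Us 1 L' = Us t (L j) := by
      intro j
      by_cases hj : j = i
      · subst hj
        obtain ⟨L', h1, h2, h3⟩ := merge ht0 (hv j) hp hq hpq htouch
        exact ⟨L', ⟨h1.le, fun _ => h1⟩, h2, h3⟩
      · refine ⟨(L j).image (sl t), ⟨Finset.card_image_le, fun h => absurd h hj⟩, ⟨?_, ?_⟩, ?_⟩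
        · intro r hr
          obtain ⟨r', hr', rfl⟩ := Finset.mem_image.1 hr
          exact (hL j).1 r' hr'
        · intro r hr s hs hrs
          obtain ⟨r', hr', rfl⟩ := Finset.mem_image.1 hr
          obtain ⟨s', hs', rfl⟩ := Finset.mem_image.1 hs
          have := (hv j).2 r' hr' s' hs' (by rintro rfl; exact hrs rfl)
          simp only [sl]
          rwa [← mul_sub, abs_mul, abs_of_pos ht0, one_mul]
        · unfold Us
          rw [set_biUnion_finset_image]
          simp [sl]
    choose L' hc hV hU using hall
    have hlt : ∑ j, (L' j).card < n := by
      rw [← hn]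
      exact Finset.sum_lt_sum (fun j _ => (hc j).1) ⟨i, Finset.mem_univ i, (hc i).2 rfl⟩
    have hfinal := ih _ hlt L' hV rfl
    have hsl := slide hη L ht0.le ht1 hv
    simp only [hU] at hfinal
    have hvol : ∀ j, vol (Us t (L j)) = vol (Us 1 (L j)) := fun j => by
      rw [real_Us ht0.le (hv j), real_Us zero_le_one (hL j)]
    simp only [hvol] at hfinal
    exact hsl.trans hfinal
  · -- at most one interval in each family: slide to the origin
    push Not at hex
    have hv : ∀ j, Val 0 (L j) := fun j => ⟨(hL j).1, fun p hp q hq hpq =>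
      absurd (hex j p hp q hq) hpq⟩
    have hsl := slide hη L le_rfl zero_le_one hv
    convert hsl using 2 with j
    rw [real_Us zero_le_one (hL j)]
    rcases (L j).eq_empty_or_nonempty with he | ⟨p, hp⟩
    · rw [he]; simp [Us, Iv]
    · have : L j = {p} := Finset.eq_singleton_iff_unique_mem.2 ⟨hp, fun q hq => hex j q hq p hp⟩
      rw [this]
      simp [Us, sl]
end chain

end

section
/-! ### Grid approximation of subsets of the line -/

/-- The `k`-th cell of the grid of mesh `1/(j+1)` in `[-n, n)`, as (centre, half-length). -/
def gcell (n j : ℕ) (k : Fin (2 * n * (j + 1))) : ℝ × ℝ :=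
  (-n + (k + 1 / 2) / (j + 1), 1 / (2 * (j + 1)))

/-- A union of cells, as a finite family of intervals. -/
def gfam (n j : ℕ) (s : Finset (Fin (2 * n * (j + 1)))) : Finset (ℝ × ℝ) :=
  open Classical in s.image (gcell n j)

/-- The cells more than half filled by `E`. -/
def gidx (n j : ℕ) (E : Set ℝ) : Finset (Fin (2 * n * (j + 1))) :=
  open Classical in Finset.univ.filter fun k =>
    1 / (2 * (j + 1) : ℝ) < vol (E ∩ Iv (gcell n j k))

lemma gcell_sub (n j : ℕ) (k k' : Fin (2 * n * (j + 1))) (h : k ≠ k') :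
    (gcell n j k).2 + (gcell n j k').2 ≤ |(gcell n j k).1 - (gcell n j k').1| := by
  simp only [gcell]
  have hj : (0 : ℝ) < j + 1 := by positivity
  have e : (-(n : ℝ) + ((k : ℕ) + 1 / 2) / (j + 1) - (-n + ((k' : ℕ) + 1 / 2) / (j + 1)))
      = ((k : ℕ) - (k' : ℕ) : ℝ) / (j + 1) := by ring
  rw [e, abs_div, abs_of_pos hj]
  have h1 : (1 : ℝ) ≤ |((k : ℕ) : ℝ) - (k' : ℕ)| := by
    have : (1 : ℤ) ≤ |((k : ℕ) : ℤ) - (k' : ℕ)| := by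
      apply Int.one_le_abs
      intro h0
      apply h; ext; omega
    exact_mod_cast this
  have e2 : 1 / (2 * ((j : ℝ) + 1)) + 1 / (2 * (j + 1)) = 1 / (j + 1) := by field_simp; norm_num
  rw [e2]; gcongr

lemma val_gfam (n j : ℕ) (s : Finset (Fin (2 * n * (j + 1)))) : Val 1 (gfam n j s) := by
  classical
  refine ⟨fun p hp => ?_, fun p hp q hq hpq => ?_⟩
  · obtain ⟨k, _, rfl⟩ := Finset.mem_image.1 hp
    simp only [gcell]; positivity
  · obtain ⟨k, _, rfl⟩ := Finset.mem_image.1 hp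
    obtain ⟨k', _, rfl⟩ := Finset.mem_image.1 hq
    rw [one_mul]
    exact gcell_sub n j k k' (by rintro rfl; exact hpq rfl)

lemma Us_gfam (n j : ℕ) (s : Finset (Fin (2 * n * (j + 1)))) :
    Us 1 (gfam n j s) = ⋃ k ∈ s, Iv (gcell n j k) := by
  classical
  unfold Us gfam
  rw [set_biUnion_finset_image]
  simp [sl]

/-- The grid approximation of `E`. -/
def gset (n j : ℕ) (E : Set ℝ) : Set ℝ := Us 1 (gfam n j (gidx n j E))

lemma mem_gset {n j : ℕ} {E : Set ℝ} {x : ℝ} {k : Fin (2 * n * (j + 1))}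
    (hx : x ∈ Iv (gcell n j k)) : x ∈ gset n j E ↔ k ∈ gidx n j E := by
  unfold gset
  rw [Us_gfam]
  constructor
  · intro h
    simp only [mem_iUnion] at h
    obtain ⟨k', hk', hx'⟩ := h
    by_cases hkk : k = k'
    · rwa [hkk]
    · exact absurd hx' (Set.disjoint_left.1 (disj_Iv (gcell_sub n j k k' hkk)) hx)
  · intro h; simp only [mem_iUnion]; exact ⟨k, h, hx⟩

lemma exists_cell (n j : ℕ) {x : ℝ} (hx : x ∈ Ico (-n : ℝ) n) :
    ∃ k : Fin (2 * n * (j + 1)), x ∈ Iv (gcell n j k) := by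
  have hj : (0 : ℝ) < j + 1 := by positivity
  have h0 : 0 ≤ (x + n) * (j + 1) := mul_nonneg (by linarith [hx.1]) hj.le
  refine ⟨⟨⌊(x + n) * (j + 1)⌋₊, ?_⟩, ?_⟩
  · rw [Nat.floor_lt h0]
    push_cast
    have := hx.2
    nlinarith
  · have h1 := Nat.floor_le h0
    have h2 := Nat.lt_floor_add_one ((x + n) * (j + 1))
    simp only [Iv, gcell]
    set m : ℝ := (⌊(x + n) * (j + 1)⌋₊ : ℝ)
    have e1 : -(n : ℝ) + (m + 1 / 2) / (j + 1) - 1 / (2 * (j + 1)) = -n + m / (j + 1) := by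
      field_simp; ring
    have e2 : -(n : ℝ) + (m + 1 / 2) / (j + 1) + 1 / (2 * (j + 1)) = -n + (m + 1) / (j + 1) := by
      field_simp; ring
    rw [e1, e2]
    constructor
    · have := (div_le_iff₀ hj).2 h1; linarith
    · have := (lt_div_iff₀ hj).2 h2; linarith

lemma Iv_gcell_sub (n j : ℕ) (k : Fin (2 * n * (j + 1))) : Iv (gcell n j k) ⊆ Ico (-n : ℝ) n := by
  have hj : (0 : ℝ) < j + 1 := by positivity
  intro x hx
  simp only [Iv, gcell, mem_Ico] at hx
  obtain ⟨h1, h2⟩ := hx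
  have e1 : -(n : ℝ) + ((k : ℕ) + 1 / 2) / (j + 1) - 1 / (2 * (j + 1)) = -n + (k : ℕ) / (j + 1) := by
      field_simp; ring
  have e2 : -(n : ℝ) + ((k : ℕ) + 1 / 2) / (j + 1) + 1 / (2 * (j + 1)) = -n + ((k : ℕ) + 1) / (j + 1) := by
      field_simp; ring
  rw [e1] at h1
  rw [e2] at h2
  have h3 : (0 : ℝ) ≤ (k : ℕ) / (j + 1) := by positivity
  have h4 : (((k : ℕ) : ℝ) + 1) / (j + 1) ≤ 2 * n := by
    rw [div_le_iff₀ hj]; exact_mod_cast k.2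
  constructor <;> linarith

lemma gset_sub (n j : ℕ) (E : Set ℝ) : gset n j E ⊆ Ico (-n : ℝ) n := by
  unfold gset
  rw [Us_gfam]
  exact iUnion₂_subset fun k _ => Iv_gcell_sub n j k

lemma fm_gset (n j : ℕ) (E : Set ℝ) : Fm (gset n j E) := fm_Us _ _

lemma ae_density (S : Set ℝ) : ∀ᵐ x ∂(volume.restrict S), ∀ (w : ℕ → ℝ),
    (∀ j, x ∈ Ico (w j - 1 / (2 * (j + 1))) (w j + 1 / (2 * (j + 1)))) →
    ∀ᶠ j : ℕ in atTop, 1 / (2 * (j + 1) : ℝ) < vol (S ∩ Iv (w j, 1 / (2 * (j + 1)))) := by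
  filter_upwards [IsUnifLocDoublingMeasure.ae_tendsto_measure_inter_div (volume : Measure ℝ) S 1]
    with x hx w hw
  have h1 := hx w (fun j : ℕ => 1 / (2 * ((j : ℝ) + 1))) (l := atTop) (by
    rw [tendsto_nhdsWithin_iff]
    constructor
    · have := (tendsto_one_div_add_atTop_nhds_zero_nat (𝕜 := ℝ)).const_mul (1 / 2)
      simp only [mul_zero] at this
      refine this.congr fun j => ?_
      field_simp
    · exact Eventually.of_forall fun j => by simp only [mem_Ioi]; positivity)
    (Eventually.of_forall fun j => by
      rw [one_mul, Real.closedBall_eq_Icc]; exact Ico_subset_Icc_self (hw j))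
  have h2 := h1.eventually (lt_mem_nhds (show (1 / 2 : ℝ≥0∞) < 1 by
    rw [one_div]; exact ENNReal.one_half_lt_one))
  filter_upwards [h2] with j hj
  have hj0 : (0 : ℝ) < 1 / (2 * ((j : ℝ) + 1)) := by positivity
  have hb : volume (closedBall (w j) (1 / (2 * ((j : ℝ) + 1))))
      = ofReal (2 * (1 / (2 * ((j : ℝ) + 1)))) := Real.volume_closedBall _ _
  have hI : (S ∩ Iv (w j, 1 / (2 * (j + 1))) : Set ℝ) =ᵐ[volume]
      (S ∩ closedBall (w j) (1 / (2 * ((j : ℝ) + 1))) : Set ℝ) := by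
    rw [Real.closedBall_eq_Icc]
    exact (ae_eq_refl _).inter Ico_ae_eq_Icc
  rw [measureReal_congr hI, measureReal_def]
  rw [hb, ENNReal.lt_div_iff_mul_lt (Or.inr (by simp)) (Or.inl ofReal_ne_top)] at hj
  have hfin : volume (S ∩ closedBall (w j) (1 / (2 * ((j : ℝ) + 1)))) ≠ ∞ :=
    (measure_lt_top_of_subset inter_subset_right (by rw [hb]; exact ofReal_ne_top)).ne
  have := (ENNReal.toReal_lt_toReal (by
    exact mul_ne_top (by simp) ofReal_ne_top) hfin).2 hj
  rw [toReal_mul, toReal_ofReal (by positivity)] at this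
  simpa using this

lemma tendsto_gset (n : ℕ) {E : Set ℝ} (hE : MeasurableSet E) (hs : E ⊆ Ico (-n : ℝ) n) :
    Tendsto (fun j => vol (E ∆ (gset n j E))) atTop (𝓝 0) := by
  have h1 := ae_density E
  have h2 := ae_density Eᶜ
  rw [ae_restrict_iff' hE] at h1
  rw [ae_restrict_iff' hE.compl] at h2
  have hlim : Tendsto (fun j => ∫⁻ x, (E ∆ (gset n j E)).indicator 1 x ∂volume) atTop
      (𝓝 (∫⁻ x : ℝ, 0)) := by
    refine tendsto_lintegral_of_dominated_convergence ((Ico (-n : ℝ) n).indicator 1)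
      (fun j => meas_ind (hE.symmDiff (fm_gset n j E).1)) (fun j => Eventually.of_forall fun x => ?_)
      (by rw [lintegral_ind measurableSet_Ico]; simp) ?_
    · refine indicator_le_indicator_of_subset ?_ (by simp) x
      exact symmDiff_le_sup.trans (union_subset hs (gset_sub n j E))
    · filter_upwards [h1, h2] with x hx1 hx2
      apply tendsto_const_nhds.congr'
      by_cases hxn : x ∈ Ico (-n : ℝ) n
      · choose k hk using fun j => exists_cell n j hxn
        have hcell : ∀ j, Iv (gcell n j (k j)) = Iv ((gcell n j (k j)).1, 1 / (2 * (j + 1))) :=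
          fun j => rfl
        by_cases hxE : x ∈ E
        · filter_upwards [hx1 hxE (fun j => (gcell n j (k j)).1) (fun j => hk j)] with j hj
          rw [indicator_of_notMem]
          rw [Set.mem_symmDiff]
          have : x ∈ gset n j E := by
            rw [mem_gset (hk j)]
            simp only [gidx, Finset.mem_filter, Finset.mem_univ, true_and]
            exact hj
          tauto
        · filter_upwards [hx2 hxE (fun j => (gcell n j (k j)).1) (fun j => hk j)] with j hj
          rw [indicator_of_notMem]
          rw [Set.mem_symmDiff]
          have : x ∉ gset n j E := by
            rw [mem_gset (hk j)]
            simp only [gidx, Finset.mem_filter, Finset.mem_univ, true_and, not_lt]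
            rw [← hcell] at hj
            have e := measureReal_inter_add_diff (μ := volume) (s := Iv (gcell n j (k j))) hE
              (fm_Iv _).2
            rw [real_Iv (by simp only [gcell]; positivity)] at e
            rw [inter_comm, ← diff_eq] at hj
            rw [inter_comm]
            simp only [gcell] at e hj ⊢
            linarith
          tauto
      · refine Eventually.of_forall fun j => ?_
        dsimp only
        rw [indicator_of_notMem]
        intro h
        exact hxn ((symmDiff_le_sup.trans (union_subset hs (gset_sub n j E))) h)
  simp only [lintegral_zero] at hlim
  have := (tendsto_toReal (a := 0) (by simp)).comp hlim
  refine this.congr fun j => ?_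
  simp only [Function.comp]
  rw [lintegral_ind (hE.symmDiff (fm_gset n j E).1)]; rfl

lemma Step1.chain_mono {ι : Type*} {η : ℝ} {S S' : ι → Set ℝ}
    (h : Relation.ReflTransGen (Step1 η) S S') (i j k : ι) :
    tri (S i) (S j) (S k) ≤ tri (S' i) (S' j) (S' k) := by
  induction h with
  | refl => exact le_rfl
  | tail _ h ih => exact ih.trans (h.mono i j k)

lemma Iv_diff_le (a b : ℝ) :
    vol (Iv (0, a / 2) \ Iv (0, b / 2)) ≤ |a - b| := by
  have hsub : Iv (0, a / 2) \ Iv (0, b / 2) ⊆ Icc (-(a / 2)) (-(b / 2)) ∪ Icc (b / 2) (a / 2) := by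
    intro x hx
    simp only [Iv, mem_diff, mem_Ico, not_and, not_lt, mem_union, mem_Icc] at *
    grind
  refine (measureReal_mono hsub (measure_union_lt_top (by simp) (by simp)).ne).trans ?_
  refine (measureReal_union_le _ _).trans ?_
  rw [Real.volume_real_Icc, Real.volume_real_Icc]
  rcases abs_cases (a - b) with ⟨h, h'⟩ | ⟨h, h'⟩
  · rw [max_eq_left (by linarith), max_eq_left (by linarith)]; linarith
  · rw [max_eq_right (by linarith), max_eq_right (by linarith)]; linarith

lemma abs_real_sub_le {A B : Set G}
    (hA : Fm A) (hB : Fm B) :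
    |vol A - vol B| ≤ vol (A ∆ B) := by
  have h1 := measureReal_mono (μ := volume) (show A ⊆ B ∪ A ∆ B by
    intro x hx; by_cases h : x ∈ B
    · exact Or.inl h
    · exact Or.inr (Or.inl ⟨hx, h⟩)) (hB.union (hA.symmDiff hB)).2
  have h2 := measureReal_mono (μ := volume) (show B ⊆ A ∪ A ∆ B by
    intro x hx; by_cases h : x ∈ A
    · exact Or.inl h
    · exact Or.inr (Or.inr ⟨hx, h⟩)) (hA.union (hA.symmDiff hB)).2
  have h3 := measureReal_union_le (μ := volume) B (A ∆ B)
  have h4 := measureReal_union_le (μ := volume) A (A ∆ B)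
  rw [abs_le]; constructor <;> linarith

lemma real_diff_le {A B : Set G}
    (hA : Fm A) (hB : Fm B) :
    vol (A \ B) ≤ vol (A ∆ B) :=
  measureReal_mono (fun x hx => Or.inl hx) (hA.symmDiff hB).2

/-- The Riesz–Sobolev inequality on the line, for bounded sets. -/
theorem rs1 {E F H : Set ℝ} (hE : MeasurableSet E) (hF : MeasurableSet F) (hH : MeasurableSet H)
    (n : ℕ) (sE : E ⊆ Ico (-n : ℝ) n) (sF : F ⊆ Ico (-n : ℝ) n) (sH : H ⊆ Ico (-n : ℝ) n) :
    tri E F H ≤ tri (Iv (0, vol E / 2)) (Iv (0, vol F / 2))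
      (Iv (0, vol H / 2)) := by
  have fI : Fm (Ico (-n : ℝ) n) := ⟨measurableSet_Ico, by simp⟩
  have fE := fI.mono hE sE
  have fF := fI.mono hF sF
  have fH := fI.mono hH sH
  set I : Set ℝ → Set ℝ := fun X => Iv (0, vol X / 2) with hI
  have hIv : ∀ X, vol (I X) = vol X := fun X => by
    rw [hI, real_Iv (by have := vol_nonneg (s := X); simp only; linarith)]
    simp only; ring
  set M : ℝ := vol (Ico (-n : ℝ) n)
  have hM : ∀ X, X ⊆ Ico (-n : ℝ) n → vol X ≤ M := fun X h => measureReal_mono h fI.2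
  set e : Set ℝ → ℕ → ℝ := fun X j => vol (X ∆ (gset n j X)) with he
  have hM0 : 0 ≤ M := vol_nonneg
  have he0 : ∀ X j, 0 ≤ e X j := fun X j => vol_nonneg
  have key : ∀ j, tri E F H ≤ tri (I E) (I F) (I H)
      + 2 * M * (e E j + e F j + e H j) := by
    intro j
    have c := Step1.chain_mono (chain1 one_pos (gfam n j) (val_gfam n j)) (gidx n j E) (gidx n j F)
      (gidx n j H)
    change tri (gset n j E) (gset n j F) (gset n j H) ≤
      tri (I (gset n j E)) (I (gset n j F)) (I (gset n j H)) at c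
    have gE := fm_gset n j E
    have gF := fm_gset n j F
    have gH := fm_gset n j H
    have b1 := tri_lip_left fE gE fF fH.1
    have b2 := tri_lip_mid fF gF gE fH.1
    have b3 := tri_lip_right fH gH gF gE.1
    have iE := fun X : Set ℝ => fm_Iv (0, vol X / 2)
    have c1 := tri_lip_left (iE (gset n j E)) (iE E) (iE (gset n j F)) (iE (gset n j H)).1
    have c2 := tri_lip_mid (iE (gset n j F)) (iE F) (iE E) (iE (gset n j H)).1
    have c3 := tri_lip_right (iE (gset n j H)) (iE H) (iE F) (iE E).1
    have d : ∀ X, Fm X → vol (I (gset n j X) \ I X) ≤ e X j := fun X hX => by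
      refine (Iv_diff_le _ _).trans ?_
      rw [abs_sub_comm]
      exact abs_real_sub_le hX (fm_gset n j X)
    have d' : ∀ X, Fm X → vol (X \ gset n j X) ≤ e X j := fun X hX =>
      real_diff_le hX (fm_gset n j X)
    have q : ∀ (a b c : ℝ), a ≤ b → c ≤ M → 0 ≤ b → 0 ≤ c → a * c ≤ b * M := fun a b c h1 h2 h3 h4 =>
      mul_le_mul h1 h2 h4 h3
    have q1 := q _ _ _ (d' E fE) (hM F sF) (he0 E j) vol_nonneg
    have q2 := q _ _ _ (d' F fF) (hM _ (gset_sub n j E)) (he0 F j) vol_nonneg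
    have q3 := q _ _ _ (d' H fH) (hM _ (gset_sub n j F)) (he0 H j) vol_nonneg
    have q4 := q _ _ _ (d E fE) ((hIv _).le.trans (hM _ (gset_sub n j F))) (he0 E j) vol_nonneg
    have q5 := q _ _ _ (d F fF) ((hIv _).le.trans (hM _ sE)) (he0 F j) vol_nonneg
    have q6 := q _ _ _ (d H fH) ((hIv _).le.trans (hM _ sF)) (he0 H j) vol_nonneg
    simp only [hI] at *
    linarith
  have hlim : Tendsto (fun j => tri (I E) (I F) (I H) + 2 * M * (e E j + e F j + e H j)) atTop
      (𝓝 (tri (I E) (I F) (I H) + 2 * M * (0 + 0 + 0))) :=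
    (((tendsto_gset n hE sE).add (tendsto_gset n hF sF)).add (tendsto_gset n hH sH)).const_mul _
      |>.const_add _
  have := ge_of_tendsto' hlim key
  simpa using this

end

section
/-! ### Quantitative one-dimensional Riesz–Sobolev for sets trapped near intervals -/

/-- Moving the mass of `D` to `D'` raises the integral of `K` quadratically, if `K` is at most `k`
on `D \ D'` and exceeds `k` on `D' \ D` by an amount `g` with linearly small sublevel sets. -/
lemma move_gain {D D' : Set ℝ} (hD : Fm D) (hD' : Fm D') (hv : vol D = vol D')
    {K g : ℝ → ℝ} (hK : Integrable K) {k : ℝ} (hF : ∀ x ∈ D \ D', K x ≤ k)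
    (hN : ∀ x ∈ D' \ D, K x = k + g x) (hg0 : ∀ x ∈ D' \ D, 0 ≤ g x)
    (hg : ∀ ε : ℝ, 0 ≤ ε → ∃ S : Set ℝ, Fm S ∧ vol S ≤ ε ∧ ∀ x ∈ D' \ D, g x < ε → x ∈ S) :
    (∫ x in D, K x) + vol (D ∆ D') ^ 2 / 16 ≤ ∫ x in D', K x := by
  set N := D' \ D with hNd
  set F := D \ D' with hFd
  have fN : Fm N := hD'.diff hD.1
  have fF : Fm F := hD.diff hD'.1
  have e1 : ∫ x in D, K x = (∫ x in D ∩ D', K x) + ∫ x in F, K x :=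
    (integral_inter_add_diff hD'.1 hK.integrableOn).symm
  have e2 : ∫ x in D', K x = (∫ x in D' ∩ D, K x) + ∫ x in N, K x :=
    (integral_inter_add_diff hD.1 hK.integrableOn).symm
  rw [inter_comm] at e2
  have m1 : vol D = vol (D ∩ D') + vol F :=
    (measureReal_inter_add_diff hD'.1 hD.2).symm
  have m2 : vol D' = vol (D' ∩ D) + vol N :=
    (measureReal_inter_add_diff hD.1 hD'.2).symm
  rw [inter_comm] at m2
  have hn : vol F = vol N := by linarith
  have ms : vol (D ∆ D') = 2 * vol N := by
    rw [Set.symmDiff_def, measureReal_union (disjoint_sdiff_sdiff) fN.1 fF.2 fN.2]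
    linarith
  set n := vol N with hn'
  have hn0 : 0 ≤ n := vol_nonneg
  have i1 : ∫ x in F, K x ≤ n * k := by
    calc ∫ x in F, K x ≤ ∫ x in F, k := setIntegral_mono_on hK.integrableOn
          (integrableOn_const fF.2) fF.1 hF
      _ = n * k := by rw [setIntegral_const, hn]; simp
  obtain ⟨S, fS, hS, hSN⟩ := hg (n / 2) (by linarith)
  have i2 : n * k + n / 2 * (n / 2) ≤ ∫ x in N, K x := by
    have j1 : n / 2 ≤ vol (N \ S) := by
      have := measureReal_inter_add_diff (μ := volume) (s := N) fS.1 fN.2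
      have h2 : vol (N ∩ S) ≤ vol S :=
        measureReal_mono inter_subset_right fS.2
      linarith
    have j2 : ∫ x in N, K x = (∫ x in N ∩ S, K x) + ∫ x in N \ S, K x :=
      (integral_inter_add_diff fS.1 hK.integrableOn).symm
    have j3 : vol (N ∩ S) * k ≤ ∫ x in N ∩ S, K x := by
      calc vol (N ∩ S) * k = ∫ x in N ∩ S, k := by rw [setIntegral_const]; simp
        _ ≤ _ := setIntegral_mono_on (integrableOn_const (fN.inter fS.1).2) hK.integrableOn
            (fN.inter fS.1).1 (fun x hx => by rw [hN x hx.1]; linarith [hg0 x hx.1])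
    have j4 : vol (N \ S) * (k + n / 2) ≤ ∫ x in N \ S, K x := by
      calc vol (N \ S) * (k + n / 2) = ∫ x in N \ S, (k + n / 2) := by
            rw [setIntegral_const]; simp
        _ ≤ _ := setIntegral_mono_on (integrableOn_const (fN.diff fS.1).2) hK.integrableOn
            (fN.diff fS.1).1 (fun x hx => by
              rw [hN x hx.1]
              have : ¬ g x < n / 2 := fun h => hx.2 (hSN x hx.1 h)
              linarith)
    have j5 := measureReal_inter_add_diff (μ := volume) (s := N) fS.1 fN.2
    rw [j2]
    have j6 : n * k = vol (N ∩ S) * k + vol (N \ S) * k := by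
      rw [← add_mul, j5]
    nlinarith [mul_le_mul_of_nonneg_right j1 (by linarith : 0 ≤ n / 2)]
  rw [e1, e2, ms]
  nlinarith

/-- `A` lies between the centred intervals of half-lengths `a - θ` and `a + θ`. -/
def Trap (a θ : ℝ) (A : Set ℝ) : Prop :=
  Ioo (-(a - θ)) (a - θ) ⊆ A ∧ A ⊆ Icc (-(a + θ)) (a + θ)

/-- Mass of `A` on the nonnegative half-line. -/
def mp (A : Set ℝ) : ℝ := vol (A ∩ Ici 0)
/-- Mass of `A` on the negative half-line. -/
def mm (A : Set ℝ) : ℝ := vol (A ∩ Iio 0)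
/-- The centre of the interval `[-|A ∩ (-∞,0)|, |A ∩ [0,∞)|)`. -/
def ctr (A : Set ℝ) : ℝ := (mp A - mm A) / 2
/-- The interval obtained by pushing both halves of `A` towards the origin. -/
def It (A : Set ℝ) : Set ℝ := Iv (ctr A, vol A / 2)

lemma mp_add_mm {A : Set ℝ} (hA : Fm A) : mp A + mm A = vol A := by
  have := measureReal_inter_add_diff (μ := volume) (s := A) (measurableSet_Ici (a := (0:ℝ))) hA.2
  rw [← this]; unfold mp mm; congr 2; ext x; simp

lemma It_eq {A : Set ℝ} (hA : Fm A) : It A = Ico (-mm A) (mp A) := by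
  unfold It Iv ctr
  rw [← mp_add_mm hA]; congr 1 <;> ring

lemma fm_It (A : Set ℝ) : Fm (It A) := fm_Iv _

lemma real_It {A : Set ℝ} : vol (It A) = vol A := by
  unfold It; rw [real_Iv (by positivity)]; simp; ring

lemma mp_nonneg (A : Set ℝ) : 0 ≤ mp A := vol_nonneg
lemma mm_nonneg (A : Set ℝ) : 0 ≤ mm A := vol_nonneg

lemma Trap.bd {a θ : ℝ} {A : Set ℝ} (h : Trap a θ A) (hA : Fm A) (h0 : 0 ≤ a - θ) (ht : 0 ≤ θ) :
    (a - θ ≤ mp A ∧ mp A ≤ a + θ) ∧ (a - θ ≤ mm A ∧ mm A ≤ a + θ) := by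
  refine ⟨⟨?_, ?_⟩, ?_, ?_⟩
  · have : vol (Ico 0 (a - θ)) ≤ mp A := measureReal_mono
      (fun x hx => ⟨h.1 ⟨by
        rcases hx.1.eq_or_lt with h' | h'
        · rw [← h']; have := hx.2; rw [← h'] at this; linarith
        · linarith, hx.2⟩, hx.1⟩) (hA.inter measurableSet_Ici).2
    rwa [volume_real_Ico_of_le h0, sub_zero] at this
  · have : mp A ≤ vol (Icc 0 (a + θ)) := measureReal_mono
      (fun x hx => ⟨hx.2, (h.2 hx.1).2⟩) (by simp)
    rwa [volume_real_Icc_of_le (by linarith), sub_zero] at this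
  · have : vol (Ioo (-(a - θ)) 0) ≤ mm A := measureReal_mono
      (fun x hx => ⟨h.1 ⟨hx.1, by have := hx.2; linarith⟩, hx.2⟩) (hA.inter measurableSet_Iio).2
    rwa [Real.volume_real_Ioo_of_le (by linarith), zero_sub, neg_neg] at this
  · have : mm A ≤ vol (Icc (-(a + θ)) 0) := measureReal_mono
      (fun x hx => ⟨(h.2 hx.1).1, hx.2.le⟩) (by simp)
    rwa [volume_real_Icc_of_le (by linarith), zero_sub, neg_neg] at this

lemma Trap.It {a θ : ℝ} {A : Set ℝ} (h : Trap a θ A) (hA : Fm A) (h0 : 0 ≤ a - θ) (ht : 0 ≤ θ) :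
    Trap a θ (It A) := by
  obtain ⟨⟨h1, h2⟩, h3, h4⟩ := h.bd hA h0 ht
  rw [It_eq hA]
  exact ⟨fun x hx => ⟨by linarith [hx.1], by linarith [hx.2]⟩,
    fun x hx => ⟨by linarith [hx.1], by linarith [hx.2]⟩⟩

lemma Trap.neg {a θ : ℝ} {A : Set ℝ} (h : Trap a θ A) : Trap a θ (-A) := by
  refine ⟨fun x hx => ?_, fun x hx => ?_⟩
  · exact h.1 ⟨by linarith [hx.2], by linarith [hx.1]⟩
  · have := h.2 (Set.mem_neg.1 hx); exact ⟨by linarith [this.2], by linarith [this.1]⟩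

lemma mass_Iio {A : Set ℝ} (hA : Fm A) {β q : ℝ} (hc : Ioo (-β) β ⊆ A) (hq : |q| < β) :
    vol (A ∩ Iio q) = mm A + q := by
  rw [abs_lt] at hq
  rcases le_total 0 q with h | h
  · have e : A ∩ Iio q = (A ∩ Iio 0) ∪ Ico 0 q := by
      ext x; simp only [mem_inter_iff, mem_Iio, mem_union, mem_Ico]
      constructor
      · rintro ⟨h1, h2⟩
        by_cases h3 : x < 0
        · exact Or.inl ⟨h1, h3⟩
        · exact Or.inr ⟨not_lt.1 h3, h2⟩
      · rintro (⟨h1, h2⟩ | ⟨h1, h2⟩)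
        · exact ⟨h1, by linarith⟩
        · exact ⟨hc ⟨by linarith, by linarith⟩, h2⟩
    rw [e, measureReal_union _ measurableSet_Ico (hA.inter measurableSet_Iio).2 (by simp),
      volume_real_Ico_of_le h]
    · simp [mm]
    · exact Set.disjoint_left.2 fun x hx hx' => absurd hx.2 (not_lt.2 hx'.1)
  · have e : A ∩ Iio 0 = (A ∩ Iio q) ∪ Ico q 0 := by
      ext x; simp only [mem_inter_iff, mem_Iio, mem_union, mem_Ico]
      constructor
      · rintro ⟨h1, h2⟩
        by_cases h3 : x < q
        · exact Or.inl ⟨h1, h3⟩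
        · exact Or.inr ⟨not_lt.1 h3, h2⟩
      · rintro (⟨h1, h2⟩ | ⟨h1, h2⟩)
        · exact ⟨h1, by linarith⟩
        · exact ⟨hc ⟨by linarith, by linarith⟩, h2⟩
    have : mm A = vol (A ∩ Iio q) + (0 - q) := by
      unfold mm
      rw [e, measureReal_union _ measurableSet_Ico (hA.inter measurableSet_Iio).2 (by simp),
        volume_real_Ico_of_le h]
      exact Set.disjoint_left.2 fun x hx hx' => absurd hx.2 (not_lt.2 hx'.1)
    linarith

lemma mass_Ici {A : Set ℝ} (hA : Fm A) {β q : ℝ} (hc : Ioo (-β) β ⊆ A) (hq : |q| < β) :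
    vol (A ∩ Ici q) = mp A - q := by
  have h1 := mass_Iio hA hc hq
  have h2 := measureReal_inter_add_diff (μ := volume) (s := A) (measurableSet_Ici (a := q)) hA.2
  have h3 : A \ Ici q = A ∩ Iio q := by ext x; simp
  rw [h3] at h2
  have := mp_add_mm hA
  linarith

section hexA
variable {a b c θ : ℝ} {A B C : Set ℝ}

lemma cv_shift (hB : Fm B) (hC : Fm C) (x q : ℝ) :
    cv C (-B) x = vol ({y | y + x ∈ C} ∩ B ∩ Iio q) +
      vol (C ∩ {z | z - x ∈ B} ∩ Ici (q + x)) := by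
  have e0 : {y | x - y ∈ -B} = {z | z - x ∈ B} := by ext z; simp
  rw [cv_eq_real hC.1 hB.neg.1, e0]
  have hm : Fm (C ∩ {z | z - x ∈ B}) := hC.inter ((measurable_id.sub_const x) hB.1)
  have h2 := measureReal_inter_add_diff (μ := volume) (measurableSet_Ici (a := q + x)) hm.2
  rw [← h2, add_comm]
  congr 1
  have : {y | y + x ∈ C} ∩ B ∩ Iio q = (fun y => y + x) ⁻¹' ((C ∩ {z | z - x ∈ B}) \ Ici (q + x)) := by
    ext y; simp
  rw [this, Measure.real, Measure.real, measure_preimage_add_right]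

lemma K_pos (hB : Fm B) (hC : Fm C) (tB : Trap b θ B) (tC : Trap c θ C) (ht : 0 < θ)
    (h1 : 10 * θ ≤ a + b - c) (h2 : 10 * θ ≤ a + c - b) (h3 : 10 * θ ≤ b + c - a)
    {x : ℝ} (hx : |x - a| ≤ θ) : cv C (-B) x = mm B + mp C - x := by
  rw [abs_le] at hx
  have hq : |c - a| < b - θ := by rw [abs_lt]; constructor <;> linarith
  have hq' : |c - a - 3 * θ| < b - θ := by rw [abs_lt]; constructor <;> linarith
  have hq2 : |c - a - 3 * θ + x| < c - θ := by rw [abs_lt]; constructor <;> linarith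
  rw [cv_shift hB hC x (c - a - 3 * θ)]
  have e1 : {y | y + x ∈ C} ∩ B ∩ Iio (c - a - 3 * θ) = B ∩ Iio (c - a - 3 * θ) := by
    ext y; simp only [mem_inter_iff, mem_setOf_eq, mem_Iio]
    refine ⟨fun h => ⟨h.1.2, h.2⟩, fun h => ⟨⟨tC.1 ⟨?_, ?_⟩, h.1⟩, h.2⟩⟩
    · have := (tB.2 h.1).1; linarith
    · linarith [h.2]
  have e2 : C ∩ {z | z - x ∈ B} ∩ Ici (c - a - 3 * θ + x) = C ∩ Ici (c - a - 3 * θ + x) := by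
    ext z; simp only [mem_inter_iff, mem_setOf_eq, mem_Ici]
    refine ⟨fun h => ⟨h.1.1, h.2⟩, fun h => ⟨⟨h.1, tB.1 ⟨?_, ?_⟩⟩, h.2⟩⟩
    · linarith [h.2]
    · have := (tC.2 h.1).2; linarith
  rw [e1, e2, mass_Iio hB tB.1 hq', mass_Ici hC tC.1 hq2]
  ring

lemma K_neg (hB : Fm B) (hC : Fm C) (tB : Trap b θ B) (tC : Trap c θ C) (ht : 0 < θ)
    (h1 : 10 * θ ≤ a + b - c) (h2 : 10 * θ ≤ a + c - b) (h3 : 10 * θ ≤ b + c - a)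
    {x : ℝ} (hx : |x + a| ≤ θ) : cv C (-B) x = mp B + mm C + x := by
  rw [abs_le] at hx
  have hq' : |a - c + 3 * θ| < b - θ := by rw [abs_lt]; constructor <;> linarith
  have hq2 : |a - c + 3 * θ + x| < c - θ := by rw [abs_lt]; constructor <;> linarith
  have hm : Fm (C ∩ {z | z - x ∈ B}) := hC.inter ((measurable_id.sub_const x) hB.1)
  have e0 : {y | x - y ∈ -B} = {z | z - x ∈ B} := by ext z; simp
  rw [cv_eq_real hC.1 hB.neg.1, e0]
  have k2 := measureReal_inter_add_diff (μ := volume) (measurableSet_Ici (a := a - c + 3 * θ + x)) hm.2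
  have e1 : (C ∩ {z | z - x ∈ B}) \ Ici (a - c + 3 * θ + x) = C ∩ Iio (a - c + 3 * θ + x) := by
    ext z; simp only [mem_diff, mem_inter_iff, mem_setOf_eq, mem_Ici, mem_Iio, not_le]
    refine ⟨fun h => ⟨h.1.1, h.2⟩, fun h => ⟨⟨h.1, tB.1 ⟨?_, ?_⟩⟩, h.2⟩⟩
    · have := (tC.2 h.1).1; linarith
    · linarith [h.2]
  have e2 : vol ((C ∩ {z | z - x ∈ B}) ∩ Ici (a - c + 3 * θ + x))
      = vol (B ∩ Ici (a - c + 3 * θ)) := by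
    have : B ∩ Ici (a - c + 3 * θ) =
        (fun y => y + x) ⁻¹' ((C ∩ {z | z - x ∈ B}) ∩ Ici (a - c + 3 * θ + x)) := by
      ext y; simp only [mem_inter_iff, mem_preimage, mem_setOf_eq, mem_Ici, add_sub_cancel_right,
        add_le_add_iff_right]
      refine ⟨fun h => ⟨⟨tC.1 ⟨?_, ?_⟩, h.1⟩, h.2⟩, fun h => ⟨h.1.2, h.2⟩⟩
      · linarith [h.2]
      · have := (tB.2 h.1).2; linarith
    rw [this, Measure.real, Measure.real, measure_preimage_add_right]
  rw [← k2, e1, e2, mass_Iio hC tC.1 hq2, mass_Ici hB tB.1 hq']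
  ring

lemma hexA (hA : Fm A) (hB : Fm B) (hC : Fm C) (tA : Trap a θ A) (tB : Trap b θ B)
    (tC : Trap c θ C) (ht : 0 < θ)
    (h1 : 10 * θ ≤ a + b - c) (h2 : 10 * θ ≤ a + c - b) (h3 : 10 * θ ≤ b + c - a) :
    tri A B C + vol (A ∆ (It A)) ^ 2 / 32 ≤ tri (It A) B C := by
  obtain ⟨⟨p1, p2⟩, q1, q2⟩ := tA.bd hA (by linarith) ht.le
  have fI := fm_It A
  have tI := tA.It hA (by linarith) ht.le
  rw [tri_rot hA.1 hB.1 hC.1, tri_rot fI.1 hB.1 hC.1, tri_eq_setIntegral hC hB.neg hA.1,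
    tri_eq_setIntegral hC hB.neg fI.1]
  set K := cv C (-B) with hKd
  have hK : Integrable K := integrable_cv hC hB.neg
  have split : ∀ S : Set ℝ, ∫ x in S, K x = (∫ x in S ∩ Ici 0, K x) + ∫ x in S ∩ Iio 0, K x := by
    intro S
    rw [← integral_inter_add_diff (measurableSet_Ici (a := (0:ℝ))) hK.integrableOn]
    congr 3; ext x; simp
  have vIp : It A ∩ Ici 0 = Ico 0 (mp A) := by
    rw [It_eq hA]; ext x; simp only [mem_inter_iff, mem_Ico, mem_Ici]
    exact ⟨fun h => ⟨h.2, h.1.2⟩, fun h => ⟨⟨by linarith [mm_nonneg A, h.1], h.2⟩, h.1⟩⟩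
  have vIm : It A ∩ Iio 0 = Ico (-mm A) 0 := by
    rw [It_eq hA]; ext x; simp only [mem_inter_iff, mem_Ico, mem_Iio]
    exact ⟨fun h => ⟨h.1.1, h.2⟩, fun h => ⟨⟨h.1, by linarith [mp_nonneg A, h.2]⟩, h.2⟩⟩
  -- points where `A` and its rearrangement differ are within `θ` of `±a`
  have near : ∀ x, 0 ≤ x → (x ∈ A ↔ ¬ x ∈ It A) → |x - a| ≤ θ := by
    intro x hx hxx
    by_contra hcon
    have : x < a - θ ∨ a + θ < x := by
      by_contra hh; push Not at hh; exact hcon (abs_le.2 ⟨by linarith [hh.1], by linarith [hh.2]⟩)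
    rcases this with h | h
    · have k : x ∈ Ioo (-(a - θ)) (a - θ) := ⟨by linarith, h⟩
      exact hxx.1 (tA.1 k) (tI.1 k)
    · have k1 : ¬ x ∈ A := fun hh => by linarith [(tA.2 hh).2]
      have k2 : ¬ x ∈ It A := fun hh => by linarith [(tI.2 hh).2]
      exact k1 (hxx.2 k2)
  have near' : ∀ x, x < 0 → (x ∈ A ↔ ¬ x ∈ It A) → |x + a| ≤ θ := by
    intro x hx hxx
    by_contra hcon
    have : -(a - θ) < x ∨ x < -(a + θ) := by
      by_contra hh; push Not at hh; exact hcon (abs_le.2 ⟨by linarith [hh.2], by linarith [hh.1]⟩)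
    rcases this with h | h
    · have k : x ∈ Ioo (-(a - θ)) (a - θ) := ⟨h, by linarith⟩
      exact hxx.1 (tA.1 k) (tI.1 k)
    · have k1 : ¬ x ∈ A := fun hh => by linarith [(tA.2 hh).1]
      have k2 : ¬ x ∈ It A := fun hh => by linarith [(tI.2 hh).1]
      exact k1 (hxx.2 k2)
  have memI : ∀ x, x ∈ It A ↔ -mm A ≤ x ∧ x < mp A := by
    intro x; rw [It_eq hA]; rfl
  have gp : (∫ x in A ∩ Ici 0, K x) + vol ((A ∩ Ici 0) ∆ (It A ∩ Ici 0)) ^ 2 / 16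
      ≤ ∫ x in It A ∩ Ici 0, K x := by
    refine move_gain (k := mm B + mp C - mp A) (g := fun x => mp A - x)
      (hA.inter measurableSet_Ici) (fI.inter measurableSet_Ici) ?_ hK ?_ ?_ ?_ ?_
    · rw [vIp, volume_real_Ico_of_le (mp_nonneg A), sub_zero]; rfl
    · rintro x ⟨⟨hx1, hx2⟩, hx3⟩
      have nI : ¬ x ∈ It A := fun h => hx3 ⟨h, hx2⟩
      rw [hKd, K_pos hB hC tB tC ht h1 h2 h3 (near x hx2 ⟨fun _ => nI, fun _ => hx1⟩)]
      have : mp A ≤ x := by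
        by_contra hh; push Not at hh
        exact nI ((memI x).2 ⟨by linarith [mm_nonneg A, mem_Ici.1 hx2], hh⟩)
      linarith
    · rintro x ⟨⟨hx1, hx2⟩, hx3⟩
      have nA : ¬ x ∈ A := fun h => hx3 ⟨h, hx2⟩
      rw [hKd, K_pos hB hC tB tC ht h1 h2 h3
        (near x hx2 ⟨fun h => absurd h nA, fun h => absurd hx1 h⟩)]
      ring
    · rintro x ⟨⟨hx1, hx2⟩, hx3⟩
      have := ((memI x).1 hx1).2
      linarith
    · intro ε hε
      refine ⟨Ioo (mp A - ε) (mp A), ⟨measurableSet_Ioo, by simp⟩, ?_, ?_⟩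
      · rw [Real.volume_real_Ioo_of_le (by linarith)]; linarith
      · rintro x ⟨⟨hx1, hx2⟩, hx3⟩ hg
        exact ⟨by linarith, ((memI x).1 hx1).2⟩
  have gm : (∫ x in A ∩ Iio 0, K x) + vol ((A ∩ Iio 0) ∆ (It A ∩ Iio 0)) ^ 2 / 16
      ≤ ∫ x in It A ∩ Iio 0, K x := by
    refine move_gain (k := mp B + mm C - mm A) (g := fun x => mm A + x)
      (hA.inter measurableSet_Iio) (fI.inter measurableSet_Iio) ?_ hK ?_ ?_ ?_ ?_
    · rw [vIm, volume_real_Ico_of_le (by linarith [mm_nonneg A]), zero_sub, neg_neg]; rfl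
    · rintro x ⟨⟨hx1, hx2⟩, hx3⟩
      have nI : ¬ x ∈ It A := fun h => hx3 ⟨h, hx2⟩
      rw [hKd, K_neg hB hC tB tC ht h1 h2 h3 (near' x hx2 ⟨fun _ => nI, fun _ => hx1⟩)]
      have : x ≤ -mm A := by
        by_contra hh; push Not at hh
        exact nI ((memI x).2 ⟨hh.le, by linarith [mp_nonneg A, mem_Iio.1 hx2]⟩)
      linarith
    · rintro x ⟨⟨hx1, hx2⟩, hx3⟩
      have nA : ¬ x ∈ A := fun h => hx3 ⟨h, hx2⟩
      rw [hKd, K_neg hB hC tB tC ht h1 h2 h3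
        (near' x hx2 ⟨fun h => absurd h nA, fun h => absurd hx1 h⟩)]
      ring
    · rintro x ⟨⟨hx1, hx2⟩, hx3⟩
      have := ((memI x).1 hx1).1
      linarith
    · intro ε hε
      refine ⟨Ico (-mm A) (-mm A + ε), ⟨measurableSet_Ico, by simp⟩, ?_, ?_⟩
      · rw [volume_real_Ico_of_le (by linarith)]; linarith
      · rintro x ⟨⟨hx1, hx2⟩, hx3⟩ hg
        exact ⟨((memI x).1 hx1).1, by linarith⟩
  have hs : vol (A ∆ (It A)) ≤ vol ((A ∩ Ici 0) ∆ (It A ∩ Ici 0)) +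
      vol ((A ∩ Iio 0) ∆ (It A ∩ Iio 0)) := by
    refine (measureReal_mono ?_ ?_).trans (measureReal_union_le _ _)
    · intro x hx
      rcases le_or_gt 0 x with h | h
      · left; rcases hx with hx | hx
        · exact Or.inl ⟨⟨hx.1, h⟩, fun hh => hx.2 hh.1⟩
        · exact Or.inr ⟨⟨hx.1, h⟩, fun hh => hx.2 hh.1⟩
      · right; rcases hx with hx | hx
        · exact Or.inl ⟨⟨hx.1, h⟩, fun hh => hx.2 hh.1⟩
        · exact Or.inr ⟨⟨hx.1, h⟩, fun hh => hx.2 hh.1⟩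
    · exact (((hA.inter measurableSet_Ici).symmDiff (fI.inter measurableSet_Ici)).union
        ((hA.inter measurableSet_Iio).symmDiff (fI.inter measurableSet_Iio))).2
  rw [split A, split (It A)]
  have s0 : 0 ≤ vol (A ∆ (It A)) := vol_nonneg
  set s1 := vol ((A ∩ Ici 0) ∆ (It A ∩ Ici 0))
  set s2 := vol ((A ∩ Iio 0) ∆ (It A ∩ Iio 0))
  have : vol (A ∆ (It A)) ^ 2 ≤ 2 * s1 ^ 2 + 2 * s2 ^ 2 := by
    have : vol (A ∆ (It A)) ^ 2 ≤ (s1 + s2) ^ 2 := by gcongr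
    nlinarith [sq_nonneg (s1 - s2)]
  linarith

/-- Quantitative one-dimensional Riesz–Sobolev inequality for sets trapped near centred intervals
whose half-lengths form a strict triangle. -/
theorem hex (hA : Fm A) (hB : Fm B) (hC : Fm C) (tA : Trap a θ A) (tB : Trap b θ B)
    (tC : Trap c θ C) (ht : 0 < θ)
    (h1 : 10 * θ ≤ a + b - c) (h2 : 10 * θ ≤ a + c - b) (h3 : 10 * θ ≤ b + c - a) :
    tri A B C + (vol (A ∆ (It A)) ^ 2 + vol (B ∆ (It B)) ^ 2
        + vol (C ∆ (It C)) ^ 2) / 32 + (ctr C - ctr A - ctr B) ^ 2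
      ≤ tri (Iv (0, vol A / 2)) (Iv (0, vol B / 2)) (Iv (0, vol C / 2)) := by
  have gA := hexA hA hB hC tA tB tC ht h1 h2 h3
  have tIA := tA.It hA (by linarith) ht.le
  have gB := hexA hB (fm_It A) hC tB tIA tC ht (by linarith) (by linarith) (by linarith)
  have tIB := tB.It hB (by linarith) ht.le
  have gC := hexA hC (fm_It B).neg (fm_It A) tC tIB.neg tIA ht (by linarith) (by linarith)
    (by linarith)
  rw [tri_comm hB.1 (fm_It A).1 hC.1, tri_comm (fm_It B).1 (fm_It A).1 hC.1] at gB
  rw [← tri_rot (fm_It A).1 (fm_It B).1 hC.1, ← tri_rot (fm_It A).1 (fm_It B).1 (fm_It C).1] at gC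
  have e := tri_Iv (ctr A, vol A / 2) (ctr B, vol B / 2) (ctr C, vol C / 2)
    (by positivity)
  have e0 := tri_Iv (0, vol A / 2) (0, vol B / 2) (0, vol C / 2)
    (by positivity)
  have bA := tA.bd hA (by linarith) ht.le
  have bB := tB.bd hB (by linarith) ht.le
  have bC := tC.bd hC (by linarith) ht.le
  have vA := mp_add_mm hA
  have vB := mp_add_mm hB
  have vC := mp_add_mm hC
  have cA : |ctr A| ≤ θ := by unfold ctr; rw [abs_le]; constructor <;> linarith
  have cB : |ctr B| ≤ θ := by unfold ctr; rw [abs_le]; constructor <;> linarith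
  have cC : |ctr C| ≤ θ := by unfold ctr; rw [abs_le]; constructor <;> linarith
  have hs : |ctr C - ctr A - ctr B| ≤ 3 * θ := by
    rw [abs_le] at *; constructor <;> linarith
  have hst := Gf_strict (l := vol A / 2) (l' := vol B / 2) (l'' := vol C / 2)
    (s := ctr C - ctr A - ctr B) (by
      have : |vol A / 2 - vol B / 2| ≤ vol C / 2 - 3 * θ := by
        rw [abs_le]; constructor <;> linarith
      linarith) (by linarith)
  simp only [sub_self] at e e0
  unfold It at gA gB gC ⊢
  linarith
end hexA

end

section
/-! ### Slicing `ℝ^(m+1)` into lines -/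

/-- The identification `ℝ × ℝ^m ≃ ℝ^(m+1)`. -/
def J (s : ℝ) (x : Vec m) : Vec (m + 1) := WithLp.toLp 2 (Fin.cons s x.ofLp)

/-- The last `m` coordinates. -/
def tl (v : Vec (m + 1)) : Vec m := WithLp.toLp 2 (fun i => v i.succ)

/-- The section of `A` over `x`. -/
def sec (A : Set (Vec (m + 1))) (x : Vec m) : Set ℝ := {s | J s x ∈ A}

section J
variable {A B C : Set (Vec (m + 1))}

@[simp] lemma J_zero_coord (s : ℝ) (x : Vec m) : J s x 0 = s := rfl
@[simp] lemma J_succ (s : ℝ) (x : Vec m) (i : Fin m) : J s x i.succ = x i := rfl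
@[simp] lemma tl_apply (v : Vec (m + 1)) (i : Fin m) : tl v i = v i.succ := rfl
@[simp] lemma tl_J (s : ℝ) (x : Vec m) : tl (J s x) = x := by ext i; simp
@[simp] lemma J_tl (v : Vec (m + 1)) : J (v 0) (tl v) = v := by
  ext i; refine Fin.cases ?_ (fun i => ?_) i <;> simp

lemma J_add (s t : ℝ) (x y : Vec m) : J s x + J t y = J (s + t) (x + y) := by
  ext i; refine Fin.cases ?_ (fun i => ?_) i <;> simp

lemma J_sub (s t : ℝ) (x y : Vec m) : J s x - J t y = J (s - t) (x - y) := by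
  ext i; refine Fin.cases ?_ (fun i => ?_) i <;> simp

lemma J_smul (c s : ℝ) (x : Vec m) : c • J s x = J (c * s) (c • x) := by
  ext i; refine Fin.cases ?_ (fun i => ?_) i <;> simp

lemma inner_J (s t : ℝ) (x y : Vec m) : inner ℝ (J s x) (J t y) = s * t + inner ℝ x y := by
  simp only [PiLp.inner_apply, Fin.sum_univ_succ, J_zero_coord, J_succ]
  simp [mul_comm]

lemma norm_J_sq (s : ℝ) (x : Vec m) : ‖J s x‖ ^ 2 = s ^ 2 + ‖x‖ ^ 2 := by
  rw [← real_inner_self_eq_norm_sq, inner_J, real_inner_self_eq_norm_sq]; ring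

lemma norm_tl_le (v : Vec (m + 1)) : ‖tl v‖ ≤ ‖v‖ := by
  have h := norm_J_sq (v 0) (tl v)
  rw [J_tl] at h
  exact abs_le_of_sq_le_sq' (by nlinarith [sq_nonneg (v 0)]) (norm_nonneg _) |>.2

lemma continuous_J : Continuous (fun p : ℝ × Vec m => J p.1 p.2) := by
  unfold J
  refine (PiLp.continuous_toLp 2 _).comp (continuous_pi fun i => ?_)
  refine Fin.cases ?_ (fun i => ?_) i
  · exact continuous_fst
  · simp only [Fin.cons_succ]; fun_prop

lemma continuous_tl : Continuous (tl (m := m)) := by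
  unfold tl; fun_prop

lemma measurable_J : Measurable (fun p : ℝ × Vec m => J p.1 p.2) := continuous_J.measurable

lemma mp_split : MeasurePreserving (fun v : Vec (m + 1) => ((v 0, tl v) : ℝ × Vec m)) := by
  have h1 := PiLp.volume_preserving_ofLp (Fin (m + 1))
  have h2 := volume_preserving_piFinSuccAbove (fun _ : Fin (m + 1) => ℝ) 0
  have h3 : MeasurePreserving (Prod.map id (WithLp.toLp 2) : ℝ × (Fin m → ℝ) → ℝ × Vec m) :=
    (MeasurePreserving.id volume).prod (PiLp.volume_preserving_toLp (Fin m))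
  exact (h3.comp (h2.comp h1))

lemma mp_J : MeasurePreserving (fun p : ℝ × Vec m => J p.1 p.2) := by
  refine ⟨measurable_J, ?_⟩
  rw [← (mp_split (m := m)).map_eq, Measure.map_map measurable_J mp_split.measurable]
  have : (fun p : ℝ × Vec m => J p.1 p.2) ∘ (fun v : Vec (m + 1) => ((v 0, tl v) : ℝ × Vec m)) = id := by
    ext1 v; simp
  rw [this, Measure.map_id]

lemma measurable_J_left (x : Vec m) : Measurable (fun s : ℝ => J s x) :=
  measurable_J.comp (measurable_id.prodMk measurable_const)

lemma measurableSet_sec (hA : MeasurableSet A) (x : Vec m) :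
    MeasurableSet (sec A x) := measurable_J_left x hA

lemma lintegral_J {F : Vec (m + 1) → ℝ≥0∞} (hF : Measurable F) :
    ∫⁻ v, F v = ∫⁻ x : Vec m, ∫⁻ s : ℝ, F (J s x) := by
  rw [← (mp_J (m := m)).lintegral_comp hF, Measure.volume_eq_prod,
    lintegral_prod_symm' (fun p : ℝ × Vec m => F (J p.1 p.2)) (hF.comp measurable_J)]

lemma volume_eq_sec (hA : MeasurableSet A) :
    volume A = ∫⁻ x : Vec m, volume (sec A x) := by
  rw [← lintegral_indicator_one hA, lintegral_J (measurable_one.indicator hA)]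
  refine lintegral_congr fun x => ?_
  rw [← lintegral_indicator_one (measurableSet_sec hA x)]
  rfl

lemma measurable_volume_sec (hA : MeasurableSet A) :
    Measurable (fun x : Vec m => volume (sec A x)) :=
  measurable_measure_prodMk_right (measurable_J hA)

lemma triE_sec (hA : MeasurableSet A) (hB : MeasurableSet B)
    (hC : MeasurableSet C) :
    triE A B C = ∫⁻ x : Vec m, ∫⁻ y : Vec m, triE (sec A x) (sec B y) (sec C (x + y)) := by
  unfold triE
  have hm := meas_tri_aux hA hB hC
  rw [lintegral_J hm.lintegral_prod_right']
  refine lintegral_congr fun x => ?_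
  have h1 : ∀ s : ℝ, ∫⁻ y, A.indicator 1 (J s x) * B.indicator 1 y * C.indicator 1 (J s x + y)
      = ∫⁻ y : Vec m, ∫⁻ t : ℝ, (A.indicator 1 (J s x) * B.indicator 1 (J t y)
          * C.indicator 1 (J s x + J t y) : ℝ≥0∞) := by
    intro s
    exact lintegral_J (hm.comp (measurable_const.prodMk measurable_id))
  simp_rw [h1]
  rw [lintegral_lintegral_swap]
  · refine lintegral_congr fun y => lintegral_congr fun s => lintegral_congr fun t => ?_
    rw [J_add]; rfl
  · have : Measurable (fun p : (ℝ × Vec m) × ℝ => (A.indicator 1 (J p.1.1 x) * B.indicator 1 (J p.2 p.1.2)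
          * C.indicator 1 (J p.1.1 x + J p.2 p.1.2) : ℝ≥0∞)) := by
      refine hm.comp (f := fun p : (ℝ × Vec m) × ℝ => (J p.1.1 x, J p.2 p.1.2)) ?_
      exact ((measurable_J_left x).comp (measurable_fst.comp measurable_fst)).prodMk
        (measurable_J.comp (measurable_snd.prodMk (measurable_snd.comp measurable_fst)))
    exact this.lintegral_prod_right'.aemeasurable

lemma measurable_triE_sec (hA : MeasurableSet A) (hB : MeasurableSet B)
    (hC : MeasurableSet C) :
    Measurable (fun p : Vec m × Vec m => triE (sec A p.1) (sec B p.2) (sec C (p.1 + p.2))) := by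
  have hm := meas_tri_aux hA hB hC
  have : Measurable (fun p : ((Vec m × Vec m) × ℝ) × ℝ =>
      (A.indicator 1 (J p.1.2 p.1.1.1) * B.indicator 1 (J p.2 p.1.1.2)
          * C.indicator 1 (J p.1.2 p.1.1.1 + J p.2 p.1.1.2) : ℝ≥0∞)) := by
    refine hm.comp (f := fun p : ((Vec m × Vec m) × ℝ) × ℝ => (J p.1.2 p.1.1.1, J p.2 p.1.1.2)) ?_
    exact (measurable_J.comp (f := fun p : ((Vec m × Vec m) × ℝ) × ℝ => (p.1.2, p.1.1.1))
      (by fun_prop)).prodMk (measurable_J.comp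
        (f := fun p : ((Vec m × Vec m) × ℝ) × ℝ => (p.2, p.1.1.2)) (by fun_prop))
  simp only [J_add] at this
  exact this.lintegral_prod_right'.lintegral_prod_right'
end J

end

section
/-! ### Steiner symmetrization and the flow towards it -/

section steiner
variable {A B C : Set (Vec (m + 1))}

/-- Steiner symmetrization in the direction of the first coordinate. -/
def St (A : Set (Vec (m + 1))) : Set (Vec (m + 1)) :=
  {v | v 0 ∈ Iv (0, vol (sec A (tl v)) / 2)}

lemma sec_St (A : Set (Vec (m + 1))) (x : Vec m) :
    sec (St A) x = Iv (0, vol (sec A x) / 2) := by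
  ext s; simp [sec, St]

lemma measurable_coord (i : Fin m) : Measurable (fun v : Vec m => v i) := by fun_prop

lemma measurable_real_sec (hA : MeasurableSet A) :
    Measurable (fun x : Vec m => vol (sec A x)) := (measurable_volume_sec hA).ennreal_toReal

lemma measurableSet_St (hA : MeasurableSet A) : MeasurableSet (St A) := by
  have h1 := (measurable_real_sec hA).comp (continuous_tl (m := m)).measurable
  have h2 := measurable_coord (m := m + 1) 0
  have : St A = {v : Vec (m + 1) | 0 - vol (sec A (tl v)) / 2 ≤ v 0} ∩
      {v | v 0 < 0 + vol (sec A (tl v)) / 2} := by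
    ext v; simp [St, Iv]
  rw [this]
  exact (measurableSet_le (measurable_const.sub (h1.div_const 2)) h2).inter
    (measurableSet_lt h2 (measurable_const.add (h1.div_const 2)))

lemma fm_ball (x : Vec d) (R : ℝ) : Fm (closedBall x R) :=
  ⟨measurableSet_closedBall, measure_closedBall_lt_top.ne⟩

lemma fm_of_bdd {A : Set (Vec d)} (hA : MeasurableSet A) {R : ℝ}
    (h : A ⊆ Bl R) : Fm A := (fm_ball 0 R).mono hA h

lemma abs_coord_le (v : Vec (m + 1)) : |v 0| ≤ ‖v‖ := by
  have h := norm_J_sq (v 0) (tl v)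
  rw [J_tl] at h
  exact abs_le_of_sq_le_sq (by nlinarith [sq_nonneg ‖tl v‖]) (norm_nonneg _)

lemma sec_sub {R : ℝ} (h : A ⊆ Bl R) (x : Vec m) :
    sec A x ⊆ Icc (-R) R := by
  intro s hs
  have h1 := mem_Bl.1 (h hs)
  have h2 := abs_coord_le (J s x)
  simp only [J_zero_coord] at h2
  exact abs_le.1 (h2.trans h1)

lemma sec_empty {R : ℝ} (h : A ⊆ Bl R) (x : Vec m)
    (hx : R < ‖x‖) : sec A x = ∅ := by
  ext s; simp only [mem_empty_iff_false, iff_false]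
  intro hs
  have h1 := mem_Bl.1 (h hs)
  have h2 := norm_tl_le (J s x)
  simp only [tl_J] at h2
  linarith

lemma fm_sec (hA : MeasurableSet A) {R : ℝ}
    (h : A ⊆ Bl R) (x : Vec m) : Fm (sec A x) :=
  Fm.mono (A := Icc (-R) R) ⟨measurableSet_Icc, by simp⟩ (measurableSet_sec hA x) (sec_sub h x)

lemma vol_St (hA : MeasurableSet A) {R : ℝ}
    (h : A ⊆ Bl R) : volume (St A) = volume A := by
  rw [volume_eq_sec (measurableSet_St hA), volume_eq_sec hA]
  refine lintegral_congr fun x => ?_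
  rw [sec_St]
  have h1 := real_Iv (p := (0, vol (sec A x) / 2)) (by positivity)
  have h2 : vol (Iv (0, vol (sec A x) / 2)) = vol (sec A x) := by
    rw [h1]; simp only; ring
  exact (measureReal_eq_measureReal_iff (fm_Iv _).2 (fm_sec hA h x).2).1 h2

lemma St_sub (hA : MeasurableSet A) {R : ℝ}
    (h : A ⊆ Bl R) : St A ⊆ Bl R := by
  intro v hv
  have hx : vol (sec A (tl v)) ≤ 2 * √(R ^ 2 - ‖tl v‖ ^ 2) ∧ (0 < vol (sec A (tl v)) →
      0 ≤ R ^ 2 - ‖tl v‖ ^ 2 ∧ 0 ≤ R) := by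
    have hs : sec A (tl v) ⊆ Icc (-√(R ^ 2 - ‖tl v‖ ^ 2)) (√(R ^ 2 - ‖tl v‖ ^ 2)) := by
      intro s hs
      have h1 := mem_Bl.1 (h hs)
      have h2 := norm_J_sq s (tl v)
      rw [mem_Icc, ← abs_le]
      refine Real.abs_le_sqrt ?_
      nlinarith [norm_nonneg (J s (tl v))]
    constructor
    · have := measureReal_mono (μ := volume) hs (by simp)
      rw [volume_real_Icc_of_le (by have := sqrt_nonneg (R ^ 2 - ‖tl v‖ ^ 2); linarith)] at this
      linarith
    · intro hp
      have : (sec A (tl v)).Nonempty := by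
        by_contra hh; rw [not_nonempty_iff_eq_empty] at hh; rw [hh] at hp; simp at hp
      obtain ⟨s, hs⟩ := this
      have h1 := mem_Bl.1 (h hs)
      have h2 := norm_J_sq s (tl v)
      exact ⟨by nlinarith [norm_nonneg (J s (tl v)), sq_nonneg s], (norm_nonneg _).trans h1⟩
  have hv' : -(vol (sec A (tl v)) / 2) ≤ v 0 ∧ v 0 < vol (sec A (tl v)) / 2 := by
    simpa [St, Iv] using hv
  have hp := hx.2 (by linarith)
  have h3 : |v 0| ≤ √(R ^ 2 - ‖tl v‖ ^ 2) := abs_le.2 ⟨by linarith, by linarith⟩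
  have h4 : v 0 ^ 2 ≤ R ^ 2 - ‖tl v‖ ^ 2 := by
    rw [← sq_abs, ← sq_sqrt hp.1]; gcongr
  have h5 := norm_J_sq (v 0) (tl v)
  rw [J_tl] at h5
  rw [mem_Bl]
  exact abs_le_of_sq_le_sq' (by linarith) hp.2 |>.2

lemma tri_le_St (hA : MeasurableSet A) (hB : MeasurableSet B)
    (hC : MeasurableSet C) {R : ℝ} (bA : A ⊆ Bl R)
    (bB : B ⊆ Bl R) (bC : C ⊆ Bl R) :
    tri A B C ≤ tri (St A) (St B) (St C) := by
  have sA := measurableSet_St hA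
  have sB := measurableSet_St hB
  have sC := measurableSet_St hC
  refine toReal_mono (triE_lt_top _ (fm_of_bdd sA (St_sub hA bA))
    (fm_of_bdd sB (St_sub hB bB))).ne ?_
  rw [triE_sec hA hB hC, triE_sec sA sB sC]
  refine lintegral_mono fun x => lintegral_mono fun y => ?_
  simp only [sec_St]
  obtain ⟨n, hn⟩ := exists_nat_gt R
  have hs : Icc (-R) R ⊆ Ico (-n : ℝ) n := fun s hs => ⟨by linarith [hs.1], by linarith [hs.2]⟩
  have := rs1 (measurableSet_sec hA x) (measurableSet_sec hB y) (measurableSet_sec hC (x + y)) n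
    ((sec_sub bA x).trans hs) ((sec_sub bB y).trans hs) ((sec_sub bC (x + y)).trans hs)
  exact (toReal_le_toReal (triE_lt_top _ (fm_sec hA bA x) (fm_sec hB bB y)).ne
    (triE_lt_top _ (fm_Iv _) (fm_Iv _)).ne).1 this

lemma lev_bdd {A B : Set (Vec d)} (hA : MeasurableSet A) (hB : MeasurableSet B) {R τ : ℝ}
    (hτ : 0 < τ) (bA : A ⊆ Bl R) (bB : B ⊆ Bl R) :
    lev τ A B ⊆ Bl (2 * R) := by
  intro z hz
  by_contra hcon
  have : A ∩ {y | z - y ∈ B} = ∅ := by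
    ext y; simp only [mem_inter_iff, mem_setOf_eq, mem_empty_iff_false, iff_false, not_and]
    intro h1 h2
    have h3 := mem_Bl.1 (bA h1)
    have h4 := mem_Bl.1 (bB h2)
    refine hcon (mem_Bl.2 ?_)
    calc ‖z‖ = ‖y + (z - y)‖ := by congr 1; abel
      _ ≤ ‖y‖ + ‖z - y‖ := norm_add_le _ _
      _ ≤ _ := by linarith
  have h : τ < cv A B z := hz
  rw [cv_eq_real hA hB, this] at h
  simp at h; linarith

lemma T_le_St (hA : MeasurableSet A) (hB : MeasurableSet B) {R τ : ℝ}
    (hτ : 0 < τ) (bA : A ⊆ Bl R) (bB : B ⊆ Bl R) :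
    T τ A B ≤ T τ (St A) (St B) := by
  have fA := fm_of_bdd hA bA
  have fB := fm_of_bdd hB bB
  have hC := fm_lev hτ fA fB
  have bC := lev_bdd hA hB hτ bA bB
  rcases lt_or_ge R 0 with hR | hR
  · have eA : A = ∅ := by
      rw [Bl, closedBall_eq_empty.2 hR] at bA; exact subset_empty_iff.1 bA
    have eSA : St A = ∅ := by
      have := St_sub hA bA
      rw [Bl, closedBall_eq_empty.2 hR] at this; exact subset_empty_iff.1 this
    have eB : B = ∅ := by
      rw [Bl, closedBall_eq_empty.2 hR] at bB; exact subset_empty_iff.1 bB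
    rw [eB, ← eA, eSA, eA]
  have hRR : closedBall (0 : Vec (m + 1)) R ⊆ Bl (2 * R) :=
    Bl_mono (by linarith)
  have h1 := tri_le_St hA hB hC.1 (bA.trans hRR) (bB.trans hRR) bC
  have h2 := tri_sub_le_T hτ.le (fm_of_bdd (measurableSet_St hA) (St_sub hA bA))
    (fm_of_bdd (measurableSet_St hB) (St_sub hB bB))
    (fm_of_bdd (measurableSet_St hC.1) (St_sub hC.1 bC))
  have h3 : vol (St (lev τ A B)) = vol (lev τ A B) := by
    simp only [Measure.real, vol_St hC.1 bC]
  rw [T_eq_lev hτ fA fB]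
  rw [h3] at h2
  linarith
end steiner

end

section
section lift
variable {ι : Type*}
variable {A : Set (Vec (m + 1))}

/-- The subset of `ℝ^(m+1)` over the ball of radius `n` whose section over `x` is the member of the
finite family `S` with index `f x`. -/
def lft (n : ℝ) (f : Vec m → ι) (S : ι → Set ℝ) : Set (Vec (m + 1)) :=
  {v | ‖tl v‖ ≤ n ∧ v 0 ∈ S (f (tl v))}

lemma sec_lft_of_le {n : ℝ} {f : Vec m → ι} {S : ι → Set ℝ} {x : Vec m} (h : ‖x‖ ≤ n) :
    sec (lft n f S) x = S (f x) := by
  ext s; simp [sec, lft, h]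

lemma sec_lft_of_lt {n : ℝ} {f : Vec m → ι} {S : ι → Set ℝ} {x : Vec m} (h : n < ‖x‖) :
    sec (lft n f S) x = ∅ := by
  ext s; simp [sec, lft, h]

variable [Fintype ι]

lemma measurableSet_lft {n : ℝ} {f : Vec m → ι} (hf : ∀ i, MeasurableSet (f ⁻¹' {i}))
    {S : ι → Set ℝ} (hS : ∀ i, Fm (S i)) : MeasurableSet (lft n f S) := by
  have : lft n f S = ⋃ i, ({v | ‖tl v‖ ≤ n} ∩ tl ⁻¹' (f ⁻¹' {i})) ∩ {v | v 0 ∈ S i} := by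
    ext v; simp [lft, and_assoc]
  rw [this]
  have ht := (continuous_tl (m := m)).measurable
  refine MeasurableSet.iUnion fun i => ?_
  exact ((measurableSet_le ht.norm measurable_const).inter (ht (hf i))).inter
    (measurable_coord (m := m + 1) 0 (hS i).1)

lemma volume_le_of_sec (hA : MeasurableSet A) {n c : ℝ} (hc : 0 ≤ c)
    (h0 : ∀ x, n < ‖x‖ → sec A x = ∅) (h1 : ∀ x, ‖x‖ ≤ n → volume (sec A x) ≤ ofReal c) :
    volume A ≤ ofReal c * volume (Bl n : Set (Vec m)) := by
  rw [volume_eq_sec hA, ← lintegral_indicator_const measurableSet_closedBall]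
  refine lintegral_mono fun x => ?_
  by_cases hx : ‖x‖ ≤ n
  · rw [indicator_of_mem (mem_Bl.2 hx)]; exact h1 x hx
  · rw [h0 x (not_le.1 hx)]; simp

lemma real_le_of_sec (hA : MeasurableSet A) {n c : ℝ} (hc : 0 ≤ c)
    (h0 : ∀ x, n < ‖x‖ → sec A x = ∅) (h1 : ∀ x, ‖x‖ ≤ n → volume (sec A x) ≤ ofReal c) :
    vol A ≤ c * vol (Bl n : Set (Vec m)) := by
  have := toReal_mono
    (mul_ne_top ofReal_ne_top (fm_ball (0 : Vec m) n).2) (volume_le_of_sec hA hc h0 h1)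
  rwa [toReal_mul, toReal_ofReal hc] at this

lemma fm_lft {n : ℝ} {f : Vec m → ι} (hf : ∀ i, MeasurableSet (f ⁻¹' {i}))
    {S : ι → Set ℝ} (hS : ∀ i, Fm (S i)) : Fm (lft n f S) := by
  have hm := measurableSet_lft (n := n) hf hS
  refine ⟨hm, ?_⟩
  have hc : ∀ i, volume (S i) ≤ ofReal (∑ i, vol (S i)) := fun i => by
    rw [← ofReal_toReal (hS i).2]
    exact ofReal_le_ofReal (Finset.single_le_sum (f := fun i => vol (S i))
      (fun _ _ => vol_nonneg) (Finset.mem_univ i))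
  have := volume_le_of_sec hm (n := n) (c := ∑ i, vol (S i))
    (sum_nonneg fun _ _ => vol_nonneg) (fun x hx => sec_lft_of_lt hx)
    (fun x hx => by rw [sec_lft_of_le hx]; exact hc _)
  exact (this.trans_lt (ENNReal.mul_lt_top ENNReal.ofReal_lt_top (fm_ball (0 : Vec m) n).2.lt_top)).ne

lemma sec_symmDiff (A B : Set (Vec (m + 1))) (x : Vec m) :
    sec (A ∆ B) x = (sec A x) ∆ (sec B x) := rfl

lemma lft_near {n η : ℝ} {f : Vec m → ι} (hf : ∀ i, MeasurableSet (f ⁻¹' {i}))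
    {S S' : ι → Set ℝ} (hS : ∀ i, Fm (S i)) (h : Step1 η S S') (hη : 0 ≤ η) :
    vol ((lft n f S) ∆ (lft n f S')) ≤
      η * vol (Bl n : Set (Vec m)) := by
  refine real_le_of_sec ((measurableSet_lft hf hS).symmDiff (measurableSet_lft hf h.fm)) hη ?_ ?_
  · intro x hx
    rw [sec_symmDiff, sec_lft_of_lt hx, sec_lft_of_lt hx]; simp
  · intro x hx
    rw [sec_symmDiff, sec_lft_of_le hx, sec_lft_of_le hx]
    rw [← ofReal_toReal ((hS (f x)).symmDiff (h.fm (f x))).2]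
    exact ofReal_le_ofReal (h.near _)

lemma lft_vol {n η : ℝ} {f : Vec m → ι} (hf : ∀ i, MeasurableSet (f ⁻¹' {i}))
    {S S' : ι → Set ℝ} (hS : ∀ i, Fm (S i)) (h : Step1 η S S') :
    vol (lft n f S') = vol (lft n f S) := by
  unfold Measure.real
  rw [volume_eq_sec (measurableSet_lft hf hS), volume_eq_sec (measurableSet_lft hf h.fm)]
  congr 1
  refine lintegral_congr fun x => ?_
  by_cases hx : ‖x‖ ≤ n
  · rw [sec_lft_of_le hx, sec_lft_of_le hx]
    exact (measureReal_eq_measureReal_iff (h.fm _).2 (hS _).2).1 (h.vol_eq _)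
  · rw [sec_lft_of_lt (not_le.1 hx), sec_lft_of_lt (not_le.1 hx)]

lemma triE_empty_left {G : Type*} [NormedAddCommGroup G] [MeasureSpace G] (B C : Set G) :
    triE ∅ B C = 0 := by simp [triE]
lemma triE_empty_mid {G : Type*} [NormedAddCommGroup G] [MeasureSpace G] (B C : Set G) :
    triE B ∅ C = 0 := by simp [triE]
lemma triE_empty_right {G : Type*} [NormedAddCommGroup G] [MeasureSpace G] (B C : Set G) :
    triE B C ∅ = 0 := by simp [triE]

lemma lft_tri {n η : ℝ} {f g h : Vec m → ι} (hf : ∀ i, MeasurableSet (f ⁻¹' {i}))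
    (hg : ∀ i, MeasurableSet (g ⁻¹' {i})) (hh : ∀ i, MeasurableSet (h ⁻¹' {i}))
    {S S' : ι → Set ℝ} (hS : ∀ i, Fm (S i)) (hst : Step1 η S S') :
    tri (lft n f S) (lft n g S) (lft n h S) ≤ tri (lft n f S') (lft n g S') (lft n h S') := by
  refine toReal_mono (triE_lt_top _ (fm_lft hf hst.fm) (fm_lft hg hst.fm)).ne ?_
  rw [triE_sec (measurableSet_lft hf hS) (measurableSet_lft hg hS) (measurableSet_lft hh hS),
    triE_sec (measurableSet_lft hf hst.fm) (measurableSet_lft hg hst.fm)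
      (measurableSet_lft hh hst.fm)]
  refine lintegral_mono fun x => lintegral_mono fun y => ?_
  by_cases hx : ‖x‖ ≤ n
  swap
  · rw [sec_lft_of_lt (not_le.1 hx), triE_empty_left]; exact zero_le
  by_cases hy : ‖y‖ ≤ n
  swap
  · rw [sec_lft_of_lt (not_le.1 hy), triE_empty_mid]; exact zero_le
  by_cases hz : ‖x + y‖ ≤ n
  swap
  · rw [sec_lft_of_lt (not_le.1 hz), triE_empty_right]; exact zero_le
  simp only [sec_lft_of_le hx, sec_lft_of_le hy, sec_lft_of_le hz]
  exact (toReal_le_toReal (triE_lt_top _ (hS _) (hS _)).ne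
    (triE_lt_top _ (hst.fm _) (hst.fm _)).ne).1 (hst.mono _ _ _)

end lift

end

/-! ### The path towards the Steiner symmetrization -/

section
section path
variable {A B : Set (Vec (m + 1))}

/-- Grid discretization of `A` along the first coordinate. -/
def dsc (n j : ℕ) (A : Set (Vec (m + 1))) : Set (Vec (m + 1)) :=
  lft n (fun x => gidx n j (sec A x)) (fun i => Us 1 (gfam n j i))

lemma meas_gidx (n j : ℕ) (hA : MeasurableSet A)
    (i : Finset (Fin (2 * n * (j + 1)))) :
    MeasurableSet ((fun x : Vec m => gidx n j (sec A x)) ⁻¹' {i}) := by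
  classical
  have : (fun x : Vec m => gidx n j (sec A x)) ⁻¹' {i} = ⋂ k, {x : Vec m | k ∈ i ↔
      1 / (2 * (j + 1) : ℝ) < vol (sec (A ∩ {v | v 0 ∈ Iv (gcell n j k)}) x)} := by
    ext x
    simp only [mem_preimage, mem_singleton_iff, Finset.ext_iff, mem_iInter, mem_setOf_eq, gidx,
      Finset.mem_filter, Finset.mem_univ, true_and]
    refine forall_congr' fun k => ?_
    have : sec (A ∩ {v | v 0 ∈ Iv (gcell n j k)}) x = sec A x ∩ Iv (gcell n j k) := by
      ext s; simp [sec]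
    rw [this]; exact Iff.comm
  rw [this]
  refine MeasurableSet.iInter fun k => ?_
  have h1 : MeasurableSet {x : Vec m |
      1 / (2 * (j + 1) : ℝ) < vol (sec (A ∩ {v | v 0 ∈ Iv (gcell n j k)}) x)} :=
    measurableSet_lt measurable_const (measurable_real_sec
      (hA.inter (measurable_coord (m := m + 1) 0 (fm_Iv _).1)))
  by_cases hk : k ∈ i
  · simpa [hk] using h1
  · have e : {x : Vec m | k ∈ i ↔
      1 / (2 * (j + 1) : ℝ) < vol (sec (A ∩ {v | v 0 ∈ Iv (gcell n j k)}) x)} = {x : Vec m |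
      1 / (2 * (j + 1) : ℝ) < vol (sec (A ∩ {v | v 0 ∈ Iv (gcell n j k)}) x)}ᶜ := by
      ext x; simp only [hk, false_iff, mem_setOf_eq, mem_compl_iff]
    rw [e]; exact h1.compl

lemma fm_dsc (n j : ℕ) (hA : MeasurableSet A) : Fm (dsc n j A) :=
  fm_lft (meas_gidx n j hA) (fun i => fm_Us _ _)

lemma sec_dsc (n j : ℕ) {x : Vec m} (hx : ‖x‖ ≤ n) :
    sec (dsc n j A) x = gset n j (sec A x) := sec_lft_of_le hx

lemma tendsto_dsc (n : ℕ) (hA : MeasurableSet A) {R : ℝ}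
    (bA : A ⊆ Bl R) (hR : R < n) :
    Tendsto (fun j => vol (A ∆ (dsc n j A))) atTop (𝓝 0) := by
  have hs : Icc (-R) R ⊆ Ico (-n : ℝ) n := fun s hs => ⟨by linarith [hs.1], by linarith [hs.2]⟩
  have e : ∀ j, volume (A ∆ (dsc n j A)) =
      ∫⁻ x : Vec m, volume (sec (A ∆ (dsc n j A)) x) := fun j =>
    volume_eq_sec (hA.symmDiff (fm_dsc n j hA).1)
  have key : Tendsto (fun j => volume (A ∆ (dsc n j A))) atTop (𝓝 0) := by
    simp_rw [e]
    rw [← lintegral_zero (μ := (volume : Measure (Vec m)))]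
    refine tendsto_lintegral_of_dominated_convergence
      ((Bl n : Set (Vec m)).indicator (fun _ => volume (Ico (-n : ℝ) n))) ?_ ?_ ?_ ?_
    · intro j; exact measurable_volume_sec (hA.symmDiff (fm_dsc n j hA).1)
    · intro j
      refine Eventually.of_forall fun x => ?_
      beta_reduce
      by_cases hx : ‖x‖ ≤ n
      · rw [indicator_of_mem (mem_Bl.2 hx), sec_symmDiff, sec_dsc n j hx]
        refine measure_mono (symmDiff_le_sup.trans (union_subset ((sec_sub bA x).trans hs)
          (gset_sub n j _)))
      · rw [sec_symmDiff, sec_empty bA x (by linarith [not_le.1 hx]), dsc,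
          sec_lft_of_lt (not_le.1 hx)]
        simp
    · rw [lintegral_indicator_const measurableSet_closedBall]
      exact mul_ne_top (by simp) (fm_ball (0 : Vec m) n).2
    · refine Eventually.of_forall fun x => ?_
      by_cases hx : ‖x‖ ≤ n
      · have := tendsto_gset n (measurableSet_sec hA x) ((sec_sub bA x).trans hs)
        have h2 := ENNReal.tendsto_ofReal this
        rw [ENNReal.ofReal_zero] at h2
        refine h2.congr fun j => ?_
        rw [sec_symmDiff, sec_dsc n j hx, Measure.real,
          ofReal_toReal ((fm_sec hA bA x).symmDiff (fm_gset n j _)).2]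
      · refine tendsto_const_nhds.congr fun j => ?_
        rw [sec_symmDiff, sec_empty bA x (by linarith [not_le.1 hx]), dsc,
          sec_lft_of_lt (not_le.1 hx)]
        simp
  have := (tendsto_toReal zero_ne_top).comp key
  simpa [Measure.real] using! this

lemma end_dsc (n j : ℕ) (hA : MeasurableSet A) {R : ℝ}
    (bA : A ⊆ Bl R) (hR : R < n) :
    vol ((lft n (fun x => gidx n j (sec A x))
      (fun i => Iv (0, vol (Us 1 (gfam n j i)) / 2))) ∆ (St A))
      ≤ 2 * vol (A ∆ (dsc n j A)) := by
  have fA := fm_of_bdd hA bA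
  have h : volume ((lft n (fun x => gidx n j (sec A x))
      (fun i => Iv (0, vol (Us 1 (gfam n j i)) / 2))) ∆ (St A))
      ≤ 2 * volume (A ∆ (dsc n j A)) := by
    rw [volume_eq_sec ((measurableSet_lft (meas_gidx n j hA) (fun i => fm_Iv _)).symmDiff
      (measurableSet_St hA)), volume_eq_sec (hA.symmDiff (fm_dsc n j hA).1),
      ← lintegral_const_mul _ (measurable_volume_sec (hA.symmDiff (fm_dsc n j hA).1))]
    refine lintegral_mono fun x => ?_
    rw [sec_symmDiff, sec_symmDiff, sec_St]
    by_cases hx : ‖x‖ ≤ n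
    · rw [sec_dsc n j hx, sec_lft_of_le hx]
      change volume ((Iv (0, vol (gset n j (sec A x)) / 2)) ∆ _) ≤ _
      have f1 := fm_sec hA bA x
      have f2 := fm_gset n j (sec A x)
      have k1 := Iv_diff_le (vol (gset n j (sec A x))) (vol (sec A x))
      have k2 := Iv_diff_le (vol (sec A x)) (vol (gset n j (sec A x)))
      have k3 := abs_real_sub_le f1 f2
      have k4 : vol (symmDiff (Iv (0, vol (gset n j (sec A x)) / 2))
          (Iv (0, vol (sec A x) / 2))) ≤ 2 * vol ((sec A x) ∆ (gset n j (sec A x))) := by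
        refine (measureReal_union_le _ _).trans ?_
        rw [abs_sub_comm] at k1
        linarith
      rw [← toReal_le_toReal ((fm_Iv _).symmDiff (fm_Iv _)).2
        (mul_ne_top (by simp) (f1.symmDiff f2).2), toReal_mul]
      exact k4
    · rw [sec_lft_of_lt (not_le.1 hx), sec_empty bA x (by linarith [not_le.1 hx])]
      simp [Iv]
  have := toReal_mono (mul_ne_top (by simp) (fA.symmDiff (fm_dsc n j hA)).2) h
  rw [toReal_mul] at this
  exact this

/-- Pairs whose measures and whose functional `T` are almost those of `(A, B)`. -/
structure Ok (τ η : ℝ) (A B : Set (Vec (m + 1))) (P : Set (Vec (m + 1)) × Set (Vec (m + 1))) : Prop where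
  f1 : Fm P.1
  f2 : Fm P.2
  v1 : |vol P.1 - vol A| ≤ η
  v2 : |vol P.2 - vol B| ≤ η
  t : T τ A B - η ≤ T τ P.1 P.2

/-- A small move to an admissible pair. -/
def Mv (τ η : ℝ) (A B : Set (Vec (m + 1))) (P P' : Set (Vec (m + 1)) × Set (Vec (m + 1))) : Prop :=
  Ok τ η A B P' ∧ vol (P.1 ∆ P'.1) ≤ η ∧ vol (P.2 ∆ P'.2) ≤ η

/-- A discrete path of admissible pairs from a bounded pair to its Steiner symmetrization. -/
theorem path (hA : MeasurableSet A) (hB : MeasurableSet B) {R τ η : ℝ}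
    (hR : 0 ≤ R) (hτ : 0 < τ) (hη : 0 < η) (bA : A ⊆ Bl R)
    (bB : B ⊆ Bl R) :
    Relation.ReflTransGen (Mv τ η A B) (A, B) (St A, St B) := by
  have fA := fm_of_bdd hA bA
  have fB := fm_of_bdd hB bB
  have fC := fm_lev hτ fA fB
  have bC := lev_bdd hA hB hτ bA bB
  set C := lev τ A B with hC
  obtain ⟨n, hn⟩ := exists_nat_gt (2 * R)
  -- `K` bounds the loss in `T` per unit of discretization error
  set K : ℝ := 1 + vol A + vol B + τ with hK
  have a0 : 0 ≤ vol A := vol_nonneg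
  have b0 : 0 ≤ vol B := vol_nonneg
  have K1 : 1 ≤ K := by linarith
  set ε : ℝ := min 1 (η / (4 * K)) with hε
  have ε0 : 0 < ε := lt_min one_pos (by positivity)
  have ε1 : ε ≤ 1 := min_le_left _ _
  have εK : 4 * (ε * K) ≤ η := by
    have h1 : ε * (4 * K) ≤ η := (le_div_iff₀ (by positivity)).1 (min_le_right _ _)
    linarith
  have εη : 4 * ε ≤ η := by nlinarith
  have tA := tendsto_dsc n hA bA (by linarith)
  have tB := tendsto_dsc n hB bB (by linarith)
  have tC := tendsto_dsc n fC.1 bC (by linarith)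
  obtain ⟨j, jA, jB, jC⟩ := ((tA.eventually (gt_mem_nhds ε0)).and
    ((tB.eventually (gt_mem_nhds ε0)).and (tC.eventually (gt_mem_nhds ε0)))).exists
  set f : Vec m → _ := fun x => gidx n j (sec A x) with hf
  set g : Vec m → _ := fun x => gidx n j (sec B x) with hg
  set h : Vec m → _ := fun x => gidx n j (sec C x) with hh
  have mf := meas_gidx n j hA
  have mg := meas_gidx n j hB
  have mh := meas_gidx n j fC.1
  have dA := fm_dsc n j hA
  have dB := fm_dsc n j hB
  have dC := fm_dsc n j fC.1
  set vb := vol (Bl n : Set (Vec m)) with hvb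
  have vb0 : 0 ≤ vb := vol_nonneg
  set η' : ℝ := η / (1 + vb) with hη'
  have hη'0 : 0 < η' := by positivity
  have hη'1 : η' * vb ≤ η := by
    rw [hη', div_mul_eq_mul_div, div_le_iff₀ (by positivity)]; nlinarith
  have ch := chain1 hη'0 (gfam n j) (val_gfam n j)
  have vA := abs_real_sub_le fA dA
  have vB := abs_real_sub_le fB dB
  have vC := abs_real_sub_le fC dC
  -- `T` along the chain, bounded below through the third discretized set
  have ok : ∀ S : Finset (Fin (2 * n * (j + 1))) → Set ℝ, (∀ i, Fm (S i)) →
      vol (lft n f S) = vol (dsc n j A) →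
      vol (lft n g S) = vol (dsc n j B) →
      vol (lft n h S) = vol (dsc n j C) →
      tri (dsc n j A) (dsc n j B) (dsc n j C) ≤ tri (lft n f S) (lft n g S) (lft n h S) →
      Ok τ η A B (lft n f S, lft n g S) := by
    intro S hS e1 e2 e3 e4
    have F1 := fm_lft (n := n) mf hS
    have F2 := fm_lft (n := n) mg hS
    have F3 := fm_lft (n := n) mh hS
    refine ⟨F1, F2, ?_, ?_, ?_⟩
    · change |vol (lft n f S) - _| ≤ η
      rw [e1, abs_sub_comm]; linarith
    · change |vol (lft n g S) - _| ≤ η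
      rw [e2, abs_sub_comm]; linarith
    · change _ ≤ T τ (lft n f S) (lft n g S)
      have q1 := tri_sub_le_T hτ.le F1 F2 F3
      have q2 := T_eq_lev hτ fA fB
      have b1 := tri_lip_left fA dA fB fC.1
      have b2 := tri_lip_mid fB dB dA fC.1
      have b3 := tri_lip_right fC dC dB dA.1
      have c1 := real_diff_le fA dA
      have c2 := real_diff_le fB dB
      have c3 := real_diff_le fC dC
      have hdA : vol (dsc n j A) ≤ vol A + 1 := by
        have := abs_le.1 vA; linarith
      have hdB : vol (dsc n j B) ≤ vol B + 1 := by
        have := abs_le.1 vB; linarith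
      have p1 : vol (A \ dsc n j A) * vol B ≤ ε * K :=
        mul_le_mul (by linarith) (by linarith) vol_nonneg ε0.le
      have p2 : vol (B \ dsc n j B) * vol (dsc n j A) ≤ ε * K :=
        mul_le_mul (by linarith) (by linarith) vol_nonneg ε0.le
      have p3 : vol (C \ dsc n j C) * vol (dsc n j B) ≤ ε * K :=
        mul_le_mul (by linarith) (by linarith) vol_nonneg ε0.le
      have p4 : τ * (vol (dsc n j C) - vol C) ≤ ε * K := by
        have := abs_le.1 vC
        rw [mul_comm]
        exact mul_le_mul (by linarith) (by linarith) hτ.le ε0.le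
      rw [e3] at q1
      linarith
  have hU : ∀ i, Fm (Us 1 (gfam n j i)) := fun i => fm_Us _ _
  have main : ∀ S, Relation.ReflTransGen (Step1 η') (fun i => Us 1 (gfam n j i)) S →
      (∀ i, Fm (S i)) ∧ vol (lft n f S) = vol (dsc n j A) ∧
      vol (lft n g S) = vol (dsc n j B) ∧
      vol (lft n h S) = vol (dsc n j C) ∧
      tri (dsc n j A) (dsc n j B) (dsc n j C) ≤ tri (lft n f S) (lft n g S) (lft n h S) ∧
      Relation.ReflTransGen (Mv τ η A B) (A, B) (lft n f S, lft n g S) := by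
    intro S hS
    induction hS with
    | refl =>
      refine ⟨hU, rfl, rfl, rfl, le_rfl, Relation.ReflTransGen.single ⟨?_, ?_, ?_⟩⟩
      · exact ok _ hU rfl rfl rfl le_rfl
      · exact (jA.le.trans (by linarith) : vol (A ∆ (dsc n j A)) ≤ η)
      · exact (jB.le.trans (by linarith) : vol (B ∆ (dsc n j B)) ≤ η)
    | tail h1 h2 ih =>
      rename_i S1 S2
      obtain ⟨i1, i2, i3, i4, i5, i6⟩ := ih
      have w1 := (lft_vol (n := n) mf i1 h2).trans i2
      have w2 := (lft_vol (n := n) mg i1 h2).trans i3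
      have w3 := (lft_vol (n := n) mh i1 h2).trans i4
      have w4 := i5.trans (lft_tri (n := n) mf mg mh i1 h2)
      refine ⟨h2.fm, w1, w2, w3, w4, i6.tail ⟨ok S2 h2.fm w1 w2 w3 w4, ?_, ?_⟩⟩
      · exact (lft_near mf i1 h2 hη'0.le).trans hη'1
      · exact (lft_near mg i1 h2 hη'0.le).trans hη'1
  obtain ⟨_, _, _, _, _, fin⟩ := main _ ch
  have sA := fm_of_bdd (measurableSet_St hA) (St_sub hA bA)
  have sB := fm_of_bdd (measurableSet_St hB) (St_sub hB bB)
  refine fin.tail ⟨⟨sA, sB, ?_, ?_, ?_⟩, ?_, ?_⟩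
  · simp only [Measure.real, vol_St hA bA, sub_self, abs_zero]; exact hη.le
  · simp only [Measure.real, vol_St hB bB, sub_self, abs_zero]; exact hη.le
  · have := T_le_St hA hB hτ bA bB
    simp only; linarith
  · exact (end_dsc n j hA bA (by linarith)).trans (by linarith)
  · exact (end_dsc n j hB bB (by linarith)).trans (by linarith)
end path

end

section
/-! ### Balls, and convergence of iterated Steiner symmetrization -/

/-- The radius of the ball of volume `v` in `ℝ^d`. -/
def rad (d : ℕ) (v : ℝ) : ℝ :=
  (v / (volume (Bl 1 : Set (Vec d))).toReal) ^ ((1 : ℝ) / d)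

section balls
variable {A B : Set (Vec d)}

lemma ballStar_rad (A : Set (Vec d)) : ballStar A = Bl (rad d (vol A)) := rfl

lemma om_pos : 0 < vol (Bl 1 : Set (Vec d)) :=
  toReal_pos (measure_closedBall_pos volume 0 one_pos).ne' (fm_ball 0 1).2

lemma real_Bl {r : ℝ} (hr : 0 ≤ r) :
    vol (Bl r : Set (Vec d)) = r ^ d * vol (Bl 1 : Set (Vec d)) := by
  rw [Measure.addHaar_real_closedBall volume (0 : Vec d) hr, finrank_euclideanSpace_fin,
    Measure.addHaar_real_closedBall volume (0 : Vec d) zero_le_one, one_pow, one_mul]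

lemma rad_nonneg {v : ℝ} (hv : 0 ≤ v) : 0 ≤ rad d v :=
  Real.rpow_nonneg (div_nonneg hv toReal_nonneg) _

lemma rad_pow (hd : 1 ≤ d) {v : ℝ} (hv : 0 ≤ v) :
    rad d v ^ d * vol (Bl 1 : Set (Vec d)) = v := by
  have h := (om_pos (d := d)).ne'
  unfold rad
  rw [one_div, Real.rpow_inv_natCast_pow (div_nonneg hv toReal_nonneg) (by omega)]
  exact div_mul_cancel₀ v h

lemma real_Bl_rad (hd : 1 ≤ d) {v : ℝ} (hv : 0 ≤ v) :
    vol (Bl (rad d v) : Set (Vec d)) = v := by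
  rw [real_Bl (rad_nonneg hv), rad_pow hd hv]

lemma rad_real_Bl (hd : 1 ≤ d) {r : ℝ} (hr : 0 ≤ r) :
    rad d (vol (Bl r : Set (Vec d))) = r := by
  have h := rad_pow hd (vol_nonneg (s := (Bl r : Set (Vec d))))
  have h2 := real_Bl (d := d) hr
  rw [h2] at h ⊢
  have h3 := mul_right_cancel₀ (om_pos (d := d)).ne' h
  exact (pow_left_inj₀ (rad_nonneg (by positivity)) hr (by omega)).1 h3

lemma real_ballStar (hd : 1 ≤ d) (A : Set (Vec d)) :
    vol (ballStar A) = vol A := real_Bl_rad hd vol_nonneg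

lemma rad_mono {v w : ℝ} (hv : 0 ≤ v) (h : v ≤ w) : rad d v ≤ rad d w := by
  unfold rad
  refine Real.rpow_le_rpow (div_nonneg hv toReal_nonneg) ?_ (by positivity)
  gcongr

lemma rad_le (hd : 1 ≤ d) {R : ℝ} (hR : 0 ≤ R)
    (h : vol A ≤ vol (Bl R : Set (Vec d))) : rad d (vol A) ≤ R := by
  have := rad_mono (d := d) (vol_nonneg (s := A)) h
  rwa [rad_real_Bl hd hR] at this

lemma ballStar_sub (hd : 1 ≤ d) {R : ℝ} (hR : 0 ≤ R) (h : A ⊆ Bl R) :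
    ballStar A ⊆ Bl R :=
  Bl_mono (rad_le hd hR (measureReal_mono h (fm_ball 0 R).2))

lemma ballStar_congr (h : volume A = volume B) : ballStar A = ballStar B := by
  unfold ballStar; rw [h]

lemma fm_Bl (r : ℝ) : Fm (Bl r : Set (Vec d)) := fm_ball 0 r

lemma fm_ballStar (A : Set (Vec d)) : Fm (ballStar A) := fm_ball 0 _

/-- Sets of equal measure have differences of equal measure. -/
lemma real_diff_eq (hA : Fm A) (hB : Fm B)
    (h : vol A = vol B) : vol (A \ B) = vol (B \ A) := by
  have h1 := measureReal_diff_add_inter (μ := volume) (s := A) hB.1 hA.2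
  have h2 := measureReal_diff_add_inter (μ := volume) (s := B) hA.1 hB.2
  rw [inter_comm] at h2
  linarith

lemma real_symmDiff (hA : Fm A) (hB : Fm B) :
    vol (A ∆ B) = vol (A \ B) + vol (B \ A) :=
  measureReal_symmDiff_eq hA.1 hB.1 hA.2 hB.2

end balls

section stgain
variable {A B : Set (Vec (m + 1))}

/-- Fiberwise gain: replacing `S` by a centred interval decreases the mass outside a centred
interval `I` by at least the measure of any translate overlap of `S \ I` and `I \ S`. -/
lemma fib_gain {S I : Set ℝ} (hS : Fm S) (hI : I = ∅ ∨ ∃ ρ, 0 ≤ ρ ∧ I = Icc (-ρ) ρ) (w : ℝ) :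
    volume (Iv (0, vol S / 2) \ I) + volume ((S \ I) ∩ {s | s + w ∈ I \ S})
      ≤ volume (S \ I) := by
  have hIF : Fm I := by
    rcases hI with h | ⟨ρ, _, h⟩ <;> rw [h]
    · exact ⟨MeasurableSet.empty, by simp⟩
    · exact ⟨measurableSet_Icc, by simp⟩
  set D := (S \ I) ∩ {s | s + w ∈ I \ S}
  have hmw : Measurable (fun s : ℝ => s + w) := measurable_id.add_const w
  have hD : MeasurableSet D := (hS.1.diff hIF.1).inter (hmw (hIF.1.diff hS.1))
  have hDF : Fm D := (hS.diff hIF.1).mono hD inter_subset_left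
  have d1 : vol D ≤ vol (S \ I) := measureReal_mono inter_subset_left (hS.diff hIF.1).2
  have d2 : vol D ≤ vol (I \ S) := by
    have h1 : volume D ≤ volume ((fun s : ℝ => s + w) ⁻¹' (I \ S)) := measure_mono inter_subset_right
    rw [measure_preimage_add_right] at h1
    exact toReal_mono (hIF.diff hS.1).2 h1
  have h1 := measureReal_diff_add_inter (μ := volume) (s := S) hIF.1 hS.2
  have h2 := measureReal_diff_add_inter (μ := volume) (s := I) hS.1 hIF.2
  rw [inter_comm] at h2
  have hv := real_Iv (p := (0, vol S / 2)) (by positivity)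
  simp only at hv
  have key : vol (Iv (0, vol S / 2) \ I) ≤ max (vol S - vol I) 0 := by
    rcases hI with h | ⟨ρ, hρ, h⟩
    · rw [h]; simp only [diff_empty, measureReal_empty, sub_zero]
      exact le_max_of_le_left (by linarith)
    · by_cases hc : vol S / 2 ≤ ρ
      · have : Iv (0, vol S / 2) \ I = ∅ := by
          rw [diff_eq_empty, h]
          intro s hs; simp only [Iv, mem_Ico, zero_sub, zero_add] at hs
          exact ⟨by linarith, by linarith⟩
        rw [this]; simp
      · push Not at hc
        have hsub : Iv (0, vol S / 2) \ I ⊆ Ico (-(vol S / 2)) (-ρ) ∪ Ico ρ (vol S / 2) := by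
          rintro s ⟨hs, hs2⟩
          simp only [Iv, mem_Ico, zero_sub, zero_add] at hs
          rw [h, mem_Icc, not_and_or] at hs2
          push Not at hs2
          rcases hs2 with h3 | h3
          · left; exact ⟨hs.1, h3⟩
          · right; exact ⟨h3.le, hs.2⟩
        refine (measureReal_mono hsub (by simp)).trans ((measureReal_union_le _ _).trans ?_)
        rw [volume_real_Ico_of_le (by linarith), volume_real_Ico_of_le (by linarith), h,
          volume_real_Icc_of_le (by linarith)]
        exact le_max_of_le_left (by linarith)
  have fin : vol (Iv (0, vol S / 2) \ I) + vol D ≤ vol (S \ I) := by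
    rcases max_choice (vol S - vol I) 0 with h3 | h3 <;> rw [h3] at key <;> linarith
  have f1 := ((fm_Iv (0, vol S / 2)).diff hIF.1).2
  rw [← toReal_le_toReal (ENNReal.add_ne_top.2 ⟨f1, hDF.2⟩) (hS.diff hIF.1).2,
    toReal_add f1 hDF.2]
  exact fin

lemma sec_Bl (r : ℝ) (x : Vec m) :
    sec (Bl r) x = ∅ ∨ ∃ ρ, 0 ≤ ρ ∧ sec (Bl r) x = Icc (-ρ) ρ := by
  by_cases h : ‖x‖ ≤ r
  · right
    refine ⟨√(r ^ 2 - ‖x‖ ^ 2), sqrt_nonneg _, ?_⟩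
    ext s
    have h2 := norm_J_sq s x
    have hr : 0 ≤ r := (norm_nonneg x).trans h
    simp only [sec, mem_setOf_eq, mem_Bl]
    rw [mem_Icc, ← abs_le, ← sq_le_sq₀ (norm_nonneg _) hr, h2, ← sq_le_sq₀ (abs_nonneg s)
      (sqrt_nonneg _), sq_sqrt (by nlinarith [norm_nonneg x]), sq_abs]
    constructor <;> intro h <;> linarith
  · left; exact sec_empty le_rfl x (not_le.1 h)

/-- Steiner symmetrization moves mass into a centred ball. -/
lemma st_gain (hA : MeasurableSet A) {R : ℝ} (bA : A ⊆ Bl R) (r w : ℝ) :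
    vol (St A \ Bl r) + vol ((A \ Bl r) ∩ {x | x + J w 0 ∈ Bl r \ A})
      ≤ vol (A \ Bl r) := by
  have fA := fm_of_bdd hA bA
  have fS := fm_of_bdd (measurableSet_St hA) (St_sub hA bA)
  have hB := (fm_Bl (d := m + 1) r).1
  have hm : MeasurableSet {x : Vec (m + 1) | x + J w 0 ∈ Bl r \ A} :=
    (measurable_id.add_const (J w 0)) (hB.diff hA)
  have hD := (hA.diff hB).inter hm
  have f3 : Fm ((A \ Bl r) ∩ {x | x + J w 0 ∈ Bl r \ A}) := (fA.diff hB).mono hD inter_subset_left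
  have key : volume (St A \ Bl r) + volume ((A \ Bl r) ∩ {x | x + J w 0 ∈ Bl r \ A})
      ≤ volume (A \ Bl r) := by
    rw [volume_eq_sec ((measurableSet_St hA).diff hB), volume_eq_sec hD,
      volume_eq_sec (hA.diff hB),
      ← lintegral_add_left (measurable_volume_sec ((measurableSet_St hA).diff hB))]
    refine lintegral_mono fun x => ?_
    have := fib_gain (fm_sec hA bA x) (sec_Bl r x) w
    rw [← sec_St] at this
    convert this using 3 <;> try rfl
    refine Set.ext fun s => ?_
    simp only [sec, mem_inter_iff, mem_diff, mem_setOf_eq, J_add, add_zero]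
  rw [← toReal_le_toReal (ENNReal.add_ne_top.2 ⟨(fS.diff hB).2, f3.2⟩) (fA.diff hB).2,
    toReal_add (fS.diff hB).2 f3.2] at key
  exact key

/-- Some translation makes two bounded sets overlap substantially. -/
lemma exists_overlap {G H : Set (Vec d)} {R : ℝ} (hR : 0 < R) (hG : MeasurableSet G)
    (hH : MeasurableSet H) (bG : G ⊆ Bl R) (bH : H ⊆ Bl R) :
    ∃ w : Vec d, vol G * vol H ≤
      vol (Bl (2 * R) : Set (Vec d)) * vol (G ∩ {x | x + w ∈ H}) := by
  by_contra hcon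
  push Not at hcon
  have fG := fm_of_bdd hG bG
  have fH := fm_of_bdd hH bH
  set V := vol (Bl (2 * R) : Set (Vec d))
  have V0 : 0 < V := by
    refine toReal_pos (measure_closedBall_pos volume 0 (by linarith)).ne' (fm_ball 0 _).2
  have e1 : ∀ w, cv H (-G) w = vol (G ∩ {x | x + w ∈ H}) := by
    intro w
    rw [cv_comm, cv_eq_real hG.neg hH, ← real_neg]
    congr 1
    ext x; simp [add_comm, sub_eq_add_neg]
  have e2 := integral_cv fH fG.neg
  rw [real_neg] at e2
  have e3 : ∀ w ∉ (Bl (2 * R) : Set (Vec d)), cv H (-G) w = 0 := by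
    intro w hw
    rw [e1]
    have : G ∩ {x | x + w ∈ H} = ∅ := by
      ext x; simp only [mem_inter_iff, mem_setOf_eq, mem_empty_iff_false, iff_false]
      rintro ⟨h1, h2⟩
      apply hw
      have a1 := mem_Bl.1 (bG h1)
      have a2 := mem_Bl.1 (bH h2)
      rw [mem_Bl]
      calc ‖w‖ = ‖(x + w) - x‖ := by simp
        _ ≤ ‖x + w‖ + ‖x‖ := norm_sub_le _ _
        _ ≤ 2 * R := by linarith
    rw [this]; simp
  rw [← setIntegral_eq_integral_of_forall_compl_eq_zero e3] at e2
  obtain ⟨w, _, hw⟩ := exists_setAverage_le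
    (measure_closedBall_pos volume (0 : Vec d) (r := 2 * R) (by linarith)).ne'
    (fm_ball 0 _).2 (integrable_cv fH fG.neg).integrableOn
  rw [setAverage_eq, e2, smul_eq_mul, e1] at hw
  have := hcon w
  change V⁻¹ * _ ≤ _ at hw
  rw [inv_mul_le_iff₀ V0] at hw
  linarith [mul_comm (vol G) (vol H)]

lemma norm_e0 : ‖(J 1 0 : Vec (m + 1))‖ = 1 := by
  have := norm_J_sq 1 (0 : Vec m)
  rw [norm_zero] at this
  nlinarith [norm_nonneg (J 1 0 : Vec (m + 1))]

lemma exists_rot (w : Vec (m + 1)) : ∃ g : O(m + 1), g (J ‖w‖ 0) = w := by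
  have h : ‖(J ‖w‖ 0 : Vec (m + 1))‖ = ‖w‖ := by
    have := norm_J_sq ‖w‖ (0 : Vec m)
    simp only [norm_zero] at this
    exact (sq_eq_sq₀ (norm_nonneg _) (norm_nonneg _)).1 (by linarith)
  exact ⟨Submodule.reflection (ℝ ∙ (J ‖w‖ 0 - w))ᗮ, Submodule.reflection_sub h⟩

lemma rot_Bl (g : O(d)) (r : ℝ) : g ⁻¹' (Bl r) = Bl r := by
  ext x; simp

lemma rot_vol (g : O(d)) (A : Set (Vec d)) :
    volume (g ⁻¹' A) = volume A :=
  g.measurePreserving.measure_preimage_emb g.toHomeomorph.measurableEmbedding A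

lemma rot_real (g : O(d)) (A : Set (Vec d)) :
    vol (g ⁻¹' A) = vol A := by simp [Measure.real, rot_vol]

lemma rot_sub (g : O(d)) {A : Set (Vec d)} {R : ℝ} (h : A ⊆ Bl R) :
    g ⁻¹' A ⊆ Bl R := by
  rw [← rot_Bl g R]; exact preimage_mono h

lemma rot_meas (g : O(d)) {A : Set (Vec d)} (h : MeasurableSet A) :
    MeasurableSet (g ⁻¹' A) := g.continuous.measurable h

/-- In a suitable direction Steiner symmetrization substantially decreases `|A \ A⋆|`. -/
lemma exists_dir (hA : MeasurableSet A) {R : ℝ} (hR : 0 < R)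
    (bA : A ⊆ Bl R) : ∃ g : O(m + 1),
      vol (A \ ballStar A) ^ 2 ≤ vol (Bl (2 * R) : Set (Vec (m + 1))) *
        (vol (A \ ballStar A) - vol (St (g ⁻¹' A) \ ballStar A)) := by
  have fA := fm_of_bdd hA bA
  have fS := fm_ballStar A
  obtain ⟨w, hw⟩ := exists_overlap hR (hA.diff fS.1) (fS.1.diff hA) (diff_subset.trans bA)
    (diff_subset.trans (ballStar_sub (by omega) hR.le bA))
  obtain ⟨g, hg⟩ := exists_rot w
  refine ⟨g, ?_⟩
  have h1 := real_diff_eq fA fS (real_ballStar (by omega) A).symm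
  rw [← h1] at hw
  have h2 := st_gain (rot_meas g hA) (rot_sub g bA) (rad (m + 1) (vol A)) ‖w‖
  rw [← ballStar_rad] at h2
  have e0 : ballStar A = g ⁻¹' (ballStar A) := (rot_Bl g _).symm
  have e1 : vol ((g ⁻¹' A) \ ballStar A) = vol (A \ ballStar A) := by
    rw [e0, ← preimage_diff, rot_real, ← e0]
  have e2 : vol (((g ⁻¹' A) \ ballStar A) ∩ {x | x + J ‖w‖ 0 ∈ ballStar A \ (g ⁻¹' A)})
      = vol ((A \ ballStar A) ∩ {x | x + w ∈ ballStar A \ A}) := by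
    rw [← rot_real g ((A \ ballStar A) ∩ _)]
    congr 1
    ext x
    have hx : x ∈ ballStar A ↔ g x ∈ ballStar A := by
      conv_lhs => rw [e0]
      rfl
    have hx' : x + J ‖w‖ 0 ∈ ballStar A ↔ g x + w ∈ ballStar A := by
      conv_lhs => rw [e0]
      rw [mem_preimage, map_add, hg]
    simp only [mem_inter_iff, mem_diff, mem_preimage, mem_setOf_eq, hx, hx', map_add, hg]
  rw [e1, e2] at h2
  have V0 : 0 ≤ vol (Bl (2 * R) : Set (Vec (m + 1))) := vol_nonneg
  nlinarith

/-- Induction principle: a property of bounded pairs that holds near pairs of balls and can be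
pulled back along rotations and Steiner symmetrization holds for all bounded pairs. -/
theorem steiner_induction {R ξ : ℝ} (hR : 0 < R) (hξ : 0 < ξ)
    (P : Set (Vec (m + 1)) → Set (Vec (m + 1)) → Prop)
    (rot : ∀ (g : O(m + 1)) A B, MeasurableSet A → MeasurableSet B →
      A ⊆ Bl R → B ⊆ Bl R → P (g ⁻¹' A) (g ⁻¹' B) → P A B)
    (st : ∀ A B, MeasurableSet A → MeasurableSet B → A ⊆ Bl R → B ⊆ Bl R →
      P (St A) (St B) → P A B)
    (base : ∀ A B, MeasurableSet A → MeasurableSet B → A ⊆ Bl R → B ⊆ Bl R →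
      vol (A \ ballStar A) + vol (B \ ballStar B) < ξ → P A B)
    (hA : MeasurableSet A) (hB : MeasurableSet B) (bA : A ⊆ Bl R)
    (bB : B ⊆ Bl R) : P A B := by
  set V := vol (Bl (2 * R) : Set (Vec (m + 1)))
  have V0 : 0 < V :=
    toReal_pos (measure_closedBall_pos volume 0 (by linarith)).ne' (fm_ball 0 _).2
  set γ := (ξ / 2) ^ 2 / V with hγ
  have γ0 : 0 < γ := by positivity
  have noninc : ∀ (g : O(m + 1)) (A : Set (Vec (m + 1))), MeasurableSet A →
      A ⊆ Bl R → vol (St (g ⁻¹' A) \ ballStar A) ≤ vol (A \ ballStar A) := by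
    intro g A hA bA
    have h2 := st_gain (rot_meas g hA) (rot_sub g bA) (rad (m + 1) (vol A)) 0
    rw [← ballStar_rad] at h2
    have e0 : ballStar A = g ⁻¹' (ballStar A) := (rot_Bl g _).symm
    have e1 : vol ((g ⁻¹' A) \ ballStar A) = vol (A \ ballStar A) := by
      rw [e0, ← preimage_diff, rot_real, ← e0]
    rw [e1] at h2
    have := vol_nonneg (s := (g ⁻¹' A \ ballStar A) ∩ {x | x + J 0 0 ∈ ballStar A \ g ⁻¹' A})
    linarith
  have star : ∀ (g : O(m + 1)) (A : Set (Vec (m + 1))), MeasurableSet A →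
      A ⊆ Bl R → ballStar (St (g ⁻¹' A)) = ballStar A := fun g A hA bA =>
    ballStar_congr ((vol_St (rot_meas g hA) (rot_sub g bA)).trans (rot_vol g A))
  have main : ∀ n : ℕ, ∀ A B, MeasurableSet A → MeasurableSet B → A ⊆ Bl R → B ⊆ Bl R →
      vol (A \ ballStar A) + vol (B \ ballStar B) ≤ n * γ → P A B := by
    intro n
    induction n with
    | zero =>
      intro A B hA hB bA bB h
      exact base A B hA hB bA bB (by simp at h; linarith)
    | succ n ih =>
      intro A B hA hB bA bB h
      by_cases hs : vol (A \ ballStar A) + vol (B \ ballStar B) < ξ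
      · exact base A B hA hB bA bB hs
      push Not at hs
      push_cast at h
      have gain : ∀ A : Set (Vec (m + 1)), MeasurableSet A → A ⊆ Bl R →
          ξ / 2 ≤ vol (A \ ballStar A) → ∃ g : O(m + 1),
          vol (St (g ⁻¹' A) \ ballStar A) + γ ≤ vol (A \ ballStar A) := by
        intro A hA bA hh
        obtain ⟨g, hg⟩ := exists_dir hA hR bA
        refine ⟨g, ?_⟩
        have : (ξ / 2) ^ 2 ≤ V * (vol (A \ ballStar A) - vol (St (g ⁻¹' A) \ ballStar A)) :=
          le_trans (by gcongr) hg
        have : γ ≤ vol (A \ ballStar A) - vol (St (g ⁻¹' A) \ ballStar A) := by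
          rw [hγ, div_le_iff₀ V0]; linarith
        linarith
      have fin : ∀ g : O(m + 1),
          vol (St (g ⁻¹' A) \ ballStar A) + vol (St (g ⁻¹' B) \ ballStar B) ≤ n * γ →
          P A B := by
        intro g hg
        refine rot g A B hA hB bA bB (st _ _ (rot_meas g hA) (rot_meas g hB) (rot_sub g bA)
          (rot_sub g bB) (ih _ _ (measurableSet_St (rot_meas g hA)) (measurableSet_St (rot_meas g hB))
          (St_sub (rot_meas g hA) (rot_sub g bA)) (St_sub (rot_meas g hB) (rot_sub g bB)) ?_))
        rw [star g A hA bA, star g B hB bB]; exact hg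
      rcases le_or_gt (ξ / 2) (vol (A \ ballStar A)) with h1 | h1
      · obtain ⟨g, hg⟩ := gain A hA bA h1
        exact fin g (by linarith [noninc g B hB bB])
      · obtain ⟨g, hg⟩ := gain B hB bB (by linarith)
        exact fin g (by linarith [noninc g A hA bA])
  obtain ⟨n, hn⟩ := exists_nat_ge ((vol (A \ ballStar A) + vol (B \ ballStar B)) / γ)
  exact main n A B hA hB bA bB ((div_le_iff₀ γ0).1 hn)

end stgain

end

/-! ### Riesz–Sobolev inequality -/

section
section rs
variable {A B C A' B' : Set (Vec d)}

/-- The deficit in the rearrangement inequality for `T`. -/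
def Def (τ : ℝ) (A B : Set (Vec d)) : ℝ := T τ (ballStar A) (ballStar B) - T τ A B

lemma rot_eq_aff (g : O(d)) (A : Set (Vec d)) :
    g ⁻¹' A = aff g.symm.toLinearEquiv 0 A := by
  ext x
  simp only [aff, mem_preimage, mem_image, add_zero]
  constructor
  · intro h; exact ⟨g x, h, by simp⟩
  · rintro ⟨y, hy, rfl⟩; simpa using hy

lemma T_rot (g : O(d)) (hA : MeasurableSet A)
    (hB : MeasurableSet B) (τ : ℝ) : T τ (g ⁻¹' A) (g ⁻¹' B) = T τ A B := by
  have h := T_aff g.symm.toLinearEquiv 0 0 hA hB τ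
  have hd : |det(g.symm.toLinearEquiv)| = 1 := by
    have := real_aff g.symm.toLinearEquiv 0 (Bl 1 : Set (Vec d))
    rw [← rot_eq_aff, rot_real] at this
    have h0 := om_pos (d := d)
    exact (mul_right_cancel₀ h0.ne' (by rw [one_mul]; exact this)).symm
  rw [hd, one_mul, one_pow, one_mul, ← rot_eq_aff, ← rot_eq_aff] at h
  exact h

lemma rs_bdd (hd : 1 ≤ d) (hA : MeasurableSet A) (hB : MeasurableSet B) {R τ : ℝ}
    (hτ : 0 < τ) (bA : A ⊆ Bl R) (bB : B ⊆ Bl R) : T τ A B ≤ T τ (ballStar A) (ballStar B) := by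
  obtain ⟨m, rfl⟩ : ∃ m, d = m + 1 := ⟨d - 1, by omega⟩
  set R' := max R 1
  have hR' : 0 < R' := lt_max_of_lt_right one_pos
  replace bA : A ⊆ Bl R' := bA.trans (Bl_mono (le_max_left _ _))
  replace bB : B ⊆ Bl R' := bB.trans (Bl_mono (le_max_left _ _))
  refine le_of_forall_pos_le_add fun ε hε => ?_
  set V := vol (Bl R' : Set (Vec (m + 1)))
  have V0 : 0 ≤ V := vol_nonneg
  refine steiner_induction hR' (ξ := ε / (1 + V)) (by positivity)
    (fun A B => T τ A B ≤ T τ (ballStar A) (ballStar B) + ε) ?_ ?_ ?_ hA hB bA bB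
  · intro g A B hA hB _ _ h
    rw [T_rot g hA hB, ballStar_congr (rot_vol g A), ballStar_congr (rot_vol g B)] at h
    exact h
  · intro A B hA hB bA bB h
    rw [ballStar_congr (vol_St hA bA), ballStar_congr (vol_St hB bB)] at h
    exact (T_le_St hA hB hτ bA bB).trans h
  · intro A B hA hB bA bB h
    have h1 := T_lip hτ (fm_of_bdd hA bA) (fm_ballStar A) (fm_of_bdd hB bB) (fm_ballStar B)
    rw [real_ballStar hd] at h1
    have a1 : vol A ≤ V := measureReal_mono bA (fm_Bl _).2
    have b1 : vol B ≤ V := measureReal_mono bB (fm_Bl _).2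
    rw [lt_div_iff₀ (by positivity)] at h
    have := mul_le_mul_of_nonneg_left a1 (vol_nonneg (s := B \ ballStar B))
    have := mul_le_mul_of_nonneg_left b1 (vol_nonneg (s := A \ ballStar A))
    have e1 := vol_nonneg (s := B \ ballStar B)
    have e2 := vol_nonneg (s := A \ ballStar A)
    nlinarith

lemma tendsto_diff_Bl (hA : Fm A) :
    Tendsto (fun n : ℕ => vol (A \ Bl (n : ℝ))) atTop (𝓝 0) := by
  have h : Tendsto (fun n : ℕ => volume (A \ Bl (n : ℝ))) atTop (𝓝 (volume (⋂ n : ℕ, A \ Bl (n : ℝ)))) := by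
    refine tendsto_measure_iInter_atTop
      (fun n => (hA.1.diff (fm_Bl (n : ℝ)).1).nullMeasurableSet) ?_ ⟨0, (hA.diff (fm_Bl _).1).2⟩
    intro i j hij
    exact diff_subset_diff_right (Bl_mono (by exact_mod_cast hij))
  have e : (⋂ n : ℕ, A \ Bl (n : ℝ)) = ∅ := by
    ext x; simp only [mem_iInter, mem_diff, mem_Bl, mem_empty_iff_false, iff_false, not_forall]
    obtain ⟨n, hn⟩ := exists_nat_ge ‖x‖
    exact ⟨n, by simp [hn]⟩
  rw [e, measure_empty] at h
  have := (tendsto_toReal zero_ne_top).comp h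
  simpa [Measure.real] using! this

/-- Concentric balls differ by the difference of their measures. -/
lemma ballStar_diff (hd : 1 ≤ d) (A B : Set (Vec d)) :
    vol ((ballStar A) ∆ (ballStar B)) = |vol A - vol B| := by
  wlog h : vol A ≤ vol B generalizing A B
  · rw [symmDiff_comm, abs_sub_comm]; exact this B A (le_of_not_ge h)
  have hs : ballStar A ⊆ ballStar B := Bl_mono (rad_mono vol_nonneg h)
  rw [real_symmDiff (fm_ballStar A) (fm_ballStar B), diff_eq_empty.2 hs, measureReal_empty, zero_add,
    measureReal_diff hs (fm_ballStar A).1 (fm_ballStar B).2, real_ballStar hd, real_ballStar hd, abs_of_nonpos (by linarith)]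
  ring

lemma vol_sub_le (hA : Fm A) (hB : Fm B) :
    |vol A - vol B| ≤ vol (A ∆ B) := by
  have h1 := measureReal_diff_add_inter (μ := volume) (s := A) hB.1 hA.2
  have h2 := measureReal_diff_add_inter (μ := volume) (s := B) hA.1 hB.2
  rw [inter_comm] at h2
  rw [real_symmDiff hA hB, abs_le]
  have := vol_nonneg (s := A \ B)
  have := vol_nonneg (s := B \ A)
  constructor <;> linarith

lemma sd_tri (hA : Fm A) (hB : Fm B) (hC : Fm C) :
    vol (A ∆ C) ≤ vol (A ∆ B) + vol (B ∆ C) :=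
  (measureReal_mono (symmDiff_triangle A B C) ((hA.symmDiff hB).union (hB.symmDiff hC)).2).trans
    (measureReal_union_le _ _)

lemma diff_le_sd (hA : Fm A) (hB : Fm B) :
    vol (A \ B) ≤ vol (A ∆ B) :=
  measureReal_mono subset_union_left (hA.symmDiff hB).2

/-- `T` is Lipschitz in the symmetric difference. -/
lemma T_lip_sd {τ P : ℝ} (hτ : 0 < τ) (hA : Fm A) (hA' : Fm A') (hB : Fm B)
    (hB' : Fm B') (hP : vol A' ≤ P) (hP' : vol B ≤ P) :
    T τ A B ≤ T τ A' B' + P * (vol (A ∆ A') + vol (B ∆ B')) := by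
  have h := T_lip hτ hA hA' hB hB'
  have h1 := diff_le_sd hA hA'
  have h2 := diff_le_sd hB hB'
  have h3 : vol (A \ A') * vol B ≤ vol (A ∆ A') * P :=
    mul_le_mul h1 hP' vol_nonneg vol_nonneg
  have h4 : vol (B \ B') * vol A' ≤ vol (B ∆ B') * P :=
    mul_le_mul h2 hP vol_nonneg vol_nonneg
  nlinarith

end rs

/-! ### The distance to the orbit of pairs of balls -/

section pd
variable {A B A' B' : Set (Vec d)}

lemma mp_iff_det (ψ : GL(d)) :
    MeasurePreserving (⇑ψ) volume volume ↔ |det(ψ)| = 1 := by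
  have h0 := om_pos (d := d)
  have hc : Continuous ψ := (ψ : Vec d →ₗ[ℝ] Vec d).continuous_of_finiteDimensional
  constructor
  · intro h
    have h1 := real_aff ψ 0 (Bl 1 : Set (Vec d))
    have h2 := h.measure_preimage_emb ψ.toContinuousLinearEquiv.toHomeomorph.measurableEmbedding
      (aff ψ 0 (Bl 1 : Set (Vec d)))
    have h3 : (ψ ⁻¹' aff ψ 0 (Bl 1 : Set (Vec d))) = Bl 1 := by
      ext x
      rw [mem_preimage, ← add_zero (ψ x), mem_aff]
    rw [h3] at h2
    rw [Measure.real, ← h2] at h1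
    exact (mul_right_cancel₀ h0.ne' (by rw [one_mul]; exact h1)).symm
  · intro h
    refine ⟨hc.measurable, ?_⟩
    have hd : det(ψ) ≠ 0 := by
      intro h2; rw [h2] at h; simp at h
    have := Measure.map_linearMap_addHaar_eq_smul_addHaar (volume : Measure (Vec d)) hd
    rw [abs_inv, h] at this
    simpa using this

lemma pd_le (A B : Set (Vec d)) (ψ : GL(d)) (u v : Vec d)
    (h : |det(ψ)| = 1) :
    pairDistance A B ≤ max (vol (A ∆ (aff ψ u (ballStar A))))
      (vol (B ∆ (aff ψ v (ballStar B)))) :=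
  csInf_le ⟨0, by rintro r ⟨ψ, u, v, _, rfl⟩; positivity⟩ ⟨ψ, u, v, (mp_iff_det ψ).2 h, rfl⟩

lemma le_pd (A B : Set (Vec d)) {x : ℝ} (h : ∀ (ψ : GL(d)) (u v : Vec d),
    |det(ψ)| = 1 →
    x ≤ max (vol (A ∆ (aff ψ u (ballStar A))))
      (vol (B ∆ (aff ψ v (ballStar B))))) : x ≤ pairDistance A B := by
  refine le_csInf ?_ ?_
  · exact ⟨_, LinearEquiv.refl ℝ _, 0, 0, (MeasurePreserving.id _), rfl⟩
  · rintro r ⟨ψ, u, v, hm, rfl⟩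
    exact h ψ u v ((mp_iff_det ψ).1 hm)

lemma pd_nonneg (A B : Set (Vec d)) : 0 ≤ pairDistance A B :=
  le_pd A B fun _ _ _ _ => le_max_of_le_left vol_nonneg

lemma pd_lt {x : ℝ} (h : pairDistance A B < x) :
    ∃ (ψ : GL(d)) (u v : Vec d), |det(ψ)| = 1 ∧
    vol (A ∆ (aff ψ u (ballStar A))) < x ∧
      vol (B ∆ (aff ψ v (ballStar B))) < x := by
  by_contra hc
  push Not at hc
  refine absurd h (not_lt.2 (le_pd A B fun ψ u v hd => ?_))
  by_contra hlt
  rw [not_le, max_lt_iff] at hlt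
  exact absurd (hc ψ u v hd hlt.1) (not_le.2 hlt.2)

lemma aff_symmDiff (ψ : GL(d)) (u : Vec d) (A B : Set (Vec d)) :
    aff ψ u (A ∆ B) = (aff ψ u A) ∆ (aff ψ u B) :=
  image_symmDiff (affH ψ u).injective A B

lemma pd_lip (hd : 1 ≤ d) (hA : Fm A) (hA' : Fm A') (hB : Fm B) (hB' : Fm B') :
    pairDistance A B ≤ pairDistance A' B' + 2 * max (vol (A ∆ A')) (vol (B ∆ B')) := by
  rw [← sub_le_iff_le_add]
  refine le_pd _ _ fun ψ u v hψ => ?_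
  rw [sub_le_iff_le_add]
  have key : ∀ {A A' : Set (Vec d)} (hA : Fm A) (hA' : Fm A') (u : Vec d),
      vol (A ∆ (aff ψ u (ballStar A))) ≤
      vol (A' ∆ (aff ψ u (ballStar A'))) + 2 * vol (A ∆ A') := by
    intro A A' hA hA' u
    have f1 := (fm_ballStar A).aff ψ u
    have f2 := (fm_ballStar A').aff ψ u
    have h1 := sd_tri hA hA' f1
    have h2 := sd_tri hA' f2 f1
    rw [← aff_symmDiff, real_aff, hψ, one_mul, ballStar_diff hd, abs_sub_comm] at h2
    have h3 := vol_sub_le hA hA'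
    linarith
  have k1 := key hA hA' u
  have k2 := key hB hB' v
  refine (pd_le A B ψ u v hψ).trans (max_le ?_ ?_)
  · have := le_max_left (vol (A ∆ A')) (vol (B ∆ B'))
    have := le_max_left (vol (A' ∆ (aff ψ u (ballStar A')))) (vol (B' ∆ (aff ψ v (ballStar B'))))
    linarith
  · have := le_max_right (vol (A ∆ A')) (vol (B ∆ B'))
    have := le_max_right (vol (A' ∆ (aff ψ u (ballStar A')))) (vol (B' ∆ (aff ψ v (ballStar B'))))
    linarith

lemma pd_le_vol (hd : 1 ≤ d) (hA : Fm A) (hB : Fm B) :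
    pairDistance A B ≤ 2 * max (vol A) (vol B) := by
  have h := pd_le A B (LinearEquiv.refl ℝ _) 0 0 (by simp)
  have e : ∀ A : Set (Vec d), aff (LinearEquiv.refl ℝ _) 0 A = A := by intro A; simp [aff]
  rw [e, e] at h
  have key : ∀ {A : Set (Vec d)}, Fm A → vol (A ∆ (ballStar A)) ≤ 2 * vol A := by
    intro A hA
    refine (measureReal_mono symmDiff_le_sup (hA.union (fm_ballStar A)).2).trans
      ((measureReal_union_le _ _).trans ?_)
    rw [real_ballStar hd]; linarith
  refine h.trans (max_le ?_ ?_)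
  · linarith [key hA, le_max_left (vol A) (vol B)]
  · linarith [key hB, le_max_right (vol A) (vol B)]

/-- The dilation by `s`. -/
def dil (d : ℕ) (s : ℝ) (hs : s ≠ 0) : GL(d) := LinearEquiv.smulOfNeZero ℝ _ s hs

lemma dil_apply {s : ℝ} (hs : s ≠ 0) (x : Vec d) : dil d s hs x = s • x := rfl

lemma det_dil {s : ℝ} (hs : 0 < s) :
    |det(dil d s hs.ne')| = s ^ d := by
  have : (dil d s hs.ne' : Vec d →ₗ[ℝ] Vec d) = s • LinearMap.id := by ext x; simp [dil_apply]
  rw [this, LinearMap.det_smul]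
  simp [abs_of_pos hs]

lemma det_trans (φ ψ : GL(d)) :
    |det(φ.trans ψ)| =
      |det(φ)| * |det(ψ)| := by
  rw [LinearEquiv.coe_trans, LinearMap.det_comp, abs_mul, mul_comm]

lemma det_symm {φ : GL(d)} (h : |det(φ)| = 1) :
    |det(φ.symm)| = 1 := by
  have := det_trans φ φ.symm
  rw [h, one_mul, LinearEquiv.self_trans_symm] at this
  rw [← this]; simp

lemma aff_aff (φ ψ : GL(d)) (u v : Vec d) (A : Set (Vec d)) :
    aff φ u (aff ψ v A) = aff (ψ.trans φ) (φ v + u) A := by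
  unfold aff
  rw [image_image]
  refine image_congr fun x _ => ?_
  simp [add_assoc]

lemma aff_dil_Bl {s r : ℝ} (hs : 0 < s) : aff (dil d s hs.ne') 0 (Bl r) = Bl (s * r) := by
  ext x
  simp only [aff, add_zero, mem_image, mem_Bl, dil_apply]
  constructor
  · rintro ⟨y, hy, rfl⟩
    rw [norm_smul, norm_eq_abs, abs_of_pos hs]; gcongr
  · intro h
    refine ⟨s⁻¹ • x, ?_, by rw [smul_inv_smul₀ hs.ne']⟩
    rw [norm_smul, norm_eq_abs, abs_of_pos (inv_pos.2 hs), inv_mul_le_iff₀ hs]; exact h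

lemma rad_scale (hd : 1 ≤ d) {s v : ℝ} (hs : 0 < s) (hv : 0 ≤ v) : rad d (s ^ d * v) = s * rad d v := by
  have : s ^ d * v = vol (Bl (s * rad d v) : Set (Vec d)) := by
    rw [real_Bl (mul_nonneg hs.le (rad_nonneg hv)), mul_pow, mul_assoc, rad_pow hd hv]
  rw [this, rad_real_Bl hd (mul_nonneg hs.le (rad_nonneg hv))]

lemma ballStar_aff (hd : 1 ≤ d) {s : ℝ} (hs : 0 < s) (φ : GL(d))
    (hφ : |det(φ)| = 1) (u : Vec d) (A : Set (Vec d)) :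
    ballStar (aff (φ.trans (dil d s hs.ne')) u A) = aff (dil d s hs.ne') 0 (ballStar A) := by
  rw [ballStar_rad, real_aff, det_trans, hφ, det_dil hs, one_mul, rad_scale hd hs vol_nonneg,
    ballStar_rad, aff_dil_Bl hs]

lemma pd_aff (hd : 1 ≤ d) {s : ℝ} (hs : 0 < s) (φ : GL(d))
    (hφ : |det(φ)| = 1) (u v : Vec d) (A B : Set (Vec d)) :
    pairDistance (aff (φ.trans (dil d s hs.ne')) u A) (aff (φ.trans (dil d s hs.ne')) v B)
      ≤ s ^ d * pairDistance A B := by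
  rw [mul_comm, ← div_le_iff₀ (by positivity)]
  refine le_pd _ _ fun ψ u' v' hψ => ?_
  rw [div_le_iff₀ (by positivity)]
  set δ := dil d s hs.ne' with hδ
  have hdet : |det(ψ.trans φ)| = 1 := by
    rw [det_trans, hψ, hφ, one_mul]
  have key : ∀ (A : Set (Vec d)) (u u' : Vec d),
      vol ((aff (φ.trans δ) u A) ∆ (aff (ψ.trans φ) (δ (φ u') + u)
        (ballStar (aff (φ.trans δ) u A)))) = s ^ d * vol (A ∆ (aff ψ u' (ballStar A))) := by
    intro A u u'
    rw [ballStar_aff hd hs φ hφ]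
    have : aff (ψ.trans φ) (δ (φ u') + u) (aff δ 0 (ballStar A)) =
        aff (φ.trans δ) u (aff ψ u' (ballStar A)) := by
      rw [aff_aff, aff_aff]
      have e1 : (δ.trans (ψ.trans φ)) = ψ.trans (φ.trans δ) := by
        ext1 x; simp [hδ, dil_apply]
      rw [e1]; simp
    rw [this, ← aff_symmDiff, real_aff, det_trans, hφ, det_dil hs, one_mul]
  refine (pd_le _ _ (ψ.trans φ) (δ (φ u') + u) (δ (φ v') + v) hdet).trans ?_
  rw [key, key, ← mul_max_of_nonneg _ _ (by positivity), mul_comm]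

/-- Invariance of the distance under measure-preserving affine maps with a common linear part. -/
lemma pd_aff_le (hd : 1 ≤ d) (φ : GL(d))
    (hφ : |det(φ)| = 1) (u v : Vec d) (A B : Set (Vec d)) :
    pairDistance (aff φ u A) (aff φ v B) ≤ pairDistance A B := by
  have h := pd_aff hd one_pos φ hφ u v A B
  have e : φ.trans (dil d 1 one_ne_zero) = φ := by ext1 x; simp [dil_apply]
  rw [one_pow, one_mul] at h
  rwa [e] at h

lemma pd_aff_eq (hd : 1 ≤ d) (φ : GL(d))
    (hφ : |det(φ)| = 1) (u v : Vec d) (A B : Set (Vec d)) :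
    pairDistance (aff φ u A) (aff φ v B) = pairDistance A B := by
  refine le_antisymm (pd_aff_le hd φ hφ u v A B) ?_
  have h := pd_aff_le hd φ.symm (det_symm hφ) (-φ.symm u) (-φ.symm v) (aff φ u A) (aff φ v B)
  have e : ∀ (u : Vec d) (A : Set (Vec d)), aff φ.symm (-φ.symm u) (aff φ u A) = A := by
    intro u A; rw [aff_aff]; simp [aff]
  rwa [e, e] at h

lemma ballStar_aff_one (φ : GL(d))
    (hφ : |det(φ)| = 1) (u : Vec d) (A : Set (Vec d)) :
    ballStar (aff φ u A) = ballStar A := by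
  rw [ballStar_rad, real_aff, hφ, one_mul, ballStar_rad]

lemma T_aff_one (φ : GL(d))
    (hφ : |det(φ)| = 1) (u v : Vec d)
    (hA : MeasurableSet A) (hB : MeasurableSet B) (τ : ℝ) :
    T τ (aff φ u A) (aff φ v B) = T τ A B := by
  have := T_aff φ u v hA hB τ
  rwa [hφ, one_mul, one_pow, one_mul] at this

lemma Def_aff (φ : GL(d))
    (hφ : |det(φ)| = 1) (u v : Vec d)
    (hA : MeasurableSet A) (hB : MeasurableSet B) (τ : ℝ) :
    Def τ (aff φ u A) (aff φ v B) = Def τ A B := by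
  unfold Def
  rw [ballStar_aff_one φ hφ, ballStar_aff_one φ hφ, T_aff_one φ hφ u v hA hB]

lemma rot_det (g : O(d)) :
    |det(g.toLinearEquiv)| = 1 :=
  (mp_iff_det _).1 g.measurePreserving

end pd

end

section
/-! ### Convolutions of balls -/

section lens

lemma cv_Bl_eq (a b : ℝ) (x : Vec d) :
    cv (Bl a) (Bl b) x = vol (Bl a ∩ closedBall x b : Set (Vec d)) := by
  rw [cv_eq_real (fm_Bl a).1 (fm_Bl b).1]
  congr 2
  ext y; simp [dist_comm, dist_eq_norm]

lemma cv_Bl_rot (a b : ℝ) {x y : Vec d} (h : ‖x‖ = ‖y‖) :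
    cv (Bl a) (Bl b) x = cv (Bl a) (Bl b) y := by
  obtain ⟨g, hg⟩ : ∃ g : O(d), g x = y :=
    ⟨Submodule.reflection (ℝ ∙ (x - y))ᗮ, Submodule.reflection_sub h⟩
  rw [cv_Bl_eq, cv_Bl_eq, ← rot_real g (Bl a ∩ closedBall y b), preimage_inter, rot_Bl, ← hg]
  congr 2
  ext z; simp

/-- The lens `Bl a ∩ (x + Bl b)` shrinks, strictly when it is nondegenerate, as `x` moves away
from the origin: reflect across the perpendicular bisector of `x` and `y`. -/
lemma lens_aux {a b s s' : ℝ} {e : Vec d} (he : ‖e‖ = 1) (hs : 0 ≤ s) (hs' : s < s') :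
    cv (Bl a) (Bl b) (s' • e) ≤ cv (Bl a) (Bl b) (s • e) ∧
    (|a - b| < s' → s < a + b → 0 < a → 0 < b →
      cv (Bl a) (Bl b) (s' • e) < cv (Bl a) (Bl b) (s • e)) := by
  rw [cv_Bl_eq, cv_Bl_eq]
  set Lx : Set (Vec d) := Bl a ∩ closedBall (s • e) b
  set Ly : Set (Vec d) := Bl a ∩ closedBall (s' • e) b
  have fx : Fm Lx := (fm_Bl a).inter measurableSet_closedBall
  have fy : Fm Ly := (fm_Bl a).inter measurableSet_closedBall
  set σ : Vec d → Vec d := fun z => (Submodule.reflection (ℝ ∙ e)ᗮ) z + (s + s') • e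
  have σe : ∀ z, σ z = z + (s + s' - 2 * inner ℝ e z) • e := by
    intro z
    simp only [σ]
    rw [Submodule.reflection_orthogonal_apply, Submodule.reflection_singleton_apply, he]
    simp only [RCLike.ofReal_real_eq_id, id_eq, one_pow, div_one]
    module
  have hσ : MeasurePreserving σ :=
    (measurePreserving_add_right volume ((s + s') • e)).comp
      (Submodule.reflection (ℝ ∙ e)ᗮ).measurePreserving
  have hσc : Continuous σ := by simp only [σ]; fun_prop
  have ee : inner ℝ e e = (1 : ℝ) := by rw [real_inner_self_eq_norm_sq, he, one_pow]
  have σσ : ∀ z, σ (σ z) = z := by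
    intro z
    rw [σe (σ z), σe z]
    simp only [inner_add_right, inner_smul_right, ee]
    module
  have nσ : ∀ z, ‖σ z‖ ^ 2 = ‖z‖ ^ 2 + (s + s' - 2 * inner ℝ e z) * (s + s') := by
    intro z
    rw [σe, norm_add_sq_real, norm_smul, he, inner_smul_right, real_inner_comm, mul_one,
      norm_eq_abs, sq_abs]
    ring
  have dx : ∀ (z : Vec d) (t : ℝ), ‖z - t • e‖ ^ 2 = ‖z‖ ^ 2 - 2 * t * inner ℝ e z + t ^ 2 := by
    intro z t
    rw [norm_sub_sq_real, norm_smul, he, inner_smul_right, real_inner_comm, mul_one,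
      norm_eq_abs, sq_abs]
    ring
  have iσ : ∀ z, inner ℝ e (σ z) = s + s' - inner ℝ e z := by
    intro z; rw [σe, inner_add_right, inner_smul_right, ee]; ring
  have d1 : ∀ z, ‖σ z - s • e‖ = ‖z - s' • e‖ := by
    intro z
    rw [← sq_eq_sq₀ (norm_nonneg _) (norm_nonneg _), dx, dx, nσ, iσ]; ring
  have d2 : ∀ z, ‖σ z - s' • e‖ = ‖z - s • e‖ := by
    intro z
    rw [← sq_eq_sq₀ (norm_nonneg _) (norm_nonneg _), dx, dx, nσ, iσ]; ring
  have sub : σ ⁻¹' (Ly \ Lx) ⊆ Lx \ Ly := by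
    intro z hz
    obtain ⟨⟨h1, h2⟩, h3⟩ := hz
    rw [mem_Bl] at h1
    rw [mem_closedBall_iff_norm, d2] at h2
    have h4 : b < ‖z - s' • e‖ := by
      by_contra hc
      exact h3 ⟨mem_Bl.2 h1, mem_closedBall_iff_norm.2 (by rw [d1]; linarith)⟩
    refine ⟨⟨mem_Bl.2 ?_, mem_closedBall_iff_norm.2 h2⟩, fun h5 => ?_⟩
    · have h5 : ‖z - s • e‖ ^ 2 < ‖z - s' • e‖ ^ 2 := by
        have := norm_nonneg (z - s • e)
        gcongr; linarith
      rw [dx, dx] at h5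
      have h6 : 0 ≤ s + s' - 2 * inner ℝ e z := by
        by_contra hc
        push Not at hc
        nlinarith
      have h7 := nσ z
      have h8 : ‖z‖ ^ 2 ≤ ‖σ z‖ ^ 2 := by nlinarith
      exact ((sq_le_sq₀ (norm_nonneg _) (norm_nonneg _)).1 h8).trans h1
    · exact absurd (mem_closedBall_iff_norm.1 h5.2) (not_le.2 h4)
  have hme : MeasurableSet (Ly \ Lx) := fy.1.diff fx.1
  have v1 : vol (σ ⁻¹' (Ly \ Lx)) = vol (Ly \ Lx) := by
    unfold Measure.real; rw [hσ.measure_preimage hme.nullMeasurableSet]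
  have e1 := measureReal_diff_add_inter (μ := volume) (s := Lx) fy.1 fx.2
  have e2 := measureReal_diff_add_inter (μ := volume) (s := Ly) fx.1 fy.2
  rw [inter_comm] at e2
  have le : vol (Ly \ Lx) ≤ vol (Lx \ Ly) := by
    rw [← v1]; exact measureReal_mono sub (fx.diff fy.1).2
  refine ⟨by linarith, fun h1 h2 ha hb => ?_⟩
  -- a nonempty open set in `Lx \ Ly` which the reflection moves out of `Ly`
  set W : Set (Vec d) := {z | ‖z‖ < a ∧ ‖z - s • e‖ < b ∧ b < ‖z - s' • e‖ ∧ a < ‖σ z‖}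
  have hW : IsOpen W := by
    refine ((isOpen_lt continuous_norm continuous_const).inter
      ((isOpen_lt (f := fun z : Vec d => ‖z - s • e‖) (by fun_prop) continuous_const).inter
      ((isOpen_lt continuous_const (g := fun z : Vec d => ‖z - s' • e‖) (by fun_prop)).inter
      (isOpen_lt continuous_const hσc.norm))))
  have hWn : W.Nonempty := by
    obtain ⟨h3, h4⟩ := abs_lt.1 h1
    obtain ⟨p, hp1, hp2⟩ := exists_between (show max (max a (s + s' - a)) (max (s + b) (s' - b)) <
        min (s' + b) (s + s' + a) by
      simp only [max_lt_iff, lt_min_iff]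
      refine ⟨⟨⟨?_, ?_⟩, ?_, ?_⟩, ⟨?_, ?_⟩, ?_, ?_⟩ <;> linarith)
    simp only [max_lt_iff, lt_min_iff] at hp1 hp2
    obtain ⟨⟨q1, q2⟩, q3, q4⟩ := hp1
    obtain ⟨q5, q6⟩ := hp2
    have nn : ∀ t : ℝ, ‖t • e‖ = |t| := by intro t; rw [norm_smul, he, mul_one, norm_eq_abs]
    refine ⟨(s + s' - p) • e, ?_, ?_, ?_, ?_⟩
    · rw [nn, abs_lt]; constructor <;> linarith
    · rw [← sub_smul, nn, abs_lt]; constructor <;> linarith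
    · rw [← sub_smul, nn, lt_abs]; right; linarith
    · rw [σe, ← add_smul, nn, inner_smul_right, ee, lt_abs]; left; linarith
  have Wp : 0 < vol W := by
    have fW : volume W ≠ ∞ := ((measure_mono (fun z hz => mem_Bl.2 hz.1.le)).trans_lt
      (fm_Bl a).2.lt_top).ne
    exact toReal_pos (hW.measure_pos volume hWn).ne' fW
  have Ws : W ⊆ Lx \ Ly := by
    rintro z ⟨h3, h4, h5, h6⟩
    exact ⟨⟨mem_Bl.2 h3.le, mem_closedBall_iff_norm.2 h4.le⟩,
      fun h => absurd (mem_closedBall_iff_norm.1 h.2) (not_le.2 h5)⟩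
  have dis : Disjoint (σ ⁻¹' (Ly \ Lx)) W := by
    rw [disjoint_left]
    rintro z hz ⟨h3, h4, h5, h6⟩
    exact absurd (mem_Bl.1 hz.1.1) (not_le.2 h6)
  have := measureReal_mono (μ := volume) (union_subset sub Ws) (fx.diff fy.1).2
  rw [measureReal_union dis hW.measurableSet ((measure_mono sub).trans_lt (fx.diff fy.1).2.lt_top).ne
    ((measure_mono Ws).trans_lt (fx.diff fy.1).2.lt_top).ne, v1] at this
  linarith

/-- The value of the convolution of two balls at distance `s` from the origin of `ℝ^(m+1)`. -/
def lens (m : ℕ) (a b s : ℝ) : ℝ := cv (Bl a : Set (Vec (m + 1))) (Bl b) (J s 0)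

lemma norm_J0 {s : ℝ} (hs : 0 ≤ s) : ‖(J s 0 : Vec (m + 1))‖ = s := by
  have := norm_J_sq s (0 : Vec m)
  rw [norm_zero] at this
  exact (sq_eq_sq₀ (norm_nonneg _) hs).1 (by linarith)

lemma cv_Bl_lens (a b : ℝ) (x : Vec (m + 1)) : cv (Bl a) (Bl b) x = lens m a b ‖x‖ :=
  cv_Bl_rot a b (norm_J0 (norm_nonneg x)).symm

lemma J0_smul (s : ℝ) : (J s 0 : Vec (m + 1)) = s • J 1 0 := by rw [J_smul]; simp

lemma lens_anti (a b : ℝ) {s s' : ℝ} (hs : 0 ≤ s) (h : s ≤ s') : lens m a b s' ≤ lens m a b s := by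
  rcases h.eq_or_lt with rfl | h
  · exact le_rfl
  unfold lens
  rw [J0_smul s, J0_smul s']
  exact (lens_aux norm_e0 hs h).1

lemma lens_strict {a b : ℝ} (ha : 0 < a) (hb : 0 < b) {s s' : ℝ} (hs : 0 ≤ s) (h : s < s')
    (h1 : |a - b| < s') (h2 : s < a + b) : lens m a b s' < lens m a b s := by
  unfold lens
  rw [J0_smul s, J0_smul s']
  exact (lens_aux norm_e0 hs h).2 h1 h2 ha hb

lemma lens_comm (a b s : ℝ) : lens m a b s = lens m b a s := cv_comm _

lemma lens_lip {a b s s' : ℝ} (hb : 0 ≤ b) :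
    lens m a b s ≤ lens m a b s' + (vol (Bl (b + |s - s'|) : Set (Vec (m + 1))) - vol (Bl b : Set (Vec (m + 1)))) := by
  have hsub : (Bl b : Set (Vec (m + 1))) ⊆ Bl (b + |s - s'|) :=
    Bl_mono (by linarith [abs_nonneg (s - s')])
  have h1 : lens m a b s ≤ cv (Bl a : Set (Vec (m + 1))) (Bl (b + |s - s'|)) (J s' 0) := by
    unfold lens
    rw [cv_Bl_eq, cv_Bl_eq]
    refine measureReal_mono (inter_subset_inter_right _ ?_) ((fm_Bl a).inter measurableSet_closedBall).2
    refine closedBall_subset_closedBall' ?_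
    rw [dist_eq_norm, J_sub, sub_zero, J0_smul, norm_smul, norm_e0]; simp
  have h2 := cv_lip_left (fm_Bl (d := m + 1) (b + |s - s'|)) (fm_Bl b) (fm_Bl a).1 (J s' 0)
  rw [cv_comm, cv_comm (A := Bl b), measureReal_diff hsub (fm_Bl b).1 (fm_Bl _).2] at h2
  exact h1.trans h2

lemma continuous_lens (a : ℝ) {b : ℝ} (hb : 0 ≤ b) : Continuous (lens m a b) := by
  have hc : Tendsto (fun r : ℝ => vol (Bl (b + |r|) : Set (Vec (m + 1))) - vol (Bl b : Set (Vec (m + 1)))) (𝓝 0) (𝓝 0) := by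
    have h : Continuous (fun r : ℝ => vol (Bl (b + |r|) : Set (Vec (m + 1))) - vol (Bl b : Set (Vec (m + 1)))) := by
      have : (fun r : ℝ => vol (Bl (b + |r|) : Set (Vec (m + 1))) - vol (Bl b : Set (Vec (m + 1))))
          = fun r => (b + |r|) ^ (m + 1) * vol (Bl 1 : Set (Vec (m + 1))) - vol (Bl b : Set (Vec (m + 1))) := by
        ext r; rw [real_Bl (d := m + 1) (by positivity)]
      rw [this]; fun_prop
    have := h.tendsto 0
    simpa using this
  rw [continuous_iff_continuousAt]
  intro s0
  rw [ContinuousAt, tendsto_iff_dist_tendsto_zero]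
  have h2 : Tendsto (fun s : ℝ => s - s0) (𝓝 s0) (𝓝 0) := by
    have : Continuous fun s : ℝ => s - s0 := by fun_prop
    simpa using this.tendsto s0
  refine squeeze_zero (fun _ => dist_nonneg) (fun s => ?_) (hc.comp h2)
  rw [Real.dist_eq, abs_le]
  have l1 := lens_lip (m := m) (a := a) (s := s) (s' := s0) hb
  have l2 := lens_lip (m := m) (a := a) (s := s0) (s' := s) hb
  rw [abs_sub_comm s0 s] at l2
  simp only [Function.comp]
  constructor <;> linarith

lemma lens_zero {a b s : ℝ} (hs : a + b ≤ s) (hm : 0 ≤ s) : lens m a b s = 0 := by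
  have key : ∀ s', a + b < s' → 0 ≤ s' → lens m a b s' = 0 := by
    intro s hs hm
    unfold lens
    rw [cv_Bl_eq]
    have : (Bl a ∩ closedBall (J s 0) b : Set (Vec (m + 1))) = ∅ := by
      ext z; simp only [mem_inter_iff, mem_empty_iff_false, iff_false]
      rintro ⟨h1, h2⟩
      rw [mem_Bl] at h1
      rw [mem_closedBall_iff_norm'] at h2
      have := norm_J0 (m := m) hm
      have h3 := norm_add_le z (J s 0 - z)
      rw [add_sub_cancel, this] at h3
      linarith
    rw [this]; simp
  by_cases hb : 0 ≤ b
  · have hc := (continuous_lens (m := m) a hb).tendsto s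
    have h1 : Tendsto (lens m a b) (𝓝[>] s) (𝓝 (lens m a b s)) := hc.mono_left nhdsWithin_le_nhds
    have h2 : Tendsto (lens m a b) (𝓝[>] s) (𝓝 0) := by
      refine tendsto_const_nhds.congr' ?_
      filter_upwards [self_mem_nhdsWithin] with t ht
      rw [mem_Ioi] at ht
      exact (key t (by linarith) (by linarith)).symm
    exact tendsto_nhds_unique h1 h2
  · unfold lens; rw [cv_Bl_eq, closedBall_eq_empty.2 (not_le.1 hb)]; simp

lemma lens_full {a b s : ℝ} (hb : 0 ≤ b) (hs : 0 ≤ s) (h : s ≤ a - b) :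
    lens m a b s = vol (Bl b : Set (Vec (m + 1))) := by
  unfold lens
  rw [cv_Bl_eq, inter_eq_self_of_subset_right]
  · rw [Measure.addHaar_real_closedBall volume _ hb, real_Bl hb, finrank_euclideanSpace_fin,
      ← Measure.addHaar_real_closedBall_eq_addHaar_real_ball]
  · refine closedBall_subset_closedBall' ?_
    rw [dist_zero_right, norm_J0 hs]; linarith

/-- For `0 < τ < min (|Bl a|, |Bl b|)` the level `τ` of the convolution of `Bl a` and `Bl b` is
attained on a sphere whose radius makes a nondegenerate triangle with `a` and `b`. -/
lemma exists_r3 {a b τ : ℝ} (ha : 0 < a) (hb : 0 < b) (hτ : 0 < τ)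
    (h1 : τ < vol (Bl a : Set (Vec (m + 1)))) (h2 : τ < vol (Bl b : Set (Vec (m + 1)))) :
    ∃ c, |a - b| < c ∧ c < a + b ∧ lens m a b c = τ := by
  have hl : lens m a b |a - b| = vol (Bl (min a b) : Set (Vec (m + 1))) := by
    rcases le_total a b with h | h
    · rw [lens_comm, min_eq_left h, lens_full ha.le (abs_nonneg _)]
      rw [abs_of_nonpos (by linarith)]; linarith
    · rw [min_eq_right h, lens_full hb.le (abs_nonneg _)]
      rw [abs_of_nonneg (by linarith)]
  have hτl : τ < lens m a b |a - b| := by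
    rw [hl]; rcases min_choice a b with h | h <;> rw [h] <;> assumption
  have hr : lens m a b (a + b) = 0 := lens_zero le_rfl (by linarith)
  have hab : |a - b| ≤ a + b := abs_le.2 ⟨by linarith, by linarith⟩
  obtain ⟨c, hc, hc2⟩ := intermediate_value_Icc' hab (continuous_lens (m := m) a hb.le).continuousOn
    (show τ ∈ Icc (lens m a b (a + b)) (lens m a b |a - b|) from ⟨by rw [hr]; exact hτ.le, hτl.le⟩)
  refine ⟨c, lt_of_le_of_ne hc.1 ?_, lt_of_le_of_ne hc.2 ?_, hc2⟩
  · rintro rfl; linarith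
  · rintro rfl; rw [hr] at hc2; linarith

/-- Quantitative strictness around the sphere of radius `c`. -/
lemma lens_gap {a b c η : ℝ} (ha : 0 < a) (hb : 0 < b) (h1 : |a - b| < c) (h2 : c < a + b) (hη : 0 < η) :
    ∃ θ > 0, ∀ x : Vec (m + 1), (‖x‖ ≤ c - η → lens m a b c + θ ≤ cv (Bl a) (Bl b) x) ∧
      (c + η ≤ ‖x‖ → cv (Bl a) (Bl b) x ≤ lens m a b c - θ) := by
  have hc : 0 < c := (abs_nonneg _).trans_lt h1
  have g2 : lens m a b (c + η) < lens m a b c :=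
    lens_strict ha hb hc.le (by linarith) (by linarith) h2
  have g1 : lens m a b c < lens m a b (max (c - η) 0) := by
    refine lens_strict ha hb (le_max_right _ _) (max_lt (by linarith) hc) h1 (max_lt (by linarith) (by linarith))
  refine ⟨min (lens m a b (max (c - η) 0) - lens m a b c) (lens m a b c - lens m a b (c + η)),
    lt_min (by linarith) (by linarith), fun x => ⟨fun hx => ?_, fun hx => ?_⟩⟩
  · rw [cv_Bl_lens]
    have := lens_anti (m := m) a b (norm_nonneg x) (hx.trans (le_max_left _ 0))
    linarith [min_le_left (lens m a b (max (c - η) 0) - lens m a b c) (lens m a b c - lens m a b (c + η))]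
  · rw [cv_Bl_lens]
    have := lens_anti (m := m) a b (by linarith) hx
    linarith [min_le_right (lens m a b (max (c - η) 0) - lens m a b c) (lens m a b c - lens m a b (c + η))]
end lens

end

section
/-! ### Trimming -/

/-- `S` is trapped between the concentric balls of radii `a - η` and `a + η`. -/
def Rt (a η : ℝ) (S : Set (Vec d)) : Prop := Bl (a - η) ⊆ S ∧ S ⊆ Bl (a + η)

lemma Rt.mono {a η η' : ℝ} {S : Set (Vec d)} (h : Rt a η S) (h' : η ≤ η') : Rt a η' S :=
  ⟨(Bl_mono (by linarith)).trans h.1,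
    h.2.trans (Bl_mono (by linarith))⟩

lemma Rt.sd {a η : ℝ} {S : Set (Vec d)} (h : Rt a η S) (hη : 0 ≤ η) :
    S ∆ (Bl a) ⊆ Bl (a + η) \ Bl (a - η) := by
  intro x hx
  rcases hx with ⟨h1, h2⟩ | ⟨h1, h2⟩
  · exact ⟨h.2 h1, fun h3 => h2 (Bl_mono (by linarith) h3)⟩
  · exact ⟨Bl_mono (by linarith) h1, fun h3 => h2 (h.1 h3)⟩

lemma real_Bl_cont {r : ℝ} (hr : 0 < r) {ε : ℝ} (hε : 0 < ε) : ∃ η > 0, η < r ∧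
    vol (Bl (r + η) : Set (Vec d)) - vol (Bl (r - η) : Set (Vec d)) < ε := by
  have hc : Tendsto (fun η : ℝ => ((r + η) ^ d - (r - η) ^ d) * vol (Bl 1 : Set (Vec d)))
      (𝓝[>] 0) (𝓝 0) := by
    have : Continuous (fun η : ℝ => ((r + η) ^ d - (r - η) ^ d) * vol (Bl 1 : Set (Vec d))) := by
      fun_prop
    have h := this.tendsto 0
    simp only [add_zero, sub_zero, sub_self, zero_mul] at h
    exact h.mono_left nhdsWithin_le_nhds
  have h1 := hc.eventually (gt_mem_nhds hε)
  have h2 : ∀ᶠ η : ℝ in 𝓝[>] 0, η < r := nhdsWithin_le_nhds (gt_mem_nhds hr)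
  obtain ⟨η, ⟨h3, h4⟩, h5⟩ := ((h1.and h2).and self_mem_nhdsWithin).exists
  have h5 : 0 < η := h5
  refine ⟨η, h5, h4, ?_⟩
  rw [real_Bl (r := r + η) (by linarith), real_Bl (r := r - η) (by linarith), ← sub_mul]
  exact h3

lemma Rt.small {r : ℝ} (hr : 0 < r) {ε : ℝ} (hε : 0 < ε) : ∃ η > 0, η < r ∧ ∀ S : Set (Vec d),
    Rt r η S → vol (S ∆ (Bl r)) < ε := by
  obtain ⟨η, h1, h2, h3⟩ := real_Bl_cont (d := d) hr hε
  refine ⟨η, h1, h2, fun S hS => lt_of_le_of_lt ?_ h3⟩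
  rw [← measureReal_diff (Bl_mono (by linarith)) (fm_Bl _).1 (fm_Bl _).2]
  exact measureReal_mono (hS.sd h1.le) ((fm_Bl _).diff (fm_Bl _).1).2

lemma cv_sd {A A' B B' : Set (Vec d)} (hA : Fm A) (hA' : Fm A') (hB : Fm B) (hB' : Fm B') (x : Vec d) :
    |cv A B x - cv A' B' x| ≤ vol (A ∆ A') + vol (B ∆ B') := by
  have h1 := cv_lip hA hA' hB hB' x
  have h2 := cv_lip hA' hA hB' hB x
  have h3 := diff_le_sd hA hA'
  have h4 := diff_le_sd hB hB'
  have h5 := diff_le_sd hA' hA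
  have h6 := diff_le_sd hB' hB
  rw [symmDiff_comm] at h5 h6
  rw [abs_le]; constructor <;> linarith

lemma lev_trap {r1 r2 r3 η : ℝ} (h1 : 0 < r1) (h2 : 0 < r2) (h3 : |r1 - r2| < r3) (h4 : r3 < r1 + r2)
    (hη : 0 < η) : ∃ δ > 0, ∀ (A B : Set (Vec (m + 1))) (τ : ℝ), Fm A → Fm B →
      vol (A ∆ (Bl r1)) ≤ δ → vol (B ∆ (Bl r2)) ≤ δ →
      |τ - lens m r1 r2 r3| ≤ δ → Rt r3 η (lev τ A B) := by
  obtain ⟨θ, hθ, hg⟩ := lens_gap (m := m) h1 h2 h3 h4 hη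
  refine ⟨θ / 4, by positivity, fun A B τ hA hB dA dB dτ => ?_⟩
  have key : ∀ x, |cv A B x - cv (Bl r1) (Bl r2) x| ≤ θ / 2 := fun x =>
    (cv_sd hA (fm_Bl _) hB (fm_Bl _) x).trans (by linarith)
  rw [abs_le] at dτ
  refine ⟨fun x hx => ?_, fun x hx => ?_⟩
  · have := (hg x).1 (mem_Bl.1 hx)
    have h := abs_le.1 (key x)
    change τ < cv A B x
    linarith
  · rw [mem_Bl]
    by_contra hc
    have := (hg x).2 (not_le.1 hc).le
    have h := abs_le.1 (key x)
    have hx : τ < cv A B x := hx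
    linarith

/-- Fill the ball of radius `r - η` and cut to the ball of radius `r + η`. -/
def trim (r η : ℝ) (A : Set (Vec d)) : Set (Vec d) := (A ∪ Bl (r - η)) ∩ Bl (r + η)

lemma trim_Rt {r η : ℝ} (hη : 0 ≤ η) (A : Set (Vec d)) : Rt r η (trim r η A) :=
  ⟨fun x hx => ⟨Or.inr hx, Bl_mono (by linarith) hx⟩, fun x hx => hx.2⟩

lemma fm_trim {r η : ℝ} {A : Set (Vec d)} (hA : Fm A) : Fm (trim r η A) :=
  (hA.union (fm_Bl _)).inter (fm_Bl _).1

lemma trim_sd {r η : ℝ} (hη : 0 ≤ η) (A : Set (Vec d)) :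
    (trim r η A) ∆ (Bl r) ⊆ A ∆ (Bl r) := by
  rintro x (⟨⟨h1, h2⟩, h3⟩ | ⟨h1, h2⟩)
  · rcases h1 with h1 | h1
    · exact Or.inl ⟨h1, h3⟩
    · exact absurd (Bl_mono (by linarith) h1) h3
  · refine Or.inr ⟨h1, fun h3 => h2 ⟨Or.inl h3, Bl_mono (by linarith) h1⟩⟩

lemma setInt_lower {S : Set (Vec d)} (hS : Fm S) {f : Vec d → ℝ} (hf : Integrable f) {a : ℝ}
    (h : ∀ x ∈ S, a ≤ f x) : a * vol S ≤ ∫ x in S, f x := by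
  have := setIntegral_mono_on (μ := volume) (integrableOn_const hS.2) hf.integrableOn hS.1 h
  rw [setIntegral_const, smul_eq_mul, mul_comm] at this
  exact this

lemma setInt_upper {S : Set (Vec d)} (hS : Fm S) {f : Vec d → ℝ} (hf : Integrable f) {a : ℝ}
    (h : ∀ x ∈ S, f x ≤ a) : ∫ x in S, f x ≤ a * vol S := by
  have := setIntegral_mono_on (μ := volume) hf.integrableOn (integrableOn_const hS.2) hS.1 h
  rw [setIntegral_const, smul_eq_mul, mul_comm a] at *
  exact this

lemma neg_Bl (r : ℝ) : -(Bl r : Set (Vec d)) = Bl r := by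
  ext x; simp

lemma neg_sd (A B : Set (Vec d)) : vol ((-A) ∆ (-B)) = vol (A ∆ B) := by
  rw [← real_neg (A ∆ B)]; rfl

/-- Radii of balls of nearby volume are close. -/
lemma rad_close (hd : 1 ≤ d) {r η : ℝ} (hr : 0 < r) (hη : 0 < η) : ∃ δ > 0, ∀ v : ℝ, 0 ≤ v →
    |v - vol (Bl r : Set (Vec d))| ≤ δ → |rad d v - r| ≤ η := by
  have hsm : ∀ {s t : ℝ}, 0 ≤ s → s < t → vol (Bl s : Set (Vec d)) < vol (Bl t : Set (Vec d)) := by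
    intro s t hs h
    rw [real_Bl hs, real_Bl (r := t) (by linarith)]
    have := om_pos (d := d)
    gcongr
  have g1 : vol (Bl (max (r - η) 0) : Set (Vec d)) < vol (Bl r : Set (Vec d)) :=
    hsm (le_max_right _ _) (max_lt (by linarith) hr)
  have g2 := hsm hr.le (show r < r + η by linarith)
  refine ⟨min (vol (Bl r : Set (Vec d)) - vol (Bl (max (r - η) 0) : Set (Vec d)))
    (vol (Bl (r + η) : Set (Vec d)) - vol (Bl r : Set (Vec d))), by
      apply lt_min <;> linarith, fun v hv h => ?_⟩
  obtain ⟨k1, k2⟩ := le_min_iff.1 h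
  rw [abs_le] at k1 k2 ⊢
  constructor
  · have := rad_mono (d := d) vol_nonneg (show vol (Bl (max (r - η) 0) : Set (Vec d)) ≤ v by linarith)
    rw [rad_real_Bl hd (le_max_right _ _)] at this
    linarith [le_max_left (r - η) 0]
  · have := rad_mono (d := d) hv (show v ≤ vol (Bl (r + η) : Set (Vec d)) by linarith)
    rw [rad_real_Bl hd (by linarith)] at this
    linarith

set_option maxHeartbeats 600000 in
/-- Trimming one of the two sets decreases the deficit by a multiple of the trimmed measure. -/
lemma trim1 {r1 r2 r3 η : ℝ} (h1 : 0 < r1) (h2 : 0 < r2) (h3 : |r1 - r2| < r3) (h4 : r3 < r1 + r2)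
    (hη : 0 < η) : ∃ δ > 0, ∃ θ > 0, ∀ (A B : Set (Vec (m + 1))) (τ : ℝ), Fm A → Fm B → 0 < τ →
      vol (A ∆ (Bl r1)) ≤ δ → vol (B ∆ (Bl r2)) ≤ δ →
      |τ - lens m r1 r2 r3| ≤ δ →
      Def τ (trim r1 η A) B + θ * vol (A ∆ (trim r1 η A)) ≤ Def τ A B := by
  have hr3 : 0 < r3 := (abs_nonneg _).trans_lt h3
  have h3' := abs_lt.1 h3
  obtain ⟨θ, hθ, hg⟩ := lens_gap (m := m) hr3 h2 (c := r1) (abs_lt.2 ⟨by linarith, by linarith⟩)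
    (by linarith) hη
  set t := lens m r3 r2 r1
  -- near radius `r1` the lens function is within `θ / 16` of `t`
  have hcont : ∃ ζ > 0, ∀ s, |s - r1| ≤ ζ → |lens m r3 r2 s - t| ≤ θ / 16 := by
    obtain ⟨ζ, hζ, h⟩ := continuous_iff.1 (continuous_lens (m := m) r3 h2.le) r1 (θ / 16) (by positivity)
    refine ⟨ζ / 2, by positivity, fun s hs => (h s ?_).le⟩
    rw [Real.dist_eq]; linarith
  obtain ⟨ζ, hζ, hcont⟩ := hcont
  obtain ⟨δr, hδr, hrad⟩ := rad_close (d := m + 1) (by omega) h1 hζ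
  obtain ⟨η', hη', -, hsm⟩ := Rt.small (d := m + 1) hr3 (ε := θ / 16) (by positivity)
  obtain ⟨δl, hδl, hlev⟩ := lev_trap (m := m) h1 h2 h3 h4 hη'
  set δ := min (min δr δl) (θ / 16)
  refine ⟨δ, by positivity, θ / 4, by positivity, fun A B τ hA hB hτ dA dB dτ => ?_⟩
  have eδr : δ ≤ δr := (min_le_left _ _).trans (min_le_left _ _)
  have eδl : δ ≤ δl := (min_le_left _ _).trans (min_le_right _ _)
  have eδθ : δ ≤ θ / 16 := min_le_right _ _
  -- closeness of the dual kernel to the kernel of balls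
  have kern : ∀ A B : Set (Vec (m + 1)), Fm A → Fm B → vol (A ∆ (Bl r1)) ≤ δ →
      vol (B ∆ (Bl r2)) ≤ δ → ∀ x,
      |cv (lev τ A B) (-B) x - cv (Bl r3) (Bl r2) x| ≤ θ / 8 := by
    intro A B hA hB dA dB x
    have l := hsm _ (hlev A B τ hA hB (dA.trans eδl) (dB.trans eδl) (dτ.trans eδl))
    have := cv_sd (fm_lev hτ hA hB) (fm_Bl r3) hB.neg (fm_Bl r2).neg x
    rw [neg_sd, neg_Bl] at this
    linarith
  set A' := trim r1 η A with hA'def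
  have hA' : Fm A' := fm_trim hA
  set N := Bl (r1 - η) \ A
  set F := A \ Bl (r1 + η)
  have hN : Fm N := (fm_Bl _).diff hA.1
  have hF : Fm F := hA.diff (fm_Bl _).1
  have eA : A = (A ∩ Bl (r1 + η)) ∪ F := by simp only [F]; rw [inter_union_diff]
  have eA' : A' = (A ∩ Bl (r1 + η)) ∪ N := by
    ext x
    simp only [A', trim, N, mem_inter_iff, mem_union, mem_diff]
    have : x ∈ Bl (r1 - η) → x ∈ Bl (r1 + η) := fun h => Bl_mono (by linarith) h
    tauto
  have hI : Fm (A ∩ Bl (r1 + η)) := hA.inter (fm_Bl _).1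
  have dF : Disjoint (A ∩ Bl (r1 + η)) F := disjoint_sdiff_inter.symm
  have dN : Disjoint (A ∩ Bl (r1 + η)) N := disjoint_left.2 fun x hx hx' => hx'.2 hx.1
  have vA : vol A = vol (A ∩ Bl (r1 + η)) + vol F := by
    conv_lhs => rw [eA]
    exact measureReal_union dF hF.1 hI.2 hF.2
  have vA' : vol A' = vol (A ∩ Bl (r1 + η)) + vol N := by
    rw [eA']; exact measureReal_union dN hN.1 hI.2 hN.2
  have esd : vol (A ∆ A') = vol F + vol N := by
    rw [real_symmDiff hA hA']
    congr 2
    · ext x; simp only [A', trim, F, mem_inter_iff, mem_union, mem_diff]; tauto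
    · rw [eA']
      ext x; simp only [N, mem_inter_iff, mem_union, mem_diff]; tauto
  -- the gain of the functional itself
  have gain : T τ A B + t * (vol N - vol F) + θ / 2 * (vol N + vol F) ≤ T τ A' B := by
    set C := lev τ A B
    have hC : Fm C := fm_lev hτ hA hB
    have k := kern A B hA hB dA dB
    have e0 := T_eq_lev hτ hA hB
    have e1 := tri_sub_le_T hτ.le hA' hB hC
    have e2 : tri A B C = tri (A ∩ Bl (r1 + η)) B C + tri F B C := by
      conv_lhs => rw [eA]
      exact tri_union_left hI hF hB hC.1 dF
    have e3 : tri A' B C = tri (A ∩ Bl (r1 + η)) B C + tri N B C := by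
      rw [eA']; exact tri_union_left hI hN hB hC.1 dN
    have e4 : (t + θ / 2) * vol N ≤ tri N B C := by
      rw [tri_rot hN.1 hB.1 hC.1, tri_eq_setIntegral hC hB.neg hN.1]
      refine setInt_lower hN (integrable_cv hC hB.neg) fun x hx => ?_
      have := (hg x).1 (mem_Bl.1 hx.1)
      linarith [(abs_le.1 (k x)).1]
    have e5 : tri F B C ≤ (t - θ / 2) * vol F := by
      rw [tri_rot hF.1 hB.1 hC.1, tri_eq_setIntegral hC hB.neg hF.1]
      refine setInt_upper hF (integrable_cv hC hB.neg) fun x hx => ?_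
      have hx2 := hx.2
      rw [mem_Bl, not_le] at hx2
      have := (hg x).2 hx2.le
      linarith [(abs_le.1 (k x)).2]
    linarith
  -- the change of the functional of the balls
  have loss : T τ (ballStar A') (ballStar B) ≤ T τ (ballStar A) (ballStar B)
      + t * (vol N - vol F) + θ / 4 * (vol N + vol F) := by
    have sA' := fm_ballStar A'
    have sA := fm_ballStar A
    have sB := fm_ballStar B
    have dA' : vol (A' ∆ (Bl r1)) ≤ δ :=
      (measureReal_mono (trim_sd hη.le A) (hA.symmDiff (fm_Bl _)).2).trans dA
    have star : ∀ (S : Set (Vec (m + 1))) (r : ℝ), 0 ≤ r → Fm S → vol (S ∆ (Bl r)) ≤ δ →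
        vol ((ballStar S) ∆ (Bl r)) ≤ δ := by
      intro S r hr hS hd
      have e : ballStar (Bl r : Set (Vec (m + 1))) = Bl r := by
        rw [ballStar_rad, rad_real_Bl (by omega) hr]
      have := ballStar_diff (by omega) S (Bl r)
      rw [e] at this
      rw [this]; exact (vol_sub_le hS (fm_Bl _)).trans hd
    have radc : ∀ (S : Set (Vec (m + 1))), Fm S → vol (S ∆ (Bl r1)) ≤ δ →
        |rad (m + 1) (vol S) - r1| ≤ ζ := fun S hS hd =>
      hrad _ vol_nonneg (((vol_sub_le hS (fm_Bl _)).trans hd).trans eδr)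
    set C := lev τ (ballStar A') (ballStar B)
    have hC : Fm C := fm_lev hτ sA' sB
    have k := kern _ _ sA' sB (star A' r1 h1.le hA' dA') (star B r2 h2.le hB dB)
    have e0 := T_eq_lev hτ sA' sB
    have e1 := tri_sub_le_T hτ.le sA sB hC
    have r1A := abs_le.1 (radc A hA dA)
    have r1A' := abs_le.1 (radc A' hA' dA')
    have kx : ∀ x : Vec (m + 1), |‖x‖ - r1| ≤ ζ → |cv C (-ballStar B) x - t| ≤ θ / 4 := by
      intro x hx
      have h5 := hcont _ hx
      rw [← cv_Bl_lens] at h5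
      have h6 := abs_le.1 (k x)
      have h7 := abs_le.1 h5
      rw [abs_le]; constructor <;> linarith
    have vS := real_ballStar (d := m + 1) (by omega) A
    have vS' := real_ballStar (d := m + 1) (by omega) A'
    have n1 : 0 ≤ vol N := vol_nonneg
    have n2 : 0 ≤ vol F := vol_nonneg
    rcases le_total (vol A) (vol A') with hle | hle
    · have sub : ballStar A ⊆ ballStar A' := by
        rw [ballStar_rad, ballStar_rad]
        exact Bl_mono (rad_mono vol_nonneg hle)
      have e2 : tri (ballStar A') (ballStar B) C = tri (ballStar A) (ballStar B) C
          + tri (ballStar A' \ ballStar A) (ballStar B) C := by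
        conv_lhs => rw [← union_diff_cancel sub]
        exact tri_union_left sA (sA'.diff sA.1) sB hC.1 disjoint_sdiff_right
      have e3 : tri (ballStar A' \ ballStar A) (ballStar B) C ≤ (t + θ / 4) * vol (ballStar A' \ ballStar A) := by
        have hD := sA'.diff sA.1
        rw [tri_rot hD.1 sB.1 hC.1, tri_eq_setIntegral hC sB.neg hD.1]
        refine setInt_upper hD (integrable_cv hC sB.neg) fun x hx => ?_
        have hx1 := hx.1
        have hx2 := hx.2
        rw [ballStar_rad, mem_Bl] at hx1 hx2
        have := abs_le.1 (kx x (abs_le.2 ⟨by linarith, by linarith⟩))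
        linarith
      rw [measureReal_diff sub sA.1 sA'.2, vS, vS', vA, vA'] at e3
      linarith [mul_nonneg hθ.le n1, mul_nonneg hθ.le n2]
    · have sub : ballStar A' ⊆ ballStar A := by
        rw [ballStar_rad, ballStar_rad]
        exact Bl_mono (rad_mono vol_nonneg hle)
      have e2 : tri (ballStar A) (ballStar B) C = tri (ballStar A') (ballStar B) C
          + tri (ballStar A \ ballStar A') (ballStar B) C := by
        conv_lhs => rw [← union_diff_cancel sub]
        exact tri_union_left sA' (sA.diff sA'.1) sB hC.1 disjoint_sdiff_right
      have e3 : (t - θ / 4) * vol (ballStar A \ ballStar A') ≤ tri (ballStar A \ ballStar A') (ballStar B) C := by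
        have hD := sA.diff sA'.1
        rw [tri_rot hD.1 sB.1 hC.1, tri_eq_setIntegral hC sB.neg hD.1]
        refine setInt_lower hD (integrable_cv hC sB.neg) fun x hx => ?_
        have hx1 := hx.1
        have hx2 := hx.2
        rw [ballStar_rad, mem_Bl] at hx1 hx2
        have := abs_le.1 (kx x (abs_le.2 ⟨by linarith, by linarith⟩))
        linarith
      rw [measureReal_diff sub sA'.1 sA.2, vS, vS', vA, vA'] at e3
      linarith [mul_nonneg hθ.le n1, mul_nonneg hθ.le n2]
  rw [esd]
  unfold Def
  linarith

lemma Def_comm (τ : ℝ) (A B : Set (Vec d)) : Def τ A B = Def τ B A := by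
  unfold Def; rw [T_comm τ A, T_comm τ (ballStar A)]

/-- Trimming both sets: the deficit decreases and controls the trimmed measure. -/
lemma trim2 {r1 r2 r3 η : ℝ} (h1 : 0 < r1) (h2 : 0 < r2) (h3 : |r1 - r2| < r3) (h4 : r3 < r1 + r2)
    (hη : 0 < η) : ∃ δ > 0, ∃ K > 0, ∀ (A B : Set (Vec (m + 1))) (τ : ℝ), Fm A → Fm B → 0 < τ →
      vol (A ∆ (Bl r1)) ≤ δ → vol (B ∆ (Bl r2)) ≤ δ →
      |τ - lens m r1 r2 r3| ≤ δ →
      Def τ (trim r1 η A) (trim r2 η B) ≤ Def τ A B ∧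
      vol (A ∆ (trim r1 η A)) ≤ K * Def τ A B ∧
      vol (B ∆ (trim r2 η B)) ≤ K * Def τ A B := by
  obtain ⟨δ1, hδ1, θ1, hθ1, H1⟩ := trim1 (m := m) h1 h2 h3 h4 hη
  obtain ⟨δ2, hδ2, θ2, hθ2, H2⟩ := trim1 (m := m) h2 h1 (by rwa [abs_sub_comm]) (by linarith) hη
  refine ⟨min δ1 δ2, by positivity, 1 / θ1 + 1 / θ2, by positivity, fun A B τ hA hB hτ dA dB dτ => ?_⟩
  obtain ⟨a1, a2⟩ := le_min_iff.1 dA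
  obtain ⟨b1, b2⟩ := le_min_iff.1 dB
  obtain ⟨t1, t2⟩ := le_min_iff.1 dτ
  have k1 := H1 A B τ hA hB hτ a1 b1 t1
  have hA' : Fm (trim r1 η A) := fm_trim hA
  have a3 : vol ((trim r1 η A) ∆ (Bl r1)) ≤ δ2 :=
      (measureReal_mono (trim_sd hη.le A) (hA.symmDiff (fm_Bl _)).2).trans a2
  have k2 := H2 B (trim r1 η A) τ hB hA' hτ b2 a3 (by rw [lens_comm]; exact t2)
  rw [Def_comm τ _ (trim r1 η A), Def_comm τ _ (trim r1 η A)] at k2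
  have hpos : 0 ≤ Def τ (trim r1 η A) (trim r2 η B) := by
    have := rs_bdd (d := m + 1) (by omega) hA'.1 (fm_trim (r := r2) (η := η) hB).1 (R := max (r1 + η) (r2 + η)) hτ
      ((trim_Rt hη.le A).2.trans (Bl_mono (le_max_left _ _)))
      ((trim_Rt hη.le B).2.trans (Bl_mono (le_max_right _ _)))
    unfold Def; linarith
  have p1 : 0 ≤ vol (A ∆ (trim r1 η A)) := vol_nonneg
  have p2 : 0 ≤ vol (B ∆ (trim r2 η B)) := vol_nonneg
  have q1 := mul_nonneg hθ1.le p1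
  have q2 := mul_nonneg hθ2.le p2
  have hD : 0 ≤ Def τ A B := by linarith
  refine ⟨by linarith, ?_, ?_⟩
  · have : vol (A ∆ (trim r1 η A)) ≤ 1 / θ1 * Def τ A B := by
      rw [div_mul_eq_mul_div, one_mul, le_div_iff₀ hθ1]; linarith
    have h5 : 0 ≤ 1 / θ2 * Def τ A B := by positivity
    linarith
  · have : vol (B ∆ (trim r2 η B)) ≤ 1 / θ2 * Def τ A B := by
      rw [div_mul_eq_mul_div, one_mul, le_div_iff₀ hθ2]; linarith
    have h5 : 0 ≤ 1 / θ1 * Def τ A B := by positivity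
    linarith

end

section
/-! ### A local Cauchy functional equation in `L¹` -/

/-- A mollifier: a smooth probability density supported in the ball of radius `s`, bounded by `M`
and `M`-Lipschitz. -/
structure Mol (s M : ℝ) (φ : Vec m → ℝ) : Prop where
  nn : ∀ x, 0 ≤ φ x
  le : ∀ x, φ x ≤ M
  lip : ∀ x y, |φ x - φ y| ≤ M * ‖x - y‖
  supp : ∀ x, s ≤ ‖x‖ → φ x = 0
  one : ∫ x, φ x = 1
  int : Integrable φ
  cont : Continuous φ
  diff : ContDiff ℝ 1 φ
  cs : HasCompactSupport φ

lemma exists_mol {s : ℝ} (hs : 0 < s) : ∃ (M : ℝ) (φ : Vec m → ℝ), 0 < M ∧ Mol s M φ := by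
  let f : ContDiffBump (0 : Vec m) := ⟨s / 2, s, by linarith, by linarith⟩
  have hd : ContDiff ℝ 1 (f.normed volume) := f.contDiff_normed (n := 1)
  have hc : HasCompactSupport (f.normed (volume : Measure (Vec m))) := f.hasCompactSupport_normed
  obtain ⟨K, hK⟩ := ContDiff.lipschitzWith_of_hasCompactSupport hc hd (by simp)
  obtain ⟨M, hM⟩ := (f.continuous_normed (μ := volume)).bounded_above_of_compact_support hc
  refine ⟨max M K + 1, f.normed volume, ?_, f.nonneg_normed, fun x => ?_, fun x y => ?_, fun x hx => ?_,
    f.integral_normed, f.integrable_normed, f.continuous_normed, hd, hc⟩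
  · have : (0 : ℝ) ≤ K := K.2
    linarith [le_max_right M K]
  · exact ((le_abs_self _).trans (hM x)).trans (by linarith [le_max_left M K])
  · have h := hK.dist_le_mul x y
    rw [Real.dist_eq, dist_eq_norm] at h
    refine h.trans ?_
    gcongr
    linarith [le_max_right M K]
  · by_contra h
    have : x ∈ Function.support (f.normed volume) := h
    rw [f.support_normed_eq, mem_ball_zero_iff] at this
    exact absurd this (not_lt.2 hx)

/-- Bounded measurable functions. -/
def Bm {X : Type*} [MeasurableSpace X] (f : X → ℝ) : Prop := Measurable f ∧ ∃ M, ∀ x, |f x| ≤ M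

lemma Bm.locInt {f : Vec m → ℝ} (hf : Bm f) : LocallyIntegrable f := by
  obtain ⟨h, M, hM⟩ := hf
  refine LocallyIntegrable.mono (f := fun _ => M) (locallyIntegrable_const M) h.aestronglyMeasurable
    (ae_of_all _ fun x => ?_)
  rw [norm_eq_abs]
  exact (hM x).trans (le_abs_self M)

lemma Bm.int_mul {X : Type*} [MeasurableSpace X] {μ : Measure X} {f g : X → ℝ} (hf : Bm f) (hg : Integrable g μ) :
    Integrable (fun x => g x * f x) μ := by
  obtain ⟨h, M, hM⟩ := hf
  exact hg.mul_bdd (c := M) h.aestronglyMeasurable (ae_of_all _ hM)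

lemma Bm.intOn {X : Type*} [MeasurableSpace X] {μ : Measure X} {f : X → ℝ} (hf : Bm f) {S : Set X} (hS : μ S ≠ ∞) :
    IntegrableOn f S μ := by
  have := hf.int_mul (μ := μ.restrict S) (g := fun _ => 1) (integrableOn_const hS)
  simp only [one_mul] at this
  exact this

lemma Bm.comp {X Y : Type*} [MeasurableSpace X] [MeasurableSpace Y] {f : X → ℝ} (hf : Bm f) {g : Y → X}
    (hg : Measurable g) : Bm (fun y => f (g y)) := ⟨hf.1.comp hg, hf.2.imp fun M h y => h _⟩

lemma Bm.add {X : Type*} [MeasurableSpace X] {f g : X → ℝ} (hf : Bm f) (hg : Bm g) : Bm (fun y => f y + g y) := by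
  obtain ⟨h, M, hM⟩ := hf
  obtain ⟨h', M', hM'⟩ := hg
  exact ⟨h.add h', M + M', fun x => (abs_add_le _ _).trans (add_le_add (hM x) (hM' x))⟩

lemma Bm.sub {X : Type*} [MeasurableSpace X] {f g : X → ℝ} (hf : Bm f) (hg : Bm g) : Bm (fun y => f y - g y) := by
  obtain ⟨h, M, hM⟩ := hf
  obtain ⟨h', M', hM'⟩ := hg
  exact ⟨h.sub h', M + M', fun x => (abs_sub _ _).trans (add_le_add (hM x) (hM' x))⟩

lemma Bm.abs {X : Type*} [MeasurableSpace X] {f : X → ℝ} (hf : Bm f) : Bm (fun y => |f y|) := by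
  obtain ⟨h, M, hM⟩ := hf
  exact ⟨h.abs, M, fun x => by rw [abs_abs]; exact hM x⟩

/-- The mollification of `α`. -/
def ml (φ α : Vec m → ℝ) (x : Vec m) : ℝ := ∫ a, φ (x - a) * α a

lemma ml_eq (φ α : Vec m → ℝ) (x : Vec m) : ml φ α x = ∫ u, φ u * α (x - u) := by
  unfold ml
  rw [← integral_sub_left_eq_self (fun u => φ u * α (x - u)) volume x]
  simp

lemma ml_diff {s M : ℝ} {φ α : Vec m → ℝ} (hφ : Mol s M φ) (hα : Bm α) : Differentiable ℝ (ml φ α) := by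
  have h := hφ.cs.contDiff_convolution_left (n := 1) (ContinuousLinearMap.lsmul ℝ ℝ) hφ.diff hα.locInt
  have e : ml φ α = convolution φ α (ContinuousLinearMap.lsmul ℝ ℝ) volume := by
    ext x; rw [ml_eq]; rfl
  rw [e]; exact h.differentiable (by simp)

/-- The defect of the functional equation. -/
def dfc (α β γ : Vec m → ℝ) (p : Vec m × Vec m) : ℝ := α p.1 + β p.2 - γ (p.1 + p.2)

lemma bm_dfc {α β γ : Vec m → ℝ} (hα : Bm α) (hβ : Bm β) (hγ : Bm γ) : Bm (dfc α β γ) :=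
  ((hα.comp measurable_fst).add (hβ.comp measurable_snd)).sub (hγ.comp (measurable_fst.add measurable_snd))

section
variable {s M : ℝ} {φ : Vec m → ℝ} {α β γ : Vec m → ℝ}

lemma ml_pair (hφ : Mol s M φ) (hα : Bm α) (hβ : Bm β) (hγ : Bm γ) (x y : Vec m) :
    ∫ p : Vec m × Vec m, φ (x - p.1) * φ (y - p.2) * dfc α β γ p
      = ml φ α x + ml φ β y - ∫ p : Vec m × Vec m, φ (x - p.1) * φ (y - p.2) * γ (p.1 + p.2) := by
  have i1 : ∀ x, Integrable (fun a => φ (x - a)) := fun x => hφ.int.comp_sub_left x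
  have i2 : Integrable (fun p : Vec m × Vec m => φ (x - p.1) * φ (y - p.2)) := (i1 x).mul_prod (i1 y)
  have o : ∀ x, ∫ a, φ (x - a) = 1 := fun x => by rw [integral_sub_left_eq_self φ volume x]; exact hφ.one
  have j1 := (hα.comp (measurable_fst (β := Vec m))).int_mul i2
  have j2 := (hβ.comp (measurable_snd (α := Vec m))).int_mul i2
  have j3 : Integrable (fun p : Vec m × Vec m => φ (x - p.1) * φ (y - p.2) * γ (p.1 + p.2)) :=
    (hγ.comp (measurable_fst.add (measurable_snd (α := Vec m)))).int_mul i2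
  have j4 : Integrable (fun p : Vec m × Vec m => φ (x - p.1) * φ (y - p.2) * α p.1 + φ (x - p.1) * φ (y - p.2) * β p.2) := j1.add j2
  have e1 : ∫ p : Vec m × Vec m, φ (x - p.1) * φ (y - p.2) * α p.1 = ml φ α x := by
    have := integral_prod_mul (μ := volume) (ν := volume) (fun a => φ (x - a) * α a) (fun b => φ (y - b))
    rw [o, mul_one] at this
    rw [ml, ← this]
    exact integral_congr_ae (ae_of_all _ fun p => by ring)
  have e2 : ∫ p : Vec m × Vec m, φ (x - p.1) * φ (y - p.2) * β p.2 = ml φ β y := by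
    have := integral_prod_mul (μ := volume) (ν := volume) (fun a => φ (x - a)) (fun b => φ (y - b) * β b)
    rw [o, one_mul] at this
    rw [ml, ← this]
    exact integral_congr_ae (ae_of_all _ fun p => by ring)
  rw [← e1, ← e2, ← integral_add j1 j2, ← integral_sub j4 j3]
  refine integral_congr_ae (ae_of_all _ fun p => ?_)
  simp only [dfc]; ring

lemma ml_gamma (x y h : Vec m) :
    ∫ p : Vec m × Vec m, φ (x + h - p.1) * φ (y - h - p.2) * γ (p.1 + p.2)
      = ∫ p : Vec m × Vec m, φ (x - p.1) * φ (y - p.2) * γ (p.1 + p.2) := by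
  haveI : (volume : Measure (Vec m × Vec m)).IsAddRightInvariant :=
    inferInstanceAs (((volume : Measure (Vec m)).prod (volume : Measure (Vec m))).IsAddRightInvariant)
  rw [← integral_add_right_eq_self (fun p : Vec m × Vec m => φ (x + h - p.1) * φ (y - h - p.2) * γ (p.1 + p.2)) (h, -h)]
  refine integral_congr_ae (ae_of_all _ fun p => ?_)
  simp only [Prod.fst_add, Prod.snd_add]
  rw [show x + h - (p.1 + h) = x - p.1 by abel, show y - h - (p.2 + -h) = y - p.2 by abel,
    show p.1 + h + (p.2 + -h) = p.1 + p.2 by abel]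

/-- If `Z` contains a product of balls about `x` and `y`, the increments of the two mollifications there agree up to `O(e)`. -/
lemma ml_incr (hφ : Mol s M φ) (hM : 0 < M) (hs : 0 < s) (hα : Bm α) (hβ : Bm β) (hγ : Bm γ) {Z : Set (Vec m × Vec m)} {e : ℝ}
    (hZ : MeasurableSet Z) (hZf : volume Z ≠ ∞) (he : ∫ p in Z, |dfc α β γ p| ≤ e) {x y h : Vec m}
    (hxy : closedBall x (2 * s) ×ˢ closedBall y (2 * s) ⊆ Z) (hh : ‖h‖ ≤ s) :
    |ml φ α (x + h) + ml φ β (y - h) - (ml φ α x + ml φ β y)| ≤ 2 * M * M * e * ‖h‖ := by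
  have p1 := ml_pair hφ hα hβ hγ (x + h) (y - h)
  have p2 := ml_pair hφ hα hβ hγ x y
  rw [ml_gamma] at p1
  have i1 : ∀ x, Integrable (fun a => φ (x - a)) := fun x => hφ.int.comp_sub_left x
  have i2 : ∀ x y, Integrable (fun p : Vec m × Vec m => φ (x - p.1) * φ (y - p.2)) :=
    fun x y => (i1 x).mul_prod (i1 y)
  have k1 := (bm_dfc hα hβ hγ).int_mul (i2 (x + h) (y - h))
  have k2 := (bm_dfc hα hβ hγ).int_mul (i2 x y)
  have e0 : ml φ α (x + h) + ml φ β (y - h) - (ml φ α x + ml φ β y)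
      = ∫ p : Vec m × Vec m, (φ (x + h - p.1) * φ (y - h - p.2) * dfc α β γ p - φ (x - p.1) * φ (y - p.2) * dfc α β γ p) := by
    rw [integral_sub k1 k2]; linarith
  have hz : ∀ p : Vec m × Vec m, p ∉ Z →
      φ (x + h - p.1) * φ (y - h - p.2) * dfc α β γ p - φ (x - p.1) * φ (y - p.2) * dfc α β γ p = 0 := by
    intro p hp
    have hp' : ¬ (‖p.1 - x‖ ≤ 2 * s ∧ ‖p.2 - y‖ ≤ 2 * s) := fun h5 =>
      hp (hxy ⟨mem_closedBall_iff_norm.2 h5.1, mem_closedBall_iff_norm.2 h5.2⟩)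
    by_cases h5 : ‖p.1 - x‖ ≤ 2 * s
    · have h6 : 2 * s < ‖p.2 - y‖ := by by_contra h7; exact hp' ⟨h5, not_lt.1 h7⟩
      have z1 : φ (y - p.2) = 0 := hφ.supp _ (by rw [norm_sub_rev]; linarith)
      have z2 : φ (y - h - p.2) = 0 := hφ.supp _ (by
        have := norm_sub_norm_le (p.2 - y) (-h)
        rw [norm_neg, show p.2 - y - -h = -(y - h - p.2) by abel, norm_neg] at this
        linarith)
      rw [z1, z2]; ring
    · push Not at h5
      have z1 : φ (x - p.1) = 0 := hφ.supp _ (by rw [norm_sub_rev]; linarith)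
      have z2 : φ (x + h - p.1) = 0 := hφ.supp _ (by
        have := norm_sub_norm_le (p.1 - x) h
        rw [show p.1 - x - h = -(x + h - p.1) by abel, norm_neg] at this
        linarith)
      rw [z1, z2]; ring
  rw [e0, ← setIntegral_eq_integral_of_forall_compl_eq_zero (s := Z) hz]
  have hintg : IntegrableOn (fun p => |dfc α β γ p|) Z := (bm_dfc hα hβ hγ).abs.intOn hZf
  calc |∫ p in Z, (φ (x + h - p.1) * φ (y - h - p.2) * dfc α β γ p - φ (x - p.1) * φ (y - p.2) * dfc α β γ p)|
      ≤ ∫ p in Z, 2 * M * M * ‖h‖ * |dfc α β γ p| := by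
        rw [← norm_eq_abs]
        refine norm_integral_le_of_norm_le (hintg.const_mul _) (ae_of_all _ fun p => ?_)
        rw [← sub_mul, norm_mul, norm_eq_abs, norm_eq_abs]
        gcongr
        have l1 := hφ.lip (x + h - p.1) (x - p.1)
        have l2 := hφ.lip (y - h - p.2) (y - p.2)
        rw [show x + h - p.1 - (x - p.1) = h by abel] at l1
        rw [show y - h - p.2 - (y - p.2) = -h by abel, norm_neg] at l2
        have b1 := hφ.le (y - h - p.2)
        have b2 := hφ.le (x - p.1)
        have n1 := hφ.nn (y - h - p.2)
        have n2 := hφ.nn (x - p.1)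
        have hk : φ (x + h - p.1) * φ (y - h - p.2) - φ (x - p.1) * φ (y - p.2)
          = (φ (x + h - p.1) - φ (x - p.1)) * φ (y - h - p.2) + φ (x - p.1) * (φ (y - h - p.2) - φ (y - p.2)) := by ring
        rw [hk]
        refine (abs_add_le _ _).trans ?_
        rw [abs_mul, abs_mul, abs_of_nonneg n1, abs_of_nonneg n2]
        have q1 : |φ (x + h - p.1) - φ (x - p.1)| * φ (y - h - p.2) ≤ M * ‖h‖ * M := by gcongr
        have q2 : φ (x - p.1) * |φ (y - h - p.2) - φ (y - p.2)| ≤ M * (M * ‖h‖) := by gcongr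
        linarith
    _ = 2 * M * M * ‖h‖ * ∫ p in Z, |dfc α β γ p| := integral_const_mul _ _
    _ ≤ 2 * M * M * ‖h‖ * e := by gcongr
    _ = _ := by ring

lemma ml_fderiv (hφ : Mol s M φ) (hM : 0 < M) (hs : 0 < s) (hα : Bm α) (hβ : Bm β) (hγ : Bm γ) {Z : Set (Vec m × Vec m)} {e : ℝ}
    (hZ : MeasurableSet Z) (hZf : volume Z ≠ ∞) (he : ∫ p in Z, |dfc α β γ p| ≤ e) {x y : Vec m}
    (hxy : closedBall x (2 * s) ×ˢ closedBall y (2 * s) ⊆ Z) :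
    ‖fderiv ℝ (ml φ α) x - fderiv ℝ (ml φ β) y‖ ≤ 2 * M * M * e := by
  have he0 : 0 ≤ e := (integral_nonneg fun p => abs_nonneg _).trans he
  have d1 : HasFDerivAt (fun h => ml φ α (x + h)) (fderiv ℝ (ml φ α) x) 0 := by
    have h1 := (ml_diff hφ hα x).hasFDerivAt
    have h2 : HasFDerivAt (fun h : Vec m => x + h) (ContinuousLinearMap.id ℝ (Vec m)) 0 := (hasFDerivAt_id 0).const_add x
    have h1' : HasFDerivAt (ml φ α) (fderiv ℝ (ml φ α) x) (x + 0) := by rw [add_zero]; exact h1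
    exact h1'.comp (0 : Vec m) h2
  have d2 : HasFDerivAt (fun h => ml φ β (y - h)) (-fderiv ℝ (ml φ β) y) 0 := by
    have h1 := (ml_diff hφ hβ y).hasFDerivAt
    have h2 : HasFDerivAt (fun h : Vec m => y - h) (-ContinuousLinearMap.id ℝ (Vec m)) 0 := (hasFDerivAt_id 0).const_sub y
    have h1' : HasFDerivAt (ml φ β) (fderiv ℝ (ml φ β) y) (y - 0) := by rw [sub_zero]; exact h1
    have h3 := h1'.comp (0 : Vec m) h2
    have h4 : (fderiv ℝ (ml φ β) y).comp (-ContinuousLinearMap.id ℝ (Vec m)) = -fderiv ℝ (ml φ β) y := by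
      ext v; simp
    rw [h4] at h3; exact h3
  have d3 := d1.add d2
  rw [← sub_eq_add_neg] at d3
  refine d3.le_of_lip' (by positivity) ?_
  filter_upwards [closedBall_mem_nhds (0 : Vec m) hs] with h hh
  rw [mem_Bl] at hh
  have := ml_incr hφ hM hs hα hβ hγ hZ hZf he hxy hh
  simpa [norm_eq_abs] using this

end

end

section

section
variable {s M : ℝ} {φ : Vec m → ℝ} {α β γ : Vec m → ℝ}

lemma locInt_abs {f : Vec m → ℝ} (hf : LocallyIntegrable f) : LocallyIntegrable fun x => |f x| := by
  intro x
  obtain ⟨u, hu, h⟩ := hf x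
  exact ⟨u, hu, h.abs⟩

lemma int_biUnion_le {f : Vec m → ℝ} (hf : LocallyIntegrable f) (h0 : ∀ x, 0 ≤ f x) {r D : ℝ} (hD : 0 ≤ D)
    (F : Finset (Vec m)) (hF : ∀ x ∈ F, ∫ z in closedBall x r, f z ≤ D) :
    IntegrableOn f (⋃ x ∈ F, closedBall x r) ∧
      ∫ z in ⋃ x ∈ F, closedBall x r, f z ≤ F.card * D := by
  classical
  induction F using Finset.induction_on with
  | empty => simp
  | insert a F ha ih =>
    obtain ⟨i1, i2⟩ := ih fun x hx => hF x (Finset.mem_insert_of_mem hx)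
    have i3 : IntegrableOn f (closedBall a r) := hf.integrableOn_isCompact (isCompact_closedBall a r)
    rw [set_biUnion_insert, Finset.card_insert_of_notMem ha]
    refine ⟨i3.union i1, ?_⟩
    rw [← diff_union_self, setIntegral_union disjoint_sdiff_left
      (Finset.measurableSet_biUnion F fun x _ => measurableSet_closedBall) (i3.mono_set diff_subset) i1]
    have := setIntegral_mono_set i3 (ae_of_all _ h0)
      (diff_subset (s := closedBall a r) (t := ⋃ x ∈ F, closedBall x r)).eventuallyLE
    have h4 := hF a (Finset.mem_insert_self a F)
    push_cast
    linarith

/-- A mollified slice: freezing `x` and averaging in `y` only. -/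
lemma ml_slice (hφ : Mol s M φ) (hM : 0 < M) (hs : 0 < s) (hα : Bm α) (hβ : Bm β) (hγ : Bm γ) {Z : Set (Vec m × Vec m)} {e : ℝ}
    (hZ : MeasurableSet Z) (hZf : volume Z ≠ ∞) (he : ∫ p in Z, |dfc α β γ p| ≤ e) {x0 y0 : Vec m}
    (hxy : closedBall x0 (2 * s) ×ˢ closedBall y0 (2 * s) ⊆ Z) :
    ∫ x in closedBall x0 s, |α x + ml φ β (x0 + y0 - x) - ml φ γ (x0 + y0)| ≤ M * e := by
  set z0 := x0 + y0 with hz0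
  set Q1 := closedBall x0 s
  set Q2 := closedBall y0 (2 * s)
  have hD := bm_dfc hα hβ hγ
  have bφ : Bm φ := ⟨hφ.cont.measurable, M, fun x => by rw [abs_of_nonneg (hφ.nn x)]; exact hφ.le x⟩
  have i1 : ∀ x, Integrable (fun a => φ (x - a)) := fun x => hφ.int.comp_sub_left x
  have o : ∀ x, ∫ a, φ (x - a) = 1 := fun x => by rw [integral_sub_left_eq_self φ volume x]; exact hφ.one
  have e1 : ∀ x, α x + ml φ β (z0 - x) - ml φ γ z0 = ∫ b, φ (z0 - x - b) * dfc α β γ (x, b) := by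
    intro x
    have a1 : Integrable (fun b => φ (z0 - x - b) * α x) := (i1 _).mul_const _
    have a2 : Integrable (fun b => φ (z0 - x - b) * β b) := hβ.int_mul (i1 _)
    have a3 : Integrable (fun b => φ (z0 - x - b) * γ (x + b)) :=
      (hγ.comp (measurable_const.add measurable_id)).int_mul (i1 _)
    have b1 : ∫ b, φ (z0 - x - b) * α x = α x := by rw [integral_mul_const, o, one_mul]
    have b3 : ∫ b, φ (z0 - x - b) * γ (x + b) = ml φ γ z0 := by
      unfold ml
      rw [← integral_add_left_eq_self (fun a => φ (z0 - a) * γ a) x]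
      refine integral_congr_ae (ae_of_all _ fun b => ?_)
      beta_reduce
      rw [sub_add_eq_sub_sub]
    have a4 : Integrable (fun b => φ (z0 - x - b) * α x + φ (z0 - x - b) * β b) := a1.add a2
    rw [← b3]
    nth_rewrite 1 [← b1]
    unfold ml
    rw [← integral_add a1 a2, ← integral_sub a4 a3]
    refine integral_congr_ae (ae_of_all _ fun b => ?_)
    simp only [dfc]; ring
  have e2 : ∀ x ∈ Q1, |α x + ml φ β (z0 - x) - ml φ γ z0| ≤ ∫ b in Q2, M * |dfc α β γ (x, b)| := by
    intro x hx
    have hx' := mem_closedBall_iff_norm.1 hx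
    rw [e1, ← setIntegral_eq_integral_of_forall_compl_eq_zero (s := Q2)]
    · rw [← norm_eq_abs]
      have : IntegrableOn (fun b => M * |dfc α β γ (x, b)|) Q2 :=
        ((hD.comp (measurable_prodMk_left (x := x))).abs.intOn (fm_ball y0 _).2).const_mul M
      refine norm_integral_le_of_norm_le this (ae_of_all _ fun b => ?_)
      rw [norm_mul, norm_eq_abs, norm_eq_abs, abs_of_nonneg (hφ.nn _)]
      gcongr
      exact hφ.le _
    · intro b hb
      rw [mem_closedBall_iff_norm, not_le] at hb
      rw [hφ.supp, zero_mul]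
      have := norm_sub_norm_le (b - y0) (x0 - x)
      rw [show b - y0 - (x0 - x) = -(z0 - x - b) by rw [hz0]; abel, norm_neg, norm_sub_rev x0 x] at this
      linarith
  have hsub : Q1 ×ˢ Q2 ⊆ Z := (Set.prod_mono (closedBall_subset_closedBall (by linarith)) Subset.rfl).trans hxy
  have hI : IntegrableOn (fun p => |dfc α β γ p|) Z := hD.abs.intOn hZf
  have hI2 : IntegrableOn (fun p => M * |dfc α β γ p|) (Q1 ×ˢ Q2) (volume.prod volume) :=
    (hI.mono_set hsub).const_mul M
  calc ∫ x in Q1, |α x + ml φ β (z0 - x) - ml φ γ z0| ≤ ∫ x in Q1, ∫ b in Q2, M * |dfc α β γ (x, b)| := by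
        refine integral_mono_of_nonneg (ae_of_all _ fun x => abs_nonneg _) ?_ ?_
        · rw [IntegrableOn, ← Measure.prod_restrict] at hI2
          exact hI2.integral_prod_left
        · filter_upwards [ae_restrict_mem measurableSet_closedBall] with x hx using e2 x hx
    _ = ∫ p in Q1 ×ˢ Q2, M * |dfc α β γ p| := (setIntegral_prod _ hI2).symm
    _ = M * ∫ p in Q1 ×ˢ Q2, |dfc α β γ p| := integral_const_mul _ _
    _ ≤ M * ∫ p in Z, |dfc α β γ p| := by
        exact mul_le_mul_of_nonneg_left
          (setIntegral_mono_set hI (ae_of_all _ fun _ => abs_nonneg _) hsub.eventuallyLE) hM.le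
    _ ≤ M * e := by gcongr

/-- Half of the Cauchy lemma: `α` is affine up to `O(e)` in `L¹`. -/
lemma cauchy_half (hφ : Mol s M φ) (hM : 0 < M) (hs : 0 < s) {R : ℝ} (hR : 0 ≤ R) (μ : ℝ) :
    ∃ K : ℝ, 0 ≤ K ∧ ∀ (α β γ : Vec m → ℝ) (Z : Set (Vec m × Vec m)) (e : ℝ), Bm α → Bm β → Bm γ →
      MeasurableSet Z → volume Z ≠ ∞ → ∫ p in Z, |dfc α β γ p| ≤ e →
      (∀ x : Vec m, ‖x‖ ≤ R → closedBall x (4 * s) ×ˢ closedBall (μ • x) (4 * s) ⊆ Z) →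
      ∃ p : ℝ, ∫ x in Bl R, |α x - p - fderiv ℝ (ml φ α) 0 x| ≤ K * e := by
  obtain ⟨N, hN⟩ := exists_nat_ge (R / (2 * s))
  obtain ⟨F, hFs, hFf, hFc⟩ := (isCompact_closedBall (0 : Vec m) R).finite_cover_balls hs
  set L := 2 * M * M
  set V := vol (Bl s : Set (Vec m))
  set C1 := 2 * (N + 1) * L + L
  set C2 := M + V * (C1 * (2 * s))
  set C3 := C2 + V * (2 * (N + 1) * L * R + M * C2)
  have hV : 0 ≤ V := vol_nonneg
  have hL : 0 ≤ L := by positivity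
  have hC1 : 0 ≤ C1 := by positivity
  have hC2 : 0 ≤ C2 := by positivity
  have hC3 : 0 ≤ C3 := by positivity
  refine ⟨hFf.toFinset.card * C3, by positivity, fun α β γ Z e hα hβ hγ hZ hZf he hgood => ?_⟩
  have he0 : 0 ≤ e := (integral_nonneg fun p => abs_nonneg _).trans he
  set W := fderiv ℝ (ml φ α) 0
  have near : ∀ x : Vec m, ‖x‖ ≤ R → ∀ x' y', ‖x' - x‖ ≤ 2 * s → ‖y' - μ • x‖ ≤ 2 * s →
      closedBall x' (2 * s) ×ˢ closedBall y' (2 * s) ⊆ Z := by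
    intro x hx x' y' h1 h2
    refine Subset.trans (Set.prod_mono ?_ ?_) (hgood x hx)
    · exact closedBall_subset_closedBall' (by rw [dist_eq_norm]; linarith)
    · exact closedBall_subset_closedBall' (by rw [dist_eq_norm]; linarith)
  have DD : ∀ x : Vec m, ‖x‖ ≤ R → ∀ x' y', ‖x' - x‖ ≤ 2 * s → ‖y' - μ • x‖ ≤ 2 * s →
      ‖fderiv ℝ (ml φ α) x' - fderiv ℝ (ml φ β) y'‖ ≤ L * e := fun x hx x' y' h1 h2 =>
    ml_fderiv hφ hM hs hα hβ hγ hZ hZf he (near x hx x' y' h1 h2)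
  have h2s : 0 ≤ 2 * s := by positivity
  -- chain along the segment from the origin
  have hN1 : (0 : ℝ) < (N : ℝ) + 1 := by positivity
  have chain : ∀ x : Vec m, ‖x‖ ≤ R → ∀ j : ℕ, j ≤ N + 1 →
      ‖fderiv ℝ (ml φ α) (((j : ℝ) / (N + 1)) • x) - W‖ ≤ 2 * j * (L * e) := by
    intro x hx j
    induction j with
    | zero => intro _; simp [W]
    | succ j ih =>
      intro hj
      have ih := ih (by omega)
      have hj' : (j : ℝ) ≤ N + 1 := by exact_mod_cast (by omega : j ≤ N + 1)
      set xj := ((j : ℝ) / (N + 1)) • x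
      have hxj : ‖xj‖ ≤ R := by
        rw [norm_smul, norm_eq_abs, abs_of_nonneg (by positivity)]
        have : (j : ℝ) / (N + 1) ≤ 1 := (div_le_one hN1).2 hj'
        nlinarith [norm_nonneg x]
      have d1 := DD xj hxj xj (μ • xj) (by simpa using h2s) (by simpa using h2s)
      have d2 := DD xj hxj ((((j + 1 : ℕ) : ℝ) / (N + 1)) • x) (μ • xj) (by
        rw [← sub_smul, norm_smul, norm_eq_abs]
        have : ((j + 1 : ℕ) : ℝ) / (N + 1) - j / (N + 1) = 1 / (N + 1) := by push_cast; ring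
        rw [this, abs_of_pos (by positivity), one_div, inv_mul_le_iff₀ hN1]
        rw [div_le_iff₀ (by positivity)] at hN
        nlinarith) (by simpa using h2s)
      rw [norm_sub_rev] at d1
      calc _ ≤ ‖fderiv ℝ (ml φ α) ((((j + 1 : ℕ) : ℝ) / (N + 1)) • x) - fderiv ℝ (ml φ β) (μ • xj)‖
            + ‖fderiv ℝ (ml φ β) (μ • xj) - fderiv ℝ (ml φ α) xj‖ + ‖fderiv ℝ (ml φ α) xj - W‖ := by
            refine le_trans (le_of_eq ?_) (norm_add₃_le)
            congr 1; abel
        _ ≤ L * e + L * e + 2 * j * (L * e) := add_le_add (add_le_add d2 d1) ih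
        _ = _ := by push_cast; ring
  have hα' : ∀ x : Vec m, ‖x‖ ≤ R → ‖fderiv ℝ (ml φ α) x - W‖ ≤ 2 * (N + 1) * L * e := by
    intro x hx
    have := chain x hx (N + 1) le_rfl
    push_cast at this
    rw [div_self hN1.ne', one_smul] at this
    linarith
  have hβ' : ∀ x : Vec m, ‖x‖ ≤ R → ∀ y, ‖y - μ • x‖ ≤ 2 * s → ‖fderiv ℝ (ml φ β) y - W‖ ≤ C1 * e := by
    intro x hx y hy
    have d1 := DD x hx x y (by simpa using h2s) hy
    rw [norm_sub_rev] at d1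
    have d2 := hα' x hx
    have := norm_sub_le_norm_sub_add_norm_sub (fderiv ℝ (ml φ β) y) (fderiv ℝ (ml φ α) x) W
    simp only [C1]
    nlinarith
  have mvtα : ∀ x : Vec m, ‖x‖ ≤ R → |ml φ α x - ml φ α 0 - W x| ≤ 2 * (N + 1) * L * R * e := by
    intro x hx
    have := (convex_closedBall (0 : Vec m) R).norm_image_sub_le_of_norm_fderiv_le' (𝕜 := ℝ) (f := ml φ α) (φ := W)
      (C := 2 * (N + 1) * L * e) (x := 0) (y := x)
      (fun z _ => ml_diff hφ hα z) (fun z hz => hα' z (mem_Bl.1 hz))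
      (by simpa using hR) (by simpa using hx)
    rw [norm_eq_abs, sub_zero] at this
    refine this.trans ?_
    calc 2 * (N + 1) * L * e * ‖x‖ ≤ 2 * (N + 1) * L * e * R := by gcongr
      _ = _ := by ring
  set k := ∫ u, φ u * W u
  set p := ml φ α 0 + k
  refine ⟨p, ?_⟩
  have loc1 : ∀ (c : ℝ) (v : Vec m), LocallyIntegrable (fun x => |α x - c - W (x - v)|) := by
    intro c v
    have h2 : Continuous fun x => c + W (x - v) := by fun_prop
    have := locInt_abs (hα.locInt.sub h2.locallyIntegrable)
    simpa only [Pi.sub_apply, sub_add_eq_sub_sub] using this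
  have loc : ∀ x0 : Vec m, ‖x0‖ ≤ R → ∫ x in closedBall x0 s, |α x - p - W x| ≤ C3 * e := by
    intro x0 hx0
    set y0 := μ • x0
    have sl := ml_slice hφ hM hs hα hβ hγ hZ hZf he (near x0 hx0 x0 y0 (by simpa using h2s) (by rw [sub_self, norm_zero]; exact h2s))
    set c := ml φ γ (x0 + y0) - ml φ β y0
    have vS : vol (closedBall x0 s) = V := by
      simp only [V, Measure.real]; rw [Measure.addHaar_closedBall_center]
    have fS : volume (closedBall x0 s) ≠ ∞ := (fm_ball x0 s).2
    have mvtβ : ∀ x ∈ closedBall x0 s, |ml φ β (x0 + y0 - x) - ml φ β y0 - W (x0 - x)| ≤ C1 * (2 * s) * e := by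
      intro x hx
      have hx := mem_closedBall_iff_norm.1 hx
      have := (convex_closedBall y0 (2 * s)).norm_image_sub_le_of_norm_fderiv_le' (𝕜 := ℝ) (f := ml φ β) (φ := W)
        (C := C1 * e) (x := y0) (y := x0 + y0 - x)
        (fun z _ => ml_diff hφ hβ z) (fun z hz => hβ' x0 hx0 z (mem_closedBall_iff_norm.1 hz))
        (mem_closedBall_self h2s) (by
          rw [mem_closedBall_iff_norm, show x0 + y0 - x - y0 = -(x - x0) by abel, norm_neg]; linarith)
      rw [norm_eq_abs, show x0 + y0 - x - y0 = x0 - x by abel] at this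
      refine this.trans ?_
      rw [norm_sub_rev]
      calc C1 * e * ‖x - x0‖ ≤ C1 * e * (2 * s) := by gcongr; linarith
        _ = _ := by ring
    have mβ : Bm (ml φ β) := by
      obtain ⟨_, Mb, hMb⟩ := hβ
      refine ⟨(ml_diff hφ ⟨‹_›, Mb, hMb⟩).continuous.measurable, Mb, fun x => ?_⟩
      rw [ml_eq, ← norm_eq_abs]
      refine (norm_integral_le_of_norm_le (g := fun u => φ u * Mb) (hφ.int.mul_const _) (ae_of_all _ fun u => ?_)).trans ?_
      · rw [norm_mul, norm_eq_abs, norm_eq_abs, abs_of_nonneg (hφ.nn u)]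
        exact mul_le_mul_of_nonneg_left (hMb _) (hφ.nn u)
      · rw [integral_mul_const, hφ.one, one_mul]
    have st1 : ∫ x in closedBall x0 s, |α x - c - W (x - x0)| ≤ C2 * e := by
      have ib : IntegrableOn (fun x => |α x + ml φ β (x0 + y0 - x) - ml φ γ (x0 + y0)|) (closedBall x0 s) :=
        ((hα.add (mβ.comp (measurable_const.sub measurable_id))).sub ⟨measurable_const, |ml φ γ (x0 + y0)|, fun _ => le_rfl⟩).abs.intOn fS
      calc _ ≤ ∫ x in closedBall x0 s, (|α x + ml φ β (x0 + y0 - x) - ml φ γ (x0 + y0)| + C1 * (2 * s) * e) := by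
            refine setIntegral_mono_on ((loc1 c x0).integrableOn_isCompact (isCompact_closedBall _ _))
              (ib.add (integrableOn_const fS)) (fm_ball x0 s).1 fun x hx => ?_
            have h5 := mvtβ x hx
            refine le_trans ?_ (add_le_add le_rfl h5)
            have : α x - c - W (x - x0) = (α x + ml φ β (x0 + y0 - x) - ml φ γ (x0 + y0))
              - (ml φ β (x0 + y0 - x) - ml φ β y0 - W (x0 - x)) := by
              rw [show x0 - x = -(x - x0) by abel, map_neg]; simp only [c]; ring
            rw [this]; exact abs_sub _ _
        _ ≤ M * e + V * (C1 * (2 * s) * e) := by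
            rw [integral_add ib (integrableOn_const fS), setIntegral_const, vS, smul_eq_mul]
            linarith
        _ = _ := by simp only [C2]; ring
    have iW : Integrable (fun u => φ u * W u) :=
      (hφ.cont.mul W.continuous).integrable_of_hasCompactSupport (hφ.cs.mul_right)
    have cc : |ml φ α x0 + k - c| ≤ M * C2 * e := by
      have i1 : Integrable (fun a => φ (x0 - a)) := hφ.int.comp_sub_left x0
      have o : ∫ a, φ (x0 - a) = 1 := by rw [integral_sub_left_eq_self φ volume x0]; exact hφ.one
      have i2 : Integrable (fun a => φ (x0 - a) * α a) := hα.int_mul i1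
      have i3 : Integrable (fun a => φ (x0 - a) * W (x0 - a)) := iW.comp_sub_left x0
      have i4 : Integrable (fun a => φ (x0 - a) * c) := i1.mul_const c
      have i5 : Integrable (fun a => φ (x0 - a) * α a + φ (x0 - a) * W (x0 - a)) := i2.add i3
      have e1 : ml φ α x0 + k - c = ∫ a, φ (x0 - a) * (α a - c - W (a - x0)) := by
        have hk : k = ∫ a, φ (x0 - a) * W (x0 - a) :=
          (integral_sub_left_eq_self (fun u => φ u * W u) volume x0).symm
        have hc : c = ∫ a, φ (x0 - a) * c := by rw [integral_mul_const, o, one_mul]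
        rw [hk, ml]
        nth_rewrite 1 [hc]
        rw [← integral_add i2 i3, ← integral_sub i5 i4]
        refine integral_congr_ae (ae_of_all _ fun a => ?_)
        beta_reduce
        rw [show x0 - a = -(a - x0) by abel, map_neg]; ring
      rw [e1, ← setIntegral_eq_integral_of_forall_compl_eq_zero (s := closedBall x0 s)]
      · rw [← norm_eq_abs]
        have ii := (loc1 c x0).integrableOn_isCompact (isCompact_closedBall x0 s)
        refine (norm_integral_le_of_norm_le (g := fun a => M * |α a - c - W (a - x0)|) (ii.const_mul M)
          (ae_of_all _ fun a => ?_)).trans ?_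
        · rw [norm_mul, norm_eq_abs, norm_eq_abs, abs_of_nonneg (hφ.nn _)]
          gcongr; exact hφ.le _
        · rw [integral_const_mul, mul_assoc]
          gcongr
      · intro a ha
        rw [mem_closedBall_iff_norm, not_le, norm_sub_rev] at ha
        rw [hφ.supp _ ha.le, zero_mul]
    have pc : |c + W (-x0) - p| ≤ (2 * (N + 1) * L * R + M * C2) * e := by
      have a1 := abs_le.1 (mvtα x0 hx0)
      have a2 := abs_le.1 cc
      rw [map_neg, abs_le]
      simp only [p]
      constructor <;> linarith
    calc ∫ x in closedBall x0 s, |α x - p - W x|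
        ≤ ∫ x in closedBall x0 s, (|α x - c - W (x - x0)| + (2 * (N + 1) * L * R + M * C2) * e) := by
          have i1 := (loc1 c x0).integrableOn_isCompact (isCompact_closedBall x0 s)
          have i2 := (loc1 p 0).integrableOn_isCompact (isCompact_closedBall x0 s)
          simp only [sub_zero] at i2
          refine setIntegral_mono_on i2 (i1.add (integrableOn_const fS)) (fm_ball x0 s).1 fun x hx => ?_
          refine le_trans ?_ (add_le_add le_rfl pc)
          have : α x - p - W x = (α x - c - W (x - x0)) + (c + W (-x0) - p) := by
            rw [map_sub, map_neg]; ring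
          rw [this]; exact abs_add_le _ _
      _ ≤ C2 * e + V * ((2 * (N + 1) * L * R + M * C2) * e) := by
          rw [integral_add ((loc1 c x0).integrableOn_isCompact (isCompact_closedBall x0 s)) (integrableOn_const fS),
            setIntegral_const, vS, smul_eq_mul]
          linarith
      _ = _ := by simp only [C3]; ring
  have hl : LocallyIntegrable (fun x => |α x - p - W x|) := by simpa using loc1 p 0
  obtain ⟨u1, u2⟩ := int_biUnion_le hl (fun _ => abs_nonneg _) (r := s) (D := C3 * e) (by positivity) hFf.toFinset (by
    intro x hx
    exact loc x (mem_Bl.1 (hFs (hFf.mem_toFinset.1 hx))))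
  have sub : Bl R ⊆ ⋃ x ∈ hFf.toFinset, closedBall x s := by
    intro x hx
    have := hFc hx
    simp only [mem_iUnion, Finite.mem_toFinset] at this ⊢
    obtain ⟨i, hi, h⟩ := this
    exact ⟨i, hi, ball_subset_closedBall h⟩
  refine (setIntegral_mono_set u1 (ae_of_all _ fun _ => abs_nonneg _) sub.eventuallyLE).trans (u2.trans (le_of_eq ?_))
  ring

end

/-- The approximate Cauchy equation near the graphs `y = μ x` and `x = μ' y` forces `α` and `β` to be
close to affine functions with the same linear part. -/
lemma cauchy {s R1 R2 : ℝ} (hs : 0 < s) (h1 : 0 ≤ R1) (h2 : 0 ≤ R2) (μ μ' : ℝ) :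
    ∃ K : ℝ, 0 ≤ K ∧ ∀ (α β γ : Vec m → ℝ) (Z : Set (Vec m × Vec m)) (e : ℝ), Bm α → Bm β → Bm γ →
      MeasurableSet Z → volume Z ≠ ∞ → ∫ p in Z, |dfc α β γ p| ≤ e →
      (∀ x : Vec m, ‖x‖ ≤ R1 → closedBall x s ×ˢ closedBall (μ • x) s ⊆ Z) →
      (∀ y : Vec m, ‖y‖ ≤ R2 → closedBall (μ' • y) s ×ˢ closedBall y s ⊆ Z) →
      ∃ (p p' : ℝ) (w : Vec m), ∫ x in Bl R1, |α x - p - inner ℝ w x| ≤ K * e ∧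
        ∫ x in Bl R2, |β x - p' - inner ℝ w x| ≤ K * e := by
  obtain ⟨M, φ, hM, hφ⟩ := exists_mol (m := m) (s := s / 4) (by positivity)
  have hs4 : 0 < s / 4 := by positivity
  obtain ⟨K1, hK1, H1⟩ := cauchy_half hφ hM hs4 h1 μ
  obtain ⟨K2, hK2, H2⟩ := cauchy_half hφ hM hs4 h2 μ'
  set V := vol (Bl R2 : Set (Vec m))
  have hV : 0 ≤ V := vol_nonneg
  refine ⟨K1 + K2 + V * (2 * M * M * R2), by positivity, fun α β γ Z e hα hβ hγ hZ hZf he g1 g2 => ?_⟩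
  have he0 : 0 ≤ e := (integral_nonneg fun p => abs_nonneg _).trans he
  have e4 : 4 * (s / 4) = s := by ring
  obtain ⟨p, hp⟩ := H1 α β γ Z e hα hβ hγ hZ hZf he (by rw [e4]; exact g1)
  have swp : MeasurePreserving (Prod.swap : Vec m × Vec m → Vec m × Vec m) volume volume :=
    Measure.measurePreserving_swap
  obtain ⟨p', hp'⟩ := H2 β α γ (Prod.swap ⁻¹' Z) e hβ hα hγ (measurable_swap hZ)
    (by rw [swp.measure_preimage hZ.nullMeasurableSet]; exact hZf)
    (by
      have := swp.setIntegral_preimage_emb MeasurableEquiv.prodComm.measurableEmbedding (fun p => |dfc α β γ p|) Z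
      refine le_trans (le_of_eq ?_) he
      rw [← this]
      congr 1
      ext q
      simp only [dfc, Prod.fst_swap, Prod.snd_swap]
      rw [add_comm q.1, add_comm (β q.1)])
    (by
      rw [e4]
      intro y hy q hq
      exact g2 y hy ⟨hq.2, hq.1⟩)
  set W := fderiv ℝ (ml φ α) 0
  set W' := fderiv ℝ (ml φ β) 0
  have dW : ‖W - W'‖ ≤ 2 * M * M * e := by
    refine ml_fderiv hφ hM hs4 hα hβ hγ hZ hZf he ((Set.prod_mono ?_ ?_).trans (g1 0 (by simpa using h1)))
    · exact Bl_mono (by linarith)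
    · rw [smul_zero]; exact Bl_mono (by linarith)
  set w := (InnerProductSpace.toDual ℝ (Vec m)).symm W
  have hw : ∀ x, inner ℝ w x = W x := fun x => InnerProductSpace.toDual_symm_apply
  have loc1 : ∀ (c : ℝ) (W : Vec m →L[ℝ] ℝ), LocallyIntegrable (fun x => |β x - c - W x|) := by
    intro c W
    have h2 : Continuous fun x => c + W x := by fun_prop
    have := locInt_abs (hβ.locInt.sub h2.locallyIntegrable)
    simpa only [Pi.sub_apply, sub_add_eq_sub_sub] using this
  refine ⟨p, p', w, ?_⟩
  simp only [hw]
  refine ⟨hp.trans ?_, ?_⟩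
  · have : 0 ≤ (K2 + V * (2 * M * M * R2)) * e := by positivity
    linarith
  · have fS := (fm_Bl (d := m) R2)
    have i1 := (loc1 p' W').integrableOn_isCompact (isCompact_closedBall 0 R2)
    calc ∫ x in Bl R2, |β x - p' - W x| ≤ ∫ x in Bl R2, (|β x - p' - W' x| + 2 * M * M * e * R2) := by
          refine setIntegral_mono_on ((loc1 p' W).integrableOn_isCompact (isCompact_closedBall 0 R2))
            (i1.add (integrableOn_const fS.2)) fS.1 fun x hx => ?_
          have hx := mem_Bl.1 hx
          have h5 : |(W - W') x| ≤ 2 * M * M * e * R2 := by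
            rw [← norm_eq_abs]
            refine ((W - W').le_opNorm x).trans ?_
            gcongr
          refine le_trans ?_ (add_le_add le_rfl h5)
          have : β x - p' - W x = (β x - p' - W' x) - (W - W') x := by
            rw [ContinuousLinearMap.sub_apply]; ring
          rw [this]; exact abs_sub _ _
      _ ≤ K2 * e + V * (2 * M * M * e * R2) := by
          rw [integral_add i1 (integrableOn_const fS.2), setIntegral_const, smul_eq_mul]
          linarith
      _ ≤ _ := by
          have : 0 ≤ K1 * e := by positivity
          nlinarith

end

section
variable {A B C : Set (Vec (m + 1))}

/-! ### The directional lemma -/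

/-- Half-length of the chord of the ball of radius `r` over the point `x`. -/
def hl (r : ℝ) (x : Vec m) : ℝ := √(r ^ 2 - ‖x‖ ^ 2)

/-- The smallest margin in the triangle inequalities between the three chords. -/
def mg (r1 r2 r3 : ℝ) (p : Vec m × Vec m) : ℝ :=
  min (min (hl r1 p.1 + hl r2 p.2 - hl r3 (p.1 + p.2)) (hl r1 p.1 + hl r3 (p.1 + p.2) - hl r2 p.2))
    (hl r2 p.2 + hl r3 (p.1 + p.2) - hl r1 p.1)

lemma continuous_mg (r1 r2 r3 : ℝ) : Continuous (mg (m := m) r1 r2 r3) := by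
  unfold mg hl; fun_prop

lemma mg_swap (r1 r2 r3 : ℝ) (x y : Vec m) : mg r1 r2 r3 (x, y) = mg r2 r1 r3 (y, x) := by
  simp only [mg, add_comm y x, add_comm (hl r2 y) (hl r1 x)]
  rw [min_assoc, min_assoc, min_comm (hl r1 x + _ - _) (_ - hl r1 x)]

lemma hl_pos {r : ℝ} {x : Vec m} (hr : 0 ≤ r) (h : 0 < hl r x) : ‖x‖ < r := by
  have := Real.sqrt_pos.1 h
  nlinarith [norm_nonneg x]

/-- The map `x ↦ μ x` keeps the three chords in a nondegenerate triangle. -/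
lemma mg_pos {r1 r2 r3 : ℝ} (h1 : 0 < r1) (h2 : 0 < r2) (h3 : |r1 - r2| < r3) (h4 : r3 < r1 + r2) {x : Vec m}
    (hx : ‖x‖ < r1) : 0 < mg r1 r2 r3 (x, ((r3 ^ 2 - r1 ^ 2 - r2 ^ 2) / (2 * r1 ^ 2)) • x) := by
  have h30 : 0 < r3 := (abs_nonneg _).trans_lt h3
  obtain ⟨h5, h6⟩ := abs_lt.1 h3
  set l := (r3 ^ 2 - r1 ^ 2 - r2 ^ 2) / (2 * r1) with hl0
  have hμ : (r3 ^ 2 - r1 ^ 2 - r2 ^ 2) / (2 * r1 ^ 2) = l / r1 := by rw [hl0]; field_simp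
  have hl' : 2 * r1 * l = r3 ^ 2 - r1 ^ 2 - r2 ^ 2 := by rw [hl0]; field_simp
  have l1 : |l| < r2 := by
    rw [abs_lt]
    constructor <;> nlinarith
  have l2 : 0 < r2 ^ 2 - l ^ 2 := by
    have := sq_lt_sq' (by linarith [(abs_lt.1 l1).1]) (abs_lt.1 l1).2
    linarith
  set t := ‖x‖ / r1
  have ht : ‖x‖ = t * r1 := by simp only [t]; field_simp
  have ht0 : 0 ≤ t := by positivity
  have ht1 : t < 1 := (div_lt_one h1).2 hx
  have nx2 : ‖(l / r1) • x‖ ^ 2 = l ^ 2 * t ^ 2 := by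
    rw [norm_smul, mul_pow, norm_eq_abs, sq_abs, ht]; field_simp
  have nx3 : ‖x + (l / r1) • x‖ ^ 2 = (r1 + l) ^ 2 * t ^ 2 := by
    rw [show x + (l / r1) • x = (1 + l / r1) • x by rw [add_smul, one_smul], norm_smul, mul_pow, norm_eq_abs,
      sq_abs, ht]; field_simp
  have k2 : 0 < 1 - t ^ 2 := by nlinarith
  rw [hμ]
  set a := hl r1 x
  set b := hl r2 ((l / r1) • x)
  set c := hl r3 (x + (l / r1) • x)
  have ea : r1 ^ 2 - ‖x‖ ^ 2 = r1 ^ 2 * (1 - t ^ 2) := by rw [ht]; ring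
  have eb : r2 ^ 2 - ‖(l / r1) • x‖ ^ 2 = (r2 ^ 2 - l ^ 2) + l ^ 2 * (1 - t ^ 2) := by rw [nx2]; ring
  have ec : r3 ^ 2 - ‖x + (l / r1) • x‖ ^ 2 = (r2 ^ 2 - l ^ 2) + (r1 + l) ^ 2 * (1 - t ^ 2) := by
    rw [nx3]; linear_combination -hl'
  have a2 : a ^ 2 = r1 ^ 2 * (1 - t ^ 2) := by
    simp only [a, hl]; rw [sq_sqrt (by rw [ea]; positivity), ea]
  have b2 : b ^ 2 = (r2 ^ 2 - l ^ 2) + l ^ 2 * (1 - t ^ 2) := by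
    simp only [b, hl]; rw [sq_sqrt (by rw [eb]; positivity), eb]
  have c2 : c ^ 2 = (r2 ^ 2 - l ^ 2) + (r1 + l) ^ 2 * (1 - t ^ 2) := by
    simp only [c, hl]; rw [sq_sqrt (by rw [ec]; positivity), ec]
  have a0 : 0 ≤ a := sqrt_nonneg _
  have b0 : 0 ≤ b := sqrt_nonneg _
  have c0 : 0 ≤ c := sqrt_nonneg _
  have key : |r1 * l * (1 - t ^ 2)| < a * b := by
    refine abs_lt_of_sq_lt_sq ?_ (by positivity)
    rw [mul_pow a b, a2, b2]
    have : 0 < r1 ^ 2 * (1 - t ^ 2) * (r2 ^ 2 - l ^ 2) := by positivity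
    linear_combination this
  obtain ⟨k3, k4⟩ := abs_lt.1 key
  have c2' : c ^ 2 = a ^ 2 + b ^ 2 + 2 * (r1 * l * (1 - t ^ 2)) := by rw [a2, b2, c2]; ring
  have c3 : c ^ 2 < (a + b) ^ 2 := by rw [c2', add_sq]; linarith
  have c4 : (a - b) ^ 2 < c ^ 2 := by rw [c2', sub_sq]; linarith
  have c5 := lt_of_pow_lt_pow_left₀ 2 (by positivity) c3
  have c6 := abs_lt_of_sq_lt_sq c4 c0
  obtain ⟨c7, c8⟩ := abs_lt.1 c6
  show 0 < min (min (a + b - c) (a + c - b)) (b + c - a)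
  simp only [lt_min_iff]
  refine ⟨⟨?_, ?_⟩, ?_⟩ <;> linarith

lemma trap_sec {r η θ : ℝ} (hη : 0 ≤ η) (hηr : η ≤ r) (hθ : 0 ≤ θ) (h : 3 * r * η ≤ θ ^ 2) {x : Vec m} (hx : ‖x‖ ≤ r)
    (hA : Rt r η A) : Trap (hl r x) θ (sec A x) := by
  have h0 : 0 ≤ r ^ 2 - ‖x‖ ^ 2 := by nlinarith [norm_nonneg x]
  have e : hl r x ^ 2 = r ^ 2 - ‖x‖ ^ 2 := sq_sqrt h0
  have hp : 0 ≤ hl r x := sqrt_nonneg _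
  set a := hl r x
  constructor
  · intro s hs
    apply hA.1
    rw [mem_Bl]
    refine abs_le_of_sq_le_sq' ?_ (by linarith) |>.2
    rw [norm_J_sq]
    have hs' : |s| < a - θ := abs_lt.2 hs
    have := abs_nonneg s
    have : s ^ 2 ≤ (a - θ) ^ 2 := by rw [← sq_abs]; gcongr
    nlinarith
  · intro s hs
    have := mem_Bl.1 (hA.2 hs)
    have h5 : ‖J s x‖ ^ 2 ≤ (r + η) ^ 2 := by gcongr
    rw [norm_J_sq] at h5
    exact abs_le.1 (abs_le_of_sq_le_sq (by nlinarith) (by positivity))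

/-- Fibrewise version of `It`. -/
def Pu (A : Set (Vec (m + 1))) : Set (Vec (m + 1)) := {v | v 0 ∈ It (sec A (tl v))}

lemma sec_Pu (A : Set (Vec (m + 1))) (x : Vec m) : sec (Pu A) x = It (sec A x) := by
  ext s; simp [sec, Pu, tl_J, J_zero_coord]

lemma measurable_ctr (hA : MeasurableSet A) : Measurable (fun x : Vec m => ctr (sec A x)) := by
  have h1 := measurable_real_sec (hA.inter (measurable_coord (m := m + 1) 0 (measurableSet_Ici (a := (0 : ℝ)))))
  have h2 := measurable_real_sec (hA.inter (measurable_coord (m := m + 1) 0 (measurableSet_Iio (a := (0 : ℝ)))))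
  convert (h1.sub h2).div_const 2 using 1
  ext x
  show (vol _ - vol _) / 2 = (vol _ - vol _) / 2
  congr 3

lemma measurableSet_Pu (hA : MeasurableSet A) : MeasurableSet (Pu A) := by
  have h1 := (measurable_ctr hA).comp continuous_tl.measurable
  have h2 := ((measurable_real_sec hA).comp continuous_tl.measurable).div_const 2
  exact (measurableSet_le (h1.sub h2) (measurable_coord 0)).inter (measurableSet_lt (measurable_coord 0) (h1.add h2))

lemma bm_ctr (hA : MeasurableSet A) {R : ℝ} (h : A ⊆ Bl R) : Bm (fun x : Vec m => ctr (sec A x)) := by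
  refine ⟨measurable_ctr hA, vol (Icc (-R) R), fun x => ?_⟩
  have h1 := mp_add_mm (fm_sec hA h x)
  have h2 := mp_nonneg (sec A x)
  have h3 := mm_nonneg (sec A x)
  have h4 : vol (sec A x) ≤ vol (Icc (-R) R) := measureReal_mono (sec_sub h x) (by simp)
  rw [abs_le]; unfold ctr; constructor <;> linarith

/-- Distance of a fibre to its `It`. -/
def fd (A : Set (Vec (m + 1))) (x : Vec m) : ℝ := vol ((sec A x) ∆ (It (sec A x)))

lemma bm_fd (hA : MeasurableSet A) {R : ℝ} (h : A ⊆ Bl R) : Bm (fd A) := by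
  refine ⟨?_, vol (Icc (-R) R) + vol (Icc (-R) R), fun x => ?_⟩
  · have := measurable_real_sec (hA.symmDiff (measurableSet_Pu hA))
    simp only [sec_symmDiff, sec_Pu] at this
    exact this
  · have h4 : vol (sec A x) ≤ vol (Icc (-R) R) := measureReal_mono (sec_sub h x) (by simp)
    rw [fd, abs_of_nonneg vol_nonneg]
    have h5 : vol ((sec A x) ∆ (It (sec A x))) ≤ vol (sec A x ∪ It (sec A x)) :=
      measureReal_mono (by intro y hy; rcases hy with h | h; exacts [Or.inl h.1, Or.inr h.1])
        ((fm_sec hA h x).union (fm_It _)).2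
    have h6 := measureReal_union_le (μ := volume) (sec A x) (It (sec A x))
    rw [real_It] at h6
    linarith

lemma int_tri_sec (hA : Fm A) (hB : Fm B) (hC : Fm C) :
    Integrable (fun p : Vec m × Vec m => tri (sec A p.1) (sec B p.2) (sec C (p.1 + p.2))) ∧
      ∫ p : Vec m × Vec m, tri (sec A p.1) (sec B p.2) (sec C (p.1 + p.2)) = tri A B C := by
  have hm := measurable_triE_sec hA.1 hB.1 hC.1
  have e : ∫⁻ p : Vec m × Vec m, triE (sec A p.1) (sec B p.2) (sec C (p.1 + p.2)) = triE A B C := by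
    rw [triE_sec hA.1 hB.1 hC.1, Measure.volume_eq_prod, lintegral_prod _ hm.aemeasurable]
  have hf : triE A B C ≠ ∞ := (triE_lt_top C hA hB).ne
  rw [← e] at hf
  refine ⟨integrable_toReal_of_lintegral_ne_top hm.aemeasurable hf, ?_⟩
  simp only [tri]
  rw [integral_toReal hm.aemeasurable (ae_lt_top hm hf), e]

lemma int_cover {R s : ℝ} (hs : 0 < s) : ∃ N : ℕ, ∀ (f : Vec m → ℝ) (D : ℝ), LocallyIntegrable f → (∀ x, 0 ≤ f x) →
    0 ≤ D → (∀ x : Vec m, ‖x‖ ≤ R → ∫ z in closedBall x s, f z ≤ D) → ∫ x in Bl R, f x ≤ N * D := by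
  obtain ⟨F, hFs, hFf, hFc⟩ := (isCompact_closedBall (0 : Vec m) R).finite_cover_balls hs
  refine ⟨hFf.toFinset.card, fun f D hf h0 hD h => ?_⟩
  obtain ⟨u1, u2⟩ := int_biUnion_le hf h0 hD hFf.toFinset (by
    intro x hx
    exact h x (mem_Bl.1 (hFs (hFf.mem_toFinset.1 hx))))
  have sub : Bl R ⊆ ⋃ x ∈ hFf.toFinset, closedBall x s := by
    intro x hx
    have := hFc hx
    simp only [mem_iUnion, Finite.mem_toFinset] at this ⊢
    obtain ⟨i, hi, h⟩ := this
    exact ⟨i, hi, ball_subset_closedBall h⟩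
  exact (setIntegral_mono_set u1 (ae_of_all _ h0) sub.eventuallyLE).trans u2

/-- Every `x` inside `Bl r1` has a partner `μ • x`, and every `y` inside `Bl r2` a partner `μ' • y`, such that nearby lines cut
`Bl r1`, `Bl r2`, `Bl r3` in segments whose half-lengths form a strict triangle, with a margin. -/
lemma good_region {r1 r2 r3 : ℝ} (h1 : 0 < r1) (h2 : 0 < r2) (h3 : |r1 - r2| < r3) (h4 : r3 < r1 + r2) {κ : ℝ} (hκ : 0 < κ) :
    ∃ ε > 0, ∃ s > 0, ∃ μ μ' : ℝ,
      (∀ x : Vec m, ‖x‖ ≤ (1 - κ) * r1 → closedBall x s ×ˢ closedBall (μ • x) s ⊆ {p | ε ≤ mg r1 r2 r3 p}) ∧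
      (∀ y : Vec m, ‖y‖ ≤ (1 - κ) * r2 → closedBall (μ' • y) s ×ˢ closedBall y s ⊆ {p | ε ≤ mg r1 r2 r3 p}) := by
  set μ := (r3 ^ 2 - r1 ^ 2 - r2 ^ 2) / (2 * r1 ^ 2)
  set μ' := (r3 ^ 2 - r2 ^ 2 - r1 ^ 2) / (2 * r2 ^ 2)
  have aux : ∀ K : Set (Vec m × Vec m), IsCompact K → (∀ p ∈ K, 0 < mg r1 r2 r3 p) →
      ∃ ε > 0, ∃ s > 0, ∀ p ∈ K, closedBall p s ⊆ {p | ε ≤ mg r1 r2 r3 p} := by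
    intro K hK hp
    obtain ⟨ε, hε, hεK⟩ : ∃ ε > 0, ∀ p ∈ K, ε < mg r1 r2 r3 p := by
      rcases K.eq_empty_or_nonempty with rfl | hne
      · exact ⟨1, one_pos, by simp⟩
      · obtain ⟨p, hpK, hmin⟩ := hK.exists_isMinOn hne (continuous_mg r1 r2 r3).continuousOn
        refine ⟨mg r1 r2 r3 p / 2, half_pos (hp p hpK), fun q hq => ?_⟩
        have := hmin hq
        have := hp p hpK
        simp only [mem_setOf_eq] at *
        linarith
    obtain ⟨s, hs, hsub⟩ := hK.exists_cthickening_subset_open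
      (isOpen_lt continuous_const (continuous_mg r1 r2 r3) : IsOpen {p | ε < mg r1 r2 r3 p}) hεK
    refine ⟨ε, hε, s, hs, fun p hp q hq => ?_⟩
    have : ε < mg r1 r2 r3 q := hsub (closedBall_subset_cthickening hp s hq)
    exact this.le
  have e1 : ∀ r > 0, (1 - κ) * r < r := fun r hr => by nlinarith
  obtain ⟨ε, hε, s, hs, H⟩ := aux
    ((fun x : Vec m => (x, μ • x)) '' Bl ((1 - κ) * r1) ∪ (fun y : Vec m => (μ' • y, y)) '' Bl ((1 - κ) * r2))
    (((isCompact_closedBall _ _).image (by fun_prop)).union ((isCompact_closedBall _ _).image (by fun_prop))) (by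
      rintro _ (⟨x, hx, rfl⟩ | ⟨y, hy, rfl⟩)
      · exact mg_pos h1 h2 h3 h4 ((mem_Bl.1 hx).trans_lt (e1 _ h1))
      · beta_reduce
        rw [mg_swap]
        exact mg_pos h2 h1 (by rwa [abs_sub_comm]) (by linarith) ((mem_Bl.1 hy).trans_lt (e1 _ h2)))
  refine ⟨ε, hε, s, hs, μ, μ', fun x hx => ?_, fun y hy => ?_⟩
  · rw [closedBall_prod_same]
    exact H _ (Or.inl ⟨x, mem_Bl.2 hx, rfl⟩)
  · rw [closedBall_prod_same]
    exact H _ (Or.inr ⟨y, mem_Bl.2 hy, rfl⟩)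

/-- The directional lemma: a small one-dimensional deficit forces the fibres of `A` and `B` to be close
to intervals whose centres are close to affine functions with a common linear part. -/
lemma dir {r1 r2 r3 : ℝ} (h1 : 0 < r1) (h2 : 0 < r2) (h3 : |r1 - r2| < r3) (h4 : r3 < r1 + r2) {κ : ℝ} (hκ : 0 < κ)
    (hκ1 : κ < 1) :
    ∃ η > 0, ∃ K : ℝ, 0 ≤ K ∧ ∀ (A B C : Set (Vec (m + 1))) (e : ℝ), MeasurableSet A → MeasurableSet B → MeasurableSet C →
      Rt r1 η A → Rt r2 η B → Rt r3 η C → 0 < e → tri (St A) (St B) (St C) ≤ tri A B C + e ^ 2 →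
      ∃ (p p' : ℝ) (w : Vec m),
        (∫ x in Bl ((1 - κ) * r1), fd A x ≤ K * e ∧ ∫ x in Bl ((1 - κ) * r1), |ctr (sec A x) - p - inner ℝ w x| ≤ K * e) ∧
        (∫ x in Bl ((1 - κ) * r2), fd B x ≤ K * e ∧ ∫ x in Bl ((1 - κ) * r2), |ctr (sec B x) - p' - inner ℝ w x| ≤ K * e) := by
  have h30 : 0 < r3 := (abs_nonneg _).trans_lt h3
  obtain ⟨ε, hε, s, hs, μ, μ', g1, g2⟩ := good_region (m := m) h1 h2 h3 h4 hκ
  have hR1 : 0 ≤ (1 - κ) * r1 := by have : 0 < 1 - κ := by linarith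
                                    positivity
  have hR2 : 0 ≤ (1 - κ) * r2 := by have : 0 < 1 - κ := by linarith
                                    positivity
  obtain ⟨K1, hK1, HC⟩ := cauchy hs hR1 hR2 μ μ' (m := m)
  obtain ⟨N1, HN1⟩ := int_cover (m := m) (R := (1 - κ) * r1) hs
  obtain ⟨N2, HN2⟩ := int_cover (m := m) (R := (1 - κ) * r2) hs
  set Z : Set (Vec m × Vec m) := {p | ε ≤ mg r1 r2 r3 p}
  have hZ : MeasurableSet Z := (isClosed_le continuous_const (continuous_mg r1 r2 r3)).measurableSet
  have Zp : ∀ p ∈ Z, ‖p.1‖ < r1 ∧ ‖p.2‖ < r2 ∧ ‖p.1 + p.2‖ < r3 := by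
    intro p hp
    have hp : 0 < mg r1 r2 r3 p := hε.trans_le hp
    simp only [mg, lt_min_iff] at hp
    refine ⟨hl_pos h1.le ?_, hl_pos h2.le ?_, hl_pos h30.le ?_⟩ <;> linarith [hp.1.1, hp.1.2, hp.2]
  have Zs : Z ⊆ Bl r1 ×ˢ Bl r2 := fun p hp =>
    ⟨mem_Bl.2 (Zp p hp).1.le, mem_Bl.2 (Zp p hp).2.1.le⟩
  have hZf : volume Z ≠ ∞ := by
    refine ((measure_mono Zs).trans_lt ?_).ne
    rw [Measure.volume_eq_prod, Measure.prod_prod]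
    exact ENNReal.mul_lt_top (fm_Bl r1).2.lt_top (fm_Bl r2).2.lt_top
  set θ := ε / 10
  have hθ : 0 < θ := by positivity
  set r := r1 + r2 + r3
  obtain ⟨η, hη, e1, e2, e3, e4⟩ : ∃ η > 0, η ≤ r1 ∧ η ≤ r2 ∧ η ≤ r3 ∧ 3 * r * η ≤ θ ^ 2 := by
    refine ⟨min (min r1 r2) (min r3 (θ ^ 2 / (3 * r))), by positivity, ?_, ?_, ?_, ?_⟩
    · exact (min_le_left _ _).trans (min_le_left _ _)
    · exact (min_le_left _ _).trans (min_le_right _ _)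
    · exact (min_le_right _ _).trans (min_le_left _ _)
    · have := (min_le_right (min r1 r2) (min r3 (θ ^ 2 / (3 * r)))).trans (min_le_right _ _)
      rw [le_div_iff₀ (by positivity)] at this
      linarith
  set V := vol Z
  have hV : 0 ≤ V := vol_nonneg
  set K0 := V / 2 + 16
  set v := vol (Bl s : Set (Vec m))
  have hv : 0 < v := toReal_pos (measure_closedBall_pos volume _ hs).ne' (fm_ball _ _).2
  have hvx : ∀ x : Vec m, vol (closedBall x s) = v := fun x => by
    simp only [v, Measure.real]; rw [Measure.addHaar_closedBall_center]
  set K := K1 * K0 + N1 * (K0 / v) + N2 * (K0 / v)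
  refine ⟨η, hη, K, by positivity, fun A B C e mA mB mC tA tB tC he hd => ?_⟩
  have fA : Fm A := fm_of_bdd mA tA.2
  have fB : Fm B := fm_of_bdd mB tB.2
  have fC : Fm C := fm_of_bdd mC tC.2
  obtain ⟨n, hn⟩ := exists_nat_gt (r + η)
  have sub : ∀ (ρ : ℝ) (S : Set (Vec (m + 1))), ρ ≤ r → S ⊆ Bl (ρ + η) → ∀ x, sec S x ⊆ Ico (-n : ℝ) n := by
    intro ρ S hρ hS x t ht
    have := sec_sub hS x ht
    exact ⟨by linarith [this.1], by linarith [this.2]⟩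
  obtain ⟨i0, I0⟩ := int_tri_sec fA fB fC
  obtain ⟨i1, I1⟩ := int_tri_sec (A := St A) (B := St B) (C := St C) (fm_of_bdd (measurableSet_St mA) (St_sub mA tA.2))
    (fm_of_bdd (measurableSet_St mB) (St_sub mB tB.2)) (fm_of_bdd (measurableSet_St mC) (St_sub mC tC.2))
  simp only [sec_St] at i1 I1
  set f0 := fun p : Vec m × Vec m => tri (sec A p.1) (sec B p.2) (sec C (p.1 + p.2))
  set f1 := fun p : Vec m × Vec m => tri (Iv (0, vol (sec A p.1) / 2)) (Iv (0, vol (sec B p.2) / 2))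
    (Iv (0, vol (sec C (p.1 + p.2)) / 2))
  have iF : Integrable (fun p => f1 p - f0 p) := i1.sub i0
  have F0 : ∀ p, 0 ≤ f1 p - f0 p := fun p => sub_nonneg.2 (rs1 (measurableSet_sec mA _) (measurableSet_sec mB _)
    (measurableSet_sec mC _) n (sub r1 A (by simp only [r]; linarith) tA.2 _) (sub r2 B (by simp only [r]; linarith) tB.2 _)
    (sub r3 C (by simp only [r]; linarith) tC.2 _))
  have F1 : ∫ p in Z, (f1 p - f0 p) ≤ e ^ 2 := by
    refine (setIntegral_le_integral iF (ae_of_all _ F0)).trans ?_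
    rw [integral_sub i1 i0, I0, I1]; linarith
  set α := fun x : Vec m => ctr (sec A x)
  set β := fun x : Vec m => ctr (sec B x)
  set γ := fun x : Vec m => ctr (sec C x)
  have FZ : ∀ p ∈ Z, (fd A p.1 ^ 2 + fd B p.2 ^ 2) / 32 + dfc α β γ p ^ 2 ≤ f1 p - f0 p := by
    intro p hp
    obtain ⟨p1, p2, p3⟩ := Zp p hp
    have hm : ε ≤ mg r1 r2 r3 p := hp
    simp only [mg, le_min_iff] at hm
    have h3r : ∀ ρ, ρ ≤ r → 3 * ρ * η ≤ θ ^ 2 := fun ρ hρ => le_trans (by gcongr) e4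
    have ε10 : 10 * θ = ε := by simp only [θ]; ring
    have := hex (fm_sec mA tA.2 p.1) (fm_sec mB tB.2 p.2) (fm_sec mC tC.2 (p.1 + p.2))
      (trap_sec hη.le e1 hθ.le (h3r r1 (by simp only [r]; linarith)) p1.le tA)
      (trap_sec hη.le e2 hθ.le (h3r r2 (by simp only [r]; linarith)) p2.le tB)
      (trap_sec hη.le e3 hθ.le (h3r r3 (by simp only [r]; linarith)) p3.le tC) hθ
      (by rw [ε10]; exact hm.1.1) (by rw [ε10]; exact hm.1.2) (by rw [ε10]; exact hm.2)
    have sq := sq_nonneg (vol ((sec C (p.1 + p.2)) ∆ (It (sec C (p.1 + p.2)))))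
    have ed : dfc α β γ p ^ 2 = (ctr (sec C (p.1 + p.2)) - ctr (sec A p.1) - ctr (sec B p.2)) ^ 2 := by
      simp only [dfc, α, β, γ]; ring
    rw [ed]
    simp only [fd, f0, f1]
    linarith
  have bA := bm_fd mA tA.2
  have bB := bm_fd mB tB.2
  have aα := bm_ctr mA tA.2
  have aβ := bm_ctr mB tB.2
  have aγ := bm_ctr mC tC.2
  have L1 : ∀ u : Vec m × Vec m → ℝ, Bm u → (∀ p ∈ Z, u p ^ 2 ≤ 32 * (f1 p - f0 p)) → ∫ p in Z, u p ≤ K0 * e := by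
    intro u hu hF
    have ic : IntegrableOn (fun _ : Vec m × Vec m => e / 2) Z := integrableOn_const hZf
    have ii : IntegrableOn (fun p => 16 / e * (f1 p - f0 p)) Z := (iF.const_mul _).integrableOn
    calc ∫ p in Z, u p ≤ ∫ p in Z, (e / 2 + 16 / e * (f1 p - f0 p)) := by
          refine setIntegral_mono_on (hu.intOn hZf) (ic.add ii) hZ fun p hp => ?_
          have h5 := hF p hp
          have h6 : u p ≤ e / 2 + u p ^ 2 / (2 * e) := by
            have : 0 ≤ (u p - e) ^ 2 / (2 * e) := by positivity
            have h7 : (u p - e) ^ 2 / (2 * e) = u p ^ 2 / (2 * e) - u p + e / 2 := by field_simp; ring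
            linarith
          have h8 : u p ^ 2 / (2 * e) ≤ 32 * (f1 p - f0 p) / (2 * e) := by gcongr
          have h9 : 32 * (f1 p - f0 p) / (2 * e) = 16 / e * (f1 p - f0 p) := by field_simp; ring
          linarith
      _ = V * (e / 2) + 16 / e * ∫ p in Z, (f1 p - f0 p) := by
          rw [integral_add ic ii, setIntegral_const, smul_eq_mul, integral_const_mul]
      _ ≤ V * (e / 2) + 16 / e * e ^ 2 := by
          have : 0 ≤ 16 / e := by positivity
          linarith [mul_le_mul_of_nonneg_left F1 this]
      _ = K0 * e := by simp only [K0]; field_simp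
  have gA := L1 (fun p => fd A p.1) (bA.comp measurable_fst) fun p hp => by
    have := FZ p hp
    linarith [sq_nonneg (fd B p.2), sq_nonneg (dfc α β γ p)]
  have gB := L1 (fun p => fd B p.2) (bB.comp measurable_snd) fun p hp => by
    have := FZ p hp
    linarith [sq_nonneg (fd A p.1), sq_nonneg (dfc α β γ p)]
  have gD := L1 (fun p => |dfc α β γ p|) (bm_dfc aα aβ aγ).abs fun p hp => by
    have := FZ p hp
    rw [sq_abs]
    linarith [sq_nonneg (fd A p.1), sq_nonneg (fd B p.2), F0 p]
  obtain ⟨p, p', w, hp, hp'⟩ := HC α β γ Z (K0 * e) aα aβ aγ hZ hZf gD g1 g2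
  have k1 : 0 ≤ K1 * K0 * e := by positivity
  have k2 : 0 ≤ N1 * (K0 / v) * e := by positivity
  have k3 : 0 ≤ N2 * (K0 / v) * e := by positivity
  have kK : K * e = K1 * K0 * e + N1 * (K0 / v) * e + N2 * (K0 / v) * e := by simp only [K]; ring
  refine ⟨p, p', w, ⟨?_, by linarith⟩, ?_, by linarith⟩
  · refine (HN1 (fd A) (K0 * e / v) bA.locInt (fun x => vol_nonneg) (by positivity) fun x hx => ?_).trans ?_
    · rw [le_div_iff₀ hv]
      have := setIntegral_prod_mul (μ := volume) (ν := volume) (fd A) (fun _ : Vec m => (1 : ℝ)) (closedBall x s)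
        (closedBall (μ • x) s)
      rw [setIntegral_const, hvx, smul_eq_mul, mul_one] at this
      rw [← this]
      simp only [mul_one]
      exact (setIntegral_mono_set ((bA.comp measurable_fst).intOn hZf) (ae_of_all _ fun _ => vol_nonneg)
        (g1 x hx).eventuallyLE).trans gA
    · have : N1 * (K0 * e / v) = N1 * (K0 / v) * e := by ring
      linarith
  · refine (HN2 (fd B) (K0 * e / v) bB.locInt (fun x => vol_nonneg) (by positivity) fun x hx => ?_).trans ?_
    · rw [le_div_iff₀ hv]
      have := setIntegral_prod_mul (μ := volume) (ν := volume) (fun _ : Vec m => (1 : ℝ)) (fd B) (closedBall (μ' • x) s)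
        (closedBall x s)
      rw [setIntegral_const, hvx, smul_eq_mul, mul_one] at this
      rw [mul_comm, ← this]
      simp only [one_mul]
      exact (setIntegral_mono_set ((bB.comp measurable_snd).intOn hZf) (ae_of_all _ fun _ => vol_nonneg)
        (g2 x hx).eventuallyLE).trans gB
    · have : N2 * (K0 * e / v) = N2 * (K0 / v) * e := by ring
      linarith

end

section
variable {S : Set (Vec (m + 1))}

/-! ### Moments and centring -/

/-- First moment of a fibre. -/
def Mo (S : Set (Vec (m + 1))) (x : Vec m) : ℝ := ∫ s in sec S x, s

lemma mom_fubini (hS : MeasurableSet S) {R : ℝ} (bS : S ⊆ Bl R) {q : Vec m → ℝ} (hq : Continuous q) :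
    Integrable (fun x => q x * Mo S x) ∧ ∫ x, q x * Mo S x = ∫ v in S, v 0 * q (tl v) := by
  have c : Continuous fun v : Vec (m + 1) => v 0 * q (tl v) :=
    (by fun_prop : Continuous fun v : Vec (m + 1) => v 0).mul (hq.comp continuous_tl)
  have i1 : IntegrableOn (fun v : Vec (m + 1) => v 0 * q (tl v)) S :=
    (intBl c).mono_set bS
  rw [← integrable_indicator_iff hS] at i1
  have i2 := (mp_J (m := m)).integrable_comp i1.aestronglyMeasurable |>.2 i1
  have e2 := integral_map (mp_J (m := m)).measurable.aemeasurable
    ((mp_J (m := m)).map_eq.symm ▸ i1.aestronglyMeasurable)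
  rw [(mp_J (m := m)).map_eq, integral_indicator hS] at e2
  rw [Measure.volume_eq_prod] at i2
  have e3 : ∀ x : Vec m, ∫ s : ℝ, S.indicator (fun v => v 0 * q (tl v)) (J s x) = q x * Mo S x := by
    intro x
    rw [Mo, ← integral_const_mul, ← integral_indicator (measurableSet_sec hS x)]
    congr 1
    ext s
    by_cases h : J s x ∈ S
    · rw [indicator_of_mem h, indicator_of_mem (show s ∈ sec S x from h), J_zero_coord, tl_J, mul_comm]
    · rw [indicator_of_notMem h, indicator_of_notMem (show s ∉ sec S x from h)]
  have i3 := i2.integral_prod_right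
  simp only [Function.comp_def] at i3
  simp only [e3] at i3
  refine ⟨i3, ?_⟩
  have e4 := integral_prod_symm _ i2
  simp only [Function.comp_def, e3] at e4
  rw [e2, Measure.volume_eq_prod]
  exact e4.symm

lemma mom_sd {X Y : Set ℝ} (hX : MeasurableSet X) (hY : MeasurableSet Y) {b : ℝ} (sX : X ⊆ Icc (-b) b) (sY : Y ⊆ Icc (-b) b) :
    |(∫ s in X, s) - ∫ s in Y, s| ≤ b * vol (X ∆ Y) := by
  have ii : IntegrableOn (fun s : ℝ => s) (Icc (-b) b) := continuous_id.continuousOn.integrableOn_compact isCompact_Icc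
  have hf : ∀ Z ⊆ Icc (-b) b, volume Z ≠ ∞ := fun Z hZ => ((measure_mono hZ).trans_lt (by simp)).ne
  have key : ∀ Z, MeasurableSet Z → Z ⊆ Icc (-b) b → |∫ s in Z, s| ≤ b * vol Z := fun Z mZ hZ => by
    have := norm_setIntegral_le_of_norm_le_const (f := fun s : ℝ => s) (C := b) (hf Z hZ).lt_top fun s hs => by
      rw [norm_eq_abs]; exact abs_le.2 (hZ hs)
    rwa [norm_eq_abs] at this
  have e1 := integral_inter_add_diff hY (ii.mono_set sX)
  have e2 := integral_inter_add_diff hX (ii.mono_set sY)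
  rw [inter_comm] at e2
  have h1 := key _ (hX.diff hY) (diff_subset.trans sX)
  have h2 := key _ (hY.diff hX) (diff_subset.trans sY)
  rw [measureReal_symmDiff_eq hX hY (hf X sX) (hf Y sY), mul_add]
  rw [abs_le] at *
  constructor <;> linarith [h1.1, h1.2, h2.1, h2.2]

lemma mom_Iv (c : ℝ) {l : ℝ} (hl : 0 ≤ l) : ∫ s in Iv (c, l), s = 2 * l * c := by
  rw [Iv, integral_Ico_eq_integral_Ioc, ← intervalIntegral.integral_of_le (by simp; linarith), integral_id]
  ring

/-- If `S` is nearly round and `∫_S v₀ q(v') = 0`, the centres of its fibres nearly annihilate `q`. -/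
lemma moment {r η κ Q : ℝ} (hr : 0 < r) (hκ : 0 ≤ κ) (hκ1 : κ ≤ 1 / 2) (hη : 0 ≤ η) (hηκ : η ≤ κ * r)
    (hS : MeasurableSet S) (tS : Rt r η S) {q : Vec m → ℝ} (hq : Continuous q)
    (hQ : ∀ x : Vec m, ‖x‖ ≤ 2 * r → |q x| ≤ Q) (h0 : ∫ v in S, v 0 * q (tl v) = 0) :
    |∫ x in Bl ((1 - κ) * r), q x * (vol (sec S x) * ctr (sec S x))|
      ≤ Q * (2 * r * ∫ x in Bl ((1 - κ) * r), fd S x) + Q * (√(5 * κ) * r * vol (S ∆ (ballStar S))) := by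
  have hQ0 : 0 ≤ Q := (abs_nonneg _).trans (hQ 0 (by simp; linarith))
  have hηr : η ≤ r := by nlinarith
  have bS : S ⊆ Bl (2 * r) := tS.2.trans (Bl_mono (by linarith))
  have fS := fm_of_bdd hS bS
  obtain ⟨i1, e1⟩ := mom_fubini hS bS hq
  set R := (1 - κ) * r
  have mB : MeasurableSet (Bl R : Set (Vec m)) := (fm_Bl R).1
  rw [h0, ← integral_add_compl mB i1] at e1
  -- outside `Bl R` the moments are small since chords there are short
  set D := S ∆ (ballStar S)
  have fD : Fm D := fS.symmDiff (fm_ballStar S)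
  have bs : ballStar S ⊆ Bl (r + η) := ballStar_sub (by omega) (by linarith) tS.2
  have iD : Integrable (fun x => vol (sec D x)) ∧ ∫ x : Vec m, vol (sec D x) = vol D := by
    have hm := measurable_volume_sec fD.1
    have h := volume_eq_sec fD.1
    have hf := fD.2
    rw [h] at hf
    refine ⟨integrable_toReal_of_lintegral_ne_top hm.aemeasurable hf, ?_⟩
    simp only [Measure.real]
    rw [integral_toReal hm.aemeasurable (ae_lt_top hm hf), ← h]
  have out : ∀ x ∈ (Bl R : Set (Vec m))ᶜ, ‖q x * Mo S x‖ ≤ Q * (√(5 * κ) * r) * vol (sec D x) := by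
    intro x hx
    rw [mem_compl_iff, mem_Bl, not_le] at hx
    rw [norm_mul, norm_eq_abs, norm_eq_abs]
    have nn : 0 ≤ Q * (√(5 * κ) * r) * vol (sec D x) := by positivity
    rcases le_or_gt ‖x‖ (2 * r) with h2 | h2
    · have hb : ∀ W : Set (Vec (m + 1)), W ⊆ Bl (r + η) → sec W x ⊆ Icc (-(√(5 * κ) * r)) (√(5 * κ) * r) := by
        intro W hW s hs
        have h5 := mem_Bl.1 (hW hs)
        have h6 : ‖J s x‖ ^ 2 ≤ (r + η) ^ 2 := by gcongr
        rw [norm_J_sq] at h6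
        have h7 : R ^ 2 ≤ ‖x‖ ^ 2 := by
          have : 0 ≤ R := by simp only [R]; nlinarith
          gcongr
        refine abs_le.1 (abs_le_of_sq_le_sq ?_ (by positivity))
        rw [mul_pow, sq_sqrt (by positivity)]
        have h8 : (r + η) ^ 2 ≤ (r + κ * r) ^ 2 := by gcongr
        simp only [R] at h7
        nlinarith [mul_nonneg (mul_nonneg hκ hr.le) hr.le]
      have z : ∫ s in sec (ballStar S) x, s = 0 := by
        rw [ballStar_rad]
        rcases sec_Bl (rad (m + 1) (vol S)) x with h | ⟨ρ, hρ, h⟩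
        · rw [h]; simp
        · rw [h, integral_Icc_eq_integral_Ioc, ← intervalIntegral.integral_of_le (by linarith), integral_id]; ring
      have := mom_sd (measurableSet_sec hS x) (measurableSet_sec (fm_ballStar S).1 x) (hb S tS.2) (hb _ bs)
      rw [z, sub_zero, ← sec_symmDiff] at this
      calc |q x| * |Mo S x| ≤ Q * (√(5 * κ) * r * vol (sec D x)) :=
            mul_le_mul (hQ x h2) this (abs_nonneg _) hQ0
        _ = _ := by ring
    · rw [Mo, sec_empty bS x h2]; simpa using nn
  have o1 : |∫ x in (Bl R)ᶜ, q x * Mo S x| ≤ Q * (√(5 * κ) * r * vol D) := by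
    rw [← norm_eq_abs]
    refine (norm_integral_le_of_norm_le (iD.1.const_mul (Q * (√(5 * κ) * r))).integrableOn ?_).trans ?_
    · filter_upwards [ae_restrict_mem mB.compl] with x hx using out x hx
    · rw [integral_const_mul, mul_assoc]
      gcongr
      rw [← iD.2]
      exact setIntegral_le_integral iD.1 (ae_of_all _ fun _ => vol_nonneg)
  -- inside, the moment is that of the interval `It` up to the fibre distance
  have ins : ∀ x : Vec m, |Mo S x - vol (sec S x) * ctr (sec S x)| ≤ 2 * r * fd S x := by
    intro x
    have fx := fm_sec hS bS x
    have hm : Mo S x - vol (sec S x) * ctr (sec S x) = (∫ s in sec S x, s) - ∫ s in It (sec S x), s := by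
      rw [It, mom_Iv _ (by positivity), Mo]; ring
    rw [hm]
    refine mom_sd fx.1 (fm_It _).1 (sec_sub bS x) ?_
    rw [It_eq fx]
    have h1 : mm (sec S x) ≤ 2 * r := by
      have : vol (sec S x ∩ Iio 0) ≤ vol (Ico (-(2 * r)) 0) :=
        measureReal_mono (fun s hs => ⟨(sec_sub bS x hs.1).1, hs.2⟩) measure_Ico_lt_top.ne
      rw [volume_real_Ico_of_le (by linarith)] at this
      unfold mm; linarith
    have h2 : mp (sec S x) ≤ 2 * r := by
      have : vol (sec S x ∩ Ici 0) ≤ vol (Icc 0 (2 * r)) :=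
        measureReal_mono (fun s hs => ⟨hs.2, (sec_sub bS x hs.1).2⟩) measure_Icc_lt_top.ne
      rw [volume_real_Icc_of_le (by linarith)] at this
      unfold mp; linarith
    intro s hs
    exact ⟨by linarith [hs.1], by linarith [hs.2]⟩
  have bf := bm_fd hS bS
  have il : IntegrableOn (fun x => q x * (vol (sec S x) * ctr (sec S x))) (Bl R) := by
    have b1 : Bm fun x : Vec m => vol (sec S x) :=
      ⟨measurable_real_sec hS, vol (Icc (-(2 * r)) (2 * r)), fun x => by
        rw [abs_of_nonneg vol_nonneg]; exact measureReal_mono (sec_sub bS x) (by simp)⟩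
    have iq : IntegrableOn q (Bl R) volume := intBl hq
    have := (bm_ctr hS bS).int_mul (b1.int_mul iq)
    rw [IntegrableOn]
    simpa only [mul_assoc] using this
  have d1 : |(∫ x in Bl R, q x * Mo S x) - ∫ x in Bl R, q x * (vol (sec S x) * ctr (sec S x))|
      ≤ Q * (2 * r * ∫ x in Bl R, fd S x) := by
    rw [← integral_sub i1.integrableOn il, ← norm_eq_abs, ← integral_const_mul, ← integral_const_mul]
    refine norm_integral_le_of_norm_le (((bf.intOn (fm_Bl R).2).const_mul _).const_mul _) ?_
    filter_upwards [ae_restrict_mem mB] with x hx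
    rw [← mul_sub, norm_mul, norm_eq_abs, norm_eq_abs]
    have hx := mem_Bl.1 hx
    exact mul_le_mul (hQ x (hx.trans (by simp only [R]; nlinarith))) (ins x) (abs_nonneg _) hQ0
  rw [abs_le] at *
  constructor <;> linarith [o1.1, o1.2, d1.1, d1.2]

/-- An affine function is controlled by its `L²` norm on a ball. -/
lemma q_lower {r : ℝ} (hr : 0 < r) : ∃ c > 0, ∀ (p : ℝ) (w : Vec m),
    c * (|p| + 2 * r * ‖w‖) ^ 2 ≤ ∫ x in Bl (r / 2), (p + inner ℝ w x) ^ 2 := by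
  set v := vol (Bl (r / 8) : Set (Vec m))
  have hv : 0 < v := toReal_pos (measure_closedBall_pos volume _ (by positivity)).ne' (fm_ball _ _).2
  refine ⟨v / 256, by positivity, fun p w => ?_⟩
  obtain ⟨σ, hσ, hσp⟩ : ∃ σ : ℝ, |σ| = 1 ∧ σ * p = |p| := by
    rcases le_total 0 p with h | h
    · exact ⟨1, by simp, by rw [abs_of_nonneg h, one_mul]⟩
    · exact ⟨-1, by simp, by rw [abs_of_nonpos h]; ring⟩
  have σ2 : σ ^ 2 = 1 := by rw [← sq_abs, hσ, one_pow]
  set x0 : Vec m := (σ * (r / 4) * ‖w‖⁻¹) • w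
  have nx : ‖x0‖ ≤ r / 4 := by
    simp only [x0]
    rw [norm_smul, norm_eq_abs, abs_mul, abs_mul, hσ, abs_of_pos (by positivity : 0 < r / 4), abs_inv, abs_norm, mul_assoc]
    have := inv_mul_le_one (a := ‖w‖)
    nlinarith
  have ix : σ * inner ℝ w x0 = r / 4 * ‖w‖ := by
    simp only [x0]
    rw [inner_smul_right, real_inner_self_eq_norm_sq]
    rcases eq_or_ne ‖w‖ 0 with h | h
    · rw [h]; simp
    · field_simp; rw [σ2]
  have sub : closedBall x0 (r / 8) ⊆ Bl (r / 2) :=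
    closedBall_subset_closedBall' (by rw [dist_zero_right]; linarith)
  have i2 : IntegrableOn (fun x : Vec m => (p + inner ℝ w x) ^ 2) (Bl (r / 2)) :=
    intBl (by fun_prop : Continuous fun x : Vec m => (p + inner ℝ w x) ^ 2)
  refine le_trans ?_ (setIntegral_mono_set i2 (ae_of_all _ fun x => sq_nonneg _) sub.eventuallyLE)
  have lb : ∀ x ∈ closedBall x0 (r / 8), (|p| + 2 * r * ‖w‖) ^ 2 / 256 ≤ (p + inner ℝ w x) ^ 2 := by
    intro x hx
    have hx := mem_closedBall_iff_norm.1 hx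
    have h1 : |σ * inner ℝ w (x - x0)| ≤ ‖w‖ * (r / 8) := by
      rw [abs_mul, hσ, one_mul]
      exact (abs_real_inner_le_norm _ _).trans (by gcongr)
    have h2 : σ * inner ℝ w x = r / 4 * ‖w‖ + σ * inner ℝ w (x - x0) := by rw [inner_sub_right, mul_sub, ix]; ring
    have h3 : |p| + r / 8 * ‖w‖ ≤ σ * (p + inner ℝ w x) := by
      rw [mul_add, hσp, h2]; linarith [(abs_le.1 h1).1]
    have h4 : (p + inner ℝ w x) ^ 2 = (σ * (p + inner ℝ w x)) ^ 2 := by rw [mul_pow, σ2, one_mul]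
    have h5 : (|p| + 2 * r * ‖w‖) / 16 ≤ σ * (p + inner ℝ w x) := by
      linarith [abs_nonneg p, mul_nonneg hr.le (norm_nonneg w)]
    have h6 : 0 ≤ (|p| + 2 * r * ‖w‖) / 16 := by positivity
    rw [h4]
    calc _ = ((|p| + 2 * r * ‖w‖) / 16) ^ 2 := by ring
      _ ≤ _ := by gcongr
  have vv : vol (closedBall x0 (r / 8)) = v := by
    simp only [v, Measure.real]; rw [Measure.addHaar_closedBall_center]
  have := setIntegral_mono_on (integrableOn_const (fm_ball x0 (r / 8)).2) (i2.mono_set sub) (fm_ball x0 (r / 8)).1 lb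
  rw [setIntegral_const, vv, smul_eq_mul] at this
  linarith

lemma bm_len (hS : MeasurableSet S) {R : ℝ} (hR : 0 ≤ R) (bS : S ⊆ Bl R) :
    Bm (fun x : Vec m => vol (sec S x)) ∧ ∀ x : Vec m, vol (sec S x) ≤ 2 * R := by
  have h : ∀ x : Vec m, vol (sec S x) ≤ 2 * R := fun x => by
    have := measureReal_mono (μ := volume) (sec_sub bS x) measure_Icc_lt_top.ne
    rw [volume_real_Icc_of_le (by linarith)] at this
    linarith
  exact ⟨⟨measurable_real_sec hS, 2 * R, fun x => by rw [abs_of_nonneg vol_nonneg]; exact h x⟩, h⟩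

/-- Fibre distance to the centred interval of the same length. -/
def hd (S : Set (Vec (m + 1))) (x : Vec m) : ℝ := vol ((sec S x) ∆ (Iv (0, vol (sec S x) / 2)))

lemma hd_le (hS : MeasurableSet S) {R : ℝ} (bS : S ⊆ Bl R) (x : Vec m) :
    hd S x ≤ fd S x + 4 * |ctr (sec S x)| := by
  have h := symmDiff_Iv (ctr (sec S x), vol (sec S x) / 2) (0, vol (sec S x) / 2) rfl
  rw [sub_zero] at h
  have := measureReal_symmDiff_le (μ := volume) (Iv (0, vol (sec S x) / 2)) (fm_sec hS bS x).2 (fm_It (sec S x)).2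
  simp only [It] at this
  unfold hd fd
  simp only [It]
  linarith

lemma bm_hd (hS : MeasurableSet S) {R : ℝ} (hR : 0 ≤ R) (bS : S ⊆ Bl R) : Bm (hd S) := by
  have e : hd S = fun x => vol (sec (S ∆ (St S)) x) := by
    ext x; rw [sec_symmDiff, sec_St, hd]
  rw [e]
  have h2 := St_sub hS bS
  refine (bm_len (hS.symmDiff (measurableSet_St hS)) hR (R := R) ?_).1
  intro v hv
  rcases hv with hv | hv
  · exact bS hv.1
  · exact h2 hv.1

lemma mom2 {r η κ Q E p : ℝ} (hr : 0 < r) (hκ : 0 ≤ κ) (hκ1 : κ ≤ 1 / 2) (hη : 0 ≤ η) (hηκ : η ≤ κ * r)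
    (hS : MeasurableSet S) (tS : Rt r η S) {w : Vec m}
    (hF : ∫ x in Bl ((1 - κ) * r), fd S x ≤ E) (hG : ∫ x in Bl ((1 - κ) * r), |ctr (sec S x) - p - inner ℝ w x| ≤ E)
    {q : Vec m → ℝ} (hq : Continuous q) (hQ : ∀ x : Vec m, ‖x‖ ≤ 2 * r → |q x| ≤ Q)
    (h0 : ∫ v in S, v 0 * q (tl v) = 0) :
    IntegrableOn (fun x => vol (sec S x) * (q x * (p + inner ℝ w x))) (Bl ((1 - κ) * r)) ∧
    |∫ x in Bl ((1 - κ) * r), vol (sec S x) * (q x * (p + inner ℝ w x))|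
      ≤ Q * (6 * r * E + √(5 * κ) * r * vol (S ∆ (ballStar S))) := by
  have hQ0 : 0 ≤ Q := (abs_nonneg _).trans (hQ 0 (by simp; linarith))
  have bS : S ⊆ Bl (2 * r) := tS.2.trans (Bl_mono (by nlinarith))
  have M := moment hr hκ hκ1 hη hηκ hS tS hq hQ h0
  set R := (1 - κ) * r
  have hR2 : R ≤ 2 * r := by simp only [R]; nlinarith
  have mB : MeasurableSet (Bl R : Set (Vec m)) := (fm_Bl R).1
  obtain ⟨b1, l1⟩ := bm_len hS (by linarith) bS
  have ci : ∀ f : Vec m → ℝ, Continuous f → IntegrableOn f (Bl R) volume := fun f hf =>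
    intBl hf
  have i1 : IntegrableOn (fun x => vol (sec S x) * (q x * (p + inner ℝ w x))) (Bl R) := by
    have := b1.int_mul (ci (fun x => q x * (p + inner ℝ w x)) (by fun_prop))
    rw [IntegrableOn]; simpa only [mul_comm] using this
  have i2 : IntegrableOn (fun x => q x * (vol (sec S x) * ctr (sec S x))) (Bl R) := by
    have := (bm_ctr hS bS).int_mul (b1.int_mul (ci _ hq))
    rw [IntegrableOn]; simpa only [mul_assoc] using this
  have i3 : IntegrableOn (fun x => |ctr (sec S x) - p - inner ℝ w x|) (Bl R) := by
    have := (((bm_ctr hS bS).intOn (fm_Bl (d := m) R).2).sub (ci _ (by fun_prop : Continuous fun x : Vec m => p + inner ℝ w x))).abs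
    rw [IntegrableOn]; simpa only [Pi.sub_apply, sub_sub] using this
  refine ⟨i1, ?_⟩
  have d1 : |(∫ x in Bl R, q x * (vol (sec S x) * ctr (sec S x))) - ∫ x in Bl R, vol (sec S x) * (q x * (p + inner ℝ w x))|
      ≤ Q * (4 * r) * E := by
    rw [← integral_sub i2 i1, ← norm_eq_abs]
    refine (norm_integral_le_of_norm_le (i3.const_mul (Q * (4 * r))) ?_).trans ?_
    · filter_upwards [ae_restrict_mem mB] with x hx
      have e : q x * (vol (sec S x) * ctr (sec S x)) - vol (sec S x) * (q x * (p + inner ℝ w x))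
        = q x * vol (sec S x) * (ctr (sec S x) - p - inner ℝ w x) := by ring
      rw [e, norm_mul, norm_mul, norm_eq_abs, norm_eq_abs, norm_eq_abs, abs_of_nonneg vol_nonneg]
      have hx := mem_Bl.1 hx
      gcongr
      · exact hQ x (hx.trans hR2)
      · linarith [l1 x]
    · rw [integral_const_mul]; gcongr
  have : Q * (2 * r * ∫ x in Bl R, fd S x) ≤ Q * (2 * r * E) := by gcongr
  rw [abs_le] at *
  constructor <;> linarith [M.1, M.2, d1.1, d1.2]

/-- Long chords near the centre. -/
lemma len_lower {r η κ : ℝ} (hr : 0 < r) (hη : η ≤ r / 10) (hκ : κ ≤ 1 / 10) (hS : MeasurableSet S) (tS : Rt r η S)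
    {f : Vec m → ℝ} (hf : Continuous f) (f0 : ∀ x, 0 ≤ f x)
    (hi : IntegrableOn (fun x => vol (sec S x) * f x) (Bl ((1 - κ) * r))) :
    r * ∫ x in Bl (r / 2), f x ≤ ∫ x in Bl ((1 - κ) * r), vol (sec S x) * f x := by
  have sub : (Bl (r / 2) : Set (Vec m)) ⊆ Bl ((1 - κ) * r) := Bl_mono (by nlinarith)
  refine le_trans ?_ (setIntegral_mono_set hi (ae_of_all _ fun x => mul_nonneg vol_nonneg (f0 x)) sub.eventuallyLE)
  rw [← integral_const_mul]
  refine setIntegral_mono_on (intBl (hf.const_mul r)) (hi.mono_set sub) (fm_Bl _).1 ?_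
  intro x hx
  refine mul_le_mul_of_nonneg_right ?_ (f0 x)
  have hx := mem_Bl.1 hx
  have s1 : Icc (-(r / 2)) (r / 2) ⊆ sec S x := by
    intro s hs
    refine tS.1 (mem_Bl.2 (abs_le_of_sq_le_sq' ?_ (by linarith)).2)
    rw [norm_J_sq]
    have a1 : s ^ 2 ≤ (r / 2) ^ 2 := sq_le_sq' hs.1 hs.2
    have a2 : ‖x‖ ^ 2 ≤ (r / 2) ^ 2 := by gcongr
    have a3 : (r - r / 10) ^ 2 ≤ (r - η) ^ 2 := by gcongr <;> linarith
    nlinarith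
  have bS : S ⊆ Bl (2 * r) := tS.2.trans (Bl_mono (by linarith))
  have := measureReal_mono s1 (fm_sec hS bS x).2
  rw [volume_real_Icc_of_le (by linarith)] at this
  linarith

lemma hd_int {r κ E p P : ℝ} (hr : 0 < r) (hκ : 0 ≤ κ) (hP : 0 ≤ P)
    (hS : MeasurableSet S) (bS : S ⊆ Bl (2 * r)) {w : Vec m}
    (hF : ∫ x in Bl ((1 - κ) * r), fd S x ≤ E) (hG : ∫ x in Bl ((1 - κ) * r), |ctr (sec S x) - p - inner ℝ w x| ≤ E)
    (hP : |p| + r * ‖w‖ ≤ P) :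
    ∫ x in Bl ((1 - κ) * r), hd S x ≤ 5 * E + 4 * (vol (Bl r : Set (Vec m)) * P) := by
  have hP0 : 0 ≤ P := le_trans (by positivity) hP
  set R := (1 - κ) * r
  have hR2 : R ≤ r := by simp only [R]; nlinarith
  have fB := fm_Bl (d := m) R
  have i1 := (bm_hd hS (by linarith) bS).intOn fB.2
  have i2 := (bm_fd hS bS).intOn fB.2
  have i3 : IntegrableOn (fun x => |ctr (sec S x) - p - inner ℝ w x|) (Bl R) := by
    have ci : IntegrableOn (fun x : Vec m => p + inner ℝ w x) (Bl R) volume :=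
      intBl (by fun_prop : Continuous fun x : Vec m => p + inner ℝ w x)
    have := (((bm_ctr hS bS).intOn fB.2).sub ci).abs
    rw [IntegrableOn]; simpa only [Pi.sub_apply, sub_sub] using this
  have ic : IntegrableOn (fun _ : Vec m => 4 * P) (Bl R) := integrableOn_const fB.2
  have h := setIntegral_mono_on i1 ((i2.add (i3.const_mul 4)).add ic) fB.1 fun x hx => by
    have hx := (mem_Bl.1 hx).trans hR2
    have h1 := hd_le hS bS x
    have h2 : |ctr (sec S x)| ≤ |ctr (sec S x) - p - inner ℝ w x| + |p + inner ℝ w x| := by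
      have := abs_add_le (ctr (sec S x) - p - inner ℝ w x) (p + inner ℝ w x)
      rwa [show ctr (sec S x) - p - inner ℝ w x + (p + inner ℝ w x) = ctr (sec S x) by ring] at this
    have h3 : |p + inner ℝ w x| ≤ P := by
      refine ((abs_add_le _ _).trans ?_).trans hP
      gcongr
      rw [mul_comm]
      exact (abs_real_inner_le_norm _ _).trans (by gcongr)
    have : hd S x ≤ fd S x + 4 * |ctr (sec S x) - p - inner ℝ w x| + 4 * P := by linarith
    exact this
  rw [integral_add' (i2.add (i3.const_mul 4)) ic, integral_add' i2 (i3.const_mul 4), integral_const_mul, setIntegral_const, smul_eq_mul] at h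
  have v : vol (Bl R : Set (Vec m)) ≤ vol (Bl r : Set (Vec m)) :=
    measureReal_mono (Bl_mono hR2) (fm_Bl _).2
  have : vol (Bl R : Set (Vec m)) * (4 * P) ≤ vol (Bl r : Set (Vec m)) * (4 * P) := by gcongr
  linarith

set_option maxHeartbeats 1000000 in
/-- Centred sets with vanishing mixed second moments: the affine profile of the fibre centres is negligible,
so that almost all fibres are close to centred intervals. -/
lemma star {r1 r2 r3 : ℝ} (h1 : 0 < r1) (h2 : 0 < r2) (h3 : |r1 - r2| < r3) (h4 : r3 < r1 + r2) :
    ∃ M : ℝ, 0 ≤ M ∧ ∀ κ : ℝ, 0 < κ → κ ≤ 1 / 10 → ∃ η > 0, ∃ K : ℝ, 0 ≤ K ∧ ∀ (A B C : Set (Vec (m + 1))) (e : ℝ),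
      MeasurableSet A → MeasurableSet B → MeasurableSet C → Rt r1 η A → Rt r2 η B → Rt r3 η C → 0 < e →
      tri (St A) (St B) (St C) ≤ tri A B C + e ^ 2 →
      (∫ v in A, v 0 = 0) → (∀ w : Vec m, ∫ v in A, v 0 * inner ℝ w (tl v) = 0) → (∫ v in B, v 0 = 0) →
      ∫ x in Bl ((1 - κ) * r1), hd A x ≤ K * e + M * (√(5 * κ) * (vol (A ∆ (ballStar A)) + vol (B ∆ (ballStar B)))) ∧
      ∫ x in Bl ((1 - κ) * r2), hd B x ≤ K * e + M * (√(5 * κ) * (vol (A ∆ (ballStar A)) + vol (B ∆ (ballStar B)))) := by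
  obtain ⟨c, hc, qc⟩ := q_lower (m := m) h1
  set b1 := vol (Bl r1 : Set (Vec m))
  set b2 := vol (Bl r2 : Set (Vec m))
  set b3 := vol (Bl (r2 / 2) : Set (Vec m))
  have hb3 : 0 < b3 := toReal_pos (measure_closedBall_pos volume _ (by positivity)).ne' (fm_ball _ _).2
  have hb1 : 0 ≤ b1 := vol_nonneg
  have hb2 : 0 ≤ b2 := vol_nonneg
  set g := 1 / c / (2 * r1)
  have hg : 0 ≤ g := by positivity
  -- bounds for `|p| + r₁‖w‖` and `|p'| + r₂‖w‖` in terms of `X = 6Ke + √(5κ)δ`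
  set m1 := 1 / c
  set m2 := (1 + 4 * r2 * g * b2) / b3 + r2 * g
  have hm1 : 0 ≤ m1 := by positivity
  have hm2 : 0 ≤ m2 := by positivity
  set M := 4 * (b1 * m1) + 4 * (b2 * m2)
  have hM : 0 ≤ M := by positivity
  refine ⟨M, hM, fun κ hκ hκ1 => ?_⟩
  obtain ⟨η, hη, K, hK, D⟩ := dir (m := m) h1 h2 h3 h4 hκ (by linarith)
  refine ⟨min η (min (κ * r1) (κ * r2)), by positivity, 5 * K + M * (6 * K), by positivity, ?_⟩
  intro A B C e mA mB mC tA tB tC he ht a1 a2 b1'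
  set η' := min η (min (κ * r1) (κ * r2))
  have hη' : 0 ≤ η' := by positivity
  have e1 : η' ≤ κ * r1 := (min_le_right _ _).trans (min_le_left _ _)
  have e2 : η' ≤ κ * r2 := (min_le_right _ _).trans (min_le_right _ _)
  obtain ⟨p, p', w, ⟨fA, gA⟩, fB, gB⟩ := D A B C e mA mB mC (tA.mono (min_le_left _ _)) (tB.mono (min_le_left _ _)) (tC.mono (min_le_left _ _)) he ht
  set dA := vol (A ∆ (ballStar A))
  set dB := vol (B ∆ (ballStar B))
  have hdA : 0 ≤ dA := vol_nonneg
  have hdB : 0 ≤ dB := vol_nonneg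
  set X := 6 * (K * e) + √(5 * κ) * (dA + dB)
  have hs : 0 ≤ √(5 * κ) := sqrt_nonneg _
  have hX : 0 ≤ X := by positivity
  have bA : A ⊆ Bl (2 * r1) := tA.2.trans (Bl_mono (by nlinarith))
  have bB : B ⊆ Bl (2 * r2) := tB.2.trans (Bl_mono (by nlinarith))
  have ic : ∀ (S : Set (Vec (m + 1))) (R : ℝ), S ⊆ Bl R → ∀ f : Vec (m + 1) → ℝ, Continuous f → IntegrableOn f S volume := fun S R hS f hf =>
    (intBl hf).mono_set hS
  have ct : Continuous (tl (m := m)) := continuous_tl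
  have cq : Continuous fun x : Vec m => p + inner ℝ w x := by fun_prop
  have QA : c * (|p| + 2 * r1 * ‖w‖) ≤ X := by
    have hq : ∀ x : Vec m, ‖x‖ ≤ 2 * r1 → |p + inner ℝ w x| ≤ |p| + 2 * r1 * ‖w‖ := fun x hx => by
      refine (abs_add_le _ _).trans ?_
      gcongr
      rw [mul_comm]
      exact (abs_real_inner_le_norm _ _).trans (by gcongr)
    have z : ∫ v in A, v 0 * (p + inner ℝ w (tl v)) = 0 := by
      simp only [mul_add]
      rw [integral_add (ic A _ bA _ (by fun_prop)) (ic A _ bA _ (by fun_prop)), integral_mul_const, a1, a2 w]; simp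
    obtain ⟨i, k⟩ := mom2 h1 hκ.le (by linarith) hη' e1 mA tA fA gA cq hq z
    have l := len_lower h1 (by nlinarith) hκ1 mA tA (f := fun x => (p + inner ℝ w x) * (p + inner ℝ w x)) (by fun_prop) (fun x => mul_self_nonneg _) i
    have q1 := qc p w
    simp only [pow_two] at q1
    have k2 := (abs_le.1 k).2
    set Q := |p| + 2 * r1 * ‖w‖
    have hQ : 0 ≤ Q := by positivity
    rcases hQ.eq_or_lt with h | h
    · rw [← h]; simpa using hX
    · have k3 : r1 * (c * (Q * Q)) ≤ Q * (6 * r1 * (K * e) + √(5 * κ) * r1 * dA) :=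
        (mul_le_mul_of_nonneg_left q1 h1.le).trans (l.trans k2)
      have k4 : Q * (6 * r1 * (K * e) + √(5 * κ) * r1 * dA) ≤ (r1 * Q) * X := by
        have : 0 ≤ (r1 * Q) * (√(5 * κ) * dB) := by positivity
        simp only [X]; linarith
      refine le_of_mul_le_mul_left ?_ (by positivity : 0 < r1 * Q)
      linarith
  have hw : ‖w‖ ≤ g * X := by
    have : g * (c * (2 * r1 * ‖w‖)) ≤ g * X := mul_le_mul_of_nonneg_left (by nlinarith [abs_nonneg p]) hg
    have e : g * (c * (2 * r1 * ‖w‖)) = ‖w‖ := by simp only [g]; field_simp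
    linarith
  have QB : |p'| * b3 ≤ (1 + 4 * r2 * g * b2) * X := by
    have z : ∫ v in B, v 0 * (fun _ : Vec m => (1 : ℝ)) (tl v) = 0 := by simpa using b1'
    obtain ⟨i, k⟩ := mom2 h2 hκ.le (by linarith) hη' e2 mB tB fB gB (q := fun _ => 1) continuous_const (Q := 1) (fun x _ => by simp) z
    simp only [one_mul] at i k
    obtain ⟨bl, ll⟩ := bm_len mB (by linarith) bB
    set R := (1 - κ) * r2
    have hR : R ≤ r2 := by simp only [R]; nlinarith
    have i1 : IntegrableOn (fun x => vol (sec B x) * 1) (Bl R) := by simpa using bl.intOn (fm_Bl (d := m) R).2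
    have l := len_lower h2 (by nlinarith) hκ1 mB tB (f := fun _ => 1) continuous_const (fun x => by norm_num) i1
    rw [setIntegral_const, smul_eq_mul, mul_one] at l
    have i2 : IntegrableOn (fun x => vol (sec B x) * 1 * p') (Bl R) := i1.mul_const p'
    have i3 : IntegrableOn (fun x => vol (sec B x) * inner ℝ w x) (Bl R) := by
      have := i.sub i2
      rw [IntegrableOn]
      refine this.congr (ae_of_all _ fun x => ?_)
      simp only [Pi.sub_apply]; ring
    have sp : ∫ x in Bl R, vol (sec B x) * (p' + inner ℝ w x) = (∫ x in Bl R, vol (sec B x) * 1) * p' + ∫ x in Bl R, vol (sec B x) * inner ℝ w x := by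
      rw [← integral_mul_const, ← integral_add i2 i3]
      congr 1; ext x; ring
    have up : |∫ x in Bl R, vol (sec B x) * inner ℝ w x| ≤ 4 * r2 * (‖w‖ * r2) * b2 := by
      have := norm_setIntegral_le_of_norm_le_const (f := fun x => vol (sec B x) * inner ℝ w x) (C := 4 * r2 * (‖w‖ * r2)) (fm_Bl (d := m) R).2.lt_top fun x hx => by
        have hx := (mem_Bl.1 hx).trans hR
        rw [norm_mul, norm_eq_abs, abs_of_nonneg vol_nonneg]
        gcongr
        · linarith [ll x]
        · exact (abs_real_inner_le_norm _ _).trans (by gcongr)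
      rw [norm_eq_abs] at this
      refine this.trans ?_
      gcongr
      exact measureReal_mono (Bl_mono hR) (fm_Bl _).2
    rw [sp] at k
    have k2 : |(∫ x in Bl R, vol (sec B x) * 1) * p'| ≤ (6 * r2 * (K * e) + √(5 * κ) * r2 * dB) + 4 * r2 * (‖w‖ * r2) * b2 := by
      rw [abs_le] at *
      constructor <;> linarith [k.1, k.2, up.1, up.2]
    rw [abs_mul] at k2
    have k3 : r2 * b3 * |p'| ≤ |∫ x in Bl R, vol (sec B x) * 1| * |p'| :=
      mul_le_mul_of_nonneg_right (l.trans (le_abs_self _)) (abs_nonneg _)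
    have k4 : 4 * r2 * (‖w‖ * r2) * b2 ≤ 4 * r2 * (g * X * r2) * b2 := by gcongr
    have k5 : 0 ≤ r2 * (√(5 * κ) * dA) := by positivity
    refine le_of_mul_le_mul_left ?_ h2
    have : r2 * X = 6 * r2 * (K * e) + √(5 * κ) * r2 * dB + r2 * (√(5 * κ) * dA) := by simp only [X]; ring
    linarith
  have RA : |p| + r1 * ‖w‖ ≤ m1 * X := by
    have : m1 * (c * (|p| + 2 * r1 * ‖w‖)) ≤ m1 * X := mul_le_mul_of_nonneg_left QA hm1
    have e : m1 * (c * (|p| + 2 * r1 * ‖w‖)) = |p| + 2 * r1 * ‖w‖ := by simp only [m1]; field_simp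
    linarith [mul_nonneg h1.le (norm_nonneg w)]
  have RB : |p'| + r2 * ‖w‖ ≤ m2 * X := by
    have k1 : |p'| ≤ (1 + 4 * r2 * g * b2) * X / b3 := (le_div_iff₀ hb3).2 QB
    have k2 : r2 * ‖w‖ ≤ r2 * (g * X) := by gcongr
    have e : m2 * X = (1 + 4 * r2 * g * b2) * X / b3 + r2 * (g * X) := by simp only [m2]; ring
    linarith
  have FA := hd_int h1 hκ.le (by positivity) mA bA fA gA RA
  have FB := hd_int h2 hκ.le (by positivity) mB bB fB gB RB
  have nA : 0 ≤ b1 * (m1 * X) := by positivity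
  have nB : 0 ≤ b2 * (m2 * X) := by positivity
  have eM : M * X = 4 * (b1 * (m1 * X)) + 4 * (b2 * (m2 * X)) := by simp only [M]; ring
  have eX : M * X = M * (6 * K) * e + M * (√(5 * κ) * (dA + dB)) := by simp only [X]; ring
  constructor <;> linarith

end

section
/-! ### Invariant measure on the orthogonal group -/

/-- Invariant probability measures on compact groups are right invariant, conjugation preserving them by uniqueness. -/
lemma haar_right {G : Type*} [Group G] [TopologicalSpace G] [IsTopologicalGroup G] [CompactSpace G] [MeasurableSpace G]
    [BorelSpace G] (μ : Measure G) [IsProbabilityMeasure μ] [μ.IsHaarMeasure] (g : G) :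
    MeasurePreserving (fun x => x * g) μ μ := by
  have k : ∀ h : G, Continuous (MulAut.conj h) := fun h => by
    have : (MulAut.conj h : G → G) = fun x => h * x * h⁻¹ := by ext x; simp
    rw [this]; fun_prop
  have hc := k g⁻¹
  have hc' : Continuous (MulAut.conj g⁻¹).symm := by
    have : (MulAut.conj g⁻¹).symm = MulAut.conj g := by rw [map_inv]; rfl
    rw [this]; exact k g
  have := (MulAut.conj g⁻¹).isHaarMeasure_map μ hc hc'
  have : IsProbabilityMeasure (μ.map (MulAut.conj g⁻¹)) := Measure.isProbabilityMeasure_map hc.measurable.aemeasurable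
  have h1 : MeasurePreserving (MulAut.conj g⁻¹) μ μ := ⟨hc.measurable, Measure.isHaarMeasure_eq_of_isProbabilityMeasure _ μ⟩
  have h2 := (measurePreserving_mul_left μ g).comp h1
  have e3 : (fun x : G => x * g) = (fun x => g * x) ∘ (MulAut.conj g⁻¹) := by ext1 x; simp [mul_assoc]
  rw [e3]; exact h2

/-- A probability space carrying a bi-invariant random rotation. -/
lemma haar (d : ℕ) : ∃ (Ω : Type) (_ : MeasurableSpace Ω) (P : Measure Ω) (a : Ω → O(d)),
    IsProbabilityMeasure P ∧ Measurable (fun p : Ω × Vec d => a p.1 p.2) ∧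
    (∀ g : O(d), ∃ l : Ω → Ω, MeasurePreserving l P P ∧ ∀ ω x, a (l ω) x = g (a ω x)) ∧
    (∀ g : O(d), ∃ l : Ω → Ω, MeasurePreserving l P P ∧ ∀ ω x, a (l ω) x = a ω (g x)) := by
  have : ContinuousStar (Vec d →L[ℝ] Vec d) := ⟨(ContinuousLinearMap.adjoint (𝕜 := ℝ) (E := Vec d) (F := Vec d)).continuous⟩
  let G := unitary (Vec d →L[ℝ] Vec d)
  have : IsTopologicalGroup G := inferInstance
  have : CompactSpace G := by
    refine isCompact_iff_compactSpace.1 (isCompact_of_isClosed_isBounded isClosed_unitary ?_)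
    refine (isBounded_closedBall (x := (0 : Vec d →L[ℝ] Vec d)) (r := 1)).subset fun u hu => ?_
    rw [mem_closedBall_zero_iff]
    refine ContinuousLinearMap.opNorm_le_bound _ zero_le_one fun x => ?_
    rw [one_mul]
    exact (Unitary.norm_map ⟨u, hu⟩ x).le
  let μ : Measure G := Measure.haarMeasure ⊤
  have : IsProbabilityMeasure μ := ⟨Measure.haarMeasure_self⟩
  have right := fun g : G => haar_right μ g
  refine ⟨G, inferInstance, μ, fun u => Unitary.linearIsometryEquiv u, inferInstance, ?_, fun g => ?_, fun g => ?_⟩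
  · have : Continuous fun p : G × Vec d => (p.1 : Vec d →L[ℝ] Vec d) p.2 := by fun_prop
    exact this.measurable
  · obtain ⟨u, rfl⟩ := (Unitary.linearIsometryEquiv (𝕜 := ℝ) (H := Vec d)).surjective g
    exact ⟨fun x => u * x, measurePreserving_mul_left μ u, fun ω x => by beta_reduce; rw [map_mul]; rfl⟩
  · obtain ⟨u, rfl⟩ := (Unitary.linearIsometryEquiv (𝕜 := ℝ) (H := Vec d)).surjective g
    exact ⟨fun x => x * u, right u, fun ω x => by beta_reduce; rw [map_mul]; rfl⟩

/-- `a` is a measurable random rotation, invariant in law under left and right multiplication. -/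
structure Rand {Ω : Type} [MeasurableSpace Ω] (d : ℕ) (P : Measure Ω) (a : Ω → O(d)) : Prop where
  prob : IsProbabilityMeasure P
  ma : Measurable (fun p : Ω × Vec d => a p.1 p.2)
  left : ∀ g : O(d), ∃ l : Ω → Ω, MeasurePreserving l P P ∧ ∀ ω x, a (l ω) x = g (a ω x)
  right : ∀ g : O(d), ∃ l : Ω → Ω, MeasurePreserving l P P ∧ ∀ ω x, a (l ω) x = a ω (g x)

section
variable {Ω : Type} [MeasurableSpace Ω] {P : Measure Ω}

/-- Expected measure of `S' ∆ g⁻¹S'` for the randomly rotated copy `S'` of `S`. -/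
def Hh (P : Measure Ω) (a : Ω → O(d)) (S : Set (Vec d)) (g : O(d)) : ℝ≥0∞ :=
  ∫⁻ ω, volume (((fun y => a ω y) ⁻¹' S) ∆ ((fun y => a ω (g y)) ⁻¹' S)) ∂P

lemma Rand.meas {a : Ω → O(d)} (h : Rand d P a) {S : Set (Vec d)} (hS : MeasurableSet S) (g : O(d)) :
    Measurable fun ω => volume (((fun y => a ω y) ⁻¹' S) ∆ ((fun y => a ω (g y)) ⁻¹' S)) := by
  have m2 : Measurable fun p : Ω × Vec d => a p.1 (g p.2) := h.ma.comp (measurable_fst.prodMk (g.continuous.measurable.comp measurable_snd))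
  exact measurable_measure_prodMk_left ((h.ma hS).symmDiff (m2 hS))

lemma Rand.mul {a : Ω → O(d)} (h : Rand d P a) {S : Set (Vec d)} (hS : MeasurableSet S) (g g' : O(d)) :
    Hh P a S (g * g') ≤ Hh P a S g + Hh P a S g' := by
  unfold Hh
  rw [← lintegral_add_left (h.meas hS g)]
  refine lintegral_mono fun ω => ?_
  rw [add_comm]
  refine (measure_symmDiff_le _ ((fun y => a ω (g' y)) ⁻¹' S) _).trans (add_le_add_right (le_of_eq ?_) _)
  exact rot_vol g' (((fun y => a ω y) ⁻¹' S) ∆ ((fun y => a ω (g y)) ⁻¹' S))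

variable {a : Ω → O(m + 1)}
variable {S : Set (Vec (m + 1))}

/-- Reflection in the first coordinate. -/
def sg (m : ℕ) : O(m + 1) := (ℝ ∙ (J 1 0 : Vec (m + 1)))ᗮ.reflection

lemma refl_eq (v x : Vec d) : (ℝ ∙ v)ᗮ.reflection x = x - (2 * (inner ℝ v x / ‖v‖ ^ 2)) • v := by
  rw [Submodule.reflection_orthogonal_apply, Submodule.reflection_singleton_apply, neg_sub, mul_smul]
  simp [two_smul]

lemma sg_J (s : ℝ) (x : Vec m) : sg m (J s x) = J (-s) x := by
  rw [sg, refl_eq, norm_e0, inner_J, J_smul, J_sub]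
  simp only [inner_zero_left, smul_zero, sub_zero]
  congr 1; ring

lemma Rand.refl (h : Rand (m + 1) P a) (hS : MeasurableSet S) (v : Vec (m + 1)) :
    Hh P a S ((ℝ ∙ v)ᗮ.reflection) ≤ Hh P a S (sg m) := by
  rcases eq_or_ne v 0 with rfl | hv
  · have : ∀ y : Vec (m + 1), (ℝ ∙ (0 : Vec (m + 1)))ᗮ.reflection y = y := fun y => by rw [refl_eq]; simp
    simp only [Hh, this, symmDiff_self, Set.bot_eq_empty, measure_empty, lintegral_zero]
    exact zero_le
  obtain ⟨g, hg⟩ := exists_rot v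
  obtain ⟨l, hl, hla⟩ := h.right g
  have key : ∀ y, (ℝ ∙ v)ᗮ.reflection (g y) = g (sg m y) := by
    intro y
    rw [← J_tl y, sg_J, refl_eq]
    have n : ‖v‖ ≠ 0 := norm_ne_zero_iff.2 hv
    set s := y 0
    set z := tl y
    have e1 : inner ℝ v (g (J s z)) = ‖v‖ * s := by
      conv_lhs => rw [← hg]
      rw [g.inner_map_map, inner_J]; simp
    have hv1 : v = g (J ‖v‖ 0) := hg.symm
    have e2 : (2 * (‖v‖ * s / ‖v‖ ^ 2)) • v = g (J (2 * s) 0) := by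
      generalize ‖v‖ = q at *
      rw [hv1, ← map_smul, J_smul, smul_zero]
      congr 2; field_simp
    rw [e1, e2, ← map_sub, J_sub]
    congr 2
    · ring
    · simp
  unfold Hh
  rw [← hl.lintegral_comp (h.meas hS (sg m))]
  refine lintegral_mono fun ω => le_of_eq ?_
  rw [← rot_vol g]
  simp only [hla, preimage_symmDiff, ← preimage_comp, Function.comp_def, key]

lemma Rand.gen (h : Rand (m + 1) P a) (hS : MeasurableSet S) (g : O(m + 1)) :
    Hh P a S g ≤ (m + 1 : ℕ) * Hh P a S (sg m) := by
  obtain ⟨l, hl, rfl⟩ := g.reflections_generate_dim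
  rw [finrank_euclideanSpace_fin] at hl
  refine le_trans ?_ (mul_le_mul_left (Nat.cast_le.2 hl) _)
  clear hl
  induction l with
  | nil => simp [Hh]
  | cons v l ih =>
    rw [List.map_cons, List.prod_cons, List.length_cons, Nat.cast_succ, add_mul, one_mul]
    exact ((h.mul hS _ _).trans (add_le_add (h.refl hS v) ih)).trans (le_of_eq (add_comm _ _))

/-- Expected measure of `S ∆ g⁻¹S` for a random rotation `g`. -/
def Th (P : Measure Ω) (a : Ω → O(d)) (S : Set (Vec d)) : ℝ≥0∞ :=
  ∫⁻ ω, volume (S ∆ ((fun y => a ω y) ⁻¹' S)) ∂P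

lemma Rand.th (h : Rand (m + 1) P a) (hS : MeasurableSet S) :
    Th P a S ≤ (m + 1 : ℕ) * Hh P a S (sg m) := by
  have := h.prob
  have ms : ∀ U : Set (Vec (m + 1)), MeasurableSet U → Measurable fun ω => volume (U ∆ ((fun y => a ω y) ⁻¹' S)) :=
    fun U hU => measurable_measure_prodMk_left ((measurable_snd hU).symmDiff (h.ma hS))
  have e : ∀ ω', Th P a S = ∫⁻ ω, volume (((fun y => a ω' y) ⁻¹' S) ∆ ((fun y => a ω' (a ω y)) ⁻¹' S)) ∂P := by
    intro ω'
    obtain ⟨l, hl, hla⟩ := h.left (a ω')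
    obtain ⟨r, hr, hra⟩ := h.right (a ω')
    have e1 := hl.lintegral_comp (ms _ ((a ω').continuous.measurable hS))
    have e2 := hr.lintegral_comp (ms _ ((a ω').continuous.measurable hS))
    simp only [hla] at e1
    simp only [hra] at e2
    refine Eq.trans ?_ (e2.trans e1.symm)
    unfold Th
    exact lintegral_congr fun ω => (rot_vol (a ω') (S ∆ ((fun y => a ω y) ⁻¹' S))).symm
  have e2 : Th P a S = ∫⁻ ω', Th P a S ∂P := by simp
  rw [e2, lintegral_congr e, lintegral_lintegral_swap]
  · refine (lintegral_mono fun ω => h.gen hS (a ω)).trans ?_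
    simp
  · have m1 : Measurable fun p : (Ω × Ω) × Vec (m + 1) => a p.1.1 p.2 := h.ma.comp ((measurable_fst.comp measurable_fst).prodMk measurable_snd)
    have m2 : Measurable fun p : (Ω × Ω) × Vec (m + 1) => a p.1.1 (a p.1.2 p.2) :=
      h.ma.comp ((measurable_fst.comp measurable_fst).prodMk (h.ma.comp ((measurable_snd.comp measurable_fst).prodMk measurable_snd)))
    exact (measurable_measure_prodMk_left ((m1 hS).symmDiff (m2 hS))).aemeasurable

end

end

/-! ### Random rotations -/

section
section
variable {Ω : Type} [MeasurableSpace Ω] {P : Measure Ω} {a : Ω → O(m + 1)}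
variable {S : Set (Vec (m + 1))}

/-- The equatorial band of relative width `t`. -/
def Nb (m : ℕ) (t : ℝ) : Set (Vec (m + 1)) := {y | |y 0| < t * ‖y‖}

lemma measurableSet_Nb (t : ℝ) : MeasurableSet (Nb m t) :=
  measurableSet_lt (measurable_coord 0).abs (measurable_norm.const_mul t)

lemma coord_inner (y : Vec (m + 1)) : inner ℝ (J 1 0) y = y 0 := by
  conv_lhs => rw [← J_tl y]
  rw [inner_J]; simp

/-- Averaging over rotations, the band carries a fixed proportion of any mass. -/
lemma Rand.tilt (h : Rand (m + 1) P a) (t : ℝ) : ∃ β : ℝ≥0∞, ∀ F : Vec (m + 1) → ℝ≥0∞, Measurable F →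
    ∫⁻ ω, (∫⁻ y in Nb m t, F (a ω y)) ∂P = β * ∫⁻ y, F y := by
  have := h.prob
  refine ⟨P {ω | |(a ω (J 1 0)) 0| < t}, fun F hF => ?_⟩
  have mN := measurableSet_Nb (m := m) t
  have ma0 : Measurable fun ω => a ω (J 1 0) := h.ma.comp (measurable_id.prodMk measurable_const)
  have mU : MeasurableSet {p : Ω × Vec (m + 1) | |inner ℝ (a p.1 (J 1 0)) p.2| < t * ‖p.2‖} :=
    measurableSet_lt ((ma0.comp measurable_fst).inner measurable_snd).abs (measurable_norm.comp measurable_snd |>.const_mul t)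
  have e1 : ∀ ω, ∫⁻ y in Nb m t, F (a ω y) = ∫⁻ z, ({p : Ω × Vec (m + 1) | |inner ℝ (a p.1 (J 1 0)) p.2| < t * ‖p.2‖}.indicator (fun p => F p.2) (ω, z)) := by
    intro ω
    rw [← lintegral_indicator mN, ]
    refine Eq.trans ?_ ((a ω).measurePreserving.lintegral_comp ((hF.comp measurable_snd |>.indicator mU).comp measurable_prodMk_left))
    refine lintegral_congr fun y => ?_
    simp only [indicator, Nb, mem_setOf_eq, (a ω).inner_map_map, (a ω).norm_map, coord_inner]
  rw [lintegral_congr e1, lintegral_lintegral_swap (f := fun ω z => {p : Ω × Vec (m + 1) | |inner ℝ (a p.1 (J 1 0)) p.2| < t * ‖p.2‖}.indicator (fun p => F p.2) (ω, z)) (hF.comp measurable_snd |>.indicator mU).aemeasurable, ← lintegral_const_mul _ hF]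
  refine lintegral_congr_ae ?_
  filter_upwards [compl_mem_ae_iff.2 (measure_singleton (0 : Vec (m + 1)))] with z hz
  have n : 0 < ‖z‖ := norm_pos_iff.2 hz
  have e2 : ∀ ω, ({p : Ω × Vec (m + 1) | |inner ℝ (a p.1 (J 1 0)) p.2| < t * ‖p.2‖}.indicator (fun p => F p.2) (ω, z)) =
      {ω | |inner ℝ (a ω (J 1 0)) z| < t * ‖z‖}.indicator (fun _ => F z) ω := fun ω => by simp [indicator]
  rw [lintegral_congr e2, lintegral_indicator_const (measurableSet_lt (ma0.inner measurable_const).abs measurable_const), mul_comm]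
  congr 1
  obtain ⟨g, hg⟩ := exists_rot z
  obtain ⟨l, hl, hla⟩ := h.left g
  rw [← hl.measure_preimage (measurableSet_lt (ma0.inner measurable_const).abs measurable_const).nullMeasurableSet]
  congr 1
  ext ω
  have e3 : inner ℝ (a (l ω) (J 1 0)) z = (a ω (J 1 0)) 0 * ‖z‖ := by
    conv_lhs => rw [hla, ← hg]
    rw [g.inner_map_map, ← J_tl (a ω (J 1 0)), inner_J, inner_zero_right, J_zero_coord]; simp
  simp only [mem_setOf_eq, mem_preimage, e3, abs_mul, abs_norm, mul_lt_mul_iff_left₀ n]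

lemma band_vol {t : ℝ} : volume (Nb m t ∩ Bl 1) ≤ ofReal (2 * t) * volume (Bl 1 : Set (Vec m)) := by
  rw [volume_eq_sec ((measurableSet_Nb t).inter measurableSet_closedBall), ← lintegral_indicator_const measurableSet_closedBall]
  refine lintegral_mono fun x => ?_
  by_cases hx : x ∈ (Bl 1 : Set (Vec m))
  · rw [indicator_of_mem hx]
    refine (measure_mono (t := Ioo (-t) t) fun s hs => ?_).trans (by rw [Real.volume_Ioo]; ring_nf; rfl)
    obtain ⟨h1, h2⟩ := hs
    rw [mem_Bl] at h2
    change |J s x 0| < _ at h1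
    rw [J_zero_coord] at h1
    refine abs_lt.1 (h1.trans_le ?_)
    by_contra hc
    push Not at hc
    have h3 : 0 < t * ‖J s x‖ := (abs_nonneg s).trans_lt h1
    have : 0 < t := pos_of_mul_pos_left h3 (norm_nonneg _)
    nlinarith
  · have : sec (Nb m t ∩ Bl 1) x = ∅ := sec_empty inter_subset_right x (by simpa using hx)
    rw [this]; simp

/-- Outside the band, the asymmetry of `S` under reflection is controlled by that of its sections. -/
lemma off_band {r κ E : ℝ} (hr : 0 < r) (hκ : 0 < κ) (hκ1 : κ ≤ 1 / 10) (hS : MeasurableSet S)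
    (tS : Rt r (κ * r) S) (hE : ∫ x in Bl ((1 - κ) * r), hd S x ≤ E) :
    volume (S ∆ (sg m ⁻¹' S) \ Nb m (2 * √κ)) ≤ ofReal (2 * E) := by
  have bS := tS.2
  have hR : 0 ≤ r + κ * r := by positivity
  have m2 := rot_meas (sg m) hS
  rw [volume_eq_sec ((hS.symmDiff m2).diff (measurableSet_Nb _))]
  have hB := bm_hd hS hR bS
  have key : ∀ x : Vec m, volume (sec (S ∆ (sg m ⁻¹' S) \ Nb m (2 * √κ)) x) ≤
      (Bl ((1 - κ) * r)).indicator (fun x => ofReal (2 * hd S x)) x := by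
    intro x
    by_cases hx : x ∈ (Bl ((1 - κ) * r) : Set (Vec m))
    · rw [indicator_of_mem hx]
      set X := sec S x with hX
      have fX : Fm X := fm_sec hS bS x
      set I := Iv (0, vol X / 2)
      have fI : Fm I := fm_Iv _
      have sub : sec (S ∆ (sg m ⁻¹' S) \ Nb m (2 * √κ)) x ⊆ X ∆ I ∪ (-(X ∆ I) ∪ {-(vol X / 2), vol X / 2}) := by
        rintro s ⟨hs, -⟩
        change J s x ∈ S ∆ (sg m ⁻¹' S) at hs
        rw [mem_symmDiff, mem_preimage, sg_J] at hs
        change s ∈ X ∧ ¬ -s ∈ X ∨ -s ∈ X ∧ ¬ s ∈ X at hs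
        simp only [mem_union, mem_symmDiff, Set.mem_neg, mem_insert_iff, mem_singleton_iff]
        have hI : ¬ (s = -(vol X / 2) ∨ s = vol X / 2) → (s ∈ I ↔ -s ∈ I) := by
          intro h
          push Not at h
          simp only [I, Iv, mem_Ico, zero_sub, zero_add]
          constructor <;> rintro ⟨h1, h2⟩ <;> constructor <;> first | linarith | skip
          · exact lt_of_le_of_ne (by linarith) (fun h' => h.1 (by linarith))
          · exact lt_of_le_of_ne (by linarith) (fun h' => h.2 (by linarith))
        tauto
      have f2 := (fX.symmDiff fI)
      rw [← ofReal_toReal (ne_top_of_le_ne_top (by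
        exact ((f2.union (f2.neg.union ⟨(Set.toFinite _).measurableSet, ((Set.toFinite _).measure_zero volume).trans_ne zero_ne_top⟩)).2)) (measure_mono sub))]
      refine ofReal_le_ofReal ((measureReal_mono sub ((f2.union (f2.neg.union ⟨(Set.toFinite _).measurableSet, ((Set.toFinite _).measure_zero volume).trans_ne zero_ne_top⟩)).2)).trans ?_)
      refine (measureReal_union_le _ _).trans ?_
      refine (add_le_add_right (measureReal_union_le _ _) _).trans ?_
      have z : vol ({-(vol X / 2), vol X / 2} : Set ℝ) = 0 := by
        rw [Measure.real, (Set.toFinite _).measure_zero]; rfl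
      rw [real_neg, z, hd]
      linarith
    · rw [indicator_of_notMem hx]
      have : sec (S ∆ (sg m ⁻¹' S) \ Nb m (2 * √κ)) x = ∅ := by
        refine eq_empty_of_forall_notMem fun s hs => ?_
        obtain ⟨h1, h2⟩ := hs
        have h3 : J s x ∈ Bl (r + κ * r) := by
          rcases h1 with h | h
          · exact bS h.1
          · have := rot_sub (sg m) bS h.1; exact this
        rw [mem_Bl] at h3 hx
        change ¬ (|J s x 0| < _) at h2
        rw [J_zero_coord] at h2
        push Not at h2 hx
        have h4 : 4 * κ * ‖J s x‖ ^ 2 ≤ s ^ 2 := by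
          have := pow_le_pow_left₀ (by positivity) h2 2
          rw [sq_abs, mul_pow, mul_pow, sq_sqrt hκ.le] at this
          linarith
        have h5 := norm_J_sq s x
        have h6 := pow_le_pow_left₀ (norm_nonneg _) h3 2
        have h7 := pow_lt_pow_left₀ hx (by nlinarith) two_ne_zero
        have h8 : ‖x‖ ^ 2 ≤ (1 - 4 * κ) * (r + κ * r) ^ 2 := by
          have := mul_le_mul_of_nonneg_left h6 (by linarith : (0 : ℝ) ≤ 1 - 4 * κ)
          linarith
        have h9 : 0 ≤ r ^ 2 * (8 * κ ^ 2 + 4 * κ ^ 3) := by positivity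
        linarith [h9, h8, h7]
      rw [this]; simp
  refine (lintegral_mono key).trans ?_
  rw [lintegral_indicator measurableSet_closedBall, ← ofReal_integral_eq_lintegral_ofReal]
  · refine ofReal_le_ofReal ?_
    rw [integral_const_mul]; linarith
  · exact (hB.intOn (fm_Bl _).2).const_mul 2
  · exact ae_of_all _ fun x => mul_nonneg zero_le_two vol_nonneg

/-- Probability that a random rotation moves `y` across the boundary of `S`. -/
def ph (P : Measure Ω) (a : Ω → O(m + 1)) (S : Set (Vec (m + 1))) (y : Vec (m + 1)) : ℝ≥0∞ :=
  P {ω | y ∈ S ∆ ((fun z => a ω z) ⁻¹' S)}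

lemma Rand.ph_meas (h : Rand (m + 1) P a) (hS : MeasurableSet S) : Measurable (ph P a S) := by
  have := h.prob
  exact measurable_measure_prodMk_right ((measurable_snd hS).symmDiff (h.ma hS))

lemma Rand.th_ph (h : Rand (m + 1) P a) (hS : MeasurableSet S) : Th P a S = ∫⁻ y, ph P a S y := by
  have := h.prob
  have ms : MeasurableSet {p : Ω × Vec (m + 1) | p.2 ∈ S ∆ ((fun z => a p.1 z) ⁻¹' S)} := (measurable_snd hS).symmDiff (h.ma hS)
  exact (Measure.prod_apply (μ := P) (ν := volume) ms).symm.trans (Measure.prod_apply_symm ms)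

lemma Rand.ph_add (h : Rand (m + 1) P a) (hS : MeasurableSet S) (g : O(m + 1)) (y : Vec (m + 1))
    (hy : y ∈ S ∆ (g ⁻¹' S)) : 1 ≤ ph P a S y + ph P a S (g y) := by
  have := h.prob
  obtain ⟨l, hl, hla⟩ := h.right g
  have ms : ∀ z, MeasurableSet {ω | z ∈ S ∆ ((fun z => a ω z) ⁻¹' S)} := fun z =>
    measurable_prodMk_right ((measurable_snd hS).symmDiff (h.ma hS))
  unfold ph
  rw [← hl.measure_preimage (ms y).nullMeasurableSet]
  refine le_trans (le_of_eq measure_univ.symm) ((measure_mono fun ω _ => ?_).trans (measure_union_le _ _))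
  simp only [mem_union, mem_preimage, mem_setOf_eq, mem_symmDiff, hla] at hy ⊢
  tauto

/-- The expected rotational asymmetry is bounded by the asymmetry of the sections, the contribution of a
thin band being absorbed. -/
lemma Rand.th_le (h : Rand (m + 1) P a) {β : ℝ≥0∞} {r κ E : ℝ} (hβ : ∀ F : Vec (m + 1) → ℝ≥0∞, Measurable F →
    ∫⁻ ω, (∫⁻ y in Nb m (2 * √κ), F (a ω y)) ∂P = β * ∫⁻ y, F y) (hβ1 : 4 * (m + 1 : ℕ) * β ≤ 1) (hr : 0 < r) (hκ : 0 < κ)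
    (hκ1 : κ ≤ 1 / 10) (hS : MeasurableSet S) (tS : Rt r (κ * r) S) (hE0 : 0 ≤ E)
    (hE : ∀ g : O(m + 1), ∫ x in Bl ((1 - κ) * r), hd (g ⁻¹' S) x ≤ E) :
    Th P a S ≤ ofReal (4 * (m + 1) * E) := by
  have := h.prob
  have mN := measurableSet_Nb (m := m) (2 * √κ)
  have mp := h.ph_meas hS
  have hsg : ∀ y, sg m y ∈ Nb m (2 * √κ) ↔ y ∈ Nb m (2 * √κ) := by
    intro y
    rw [← J_tl y, sg_J]
    have : ‖J (-(y 0)) (tl y)‖ = ‖J (y 0) (tl y)‖ := by rw [← sg_J, (sg m).norm_map]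
    simp only [Nb, mem_setOf_eq, J_zero_coord, this, abs_neg]
  have step : ∀ ω, volume (((fun y => a ω y) ⁻¹' S) ∆ ((fun y => a ω (sg m y)) ⁻¹' S)) ≤
      ofReal (2 * E) + 2 * ∫⁻ y in Nb m (2 * √κ), ph P a S (a ω y) := by
    intro ω
    have m1 := rot_meas (a ω) hS
    have t1 : Rt r (κ * r) (a ω ⁻¹' S) := ⟨by rw [← rot_Bl (a ω)]; exact preimage_mono tS.1, rot_sub _ tS.2⟩
    have o1 := off_band hr hκ hκ1 m1 t1 (hE (a ω))
    set D := (a ω ⁻¹' S) ∆ (sg m ⁻¹' (a ω ⁻¹' S))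
    have mD : MeasurableSet D := m1.symmDiff (rot_meas (sg m) m1)
    change volume D ≤ _
    rw [← measure_diff_add_inter D mN]
    refine add_le_add o1 ?_
    have q : Measurable fun y => ph P a S (a ω y) := mp.comp (a ω).continuous.measurable
    have e1 : ∫⁻ y in Nb m (2 * √κ), ph P a S (a ω (sg m y)) = ∫⁻ y in Nb m (2 * √κ), ph P a S (a ω y) := by
      rw [← lintegral_indicator mN, ← lintegral_indicator mN, ← (sg m).measurePreserving.lintegral_comp (q.indicator mN)]
      exact lintegral_congr fun y => by by_cases hy : y ∈ Nb m (2 * √κ) <;> simp [indicator, hsg, hy]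
    rw [two_mul (∫⁻ y in _, _)]
    nth_rewrite 1 [← e1]
    rw [← lintegral_add_right _ q, ← lintegral_indicator mN, ← lintegral_indicator_one (mD.inter mN)]
    refine lintegral_mono fun y => ?_
    by_cases hy : y ∈ D ∩ Nb m (2 * √κ)
    · rw [indicator_of_mem hy, indicator_of_mem hy.2]
      let g := ((a ω).symm.trans (sg m)).trans (a ω)
      have := h.ph_add hS g (a ω y) (by
        have := hy.1
        simp only [D, mem_symmDiff, mem_preimage] at this
        simpa [g, mem_symmDiff] using this)
      rw [add_comm (ph P a S (a ω y))] at this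
      simpa [g] using this
    · rw [indicator_of_notMem hy]; exact zero_le
  have e2 : Hh P a S (sg m) ≤ ofReal (2 * E) + 2 * (β * Th P a S) := by
    refine (lintegral_mono step).trans ?_
    rw [lintegral_add_left measurable_const, lintegral_const_mul' _ _ (by simp), hβ _ mp, ← h.th_ph hS]
    simp
  have e3 := (h.th hS).trans (mul_le_mul_right e2 _)
  have fS : Fm S := fm_of_bdd hS tS.2
  have fin : Th P a S ≠ ∞ := by
    refine ne_top_of_le_ne_top (b := 2 * volume S) (mul_ne_top (by simp) fS.2) ?_
    calc Th P a S ≤ ∫⁻ ω, 2 * volume S ∂P := lintegral_mono fun ω => by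
          rw [two_mul]
          refine (measure_mono symmDiff_subset_union).trans ((measure_union_le _ _).trans (add_le_add_right (le_of_eq (rot_vol (a ω) S)) _))
      _ = 2 * volume S := by simp
  have hβ2 : β ≠ ∞ := by
    rintro rfl
    rw [ENNReal.mul_top (by simp)] at hβ1
    simp at hβ1
  have fin2 : 2 * (β * Th P a S) ≠ ∞ := mul_ne_top (by simp) (mul_ne_top hβ2 fin)
  have e4 := toReal_mono (mul_ne_top (by simp) (ENNReal.add_ne_top.2 ⟨ofReal_ne_top, fin2⟩)) e3
  have e5 := toReal_mono (by simp) hβ1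
  rw [toReal_mul, toReal_add ofReal_ne_top fin2, toReal_mul, toReal_mul, toReal_ofReal (by positivity), ENNReal.toReal_natCast] at e4
  rw [toReal_mul, toReal_mul, ENNReal.toReal_natCast] at e5
  simp only [ENNReal.toReal_ofNat, ENNReal.toReal_one, Nat.cast_add, Nat.cast_one] at e4 e5
  rw [← ofReal_toReal fin]
  refine ofReal_le_ofReal ?_
  have := mul_le_mul_of_nonneg_right e5 (toReal_nonneg (a := Th P a S))
  linarith
end

/-- A radial set is controlled by a single section. -/
lemma radial {r : ℝ} (hr : 0 < r) : ∃ C : ℝ, 0 ≤ C ∧ ∀ (N : Set (Vec (m + 1))) (x : Vec m), MeasurableSet N → N ⊆ Bl (2 * r) →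
    (∀ y z : Vec (m + 1), ‖y‖ = ‖z‖ → y ∈ N → z ∈ N) → (∀ y ∈ N, ‖x‖ < ‖y‖) → vol N ≤ C * vol (sec N x) := by
  refine ⟨(m + 1) * vol (ball 0 1 : Set (Vec (m + 1))) * (2 * r) ^ m, by positivity, fun N x mN bN hN hx => ?_⟩
  have fX : Fm (sec N x) := fm_sec mN bN x
  let f : ℝ → ℝ := fun s => ‖J s x‖
  have lf : LipschitzWith 1 f := LipschitzWith.of_dist_le_mul fun s t => by
    rw [NNReal.coe_one, one_mul, Real.dist_eq, Real.dist_eq]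
    refine (abs_norm_sub_norm_le _ _).trans (le_of_eq ?_)
    have := norm_J_sq (s - t) (0 : Vec m)
    rw [J_sub, sub_self, ← abs_norm, ← sq_eq_sq_iff_abs_eq_abs, this]; simp
  have hW := lf.hausdorffMeasure_image_le zero_le_one (sec N x)
  rw [hausdorffMeasure_real] at hW
  simp only [ENNReal.coe_one, ENNReal.one_rpow, one_mul] at hW
  set W := toMeasurable volume (f '' sec N x) ∩ Iic (2 * r)
  have mW : MeasurableSet W := (measurableSet_toMeasurable _ _).inter measurableSet_Iic
  have vW : volume W ≤ volume (sec N x) := (measure_mono inter_subset_left).trans ((measure_toMeasurable _).le.trans hW)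
  have sub : N ⊆ {y | ‖y‖ ∈ W} := by
    intro y hy
    have b := bN hy
    rw [mem_Bl] at b
    have e : ‖J (√(‖y‖ ^ 2 - ‖x‖ ^ 2)) x‖ = ‖y‖ := by
      have := norm_J_sq (√(‖y‖ ^ 2 - ‖x‖ ^ 2)) x
      rw [sq_sqrt (by have := hx y hy; nlinarith [norm_nonneg x]), sub_add_cancel] at this
      exact (sq_eq_sq₀ (norm_nonneg _) (norm_nonneg _)).1 this
    exact ⟨subset_toMeasurable _ _ ⟨_, hN y _ e.symm hy, e⟩, b⟩
  have fN : volume {y : Vec (m + 1) | ‖y‖ ∈ W} ≠ ∞ := (fm_of_bdd (measurable_norm mW) (R := 2 * r) fun y hy => by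
    rw [mem_Bl]; exact hy.2).2
  refine (measureReal_mono sub fN).trans ?_
  have e1 : vol {y : Vec (m + 1) | ‖y‖ ∈ W} = ∫ y : Vec (m + 1), W.indicator (fun _ => (1 : ℝ)) ‖y‖ := by
    have := integral_indicator_one (μ := (volume : Measure (Vec (m + 1)))) (measurable_norm mW)
    exact this.symm
  rw [e1, integral_fun_norm_addHaar, finrank_euclideanSpace_fin, nsmul_eq_mul, smul_eq_mul, ← mul_assoc, Nat.cast_succ, mul_assoc _ (_ ^ m)]
  refine mul_le_mul_of_nonneg_left ?_ (by positivity)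
  have e2 : ∀ y ∈ Ioi (0 : ℝ), y ^ (m + 1 - 1) • W.indicator (fun _ => (1 : ℝ)) y ≤ (2 * r) ^ m * W.indicator (fun _ => (1 : ℝ)) y := by
    intro y hy
    rw [smul_eq_mul, Nat.add_sub_cancel]
    by_cases h : y ∈ W
    · exact mul_le_mul_of_nonneg_right (pow_le_pow_left₀ (le_of_lt hy) h.2 m) (indicator_nonneg (fun _ _ => zero_le_one) _)
    · simp [h]
  have i1 : Integrable (W.indicator (fun _ => (1 : ℝ))) := (integrable_indicator_iff mW).2 (integrableOn_const (ne_top_of_le_ne_top fX.2 vW))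
  have i2 : Integrable (fun y => (2 * r) ^ m * W.indicator (fun _ => (1 : ℝ)) y) := i1.const_mul _
  have nn : ∀ y, 0 ≤ (2 * r) ^ m * W.indicator (fun _ => (1 : ℝ)) y := fun y => mul_nonneg (by positivity) (indicator_nonneg (fun _ _ => zero_le_one) _)
  calc ∫ y in Ioi (0 : ℝ), y ^ (m + 1 - 1) • W.indicator (fun _ => (1 : ℝ)) y ≤ ∫ y in Ioi (0 : ℝ), (2 * r) ^ m * W.indicator (fun _ => (1 : ℝ)) y := by
        refine integral_mono_of_nonneg ?_ i2.integrableOn ?_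
        · exact (ae_restrict_iff' measurableSet_Ioi).2 (ae_of_all _ fun y hy => smul_nonneg (pow_nonneg (le_of_lt hy) _) (indicator_nonneg (fun _ _ => zero_le_one) _))
        · exact (ae_restrict_iff' measurableSet_Ioi).2 (ae_of_all _ e2)
    _ ≤ ∫ y, (2 * r) ^ m * W.indicator (fun _ => (1 : ℝ)) y := setIntegral_le_integral i2 (ae_of_all _ nn)
    _ = (2 * r) ^ m * vol W := by
        rw [integral_const_mul]
        congr 1
        exact integral_indicator_one mW
    _ ≤ _ := mul_le_mul_of_nonneg_left (toReal_mono fX.2 vW) (by positivity)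

end

/-! ### From rotation averages to balls -/

section
lemma ballStar_Bl (hd : 1 ≤ d) {r : ℝ} (hr : 0 ≤ r) : ballStar (Bl r : Set (Vec d)) = Bl r := by
  rw [ballStar_rad, rad_real_Bl hd hr]

lemma star_sd (hd : 1 ≤ d) {S : Set (Vec d)} (hS : Fm S) {ρ : ℝ} (hρ : 0 ≤ ρ) :
    vol (S ∆ (ballStar S)) ≤ 2 * vol (S ∆ (Bl ρ)) := by
  have h1 := sd_tri hS (fm_Bl ρ) (fm_ballStar S)
  have h2 := ballStar_diff hd (Bl ρ : Set (Vec d)) S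
  have h3 := vol_sub_le hS (fm_Bl ρ)
  rw [ballStar_Bl hd hρ, abs_sub_comm] at h2
  linarith

/-- The set of points that a random rotation sends into `S` with probability more than `1/2` is radial and close to `S`. -/
lemma Rand.maj {Ω : Type} [MeasurableSpace Ω] {P : Measure Ω} {a : Ω → O(m + 1)} (h : Rand (m + 1) P a)
    {S : Set (Vec (m + 1))} (hS : MeasurableSet S) {r η : ℝ} (tS : Rt r η S) :
    ∃ K : Set (Vec (m + 1)), MeasurableSet K ∧ Rt r η K ∧ (∀ y z : Vec (m + 1), ‖y‖ = ‖z‖ → y ∈ K → z ∈ K) ∧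
      volume (S ∆ K) ≤ 2 * Th P a S := by
  have := h.prob
  have ms : ∀ y, MeasurableSet {ω | a ω y ∈ S} := fun y => measurable_prodMk_right (h.ma hS)
  refine ⟨{y | 1 / 2 < P {ω | a ω y ∈ S}}, measurableSet_lt measurable_const (measurable_measure_prodMk_right (h.ma hS)), ⟨fun y hy => ?_, fun y hy => ?_⟩, fun y z hyz hy => ?_, ?_⟩
  · have : {ω | a ω y ∈ S} = univ := eq_univ_of_forall fun ω => tS.1 (by rwa [mem_Bl, (a ω).norm_map, ← mem_Bl])
    rw [mem_setOf_eq, this, measure_univ]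
    exact ENNReal.half_lt_self one_ne_zero ENNReal.one_ne_top
  · by_contra hc
    have : {ω | a ω y ∈ S} = ∅ := eq_empty_of_forall_notMem fun ω hω => hc (by
      have := tS.2 hω
      rwa [mem_Bl, (a ω).norm_map, ← mem_Bl] at this)
    rw [mem_setOf_eq, this, measure_empty] at hy
    exact not_lt_zero hy
  · obtain ⟨g, hg⟩ := exists_rot y
    obtain ⟨g', hg'⟩ := exists_rot z
    obtain ⟨l, hl, hla⟩ := h.right (g.symm.trans g')
    have e : g.symm.trans g' y = z := by
      conv_lhs => rw [← hg]
      rw [LinearIsometryEquiv.trans_apply, g.symm_apply_apply, hyz, hg']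
    rw [mem_setOf_eq, ← hl.measure_preimage (ms y).nullMeasurableSet] at hy
    simp only [preimage_setOf_eq, hla, e] at hy
    exact hy
  · rw [h.th_ph hS]
    refine le_trans ?_ (mul_le_mul_right (mul_meas_ge_le_lintegral (h.ph_meas hS) (1 / 2)) 2)
    rw [← mul_assoc, one_div, ENNReal.mul_inv_cancel two_ne_zero (by simp), one_mul]
    refine measure_mono fun y hy => ?_
    rw [mem_setOf_eq]
    rcases hy with ⟨h1, h2⟩ | ⟨h2, h1⟩
    · have e : {ω | y ∈ S ∆ ((fun z => a ω z) ⁻¹' S)} = {ω | a ω y ∈ S}ᶜ := by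
        ext ω; simp [mem_symmDiff, h1]
      rw [ph, e, prob_compl_eq_one_sub (ms y)]
      rw [mem_setOf_eq, not_lt] at h2
      refine le_trans ?_ (tsub_le_tsub_left h2 1)
      rw [ENNReal.one_sub_inv_two]
    · have e : {ω | y ∈ S ∆ ((fun z => a ω z) ⁻¹' S)} = {ω | a ω y ∈ S} := by
        ext ω; simp [mem_symmDiff, h1]
      rw [ph, e, ← one_div] at *
      exact le_of_lt h2

lemma int_sec_le {S : Set (Vec (m + 1))} (hS : MeasurableSet S) {R : ℝ} (hR : 0 ≤ R) (bS : S ⊆ Bl R) (U : Set (Vec m)) :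
    ∫ x in U, vol (sec S x) ≤ vol S := by
  rw [integral_eq_lintegral_of_nonneg_ae (ae_of_all _ fun x => vol_nonneg) (measurable_real_sec hS).aestronglyMeasurable]
  refine toReal_mono (fm_of_bdd hS bS).2 ?_
  rw [volume_eq_sec hS]
  refine (setLIntegral_le_lintegral _ _).trans (lintegral_mono fun x => ?_)
  exact (ofReal_toReal (fm_sec hS bS x).2).le

lemma taut {k i s v : Prop} (hs : (k ∧ ¬i) ∨ (i ∧ ¬k)) (h : v ↔ i) : (s ∧ ¬v ∨ v ∧ ¬s) ∨ (s ∧ ¬k ∨ k ∧ ¬s) := by tauto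

set_option maxHeartbeats 800000 in
/-- If every rotated copy of `S` has nearly centred interval sections, then `S` is nearly a centred ball. -/
lemma fin {r : ℝ} (hr : 0 < r) : ∃ κ0 > 0, κ0 ≤ 1 / 10 ∧ ∃ C : ℝ, 0 ≤ C ∧ ∀ κ : ℝ, 0 < κ → κ ≤ κ0 → ∀ S : Set (Vec (m + 1)), MeasurableSet S →
    Rt r (κ * r) S → ∀ E : ℝ, 0 ≤ E → (∀ g : O(m + 1), ∫ x in Bl ((1 - κ) * r), hd (g ⁻¹' S) x ≤ E) →
    vol (S ∆ (ballStar S)) ≤ C * E := by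
  obtain ⟨Ω, ms, P, a, h1, h2, h3, h4⟩ := haar (m + 1)
  have h : Rand (m + 1) P a := ⟨h1, h2, h3, h4⟩
  obtain ⟨c, hc, rad⟩ := radial (m := m) hr
  set v := vol (Bl 1 : Set (Vec m)) with hv
  set V := vol (Bl 1 : Set (Vec (m + 1))) with hV
  have v0 : 0 < v := om_pos
  have V0 : 0 < V := om_pos
  set b := vol (Bl (r / 2) : Set (Vec m)) with hb
  have b0 : 0 < b := by rw [hb, real_Bl (by positivity)]; exact mul_pos (by positivity) v0
  refine ⟨min (1 / 10) ((V / (16 * (m + 1) * v)) ^ 2), by positivity, min_le_left _ _, 2 * (8 * (m + 1) + c * ((1 + 8 * (m + 1)) / b)), by positivity, ?_⟩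
  intro κ hκ hκ0 S hS tS E hE0 hE
  have hκ1 := hκ0.trans (min_le_left _ _)
  have hκ2 : √κ ≤ V / (16 * (m + 1) * v) := Real.sqrt_le_iff.2 ⟨by positivity, hκ0.trans (min_le_right _ _)⟩
  obtain ⟨β, hβ⟩ := h.tilt (2 * √κ)
  have hβ1 : 4 * (m + 1 : ℕ) * β ≤ 1 := by
    have e1 := hβ ((Bl 1).indicator 1) (measurable_one.indicator measurableSet_closedBall)
    have e2 : ∀ ω, ∫⁻ y in Nb m (2 * √κ), (Bl 1).indicator 1 (a ω y) = volume (Nb m (2 * √κ) ∩ Bl 1) := by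
      intro ω
      rw [inter_comm, ← Measure.restrict_apply measurableSet_closedBall, ← lintegral_indicator_one measurableSet_closedBall]
      refine lintegral_congr fun y => ?_
      have : a ω y ∈ (Bl 1 : Set (Vec (m + 1))) ↔ y ∈ (Bl 1 : Set (Vec (m + 1))) := by simp
      by_cases hy : y ∈ (Bl 1 : Set (Vec (m + 1)))
      · rw [indicator_of_mem hy, indicator_of_mem (this.2 hy)]; rfl
      · rw [indicator_of_notMem hy, indicator_of_notMem (fun h => hy (this.1 h))]
    rw [lintegral_congr e2, lintegral_indicator_one measurableSet_closedBall, lintegral_const, measure_univ, mul_one] at e1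
    have e3 := band_vol (m := m) (t := 2 * √κ)
    rw [e1, ← ofReal_toReal (fm_Bl (d := m) 1).2, ← ofReal_mul (by positivity)] at e3
    have V1 : volume (Bl 1 : Set (Vec (m + 1))) ≠ 0 := fun h => V0.ne' (by rw [hV, Measure.real, h]; rfl)
    rw [← ENNReal.mul_le_mul_iff_left V1 (fm_Bl (d := m + 1) 1).2, one_mul, mul_assoc]
    refine (mul_le_mul_right e3 _).trans ?_
    rw [← ofReal_toReal (fm_Bl (d := m + 1) 1).2]
    have e4 : (4 * ((m + 1 : ℕ) : ℝ≥0∞)) = ofReal (4 * (m + 1)) := by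
      rw [ofReal_mul (by norm_num)]; congr 1
      · simp
      · rw [← ENNReal.ofReal_natCast]; push_cast; rfl
    rw [e4, ← ofReal_mul (by positivity)]
    refine ofReal_le_ofReal ?_
    change 4 * (m + 1) * (2 * (2 * √κ) * v) ≤ V
    rw [le_div_iff₀ (by positivity)] at hκ2
    linarith
  have hT := h.th_le hβ hβ1 hr hκ hκ1 hS tS hE0 hE
  obtain ⟨K, mK, tK, rK, vK⟩ := h.maj hS tS
  have bS2 : S ⊆ Bl (2 * r) := tS.2.trans (Bl_mono (by nlinarith))
  have bK2 : K ⊆ Bl (2 * r) := tK.2.trans (Bl_mono (by nlinarith))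
  have fS := fm_of_bdd hS bS2
  have fK := fm_of_bdd mK bK2
  have hD : vol (S ∆ K) ≤ 8 * (m + 1) * E := by
    refine ENNReal.toReal_le_of_le_ofReal (by positivity) (vK.trans ((mul_le_mul_right hT 2).trans (le_of_eq ?_)))
    have : (2 : ℝ≥0∞) = ofReal 2 := by simp
    rw [this, ← ofReal_mul (by norm_num)]
    congr 1; ring
  have mD := hS.symmDiff mK
  have bD : S ∆ K ⊆ Bl (2 * r) := symmDiff_subset_union.trans (union_subset bS2 bK2)
  have r2 : (0 : ℝ) ≤ 2 * r := by positivity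
  have B1 := bm_hd hS r2 bS2
  have B2 := (bm_len mD r2 bD).1
  obtain ⟨x, hx, hxe⟩ := exists_le_setAverage (μ := volume) (s := (Bl (r / 2) : Set (Vec m))) (fun h => b0.ne' (by rw [hb, Measure.real, h]; rfl))
    (fm_Bl _).2 ((B1.add B2).intOn (fm_Bl _).2)
  have hI : ∫ x in Bl (r / 2), (hd S x + vol (sec (S ∆ K) x)) ≤ E + 8 * (m + 1) * E := by
    rw [integral_add (B1.intOn (fm_Bl _).2) (B2.intOn (fm_Bl _).2)]
    refine add_le_add (le_trans ?_ (hE (LinearIsometryEquiv.refl ℝ _))) ((int_sec_le mD r2 bD _).trans hD)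
    exact setIntegral_mono_set (B1.intOn (fm_Bl _).2) (ae_of_all _ fun x => vol_nonneg)
      (HasSubset.Subset.eventuallyLE (Bl_mono (by nlinarith)))
  rw [setAverage_eq, smul_eq_mul] at hxe
  have hx2 : hd S x + vol (sec (S ∆ K) x) ≤ (1 + 8 * (m + 1)) / b * E := by
    have h1 := mul_le_mul_of_nonneg_left hI (inv_nonneg.2 b0.le)
    have h2 : b⁻¹ * (E + 8 * (m + 1) * E) = (1 + 8 * (m + 1)) / b * E := by field_simp
    exact hxe.trans (h1.trans h2.le)
  rw [mem_Bl] at hx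
  set l := vol (sec S x) / 2 with hl
  have l0 : 0 ≤ l := by positivity
  have l1 : l ≤ r + κ * r := by
    have := (bm_len hS (by nlinarith) tS.2).2 x
    linarith
  set ρ := ‖J l x‖ with hρ
  have ρ2 := norm_J_sq l x
  have fN := fK.symmDiff (fm_Bl ρ)
  have key := rad (K ∆ (Bl ρ)) x fN.1 (symmDiff_subset_union.trans (union_subset bK2 (Bl_mono (by
      refine abs_le_of_sq_le_sq' ?_ r2 |>.2
      rw [← hρ] at ρ2
      have h1 := pow_le_pow_left₀ l0 (l1.trans (by nlinarith : r + κ * r ≤ 11 / 10 * r)) 2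
      have h2 := pow_le_pow_left₀ (norm_nonneg x) hx 2
      rw [ρ2]; nlinarith))))
    (by
      intro y z hyz hy
      have : y ∈ Bl ρ ↔ z ∈ Bl ρ := by rw [mem_Bl, mem_Bl, hyz]
      have h2 : y ∈ K ↔ z ∈ K := ⟨rK y z hyz, rK z y hyz.symm⟩
      rw [mem_symmDiff] at hy ⊢
      tauto)
    (by
      intro y hy
      by_contra hc
      push Not at hc
      have h1 : y ∈ K := tK.1 (by rw [mem_Bl]; nlinarith)
      have h2 : y ∈ Bl ρ := by
        rw [mem_Bl]
        exact hc.trans (abs_le_of_sq_le_sq' (by rw [ρ2]; nlinarith) (norm_nonneg _) |>.2)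
      rcases hy with h | h
      exacts [h.2 h2, h.2 h1])
  have hsec : vol (sec (K ∆ (Bl ρ)) x) ≤ hd S x + vol (sec (S ∆ K) x) := by
    have f1 := (fm_sec hS bS2 x).symmDiff (fm_Iv (0, l))
    have f2 := fm_sec mD bD x
    have z : volume ({l} : Set ℝ) = 0 := measure_singleton l
    refine (measureReal_mono (s₂ := (sec S x) ∆ (Iv (0, l)) ∪ sec (S ∆ K) x ∪ {l}) (fun s hs => ?_)
      ((f1.union f2).union ⟨measurableSet_singleton l, by simp⟩).2).trans ?_
    · change J s x ∈ K ∆ (Bl ρ) at hs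
      have e : J s x ∈ Bl ρ ↔ -l ≤ s ∧ s ≤ l := by
        rw [mem_Bl, hρ, ← abs_le, ← abs_of_nonneg l0, ← sq_le_sq, ← sq_le_sq₀ (norm_nonneg _) (norm_nonneg _), norm_J_sq, norm_J_sq, abs_of_nonneg l0]
        simp
      have e2 : ¬ s = l → (s ∈ Iv (0, l) ↔ -l ≤ s ∧ s ≤ l) := fun h => by
        simp only [Iv, mem_Ico, zero_sub, zero_add]
        exact and_congr_right fun _ => ⟨le_of_lt, fun h' => lt_of_le_of_ne h' h⟩
      have e3 : s ∈ sec (S ∆ K) x ↔ (s ∈ sec S x ∧ ¬ J s x ∈ K ∨ J s x ∈ K ∧ ¬ s ∈ sec S x) := Iff.rfl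
      rw [mem_symmDiff, e] at hs
      simp only [mem_union, e3, mem_symmDiff (t := Iv (0, l)), mem_singleton_iff]
      by_cases hsl : s = l
      · exact Or.inr hsl
      · have := e2 hsl
        exact Or.inl (taut hs this)
    · refine (measureReal_union_le _ _).trans ?_
      have z' : vol ({l} : Set ℝ) = 0 := by rw [Measure.real, z]; rfl
      rw [z', add_zero]
      exact measureReal_union_le _ _
  refine (star_sd (by omega) fS (norm_nonneg (J l x))).trans ?_
  have := sd_tri fS fK (fm_Bl ρ)
  have k2 := key.trans (mul_le_mul_of_nonneg_left (hsec.trans hx2) hc)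
  rw [← hρ]
  linarith

end

section
variable {A B : Set (Vec d)}

/-! ### Affine normalization -/

lemma int_sd {E : Type*} [NormedAddCommGroup E] [NormedSpace ℝ E] (hA : MeasurableSet A) (hB : MeasurableSet B) {R Q : ℝ}
    (bA : A ⊆ Bl R) (bB : B ⊆ Bl R) {f : Vec d → E} (hf : Continuous f) (hQ : ∀ v ∈ Bl R, ‖f v‖ ≤ Q) :
    ‖(∫ v in A, f v) - ∫ v in B, f v‖ ≤ Q * vol (A ∆ B) := by
  have fi : IntegrableOn f (Bl R) := intBl hf
  have fA := fm_of_bdd hA bA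
  have fB := fm_of_bdd hB bB
  rw [← integral_inter_add_diff hB (fi.mono_set bA), ← integral_inter_add_diff hA (fi.mono_set bB), inter_comm B A, add_sub_add_left_eq_sub, real_symmDiff fA fB, mul_add]
  exact (norm_sub_le _ _).trans (add_le_add (norm_setIntegral_le_of_norm_le_const (fA.diff hB).2.lt_top fun v hv => hQ v (bA hv.1))
    (norm_setIntegral_le_of_norm_le_const (fB.diff hA).2.lt_top fun v hv => hQ v (bB hv.1)))

lemma aff_int {E : Type*} [NormedAddCommGroup E] [NormedSpace ℝ E] {ψ : GL(d)} (hψ : |det(ψ)| = 1)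
    (u : Vec d) (A : Set (Vec d)) (f : Vec d → E) : ∫ v in aff ψ u A, f v = ∫ v in A, f (ψ v + u) := by
  have h1 : MeasurePreserving (fun y => ψ y + u) volume volume :=
    (measurePreserving_add_right volume u).comp ((mp_iff_det ψ).2 hψ)
  exact h1.setIntegral_image_emb (affH ψ u).measurableEmbedding f A

lemma Rt_aff {r η η0 s t : ℝ} {ψ : GL(d)} {u : Vec d} (h : Rt r η0 A) (hs : 0 ≤ s) (h1 : ∀ x, ‖ψ x‖ ≤ s * ‖x‖)
    (h2 : ∀ x, ‖ψ.symm x‖ ≤ s * ‖x‖) (hu : ‖u‖ ≤ t) (h3 : s * (r - η + t) ≤ r - η0) (h4 : s * (r + η0) + t ≤ r + η) : Rt r η (aff ψ u A) := by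
  constructor
  · intro y hy
    rw [mem_Bl] at hy
    refine ⟨ψ.symm (y - u), h.1 ?_, by simp⟩
    rw [mem_Bl]
    refine (h2 _).trans (le_trans (mul_le_mul_of_nonneg_left ((norm_sub_le _ _).trans (add_le_add hy hu)) hs) h3)
  · rintro _ ⟨x, hx, rfl⟩
    have := h.2 hx
    rw [mem_Bl] at this ⊢
    exact (norm_add_le _ _).trans ((add_le_add ((h1 x).trans (mul_le_mul_of_nonneg_left this hs)) hu).trans h4)

lemma cent (hd : 1 ≤ d) {r η : ℝ} (hr : 0 < r) (hη : 0 < η) : ∃ η0 > 0, ∀ A : Set (Vec d), MeasurableSet A → Rt r η0 A →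
    ∃ u, Rt r η (aff (LinearEquiv.refl ℝ (Vec d)) u A) ∧ ∫ v in aff (LinearEquiv.refl ℝ (Vec d)) u A, v = 0 := by
  set V := vol (Bl r : Set (Vec d)) with hV
  have V0 : 0 < V := by rw [hV, real_Bl hr.le]; exact mul_pos (by positivity) om_pos
  obtain ⟨η1, h1, h1r, hs⟩ := Rt.small (d := d) hr (ε := min (V / 2) (η * V / (8 * r))) (by positivity)
  refine ⟨min η1 (η / 2), by positivity, fun A hA tA => ?_⟩
  have hsd := hs A (tA.mono (min_le_left _ _))
  have m1 := min_le_left (V / 2) (η * V / (8 * r))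
  have m2 := min_le_right (V / 2) (η * V / (8 * r))
  have bA : A ⊆ Bl (2 * r) := tA.2.trans (Bl_mono (by have := min_le_left η1 (η / 2); linarith))
  have fA := fm_of_bdd hA bA
  have hvol := abs_le.1 (vol_sub_le fA (fm_Bl r))
  have VA : V / 2 ≤ vol A := by rw [← hV] at hvol; linarith [hvol.1]
  have i0 : ∫ v in (Bl r : Set (Vec d)), v = 0 := by
    have h := (Measure.measurePreserving_neg (volume : Measure (Vec d))).setIntegral_preimage_emb (Homeomorph.neg _).measurableEmbedding (fun v => v) (Bl r)
    have e : Neg.neg ⁻¹' (Bl r : Set (Vec d)) = Bl r := neg_Bl r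
    rw [e, integral_neg] at h
    rw [neg_eq_iff_add_eq_zero, ← two_smul ℝ] at h
    exact (smul_eq_zero.1 h).resolve_left two_ne_zero
  have hi := int_sd hA (fm_Bl r).1 bA (Bl_mono (by linarith)) continuous_id (Q := 2 * r) fun v hv => by simpa using hv
  simp only [id, i0, sub_zero] at hi
  set I := ∫ v in A, v
  have hu : ‖-((vol A)⁻¹ • I)‖ ≤ η / 2 := by
    rw [norm_neg, norm_smul, norm_inv, Real.norm_of_nonneg vol_nonneg, inv_mul_le_iff₀ (by linarith)]
    refine hi.trans ((mul_le_mul_of_nonneg_left (hsd.le.trans m2) (by positivity)).trans ?_)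
    have : 2 * r * (η * V / (8 * r)) = V / 2 * (η / 2) := by field_simp; norm_num
    rw [this]
    exact mul_le_mul_of_nonneg_right VA (by positivity)
  refine ⟨-((vol A)⁻¹ • I), Rt_aff (s := 1) (t := η / 2) tA zero_le_one (fun x => by simp) (fun x => by simp) hu ?_ ?_, ?_⟩
  · have := min_le_right η1 (η / 2); linarith
  · have := min_le_right η1 (η / 2); linarith
  · rw [aff_int (by simp)]
    have fi : IntegrableOn (fun v : Vec d => v) A := (intBl continuous_id).mono_set bA
    simp only [LinearEquiv.refl_apply]
    rw [integral_add fi (integrableOn_const fA.2), setIntegral_const, smul_neg, smul_smul, mul_inv_cancel₀ (by linarith), one_smul, add_neg_cancel]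

lemma diag (b : OrthonormalBasis (Fin d) ℝ (Vec d)) {l : Fin d → ℝ} (hl : ∑ i, l i = 0) :
    ∃ ψ : GL(d), |det(ψ)| = 1 ∧ ∀ x i, inner ℝ (b i) (ψ x) = exp (l i) * inner ℝ (b i) x := by
  let ψ := b.toBasis.equiv (b.toBasis.isUnitSMul (w := fun i => exp (l i)) fun i => (Real.exp_ne_zero _).isUnit) (Equiv.refl _)
  have hb : ∀ i, ψ (b i) = exp (l i) • b i := fun i => by
    have := b.toBasis.equiv_apply i (b.toBasis.isUnitSMul (w := fun i => exp (l i)) fun i => (Real.exp_ne_zero _).isUnit) (Equiv.refl _)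
    simpa [Module.Basis.isUnitSMul_apply] using this
  refine ⟨ψ, ?_, fun x i => ?_⟩
  · have : LinearMap.toMatrix b.toBasis b.toBasis (ψ : Vec d →ₗ[ℝ] Vec d) = Matrix.diagonal fun i => exp (l i) := by
      ext i j
      rw [LinearMap.toMatrix_apply, Matrix.diagonal_apply]
      simp only [OrthonormalBasis.coe_toBasis, LinearEquiv.coe_coe, hb, map_smul, OrthonormalBasis.coe_toBasis_repr_apply, OrthonormalBasis.repr_self]
      by_cases h : i = j
      · subst h; simp
      · simp [h]
    rw [← LinearMap.det_toMatrix b.toBasis, this, Matrix.det_diagonal, ← Real.exp_sum, hl, Real.exp_zero, abs_one]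
  · conv_lhs => rw [← b.sum_repr' x]
    rw [map_sum, inner_sum, Finset.sum_eq_single i]
    · rw [map_smul, hb, inner_smul_right, inner_smul_right, real_inner_self_eq_norm_sq, b.norm_eq_one]; ring
    · intro j _ hj
      rw [map_smul, hb, inner_smul_right, inner_smul_right, b.inner_eq_zero hj.symm]; ring
    · simp

lemma diag_norm (b : OrthonormalBasis (Fin d) ℝ (Vec d)) {l : Fin d → ℝ} {ε : ℝ} (hl : ∀ i, l i ≤ ε) {φ : Vec d → Vec d}
    (h : ∀ x i, inner ℝ (b i) (φ x) = exp (l i) * inner ℝ (b i) x) (x : Vec d) : ‖φ x‖ ≤ exp ε * ‖x‖ := by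
  refine abs_le_of_sq_le_sq' ?_ (by positivity) |>.2
  rw [mul_pow, ← b.sum_sq_norm_inner_right, ← b.sum_sq_norm_inner_right, mul_sum]
  refine sum_le_sum fun i _ => ?_
  rw [h, norm_mul, mul_pow, Real.norm_of_nonneg (Real.exp_pos _).le]
  exact mul_le_mul_of_nonneg_right (pow_le_pow_left₀ (Real.exp_pos _).le (Real.exp_le_exp.2 (hl i)) 2) (by positivity)

/-- A nearly round set is made isotropic by a unimodular map near the identity, diagonal in an eigenbasis of the
second moment form. -/
lemma isot {r x : ℝ} (hr : 0 < r) (hx : 0 < x) : ∃ η0 > 0, ∀ A : Set (Vec (m + 1)), MeasurableSet A → Rt r η0 A →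
    ∃ ψ : GL(m + 1), |det(ψ)| = 1 ∧ (∀ y, ‖ψ y‖ ≤ (1 + x) * ‖y‖) ∧
      (∀ y, ‖ψ.symm y‖ ≤ (1 + x) * ‖y‖) ∧ ∀ a b : Vec (m + 1), inner ℝ a b = 0 → ∫ v in A, inner ℝ a (ψ v) * inner ℝ b (ψ v) = 0 := by
  set Λ := ∫ v in (Bl r : Set (Vec (m + 1))), (inner ℝ (J 1 0) v) ^ 2 with hΛ
  have c2 : ∀ a b : Vec (m + 1), Continuous fun v : Vec (m + 1) => inner ℝ a v * inner ℝ b v := fun a b => by fun_prop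
  have Λ0 : 0 < Λ := by
    refine (setIntegral_pos_iff_support_of_nonneg_ae (ae_of_all _ fun v => sq_nonneg _) ?_).2 ?_
    · exact intBl (by fun_prop)
    · have o : IsOpen ((Function.support fun v : Vec (m + 1) => (inner ℝ (J 1 0) v : ℝ) ^ 2) ∩ ball 0 r) :=
        (Continuous.isOpen_support (by fun_prop)).inter isOpen_ball
      refine (o.measure_pos volume ⟨J (r / 2) 0, ?_, ?_⟩).trans_le (measure_mono (inter_subset_inter_right _ ball_subset_closedBall))
      · rw [Function.mem_support, inner_J]; simp [hr.ne']
      · have := norm_J_sq (r / 2) (0 : Vec m)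
        rw [mem_ball_zero_iff]
        refine abs_lt_of_sq_lt_sq' ?_ hr.le |>.2
        rw [this]; simp; nlinarith
  have x1 : 0 < log (1 + x) := Real.log_pos (by linarith)
  obtain ⟨δ, hδ, hlog⟩ := continuousAt_iff.1 (Real.continuousAt_log Λ0.ne') _ x1
  obtain ⟨η1, h1, h1r, hs⟩ := Rt.small (d := m + 1) hr (ε := min δ Λ / (2 * r) ^ 2) (by positivity)
  refine ⟨η1, h1, fun A hA tA => ?_⟩
  have bA : A ⊆ Bl (2 * r) := tA.2.trans (Bl_mono (by linarith))
  have i2 : ∀ {E : Type} [NormedAddCommGroup E] {f : Vec (m + 1) → E}, Continuous f → IntegrableOn f A := fun hf =>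
    (intBl hf).mono_set bA
  let S : Vec (m + 1) →ₗ[ℝ] Vec (m + 1) :=
    { toFun := fun a => ∫ v in A, (inner ℝ a v : ℝ) • v
      map_add' := fun a b => by
        rw [← integral_add (i2 (by fun_prop)) (i2 (by fun_prop))]
        exact integral_congr_ae (ae_of_all _ fun v => by simp only [inner_add_left, add_smul])
      map_smul' := fun c a => by
        rw [RingHom.id_apply, ← integral_smul]
        exact integral_congr_ae (ae_of_all _ fun v => by simp only [inner_smul_left, smul_smul, conj_trivial]) }
  have hS : ∀ a b, inner ℝ b (S a) = ∫ v in A, inner ℝ a v * inner ℝ b v := fun a b => by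
    rw [show S a = ∫ v in A, (inner ℝ a v : ℝ) • v from rfl, ← integral_inner (i2 (by fun_prop))]
    exact integral_congr_ae (ae_of_all _ fun v => by simp only [inner_smul_right])
  have sym : S.IsSymmetric := fun a b => by
    rw [hS, real_inner_comm, hS]
    exact integral_congr_ae (ae_of_all _ fun v => mul_comm _ _)
  have hn : Module.finrank ℝ (Vec (m + 1)) = m + 1 := finrank_euclideanSpace_fin
  set b := sym.eigenvectorBasis hn
  set lam := sym.eigenvalues hn
  have hb : ∀ i, S (b i) = lam i • b i := fun i => sym.apply_eigenvectorBasis hn i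
  have close : ∀ i, |lam i - Λ| < min δ Λ := by
    intro i
    have e1 : lam i = ∫ v in A, (inner ℝ (b i) v) ^ 2 := by
      have := hS (b i) (b i)
      rw [hb, inner_smul_right, real_inner_self_eq_norm_sq, b.norm_eq_one] at this
      simpa [sq] using this
    obtain ⟨g, hg⟩ := exists_rot (b i)
    rw [b.norm_eq_one] at hg
    have e2 : Λ = ∫ v in (Bl r : Set (Vec (m + 1))), (inner ℝ (b i) v) ^ 2 := by
      have := g.measurePreserving.setIntegral_preimage_emb g.toHomeomorph.measurableEmbedding (fun v => (inner ℝ (b i) v : ℝ) ^ 2) (Bl r)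
      rw [rot_Bl] at this
      rw [← this, hΛ, ← hg]
      simp only [g.inner_map_map]
    have := int_sd hA (fm_Bl (d := m + 1) r).1 bA (Bl_mono (by linarith)) (f := fun v => (inner ℝ (b i) v : ℝ) ^ 2) (by fun_prop) (Q := (2 * r) ^ 2) (fun v hv => by
      rw [mem_Bl] at hv
      rw [norm_pow]
      refine pow_le_pow_left₀ (norm_nonneg _) ((norm_inner_le_norm _ _).trans ?_) 2
      rw [b.norm_eq_one, one_mul]; exact hv)
    rw [← e1, ← e2] at this
    refine this.trans_lt ?_
    have h2 := hs A tA
    rw [lt_div_iff₀ (by positivity)] at h2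
    rw [mul_comm]; exact h2
  have lpos : ∀ i, 0 < lam i := fun i => by linarith [(abs_lt.1 (close i)).1, min_le_right δ Λ]
  set L := fun i => log (lam i)
  have hL : ∀ i, |L i - log Λ| < log (1 + x) := fun i => hlog ((close i).trans_le (min_le_left _ _))
  set Lb := (∑ i, L i) / (m + 1) with hLb
  have hsum : ∑ i, L i = (m + 1) * Lb := by rw [hLb]; field_simp
  have hLb2 : |Lb - log Λ| ≤ log (1 + x) := by
    have h2 : Lb - log Λ = (∑ i, (L i - log Λ)) / (m + 1) := by
      rw [Finset.sum_sub_distrib, hsum]; simp; field_simp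
    rw [h2, abs_div, abs_of_pos (by positivity : (0 : ℝ) < m + 1), div_le_iff₀ (by positivity)]
    refine (Finset.abs_sum_le_sum_abs _ _).trans ((sum_le_sum fun i _ => (hL i).le).trans (le_of_eq ?_))
    simp; ring
  set l := fun i => (Lb - L i) / 2 with hl
  have l1 : ∀ i, |l i| ≤ log (1 + x) := fun i => by
    have h2 := abs_le.1 hLb2
    have h3 := abs_lt.1 (hL i)
    rw [abs_le]; constructor <;> simp only [hl] <;> linarith
  obtain ⟨ψ, dψ, hψ⟩ := diag b (l := l) (by
    simp only [hl]
    rw [← Finset.sum_div, Finset.sum_sub_distrib, hsum]; simp)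
  have ex : exp (log (1 + x)) = 1 + x := Real.exp_log (by linarith)
  refine ⟨ψ, dψ, fun y => ?_, fun y => ?_, fun p q hpq => ?_⟩
  · rw [← ex]; exact diag_norm b (fun i => (abs_le.1 (l1 i)).2) hψ y
  · rw [← ex]
    refine diag_norm b (l := fun i => - l i) (fun i => by linarith [(abs_le.1 (l1 i)).1]) (φ := ψ.symm) (fun z i => ?_) y
    have := hψ (ψ.symm z) i
    rw [ψ.apply_symm_apply] at this
    rw [this, ← mul_assoc, ← Real.exp_add]; simp
  · have adj : ∀ a v, inner ℝ a (ψ v) = inner ℝ (ψ a) v := fun a v => by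
      rw [← b.sum_inner_mul_inner a, ← b.sum_inner_mul_inner (ψ a)]
      refine sum_congr rfl fun i _ => ?_
      rw [hψ, real_inner_comm, real_inner_comm (b i) (ψ a), hψ]; ring
    simp only [adj]
    rw [← hS, ← b.sum_inner_mul_inner]
    have : ∀ i, inner ℝ (ψ q) (b i) * inner ℝ (b i) (S (ψ p)) = exp Lb * (inner ℝ p (b i) * inner ℝ (b i) q) := fun i => by
      rw [← sym, hb, inner_smul_left, hψ, real_inner_comm, hψ, real_inner_comm (b i) p, conj_trivial]
      have e : exp Lb = exp (l i) * exp (l i) * lam i := by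
        rw [← Real.exp_log (lpos i), ← Real.exp_add, ← Real.exp_add]; congr 1; simp only [hl, L]; ring
      rw [e]; ring
    rw [sum_congr rfl fun i _ => this i, ← mul_sum, b.sum_inner_mul_inner, hpq, mul_zero]

end

/-! ### The local estimate -/

section
variable {A B : Set (Vec (m + 1))}

/-- A trapped pair can be moved by a measure-preserving affine map close to the identity so that both sets are centered and the
first one is isotropic. -/
lemma normal {r1 r2 η : ℝ} (h1 : 0 < r1) (h2 : 0 < r2) (hη : 0 < η) : ∃ η0 > 0, ∀ A B : Set (Vec (m + 1)), MeasurableSet A → MeasurableSet B →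
    Rt r1 η0 A → Rt r2 η0 B → ∃ (ψ : GL(m + 1)) (u v : Vec (m + 1)), |det(ψ)| = 1 ∧
      Rt r1 η (aff ψ u A) ∧ Rt r2 η (aff ψ v B) ∧ ∫ x in aff ψ u A, x = 0 ∧ ∫ x in aff ψ v B, x = 0 ∧
      ∀ a b : Vec (m + 1), inner ℝ a b = 0 → ∫ x in aff ψ u A, inner ℝ a x * inner ℝ b x = 0 := by
  obtain ⟨x, x0, x1, x2, x3⟩ : ∃ x : ℝ, 0 < x ∧ x * r1 ≤ η / 4 ∧ x * r2 ≤ η / 4 ∧ x ≤ 1 / 2 :=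
    ⟨min (1 / 2) (min (η / (4 * r1)) (η / (4 * r2))), by positivity,
      (mul_le_mul_of_nonneg_right ((min_le_right _ _).trans (min_le_left _ _)) h1.le).trans (le_of_eq (by field_simp)),
      (mul_le_mul_of_nonneg_right ((min_le_right _ _).trans (min_le_right _ _)) h2.le).trans (le_of_eq (by field_simp)), min_le_left _ _⟩
  obtain ⟨ηi, hi, iso⟩ := isot (m := m) h1 x0
  obtain ⟨η1, e1, c1⟩ := cent (d := m + 1) (by omega) h1 (η := min ηi (η / 4)) (by positivity)
  obtain ⟨η2, e2, c2⟩ := cent (d := m + 1) (by omega) h2 (η := η / 4) (by positivity)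
  refine ⟨min η1 η2, by positivity, fun A B hA hB tA tB => ?_⟩
  obtain ⟨u, tu, iu⟩ := c1 A hA (tA.mono (min_le_left _ _))
  obtain ⟨v, tv, iv⟩ := c2 B hB (tB.mono (min_le_right _ _))
  obtain ⟨ψ, dψ, n1, n2, iψ⟩ := iso _ (measurableSet_aff _ u hA) (tu.mono (min_le_left _ _))
  have key : ∀ {r : ℝ} {S : Set (Vec (m + 1))}, x * r ≤ η / 4 → Rt r (η / 4) S → Rt r η (aff ψ 0 S) := fun hx h =>
    Rt_aff (s := 1 + x) (t := 0) h (by linarith) n1 n2 (by simp) (by linarith [mul_pos x0 hη]) (by linarith [mul_le_mul_of_nonneg_right x3 hη.le])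
  have z : ∀ {S : Set (Vec (m + 1))}, ∫ x in S, x = 0 → ∫ x in aff ψ 0 S, x = 0 := fun {S} h => by
    rw [aff_int dψ]
    simp only [add_zero]
    have := (ψ.toContinuousLinearEquiv).integral_comp_comm (μ := volume.restrict S) (fun y => y)
    rw [h, map_zero] at this
    exact this
  have e : ∀ w S, aff ψ (ψ w) S = aff ψ 0 (aff (LinearEquiv.refl ℝ (Vec (m + 1))) w S) := fun w S => by
    rw [aff_aff, add_zero]; rfl
  refine ⟨ψ, ψ u, ψ v, dψ, ?_, ?_, ?_, ?_, fun a b hab => ?_⟩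
  · rw [e]; exact key x1 (tu.mono (min_le_right _ _))
  · rw [e]; exact key x2 tv
  · rw [e]; exact z iu
  · rw [e]; exact z iv
  · rw [e, aff_int dψ]
    simp only [add_zero]
    exact iψ a b hab

lemma rot_sd (g : O(d)) (A : Set (Vec d)) :
    vol ((g ⁻¹' A) ∆ (ballStar (g ⁻¹' A))) = vol (A ∆ (ballStar A)) := by
  rw [ballStar_congr (rot_vol g A), ← rot_real g (A ∆ _), Set.preimage_symmDiff, ballStar_rad, rot_Bl]

lemma Rt_rot {r η : ℝ} (g : O(d)) {A : Set (Vec d)} (h : Rt r η A) : Rt r η (g ⁻¹' A) :=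
  ⟨by rw [← rot_Bl g]; exact preimage_mono h.1, rot_sub g h.2⟩

lemma rot_int {E : Type*} [NormedAddCommGroup E] [NormedSpace ℝ E] (g : O(d)) (A : Set (Vec d)) (f : Vec d → E) :
    ∫ v in g ⁻¹' A, f v = ∫ v in A, f (g.symm v) := by
  have := g.measurePreserving.setIntegral_preimage_emb g.toHomeomorph.measurableEmbedding (fun v => f (g.symm v)) A
  simpa using this

/-- Steiner symmetrization of the triple `(A, B, lev τ A B)` gains at most the deficit. -/
lemma gain {τ e R : ℝ} (hA : MeasurableSet A) (hB : MeasurableSet B) (bA : A ⊆ Bl R) (bB : B ⊆ Bl R) (hτ : 0 < τ)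
    (h : Def τ A B ≤ e) : tri (St A) (St B) (St (lev τ A B)) ≤ tri A B (lev τ A B) + e := by
  have fA := fm_of_bdd hA bA
  have fB := fm_of_bdd hB bB
  have fC := fm_lev hτ fA fB
  have bC := lev_bdd hA hB hτ bA bB
  have sA := St_sub hA bA
  have sB := St_sub hB bB
  have k1 := rs_bdd (by omega) (measurableSet_St hA) (measurableSet_St hB) hτ sA sB
  rw [ballStar_congr (vol_St hA bA), ballStar_congr (vol_St hB bB)] at k1
  have k2 := tri_sub_le_T hτ.le (fm_of_bdd (measurableSet_St hA) sA) (fm_of_bdd (measurableSet_St hB) sB)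
    (fm_of_bdd (measurableSet_St fC.1) (St_sub fC.1 bC))
  have k3 := T_eq_lev hτ fA fB
  have k4 : vol (St (lev τ A B)) = vol (lev τ A B) := by simp only [Measure.real, vol_St fC.1 bC]
  rw [k4] at k2
  unfold Def at h
  linarith

/-- The stability estimate for trapped, centered and isotropic pairs. -/
lemma core {r1 r2 r3 : ℝ} (h1 : 0 < r1) (h2 : 0 < r2) (h3 : |r1 - r2| < r3) (h4 : r3 < r1 + r2) :
    ∃ η > 0, ∃ δ > 0, ∃ C, 0 ≤ C ∧ ∀ (A B : Set (Vec (m + 1))) (τ e : ℝ), MeasurableSet A → MeasurableSet B → Rt r1 η A → Rt r2 η B → 0 < τ →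
      |τ - lens m r1 r2 r3| ≤ δ → 0 < e → Def τ A B ≤ e ^ 2 → ∫ x in A, x = 0 → ∫ x in B, x = 0 →
      (∀ a b : Vec (m + 1), inner ℝ a b = 0 → ∫ x in A, inner ℝ a x * inner ℝ b x = 0) →
      vol (A ∆ (ballStar A)) + vol (B ∆ (ballStar B)) ≤ C * e := by
  obtain ⟨M, M0, hst⟩ := star (m := m) h1 h2 h3 h4
  obtain ⟨κ1, k1, k1', C1, c1, f1⟩ := fin (m := m) h1
  obtain ⟨κ2, k2, k2', C2, c2, f2⟩ := fin (m := m) h2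
  set Q := (C1 + C2) * M + 1 with hQ
  have Q0 : 0 < Q := by positivity
  obtain ⟨κ, κ0, κ1', κ2', κQ⟩ : ∃ κ : ℝ, 0 < κ ∧ κ ≤ κ1 ∧ κ ≤ κ2 ∧ Q * √(5 * κ) ≤ 1 / 2 := by
    refine ⟨min (min κ1 κ2) (1 / (5 * (2 * Q) ^ 2)), by positivity, (min_le_left _ _).trans (min_le_left _ _),
      (min_le_left _ _).trans (min_le_right _ _), ?_⟩
    have : √(5 * min (min κ1 κ2) (1 / (5 * (2 * Q) ^ 2))) ≤ 1 / (2 * Q) := by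
      rw [Real.sqrt_le_left (by positivity), div_pow, one_pow]
      refine (mul_le_mul_of_nonneg_left (min_le_right _ _) (by norm_num)).trans (le_of_eq ?_)
      field_simp
    calc _ ≤ Q * (1 / (2 * Q)) := mul_le_mul_of_nonneg_left this Q0.le
      _ = 1 / 2 := by field_simp
  obtain ⟨ηs, s0, K, K0, hs⟩ := hst κ κ0 (κ1'.trans k1')
  obtain ⟨δ, hδ, trap⟩ := lev_trap (m := m) h1 h2 h3 h4 s0
  obtain ⟨ηa, a0, ar, sa⟩ := Rt.small (d := m + 1) h1 hδ
  obtain ⟨ηb, b0, br, sb⟩ := Rt.small (d := m + 1) h2 hδ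
  obtain ⟨η, η0, l1, l2, l3, l4, l5⟩ : ∃ η : ℝ, 0 < η ∧ η ≤ ηs ∧ η ≤ ηa ∧ η ≤ ηb ∧ η ≤ κ * r1 ∧ η ≤ κ * r2 :=
    ⟨min ηs (min ηa (min ηb (min (κ * r1) (κ * r2)))), by positivity, by simp, by simp, by simp, by simp, by simp⟩
  refine ⟨η, η0, δ, hδ, 2 * ((C1 + C2) * K), by positivity, fun A B τ e hA hB tA tB hτ hτδ he hD zA zB iA => ?_⟩
  set D := vol (A ∆ (ballStar A)) + vol (B ∆ (ballStar B)) with hDD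
  have D0 : 0 ≤ D := add_nonneg vol_nonneg vol_nonneg
  have key : ∀ g : O(m + 1), _ ∧ _ := fun g => by
    have mA := rot_meas g hA
    have mB := rot_meas g hB
    have tA' := Rt_rot g tA
    have tB' := Rt_rot g tB
    have bA : g ⁻¹' A ⊆ Bl (r1 + r2 + η) := tA'.2.trans (Bl_mono (by linarith))
    have bB : g ⁻¹' B ⊆ Bl (r1 + r2 + η) := tB'.2.trans (Bl_mono (by linarith))
    have fA := fm_of_bdd mA bA
    have fB := fm_of_bdd mB bB
    have dg : Def τ (g ⁻¹' A) (g ⁻¹' B) ≤ e ^ 2 := by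
      rw [rot_eq_aff, rot_eq_aff, Def_aff _ (rot_det g.symm) _ _ hA hB]; exact hD
    have tC := trap _ _ τ fA fB (sa _ (tA'.mono l2)).le (sb _ (tB'.mono l3)).le hτδ
    have z : ∀ {S : Set (Vec (m + 1))} {R : ℝ}, S ⊆ Bl R → ∫ x in S, x = 0 → ∫ v in g ⁻¹' S, v 0 = 0 := fun {S R} bS h => by
      rw [rot_int]
      simp only [← coord_inner]
      have ii : IntegrableOn (fun x : Vec (m + 1) => x) S := (intBl continuous_id).mono_set bS
      have := integral_inner (𝕜 := ℝ) ii (g (J 1 0))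
      rw [h, inner_zero_right] at this
      rw [← this]
      refine integral_congr_ae (ae_of_all _ fun v => ?_)
      beta_reduce
      rw [← g.inner_map_map, g.apply_symm_apply]
    have w := hs _ _ _ e mA mB (fm_lev hτ fA fB).1 (tA'.mono l1) (tB'.mono l1) tC he (gain mA mB bA bB hτ dg) (z tA.2 zA) (fun w => by
      rw [rot_int, ← iA (g (J 1 0)) (g (J 0 w)) (by rw [g.inner_map_map, inner_J]; simp)]
      refine integral_congr_ae (ae_of_all _ fun v => ?_)
      beta_reduce
      have e1 : ∀ a, inner ℝ (g a) v = inner ℝ a (g.symm v) := fun a => by rw [← g.inner_map_map a, g.apply_symm_apply]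
      rw [e1, e1, coord_inner]
      congr 1
      conv_rhs => rw [← J_tl (g.symm v)]
      rw [inner_J]; simp) (z tB.2 zB)
    rw [rot_sd, rot_sd] at w
    exact w
  have E0 : 0 ≤ K * e + M * (√(5 * κ) * D) := by positivity
  have g1 := f1 κ κ0 κ1' A hA (tA.mono l4) _ E0 fun g => (key g).1
  have g2 := f2 κ κ0 κ2' B hB (tB.mono l5) _ E0 fun g => (key g).2
  have : (C1 + C2) * M * √(5 * κ) * D ≤ 1 / 2 * D := by
    refine mul_le_mul_of_nonneg_right (le_trans ?_ κQ) D0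
    exact mul_le_mul_of_nonneg_right (by linarith) (sqrt_nonneg _)
  have : D ≤ (C1 + C2) * K * e + (C1 + C2) * M * √(5 * κ) * D := by
    calc D ≤ _ := add_le_add g1 g2
      _ = _ := by ring
  linarith

end

/-! ### From local to global -/

section
variable {A B : Set (Vec (m + 1))}

lemma pd_self (A B : Set (Vec d)) : pairDistance A B ≤ max (vol (A ∆ (ballStar A))) (vol (B ∆ (ballStar B))) := by
  have e : ∀ S : Set (Vec d), aff (LinearEquiv.refl ℝ (Vec d)) 0 S = S := fun S => by simp [aff]
  simpa only [e] using pd_le A B (LinearEquiv.refl ℝ (Vec d)) 0 0 (by simp)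

/-- Stability near the orbit of `(Bl r1, Bl r2)`: trim, normalize, and apply `core`. -/
lemma local_aux {r1 r2 r3 : ℝ} (h1 : 0 < r1) (h2 : 0 < r2) (h3 : |r1 - r2| < r3) (h4 : r3 < r1 + r2) :
    ∃ δ > 0, ∃ c > 0, ∀ (A B : Set (Vec (m + 1))) (τ : ℝ), Fm A → Fm B → 0 < τ → |vol A - vol (Bl r1 : Set (Vec (m + 1)))| ≤ δ →
      |vol B - vol (Bl r2 : Set (Vec (m + 1)))| ≤ δ → |τ - lens m r1 r2 r3| ≤ δ → pairDistance A B < δ →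
      c * pairDistance A B ^ 2 ≤ Def τ A B := by
  obtain ⟨η, η0, δc, c0, C, C0, hc⟩ := core (m := m) h1 h2 h3 h4
  obtain ⟨ηn, n0, hn⟩ := normal (m := m) h1 h2 η0
  obtain ⟨δt, t0, K, K0, ht⟩ := trim2 (m := m) h1 h2 h3 h4 n0
  set Q := C + 2 * K + 1 with hQ
  have Q1 : 1 ≤ Q := by linarith
  obtain ⟨δ, δ0, d1, d2, d3⟩ : ∃ δ : ℝ, 0 < δ ∧ δ ≤ δt / 2 ∧ δ ≤ δc ∧ δ ≤ 1 := ⟨min (δt / 2) (min δc 1), by positivity, by simp, by simp, by simp⟩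
  refine ⟨δ, δ0, 1 / (4 * Q ^ 2), by positivity, fun A B τ hA hB hτ vA vB hτδ hp => ?_⟩
  obtain ⟨ψ, u, v, dψ, su, sv⟩ := pd_lt hp
  have d1s := det_symm dψ
  have pull : ∀ {S : Set (Vec (m + 1))} {r : ℝ} {u : Vec (m + 1)}, 0 < r → Fm S → |vol S - vol (Bl r : Set (Vec (m + 1)))| ≤ δ →
      vol (S ∆ (aff ψ u (ballStar S))) < δ → vol ((aff ψ.symm (-ψ.symm u) S) ∆ (Bl r)) ≤ δt := by
    intro S r u hr hS vS hs
    have e : ballStar S = aff ψ.symm (-ψ.symm u) (aff ψ u (ballStar S)) := by rw [aff_aff]; simp [aff]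
    have k1 : vol ((aff ψ.symm (-ψ.symm u) S) ∆ (ballStar S)) < δ := by
      rw [e, ← aff_symmDiff, real_aff, d1s, one_mul]; exact hs
    have k2 := ballStar_diff (by omega) S (Bl r)
    rw [ballStar_Bl (by omega) hr.le] at k2
    have := sd_tri (hS.aff ψ.symm (-ψ.symm u)) (fm_ballStar S) (fm_Bl r)
    linarith
  set A1 := aff ψ.symm (-ψ.symm u) A with hA1
  set B1 := aff ψ.symm (-ψ.symm v) B with hB1
  have fA1 : Fm A1 := hA.aff _ _
  have fB1 : Fm B1 := hB.aff _ _
  have D1 : Def τ A1 B1 = Def τ A B := Def_aff _ d1s _ _ hA.1 hB.1 τ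
  have p1 : pairDistance A1 B1 = pairDistance A B := pd_aff_eq (by omega) _ d1s _ _ A B
  obtain ⟨q1, q2, q3⟩ := ht A1 B1 τ fA1 fB1 hτ (pull h1 hA vA su) (pull h2 hB vB sv) (hτδ.trans (by linarith))
  rw [D1] at q1 q2 q3
  have tA := trim_Rt (r := r1) n0.le A1
  have tB := trim_Rt (r := r2) n0.le B1
  have fA2 : Fm (trim r1 ηn A1) := fm_trim fA1
  have fB2 : Fm (trim r2 ηn B1) := fm_trim fB1
  have D0 : 0 ≤ Def τ A B := le_trans (sub_nonneg.2 (rs_bdd (by omega) fA2.1 fB2.1 hτ (R := r1 + r2 + ηn)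
    (tA.2.trans (Bl_mono (by linarith))) (tB.2.trans (Bl_mono (by linarith))))) q1
  have p2 := pd_lip (by omega) fA1 fA2 fB1 fB2
  have p2' := max_le q2 q3
  obtain ⟨φ, a, b, dφ, tA3, tB3, zA, zB, iA⟩ := hn _ _ fA2.1 fB2.1 tA tB
  have p3 := pd_aff_eq (by omega) φ dφ a b (trim r1 ηn A1) (trim r2 ηn B1)
  have D3 := Def_aff φ dφ a b fA2.1 fB2.1 τ
  have claim : ∀ e, 0 < e → Def τ A B ≤ e ^ 2 → pairDistance A B ≤ Q * e := by
    intro e he hD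
    rcases le_total e 1 with h | h
    · have k := hc _ _ τ e (fA2.aff φ a).1 (fB2.aff φ b).1 tA3 tB3 hτ (hτδ.trans d2) he (D3.trans_le (q1.trans hD)) zA zB iA
      have k2 := (pd_self _ _).trans ((max_le_add_of_nonneg vol_nonneg vol_nonneg).trans k)
      have k3 : K * Def τ A B ≤ K * e := mul_le_mul_of_nonneg_left (hD.trans (by nlinarith)) K0.le
      rw [hQ]; linarith
    · have : Q * 1 ≤ Q * e := mul_le_mul_of_nonneg_left h (by linarith)
      linarith
  by_contra hcon
  push Not at hcon
  have pp : 0 < pairDistance A B := by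
    refine (pd_nonneg A B).lt_of_ne fun h => ?_
    rw [← h] at hcon; norm_num at hcon; linarith
  have := claim (pairDistance A B / (2 * Q)) (by positivity) (hcon.le.trans (le_of_eq (by field_simp; norm_num)))
  have e : Q * (pairDistance A B / (2 * Q)) = pairDistance A B / 2 := by field_simp
  linarith

/-- Stability near the orbit of the extremal pairs with measures near `m1`, `m2` and parameter near `t`. -/
lemma local_stab {m1 m2 t : ℝ} (ht : 0 < t) (t1 : t < m1) (t2 : t < m2) :
    ∃ δ > 0, ∃ c > 0, ∀ (A B : Set (Vec (m + 1))) (τ : ℝ), Fm A → Fm B → 0 < τ → |vol A - m1| ≤ δ →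
      |vol B - m2| ≤ δ → |τ - t| ≤ δ → pairDistance A B < δ → c * pairDistance A B ^ 2 ≤ Def τ A B := by
  have pos : ∀ {v}, t < v → 0 < rad (m + 1) v ∧ vol (Bl (rad (m + 1) v) : Set (Vec (m + 1))) = v := fun {v} hv => by
    have e := real_Bl_rad (d := m + 1) (by omega) (ht.trans hv).le
    refine ⟨(rad_nonneg (ht.trans hv).le).lt_of_ne fun h => ?_, e⟩
    rw [← h, real_Bl le_rfl] at e
    simp at e; linarith
  obtain ⟨r1, e1⟩ := pos t1
  obtain ⟨r2, e2⟩ := pos t2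
  obtain ⟨c, h3, h4, h5⟩ := exists_r3 (m := m) r1 r2 ht (e1.symm ▸ t1) (e2.symm ▸ t2)
  have := local_aux (m := m) r1 r2 h3 h4
  rwa [e1, e2, h5] at this

/-- Stability for bounded pairs far from the extremal ones: along the path from `(A, B)` to its Steiner symmetrization, which almost
does not decrease `T`, the distance to the orbit has to cross the range where the local estimate applies. -/
lemma far {δ c m1 m2 τ R : ℝ} (δ0 : 0 < δ) (c0 : 0 < c) (n1 : 0 ≤ m1) (n2 : 0 ≤ m2) (hτ : 0 < τ) (hR : 0 < R)
    (h : ∀ A B : Set (Vec (m + 1)), Fm A → Fm B → |vol A - m1| ≤ δ → |vol B - m2| ≤ δ → pairDistance A B < δ →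
      c * pairDistance A B ^ 2 ≤ Def τ A B)
    (hA : MeasurableSet A) (hB : MeasurableSet B) (bA : A ⊆ Bl R) (bB : B ⊆ Bl R)
    (vA : |vol A - m1| ≤ δ / 2) (vB : |vol B - m2| ≤ δ / 2) (hp : δ / 2 ≤ pairDistance A B) : c * δ ^ 2 / 32 ≤ Def τ A B := by
  refine steiner_induction (ξ := δ / 4) hR (by positivity) (fun A B => |vol A - m1| ≤ δ / 2 → |vol B - m2| ≤ δ / 2 →
    δ / 2 ≤ pairDistance A B → c * δ ^ 2 / 32 ≤ Def τ A B) ?_ ?_ ?_ hA hB bA bB vA vB hp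
  · intro g A B hA hB _ _ ih vA vB hp
    rw [rot_real, rot_real, rot_eq_aff, rot_eq_aff, Def_aff _ (rot_det g.symm) _ _ hA hB, pd_aff_eq (by omega) _ (rot_det g.symm)] at ih
    exact ih vA vB hp
  · intro A B hA hB bA bB ih vA vB hp
    have sA : vol (St A) = vol A := by simp only [Measure.real, vol_St hA bA]
    have sB : vol (St B) = vol B := by simp only [Measure.real, vol_St hB bB]
    have hT := T_le_St hA hB hτ bA bB
    rw [sA, sB] at ih
    by_cases hs : δ / 2 ≤ pairDistance (St A) (St B)
    · have := ih vA vB hs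
      unfold Def at this ⊢
      rw [ballStar_congr (vol_St hA bA), ballStar_congr (vol_St hB bB)] at this
      linarith
    push Not at hs
    set P := m1 + m2 + δ with hP
    have P0 : 0 < P := by positivity
    obtain ⟨η, η0, l1, l2⟩ : ∃ η : ℝ, 0 < η ∧ η ≤ δ / 8 ∧ (2 * P + 1) * η ≤ c * δ ^ 2 / 32 := by
      refine ⟨min (δ / 8) (c * δ ^ 2 / 32 / (2 * P + 1)), by positivity, min_le_left _ _, ?_⟩
      rw [mul_comm, ← le_div_iff₀ (by positivity)]; exact min_le_right _ _
    have cross : ∀ Q, Relation.ReflTransGen (Mv τ η A B) (A, B) Q → (Fm Q.1 ∧ Fm Q.2 ∧ δ / 2 ≤ pairDistance Q.1 Q.2) ∨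
        ∃ Q', Ok τ η A B Q' ∧ δ / 2 - 2 * η ≤ pairDistance Q'.1 Q'.2 ∧ pairDistance Q'.1 Q'.2 < δ / 2 := by
      intro Q hQ
      induction hQ with
      | refl => exact Or.inl ⟨fm_of_bdd hA bA, fm_of_bdd hB bB, hp⟩
      | @tail Q1 Q2 _ hs ih =>
        rcases ih with ⟨f1, f2, h⟩ | h
        · obtain ⟨ok, s1, s2⟩ := hs
          have := pd_lip (by omega) f1 ok.f1 f2 ok.f2
          have := max_le s1 s2
          by_cases hq : δ / 2 ≤ pairDistance Q2.1 Q2.2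
          · exact Or.inl ⟨ok.f1, ok.f2, hq⟩
          · exact Or.inr ⟨_, ok, by linarith, not_le.1 hq⟩
        · exact Or.inr h
    rcases cross _ (path hA hB hR.le hτ η0 bA bB) with ⟨-, -, k⟩ | ⟨Q, ok, p1, p2⟩
    · exact absurd hs (not_lt.2 k)
    have a1 := abs_le.1 vA
    have a2 := abs_le.1 vB
    have a3 := abs_le.1 ok.v1
    have a4 := abs_le.1 ok.v2
    have k := h Q.1 Q.2 ok.f1 ok.f2 (abs_le.2 ⟨by linarith, by linarith⟩) (abs_le.2 ⟨by linarith, by linarith⟩) (by linarith)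
    have k2 : c * (δ / 4) ^ 2 ≤ c * pairDistance Q.1 Q.2 ^ 2 :=
      mul_le_mul_of_nonneg_left (pow_le_pow_left₀ (by positivity) (by linarith) 2) c0.le
    have k3 := T_lip_sd hτ (fm_ballStar Q.1) (fm_ballStar A) (fm_ballStar Q.2) (fm_ballStar B) (P := P)
      (by rw [real_ballStar (by omega)]; linarith) (by rw [real_ballStar (by omega)]; linarith)
    rw [ballStar_diff (by omega), ballStar_diff (by omega)] at k3
    have k4 := mul_le_mul_of_nonneg_left (add_le_add ok.v1 ok.v2) P0.le
    have k5 := ok.t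
    unfold Def at k ⊢
    linarith
  · intro A B hA hB bA bB hξ vA vB hp
    have fA := fm_of_bdd hA bA
    have fB := fm_of_bdd hB bB
    have q := pd_self A B
    rw [real_symmDiff fA (fm_ballStar A), real_symmDiff fB (fm_ballStar B), ← real_diff_eq fA (fm_ballStar A) (real_ballStar (by omega) A).symm,
      ← real_diff_eq fB (fm_ballStar B) (real_ballStar (by omega) B).symm] at q
    have := vol_nonneg (s := A \ ballStar A)
    have := vol_nonneg (s := B \ ballStar B)
    exact absurd (hp.trans q) (not_le.2 (max_lt (by linarith) (by linarith)))

/-- Stability near one parameter `(m1, m2, t)`, from `local_stab` and `far`; unbounded sets are truncated. -/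
lemma stab {m1 m2 t : ℝ} (ht : 0 < t) (t1 : t < m1) (t2 : t < m2) :
    ∃ δ > 0, ∃ c > 0, ∀ (A B : Set (Vec (m + 1))) (τ : ℝ), Fm A → Fm B → 0 < τ → |vol A - m1| < δ →
      |vol B - m2| < δ → |τ - t| < δ → c * pairDistance A B ^ 2 ≤ Def τ A B := by
  obtain ⟨δ, δ0, c, c0, h⟩ := local_stab (m := m) ht t1 t2
  have n1 := ht.trans t1
  have n2 := ht.trans t2
  set P := m1 + m2 + δ with hP
  have P0 : 0 < P := by positivity
  set c' := min c (c * δ ^ 2 / 32 / (2 * P) ^ 2) with hc'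
  have c0' : 0 < c' := by positivity
  have bdd : ∀ (A B : Set (Vec (m + 1))) (τ : ℝ) (R : ℝ), 0 < R → MeasurableSet A → MeasurableSet B → A ⊆ Bl R → B ⊆ Bl R → 0 < τ →
      |vol A - m1| ≤ δ / 2 → |vol B - m2| ≤ δ / 2 → |τ - t| ≤ δ → c' * pairDistance A B ^ 2 ≤ Def τ A B := by
    intro A B τ R hR hA hB bA bB hτ vA vB vτ
    have fA := fm_of_bdd hA bA
    have fB := fm_of_bdd hB bB
    by_cases hp : δ / 2 ≤ pairDistance A B
    · refine le_trans ?_ (far δ0 c0 n1.le n2.le hτ hR (fun A B fA fB vA vB => h A B τ fA fB hτ vA vB vτ) hA hB bA bB vA vB hp)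
      have q := pd_le_vol (by omega) fA fB
      have a1 := abs_le.1 vA
      have a2 := abs_le.1 vB
      have q2 : max (vol A) (vol B) ≤ P := max_le (by linarith) (by linarith)
      calc c' * pairDistance A B ^ 2 ≤ c * δ ^ 2 / 32 / (2 * P) ^ 2 * (2 * P) ^ 2 :=
            mul_le_mul (min_le_right _ _) (pow_le_pow_left₀ (pd_nonneg A B) (by linarith) 2) (by positivity) (by positivity)
        _ = _ := by field_simp
    · exact (mul_le_mul_of_nonneg_right (min_le_left _ _) (by positivity)).trans
        (h A B τ fA fB hτ (vA.trans (by linarith)) (vB.trans (by linarith)) vτ (by linarith))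
  refine ⟨δ / 2, by positivity, c', c0', fun A B τ hA hB hτ vA vB vτ => ?_⟩
  set e : ℕ → ℝ := fun n => vol (A \ Bl (n : ℝ)) + vol (B \ Bl (n : ℝ)) with he
  have et : Tendsto e atTop (𝓝 0) := by simpa using (tendsto_diff_Bl hA).add (tendsto_diff_Bl hB)
  set D := Def τ A B
  set p := pairDistance A B with hp
  have l1 : Tendsto (fun n => c' * max 0 (p - 2 * e n) ^ 2) atTop (𝓝 (c' * max 0 (p - 2 * 0) ^ 2)) :=
    ((continuous_const.mul ((continuous_const.max (continuous_const.sub (continuous_const.mul continuous_id))).pow 2)).tendsto 0).comp et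
  have l2 : Tendsto (fun n => D + 2 * P * e n) atTop (𝓝 (D + 2 * P * 0)) :=
    ((continuous_const.add (continuous_const.mul continuous_id)).tendsto 0).comp et
  rw [mul_zero, sub_zero, max_eq_right (pd_nonneg A B)] at l1
  rw [mul_zero, add_zero] at l2
  refine le_of_tendsto_of_tendsto l1 l2 ?_
  have ev := et.eventually (gt_mem_nhds (show (0 : ℝ) < min (δ / 2 - |vol A - m1|) (δ / 2 - |vol B - m2|) from
    lt_min (by linarith) (by linarith)))
  filter_upwards [ev, eventually_gt_atTop 0] with n hn n0
  have cut : ∀ {S : Set (Vec (m + 1))}, Fm S → vol (S ∆ (S ∩ Bl n)) = vol (S \ Bl n) := fun {S} _ => by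
    congr 1; ext x; simp only [Set.mem_symmDiff, mem_inter_iff, mem_diff]; tauto
  have fA := hA.inter (fm_Bl (n : ℝ)).1
  have fB := hB.inter (fm_Bl (n : ℝ)).1
  have sA := vol_sub_le hA fA
  have sB := vol_sub_le hB fB
  have pl := pd_lip (by omega) hA fA hB fB
  rw [cut hA] at sA
  rw [cut hB] at sB
  rw [cut hA, cut hB] at pl
  have ga := vol_nonneg (s := A \ Bl (n : ℝ))
  have gb := vol_nonneg (s := B \ Bl (n : ℝ))
  have eA : vol (A \ Bl (n : ℝ)) ≤ e n := by simp only [he]; linarith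
  have eB : vol (B \ Bl (n : ℝ)) ≤ e n := by simp only [he]; linarith
  have hn1 := hn.trans_le (min_le_left _ _)
  have hn2 := hn.trans_le (min_le_right _ _)
  have w1 : |vol (A ∩ Bl (n : ℝ)) - m1| ≤ δ / 2 := by
    have := abs_sub_le (vol (A ∩ Bl (n : ℝ))) (vol A) m1
    rw [abs_sub_comm _ (vol A)] at this
    linarith
  have w2 : |vol (B ∩ Bl (n : ℝ)) - m2| ≤ δ / 2 := by
    have := abs_sub_le (vol (B ∩ Bl (n : ℝ))) (vol B) m2
    rw [abs_sub_comm _ (vol B)] at this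
    linarith
  have k := bdd _ _ τ n (by exact_mod_cast n0) fA.1 fB.1 inter_subset_right inter_subset_right hτ w1 w2 (by linarith)
  have v1 := abs_lt.1 vA
  have v2 := abs_lt.1 vB
  have v3 := abs_le.1 w1
  have v4 := abs_le.1 w2
  have t1 := T_lip_sd hτ hA fA hB fB (P := P) (by linarith) (by linarith)
  have t2 := T_lip_sd hτ (fm_ballStar (A ∩ Bl (n : ℝ))) (fm_ballStar A) (fm_ballStar (B ∩ Bl (n : ℝ))) (fm_ballStar B) (P := P)
    (by rw [real_ballStar (by omega)]; linarith) (by rw [real_ballStar (by omega)]; linarith)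
  rw [cut hA, cut hB] at t1
  rw [ballStar_diff (by omega), ballStar_diff (by omega), abs_sub_comm, abs_sub_comm (vol (B ∩ _))] at t2
  have t3 := mul_le_mul_of_nonneg_left (add_le_add sA sB) P0.le
  have mx : max 0 (p - 2 * e n) ≤ pairDistance (A ∩ Bl (n : ℝ)) (B ∩ Bl (n : ℝ)) :=
    max_le (pd_nonneg _ _) (by have := max_le eA eB; linarith)
  refine (mul_le_mul_of_nonneg_left (pow_le_pow_left₀ (le_max_left _ _) mx 2) c0'.le).trans (k.trans ?_)
  simp only [D, Def, he] at *
  linarith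

/-- Uniformity of the stability constant over compact sets of parameters. -/
lemma stab_compact {K : Set (ℝ × ℝ × ℝ)} (hK : IsCompact K) (h : ∀ p ∈ K, 0 < p.2.2 ∧ p.2.2 < p.1 ∧ p.2.2 < p.2.1) :
    ∃ c > 0, ∀ (A B : Set (Vec (m + 1))) (τ : ℝ), Fm A → Fm B → (vol A, vol B, τ) ∈ K →
      c * pairDistance A B ^ 2 ≤ Def τ A B := by
  refine hK.induction_on (p := fun S => ∃ c > 0, ∀ (A B : Set (Vec (m + 1))) (τ : ℝ), Fm A → Fm B → 0 < τ →
    (vol A, vol B, τ) ∈ S → c * pairDistance A B ^ 2 ≤ Def τ A B) ⟨1, one_pos, fun _ _ _ _ _ _ h => h.elim⟩ ?_ ?_ ?_ |>.imp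
      fun c hc => ⟨hc.1, fun A B τ fA fB hm => hc.2 A B τ fA fB (h _ hm).1 hm⟩
  · rintro S S' hS ⟨c, c0, hc⟩
    exact ⟨c, c0, fun A B τ fA fB hτ hm => hc A B τ fA fB hτ (hS hm)⟩
  · rintro S S' ⟨c, c0, hc⟩ ⟨c', c0', hc'⟩
    refine ⟨min c c', lt_min c0 c0', fun A B τ fA fB hτ hm => ?_⟩
    rcases hm with hm | hm
    · exact (mul_le_mul_of_nonneg_right (min_le_left _ _) (by positivity)).trans (hc A B τ fA fB hτ hm)
    · exact (mul_le_mul_of_nonneg_right (min_le_right _ _) (by positivity)).trans (hc' A B τ fA fB hτ hm)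
  · rintro ⟨m1, m2, t⟩ hp
    obtain ⟨δ, δ0, c, c0, hc⟩ := stab (m := m) (h _ hp).1 (h _ hp).2.1 (h _ hp).2.2
    refine ⟨ball (m1, m2, t) δ, mem_nhdsWithin_of_mem_nhds (ball_mem_nhds _ δ0), c, c0, fun A B τ fA fB hτ hm => ?_⟩
    rw [mem_ball, Prod.dist_eq, Prod.dist_eq, max_lt_iff, max_lt_iff] at hm
    exact hc A B τ fA fB hτ hm.1 hm.2.1 hm.2.2

end

end RS

/-- Sharpened form of the variant Riesz–Sobolev inequality. -/
theorem variant_inverse (d : ℕ) (hd : 1 ≤ d) (Λ : Set ℝ) (hΛc : IsCompact Λ)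
    (hΛ : Λ ⊆ Set.Ioo 0 1) (ρ : ℝ) (hρ : 0 < ρ) :
    ∃ c > (0 : ℝ), ∀ E₁ E₂ : Set (Vec d),
      MeasurableSet E₁ → MeasurableSet E₂ →
      volume E₁ ≠ ⊤ → volume E₂ ≠ ⊤ → 0 < volume E₁ → 0 < volume E₂ →
      ρ * max (volume E₁).toReal (volume E₂).toReal ≤
        min (volume E₁).toReal (volume E₂).toReal →
      ∀ τ : ℝ, 0 < τ → τ / min (volume E₁).toReal (volume E₂).toReal ∈ Λ →
      (∫ x, min (conv (ind (ballStar E₁)) (ind (ballStar E₂)) x) τ)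
          + c * (pairDistance E₁ E₂) ^ 2 ≤
        ∫ x, min (conv (ind E₁) (ind E₂) x) τ := by
  obtain ⟨m, rfl⟩ : ∃ m, d = m + 1 := ⟨d - 1, by omega⟩
  obtain ⟨c, c0, hc⟩ := RS.stab_compact (m := m) ((isCompact_Icc (a := (1 : ℝ)) (b := 1 / ρ)).prod ((isCompact_Icc (a := (1 : ℝ)) (b := 1 / ρ)).prod hΛc))
    fun p hp => ⟨(hΛ hp.2.2).1, (hΛ hp.2.2).2.trans_le hp.1.1, (hΛ hp.2.2).2.trans_le hp.2.1.1⟩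
  refine ⟨c, c0, fun E F hE hF fE fF pE pF hmm τ hτ hτΛ => ?_⟩
  have vE : 0 < (volume E).toReal := ENNReal.toReal_pos pE.ne' fE
  have vF : 0 < (volume F).toReal := ENNReal.toReal_pos pF.ne' fF
  set μ := min (volume E).toReal (volume F).toReal with hμ
  have μ0 : 0 < μ := lt_min vE vF
  -- rescale so that the smaller measure becomes `1`
  set s := μ ^ (1 / (m + 1 : ℕ) : ℝ) with hs
  have s0 : 0 < s := Real.rpow_pos_of_pos μ0 _
  have sd : s ^ (m + 1) = μ := by
    rw [hs, ← Real.rpow_natCast, ← Real.rpow_mul μ0.le, one_div, inv_mul_cancel₀ (by positivity), Real.rpow_one]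
  set ψ := RS.dil (m + 1) s s0.ne' with hψ
  have dψ : |det(ψ)| = μ := (RS.det_dil s0).trans sd
  have un : ∀ S, RS.aff ψ 0 (RS.aff ψ.symm 0 S) = S := fun S => by rw [RS.aff_aff]; simp [RS.aff]
  have vol_S : ∀ S, μ * vol (RS.aff ψ.symm 0 S) = vol S := fun S => by
    rw [← dψ, ← RS.real_aff ψ 0, un]
  have star : ∀ S, RS.aff ψ 0 (ballStar S) = ballStar (RS.aff ψ 0 S) := fun S =>
    (RS.ballStar_aff hd s0 (LinearEquiv.refl ℝ _) (by simp) 0 S).symm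
  have pd : ∀ S S', pairDistance (RS.aff ψ 0 S) (RS.aff ψ 0 S') ≤ μ * pairDistance S S' := fun S S' => by
    rw [← sd]; exact RS.pd_aff hd s0 (LinearEquiv.refl ℝ _) (by simp) 0 0 S S'
  set A := RS.aff ψ.symm 0 E with hA
  set B := RS.aff ψ.symm 0 F with hB
  have fmE : RS.Fm E := ⟨hE, fE⟩
  have fmF : RS.Fm F := ⟨hF, fF⟩
  have fA : RS.Fm A := fmE.aff _ _
  have fB : RS.Fm B := fmF.aff _ _
  have rng : ∀ S, μ ≤ vol S → ρ * vol S ≤ μ → vol (RS.aff ψ.symm 0 S) ∈ Icc 1 (1 / ρ) := fun S h1 h2 => by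
    have := vol_S S
    constructor
    · rw [← this] at h1; exact le_of_mul_le_mul_left (by linarith) μ0
    · rw [le_div_iff₀ hρ]; rw [← this] at h2; exact le_of_mul_le_mul_left (by linarith) μ0
  have key := hc A B (τ / μ) fA fB ⟨rng E (min_le_left _ _) ((mul_le_mul_of_nonneg_left (le_max_left _ _) hρ.le).trans hmm),
    rng F (min_le_right _ _) ((mul_le_mul_of_nonneg_left (le_max_right _ _) hρ.le).trans hmm), hτΛ⟩
  have hT : ∀ S S', MeasurableSet S → MeasurableSet S' → RS.T τ (RS.aff ψ 0 S) (RS.aff ψ 0 S') = μ ^ 2 * RS.T (τ / μ) S S' := fun S S' hS hS' => by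
    have := RS.T_aff ψ 0 0 hS hS' (τ / μ)
    rwa [dψ, mul_div_cancel₀ _ μ0.ne'] at this
  have T1 := hT A B fA.1 fB.1
  have T2 := hT (ballStar A) (ballStar B) (RS.fm_ballStar A).1 (RS.fm_ballStar B).1
  have pd1 := pd A B
  rw [star, star] at T2
  rw [un, un] at T1 T2 pd1
  have i1 := RS.integral_min_add_T hτ.le fmE fmF
  have i2 := RS.integral_min_add_T hτ.le (RS.fm_ballStar E) (RS.fm_ballStar F)
  rw [RS.real_ballStar hd, RS.real_ballStar hd] at i2
  simp only [RS.conv_eq_cv hE hF, RS.conv_eq_cv (RS.fm_ballStar E).1 (RS.fm_ballStar F).1]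
  have k1 : pairDistance E F ^ 2 ≤ μ ^ 2 * pairDistance A B ^ 2 := by
    rw [← mul_pow]; exact pow_le_pow_left₀ (RS.pd_nonneg E F) pd1 2
  have k2 := mul_le_mul_of_nonneg_left key (sq_nonneg μ)
  have k3 := mul_le_mul_of_nonneg_left k1 c0.le
  unfold RS.Def at k2
  linarith
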